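/- There exists a universal constant C > 0 such that the following holds. Let n ≥ 2 and let K, T ⊆ ℝⁿ be convex bodies in isotropic position. Set λ = C·log²(n+1). Then Vol_n(λK ∩ T) ≥ (99/100)·Vol_n(T). -/

import Mathlib

/-!
Write `N` for the gauge of `K` and `G` for a standard Gaussian vector. The theorem follows from
Markov's inequality (`PC.markov`) once the mean of `N` over `T` is `O(log² n)`
(`PC.mean_gauge_le`), and this mean is compared with `E N(G)`, for both bodies, by stochastic
localization.

**The process.** For a measure `μ` (uniform on `K` or on `T`), the tilts `PC.tt μ t θ`, with density
proportional to `exp (⟪θ, x⟫ - t ‖x‖² / 2)` with respect to `μ`, where `θ` is distributed as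
`t X + √t G` with `X` of law `μ`, form a measure-valued martingale which starts at `μ` and
converges to a random Dirac mass of law `μ`. Only the one-dimensional
marginals are needed: `PC.EE μ t` is the expectation over `θ` at time `t`, and `PC.ito` is Itô's
formula in integrated form, a derivative in `t` of expectations. It is a consequence of the heat
equation, so no stochastic integral appears.

**The covariance stays near the identity.** At times `t ≤ c / log² n`, the covariance
`PC.cm μ t θ` is within `1 / 2` of the identity, outside an event whose probability is
polynomially small in `n` (`PC.chi_EE`, `PC.chi_small`). This is shown by following the trace of the
`m`-th power of the centered covariance, with `m` of order `log n`, cut off by a bounded function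
(`PC.gen_bound`, `PC.Fm_growth`). The drift of this trace involves the third-moment tensor of the
tilt, bounded in `PC.tri_bound` by a Poincaré inequality for quadratic forms. The tilt is
`t`-strongly log-concave, and the improved Lichnerowicz inequality `PC.lich` provides the
Poincaré constant `√(A / t)` for covariance at most `A`. It is proved by a semigroup argument
on near-extremal functions of the Poincaré inequality, starting from the Prékopa–Leindler inequality
`PC.pl` and the Poincaré inequality `PC.poincare_slc` for strongly log-concave measures.

**Comparison with the Gaussian.** Let `a_t` be the barycenter of the tilt, and consider the mean of
`N(a_t + ρ(t) G)` (`PC.Fr`). Its drift is half the trace of the averaged Hessian of `N`, which is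
nonnegative, against `cov² + (ρ²)'`. With `τ` of order `1 / log n`:

* for `K`, `cov ≥ 1 / 2` up to time `τ²`, so the mean is almost increasing if `ρ²` has slope
  `-1 / 4`. As `N ≤ 1` on `K`, this gives `E N(G) ≤ 4 / τ` (`PC.gauss_mean_le`);
* for `T`, `cov ≤ 3 / 2` up to time `τ²`, so the mean is almost decreasing if `ρ²` has slope
  `-9 / 4`. After time `τ²`, strong log-concavity gives `cov ≤ 1 / t`, and `ρ² = 1 / t` makes the
  mean decreasing. Letting `t → ∞`, the mean of `N` over `T` is at most `(3 / τ) E N(G) + 1`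
  (`PC.mean_le`).

Hence the mean of `N` over `T` is at most `12 / τ² + 1`. The exceptional events contribute
little because an isotropic convex body lies between two balls with radii depending polynomially
on `n` (`PC.body_ball`, `PC.body_norm_le`).
-/

open MeasureTheory Real Pointwise RealInnerProductSpace
open scoped ENNReal

noncomputable section

/-- A convex body: a compact convex set with non-empty interior. -/
def IsConvexBody {n : ℕ} (K : Set (EuclideanSpace ℝ (Fin n))) : Prop :=
  IsCompact K ∧ Convex ℝ K ∧ (interior K).Nonempty

/-- The uniform probability measure on a set `K`. -/
def unifOn {n : ℕ} (K : Set (EuclideanSpace ℝ (Fin n))) : Measure (EuclideanSpace ℝ (Fin n)) :=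
  (volume K)⁻¹ • volume.restrict K

/-- A probability measure `μ` on `ℝⁿ` is isotropic: its barycenter vanishes and its
covariance matrix is the identity. -/
def IsIsotropicMeasure {n : ℕ} (μ : Measure (EuclideanSpace ℝ (Fin n))) : Prop :=
  (∀ i, ∫ x, x i ∂μ = 0) ∧ ∀ i j, ∫ x, x i * x j ∂μ = if i = j then 1 else 0

/-- A convex body is in isotropic position if the uniform probability measure on it
is isotropic. -/
def IsIsotropicBody {n : ℕ} (K : Set (EuclideanSpace ℝ (Fin n))) : Prop :=
  IsIsotropicMeasure (unifOn K)

/-- A log-concave density: nonnegative, and multiplicatively convex. This is equivalent to: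
`{p > 0}` is convex and `log (1/p)` is convex on it. -/
def IsLogConcaveDensity {n : ℕ} (p : EuclideanSpace ℝ (Fin n) → ℝ) : Prop :=
  (∀ x, 0 ≤ p x) ∧ ∀ x y : EuclideanSpace ℝ (Fin n), ∀ t : ℝ, 0 ≤ t → t ≤ 1 →
    p x ^ t * p y ^ (1 - t) ≤ p (t • x + (1 - t) • y)

/-- A measure on `ℝⁿ` is log-concave if it has a log-concave density w.r.t. Lebesgue. -/
def IsLogConcaveMeasure {n : ℕ} (μ : Measure (EuclideanSpace ℝ (Fin n))) : Prop :=
  ∃ p : EuclideanSpace ℝ (Fin n) → ℝ, Measurable p ∧ IsLogConcaveDensity p ∧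
    μ = volume.withDensity fun x => ENNReal.ofReal (p x)

/-- The standard Gaussian probability measure on `ℝⁿ`. -/
def stdGaussian (n : ℕ) : Measure (EuclideanSpace ℝ (Fin n)) :=
  volume.withDensity fun x => ENNReal.ofReal ((2 * π) ^ (-(n : ℝ) / 2) * Real.exp (-‖x‖ ^ 2 / 2))

/-- The Poincaré constant of a measure: the least `A ≥ 0` such that
`Var f ≤ A ⬝ E |∇ f|²` for all locally Lipschitz `f`. -/
def poincareConst {n : ℕ} (μ : Measure (EuclideanSpace ℝ (Fin n))) : ℝ :=
  sInf {A : ℝ | 0 ≤ A ∧ ∀ f : EuclideanSpace ℝ (Fin n) → ℝ, LocallyLipschitz f →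
    ∫ x, (f x - ∫ y, f y ∂μ) ^ 2 ∂μ ≤ A * ∫ x, ‖gradient f x‖ ^ 2 ∂μ}

/-- The KLS constant `ψₙ`. -/
def KLSConst (n : ℕ) : ℝ :=
  sSup {s : ℝ | ∃ μ : Measure (EuclideanSpace ℝ (Fin n)), IsProbabilityMeasure μ ∧
    IsLogConcaveMeasure μ ∧ IsIsotropicMeasure μ ∧ s = Real.sqrt (poincareConst μ)}

/-- The Hilbert-Schmidt norm of a matrix. -/
def hsNorm {n : ℕ} (M : Matrix (Fin n) (Fin n) ℝ) : ℝ :=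
  Real.sqrt (∑ i, ∑ j, (M i j) ^ 2)

/-- The coefficient `κₙ`, the supremum of `‖E [X₁ (X ⊗ X)]‖_HS` over all isotropic
log-concave random vectors `X` in `ℝⁿ`. -/
def kappaConst (n : ℕ) : ℝ :=
  sSup {s : ℝ | ∃ μ : Measure (EuclideanSpace ℝ (Fin n)), IsProbabilityMeasure μ ∧
    IsLogConcaveMeasure μ ∧ IsIsotropicMeasure μ ∧ ∃ h : 0 < n,
    s = hsNorm (Matrix.of fun i j => ∫ x, x ⟨0, h⟩ * (x i * x j) ∂μ)}

/-- A gauge function on `ℝⁿ`: non-negative, convex, positively homogeneous. -/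
def IsGauge {n : ℕ} (f : EuclideanSpace ℝ (Fin n) → ℝ) : Prop :=
  (∀ x, 0 ≤ f x) ∧ ConvexOn ℝ Set.univ f ∧
    ∀ (c : ℝ), 0 ≤ c → ∀ x, f (c • x) = c * f x

/-- `M(K)`: the mean of the Minkowski functional of `K` over the unit sphere, w.r.t. the
uniform probability measure on the sphere. -/
def Mparam (n : ℕ) (K : Set (EuclideanSpace ℝ (Fin n))) : ℝ :=
  ∫ x : Metric.sphere (0 : EuclideanSpace ℝ (Fin n)) 1,
    gauge K x ∂(((volume : Measure (EuclideanSpace ℝ (Fin n))).toSphere Set.univ)⁻¹ •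
      (volume : Measure (EuclideanSpace ℝ (Fin n))).toSphere)

/-- The polar body. -/
def polarBody {n : ℕ} (K : Set (EuclideanSpace ℝ (Fin n))) : Set (EuclideanSpace ℝ (Fin n)) :=
  {x | ∀ y ∈ K, ⟪x, y⟫ ≤ 1}

/-- `R(K)`: the maximal Euclidean norm of a point of `K`. -/
def Rparam {n : ℕ} (K : Set (EuclideanSpace ℝ (Fin n))) : ℝ :=
  sSup {r : ℝ | ∃ x ∈ K, r = ‖x‖}

/-- The operator norm `‖A : K → T‖ = sup_{x ≠ 0} ‖Ax‖_T / ‖x‖_K` (Minkowski functionals). -/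
def mapNorm {n : ℕ} (K T : Set (EuclideanSpace ℝ (Fin n)))
    (A : Matrix (Fin n) (Fin n) ℝ) : ℝ :=
  sSup {r : ℝ | ∃ x : EuclideanSpace ℝ (Fin n), x ≠ 0 ∧
    r = gauge T (Matrix.toEuclideanLin A x) / gauge K x}

/-- The ℓ₂ operator norm of a matrix. -/
def matOpNorm {n : ℕ} (M : Matrix (Fin n) (Fin n) ℝ) : ℝ :=
  ‖LinearMap.toContinuousLinearMap (Matrix.toEuclideanLin M)‖

namespace PC


/-! ### Prékopa–Leindler at the midpoint -/

lemma bm_compact {A B C : Set ℝ} (hA : IsCompact A) (hB : IsCompact B) (hAn : A.Nonempty)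
    (hBn : B.Nonempty) (hC : ∀ x ∈ A, ∀ y ∈ B, x + y ∈ C) :
    volume A + volume B ≤ volume C := by
  obtain ⟨a, ha, hamax⟩ := hA.exists_isGreatest hAn
  obtain ⟨b, hb, hbmin⟩ := hB.exists_isLeast hBn
  have h1 : volume A = volume ((fun x => x + b) '' A) := by
    simp
  have h2 : volume B = volume ((fun y => a + y) '' B) := by
    simp
  have hm1 : IsCompact ((fun x => x + b) '' A) := hA.image (by fun_prop)
  have hm2 : IsCompact ((fun y => a + y) '' B) := hB.image (by fun_prop)
  rw [h1, h2, ← measure_union₀ hm2.measurableSet.nullMeasurableSet]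
  · apply measure_mono
    rintro z (⟨x, hx, rfl⟩ | ⟨y, hy, rfl⟩)
    · exact hC _ hx _ hb
    · exact hC _ ha _ hy
  · refine measure_mono_null (t := {a + b}) ?_ (by simp)
    rintro z ⟨⟨x, hx, rfl⟩, ⟨y, hy, h⟩⟩
    have := hamax hx
    have := hbmin hy
    simp only [Set.mem_singleton_iff] at *
    linarith

lemma bm_one {A B C : Set ℝ} (hA : MeasurableSet A) (hB : MeasurableSet B) (hAn : A.Nonempty)
    (hBn : B.Nonempty) (hC : ∀ x ∈ A, ∀ y ∈ B, x + y ∈ C) :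
    volume A + volume B ≤ volume C := by
  obtain ⟨a, ha⟩ := hAn
  obtain ⟨b, hb⟩ := hBn
  rw [hA.measure_eq_iSup_isCompact, hB.measure_eq_iSup_isCompact]
  simp only [iSup_and']
  have : ∀ K ⊆ A, IsCompact K → ∀ L ⊆ B, IsCompact L → volume K + volume L ≤ volume C := by
    intro K hK hKc L hL hLc
    calc volume K + volume L ≤ volume (K ∪ {a}) + volume (L ∪ {b}) := by
          gcongr <;> exact Set.subset_union_left
      _ ≤ volume C := by
          apply bm_compact (hKc.union isCompact_singleton) (hLc.union isCompact_singleton)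
            ⟨a, by simp⟩ ⟨b, by simp⟩
          intro x hx y hy
          apply hC
          · rcases hx with hx | hx
            · exact hK hx
            · rw [hx]; exact ha
          · rcases hy with hy | hy
            · exact hL hy
            · rw [hy]; exact hb
  refine ENNReal.biSup_add_biSup_le' (p := fun K => K ⊆ A ∧ IsCompact K)
    (q := fun K => K ⊆ B ∧ IsCompact K) ⟨∅, by simp⟩ ⟨∅, by simp⟩ ?_
  exact fun K hK L hL => this K hK.1 hK.2 L hL.1 hL.2

/-- One-dimensional Prékopa–Leindler for functions with supremum `1`, in additive form. -/
lemma pl_one_normalized {f g h : ℝ → ℝ} (hf : Measurable f) (hg : Measurable g)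
    (hf0 : ∀ x, 0 ≤ f x) (hg0 : ∀ x, 0 ≤ g x) (hh0 : ∀ x, 0 ≤ h x) (hh : Measurable h)
    (hf1 : ∀ x, f x ≤ 1) (hg1 : ∀ x, g x ≤ 1) (hfs : ∀ r < 1, ∃ x, r < f x)
    (hgs : ∀ r < 1, ∃ x, r < g x) (H : ∀ x y, f x * g y ≤ h ((x + y) / 2) ^ 2) :
    (∫⁻ x, ENNReal.ofReal (f x)) + (∫⁻ x, ENNReal.ofReal (g x))
      ≤ 2 * ∫⁻ x, ENNReal.ofReal (h x) := by
  rw [lintegral_eq_lintegral_meas_lt volume (Filter.Eventually.of_forall hf0) hf.aemeasurable,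
    lintegral_eq_lintegral_meas_lt volume (Filter.Eventually.of_forall hg0) hg.aemeasurable,
    lintegral_eq_lintegral_meas_lt volume (Filter.Eventually.of_forall hh0) hh.aemeasurable,
    ← lintegral_const_mul' _ _ (by simp), ← lintegral_add_left']
  swap
  · refine (Antitone.measurable ?_).aemeasurable
    exact fun s t hst => measure_mono fun x hx => lt_of_le_of_lt hst hx
  refine setLIntegral_mono' measurableSet_Ioi fun r hr => ?_
  have hr : 0 < r := hr
  by_cases h1 : r < 1
  · have e : 2 * volume {a | r < h a} = volume {z : ℝ | r < h (z / 2)} := by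
      have : {z : ℝ | r < h (z / 2)} = (2 : ℝ) • {a | r < h a} := by
        ext z
        rw [Set.mem_smul_set_iff_inv_smul_mem₀ (by norm_num)]
        simp [div_eq_inv_mul]
      rw [this, Measure.addHaar_smul]
      simp
    rw [e]
    refine bm_one (measurableSet_lt measurable_const hf) (measurableSet_lt measurable_const hg)
      (hfs r h1) (hgs r h1) fun x hx y hy => ?_
    simp only [Set.mem_ofPred_eq] at *
    have := H x y
    by_contra hc
    push Not at hc
    have := pow_le_pow_left₀ (hh0 _) hc 2
    nlinarith
  · have e1 : {a | r < f a} = ∅ := by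
      ext x; simp; linarith [hf1 x]
    have e2 : {a | r < g a} = ∅ := by
      ext x; simp; linarith [hg1 x]
    simp [e1, e2]

lemma ennreal_amgm (a b : ℝ≥0∞) : 4 * (a * b) ≤ (a + b) ^ 2 := by
  by_cases ha : a = ∞
  · simp [ha]
  by_cases hb : b = ∞
  · simp [hb]
  lift a to NNReal using ha
  lift b to NNReal using hb
  norm_cast
  rw [← NNReal.coe_le_coe]
  push_cast
  nlinarith [sq_nonneg ((a : ℝ) - b)]

lemma pl_one_bdd {f g h : ℝ → ℝ≥0∞} (hf : Measurable f) (hg : Measurable g) (hh : Measurable h)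
    (k : NNReal) (hfk : ∀ x, f x ≤ k) (hgk : ∀ x, g x ≤ k)
    (H : ∀ x y, f x * g y ≤ h ((x + y) / 2) ^ 2) :
    (∫⁻ x, f x) * (∫⁻ x, g x) ≤ (∫⁻ x, h x) ^ 2 := by
  have haT : (⨆ x, f x) ≠ ∞ := ((iSup_le hfk).trans_lt ENNReal.coe_lt_top).ne
  have hbT : (⨆ x, g x) ≠ ∞ := ((iSup_le hgk).trans_lt ENNReal.coe_lt_top).ne
  have haf : ∀ x, f x ≤ ⨆ x, f x := le_iSup f
  have hbg : ∀ x, g x ≤ ⨆ x, g x := le_iSup g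
  have hfs : ∀ r < (⨆ x, f x), ∃ x, r < f x := fun r hr => lt_iSup_iff.1 hr
  have hgs : ∀ r < (⨆ x, g x), ∃ x, r < g x := fun r hr => lt_iSup_iff.1 hr
  generalize (⨆ x, f x) = a at *
  generalize (⨆ x, g x) = b at *
  by_cases ha0 : a = 0
  · have : ∀ x, f x = 0 := fun x => by simpa [ha0] using haf x
    simp [this]
  by_cases hb0 : b = 0
  · have : ∀ x, g x = 0 := fun x => by simpa [hb0] using hbg x
    simp [this]
  lift a to NNReal using haT
  lift b to NNReal using hbT
  have ha : (0 : ℝ) < a := by exact_mod_cast pos_iff_ne_zero.2 (by simpa using ha0)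
  have hb : (0 : ℝ) < b := by exact_mod_cast pos_iff_ne_zero.2 (by simpa using hb0)
  set c : ℝ := Real.sqrt (a * b) with hc
  have hcp : 0 < c := Real.sqrt_pos.2 (by positivity)
  have hc2 : c ^ 2 = a * b := Real.sq_sqrt (by positivity)
  have hfin : ∀ x, f x ≠ ∞ := fun x => ((haf x).trans_lt ENNReal.coe_lt_top).ne
  have hgin : ∀ x, g x ≠ ∞ := fun x => ((hbg x).trans_lt ENNReal.coe_lt_top).ne
  set h' : ℝ → ℝ := fun x => (min (h x) (ENNReal.ofReal c)).toReal with hh'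
  have hmin : ∀ x, min (h x) (ENNReal.ofReal c) ≠ ∞ := fun x =>
    ((min_le_right _ _).trans_lt ENNReal.ofReal_lt_top).ne
  have hfa : ∀ x, (f x).toReal ≤ a := fun x => by
    simpa using ENNReal.toReal_mono ENNReal.coe_ne_top (haf x)
  have hgb : ∀ x, (g x).toReal ≤ b := fun x => by
    simpa using ENNReal.toReal_mono ENNReal.coe_ne_top (hbg x)
  have key := pl_one_normalized (f := fun x => (f x).toReal / a) (g := fun x => (g x).toReal / b)
    (h := fun x => h' x / c) (by fun_prop) (by fun_prop) (fun x => by positivity)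
    (fun x => by positivity) (fun x => by positivity) (by fun_prop)
    (fun x => by rw [div_le_one ha]; exact hfa x)
    (fun x => by rw [div_le_one hb]; exact hgb x)
    (fun r hr => by
      obtain ⟨x, hx⟩ := hfs (ENNReal.ofReal (r * a)) (by
        rw [← ENNReal.ofReal_coe_nnreal]
        exact (ENNReal.ofReal_lt_ofReal_iff ha).2 (by nlinarith))
      refine ⟨x, ?_⟩
      rw [lt_div_iff₀ ha]
      exact lt_of_not_ge fun hle => hx.not_ge (by
        rw [← ENNReal.ofReal_toReal (hfin x)]; exact ENNReal.ofReal_le_ofReal hle))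
    (fun r hr => by
      obtain ⟨x, hx⟩ := hgs (ENNReal.ofReal (r * b)) (by
        rw [← ENNReal.ofReal_coe_nnreal]
        exact (ENNReal.ofReal_lt_ofReal_iff hb).2 (by nlinarith))
      refine ⟨x, ?_⟩
      rw [lt_div_iff₀ hb]
      exact lt_of_not_ge fun hle => hx.not_ge (by
        rw [← ENNReal.ofReal_toReal (hgin x)]; exact ENNReal.ofReal_le_ofReal hle))
    (fun x y => by
      rw [div_mul_div_comm, div_pow, hc2]
      gcongr
      simp only [hh']
      rw [← ENNReal.toReal_mul, ← ENNReal.toReal_pow]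
      apply ENNReal.toReal_mono (ENNReal.pow_ne_top (hmin _))
      rcases min_choice (h ((x + y) / 2)) (ENNReal.ofReal c) with e | e
      · rw [e]; exact H x y
      · rw [e, ← ENNReal.ofReal_pow hcp.le, hc2, ENNReal.ofReal_mul ha.le]
        simp only [ENNReal.ofReal_coe_nnreal]
        exact mul_le_mul' (haf x) (hbg y))
  have e1 : ∫⁻ x, ENNReal.ofReal ((f x).toReal / a) = (∫⁻ x, f x) * ENNReal.ofReal (a : ℝ)⁻¹ := by
    rw [← lintegral_mul_const _ hf]
    congr 1; ext x
    rw [div_eq_mul_inv, ENNReal.ofReal_mul (by positivity), ENNReal.ofReal_toReal (hfin x)]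
  have e2 : ∫⁻ x, ENNReal.ofReal ((g x).toReal / b) = (∫⁻ x, g x) * ENNReal.ofReal (b : ℝ)⁻¹ := by
    rw [← lintegral_mul_const _ hg]
    congr 1; ext x
    rw [div_eq_mul_inv, ENNReal.ofReal_mul (by positivity), ENNReal.ofReal_toReal (hgin x)]
  have e3 : ∫⁻ x, ENNReal.ofReal (h' x / c) ≤ (∫⁻ x, h x) * ENNReal.ofReal c⁻¹ := by
    rw [← lintegral_mul_const _ hh]
    refine lintegral_mono fun x => ?_
    simp only [hh']
    rw [div_eq_mul_inv, ENNReal.ofReal_mul (by positivity), ENNReal.ofReal_toReal (hmin x)]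
    gcongr
    exact min_le_left _ _
  rw [e1, e2] at key
  have key2 := (ennreal_amgm _ _).trans (pow_le_pow_left' (key.trans (mul_le_mul_right e3 2)) 2)
  have e4 : ENNReal.ofReal c⁻¹ ^ 2 = ENNReal.ofReal (a : ℝ)⁻¹ * ENNReal.ofReal (b : ℝ)⁻¹ := by
    rw [← ENNReal.ofReal_pow (by positivity), ← ENNReal.ofReal_mul (by positivity), inv_pow, hc2,
      mul_inv]
  have e5 : (4 * (ENNReal.ofReal (a : ℝ)⁻¹ * ENNReal.ofReal (b : ℝ)⁻¹)) *
      ((∫⁻ x, f x) * ∫⁻ x, g x) ≤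
      (4 * (ENNReal.ofReal (a : ℝ)⁻¹ * ENNReal.ofReal (b : ℝ)⁻¹)) * (∫⁻ x, h x) ^ 2 := by
    calc _ = _ := by ring
      _ ≤ _ := key2
      _ = _ := by rw [mul_pow, mul_pow, e4]; ring
  refine (ENNReal.mul_le_mul_iff_right ?_ ?_).1 e5
  · have := inv_pos.2 ha
    have := inv_pos.2 hb
    positivity
  · exact ENNReal.mul_ne_top (by simp) (ENNReal.mul_ne_top (by simp) (by simp))

lemma pl_one {f g h : ℝ → ℝ≥0∞} (hf : Measurable f) (hg : Measurable g) (hh : Measurable h)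
    (H : ∀ x y, f x * g y ≤ h ((x + y) / 2) ^ 2) :
    (∫⁻ x, f x) * (∫⁻ x, g x) ≤ (∫⁻ x, h x) ^ 2 := by
  have tr : ∀ u : ℝ → ℝ≥0∞, Measurable u →
      ∫⁻ x, u x = ⨆ k : ℕ, ∫⁻ x, min (u x) (k : ℝ≥0∞) := by
    intro u hu
    rw [← lintegral_iSup (fun k => hu.min measurable_const)]
    · congr 1; ext x
      rw [← inf_iSup_eq]
      simp [ENNReal.iSup_natCast]
    · intro i j hij x
      exact min_le_min le_rfl (by exact_mod_cast hij)
  have hmono : ∀ u : ℝ → ℝ≥0∞, Monotone fun k : ℕ => ∫⁻ x, min (u x) (k : ℝ≥0∞) := by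
    intro u i j hij
    exact lintegral_mono fun x => min_le_min le_rfl (by exact_mod_cast hij)
  rw [tr f hf, tr g hg, ENNReal.iSup_mul]
  simp only [ENNReal.mul_iSup]
  refine iSup_le fun i => iSup_le fun j => ?_
  refine (mul_le_mul' (hmono f (le_max_left i j)) (hmono g (le_max_right i j))).trans ?_
  generalize max i j = k
  · refine pl_one_bdd (hf.min measurable_const) (hg.min measurable_const) hh k
      (fun x => by simp) (fun x => by simp) fun x y => ?_
    exact (mul_le_mul' (min_le_left _ _) (min_le_left _ _)).trans (H x y)

lemma pl_pi (n : ℕ) : ∀ {f g h : (Fin n → ℝ) → ℝ≥0∞}, Measurable f → Measurable g →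
    Measurable h → (∀ x y, f x * g y ≤ h (fun i => (x i + y i) / 2) ^ 2) →
    (∫⁻ x, f x) * (∫⁻ x, g x) ≤ (∫⁻ x, h x) ^ 2 := by
  induction n with
  | zero =>
    intro f g h hf hg hh H
    rw [lintegral_unique, lintegral_unique, lintegral_unique, volume_pi, Measure.pi_univ]
    simp only [Finset.univ_eq_empty, Finset.prod_empty, mul_one]
    exact (H _ _).trans_eq (congrArg (fun z => h z ^ 2) (Subsingleton.elim _ _))
  | succ n ih =>
    intro f g h hf hg hh H
    have key : ∀ u : (Fin (n + 1) → ℝ) → ℝ≥0∞, Measurable u →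
        ∫⁻ x, u x = ∫⁻ x' : Fin n → ℝ, ∫⁻ s : ℝ, u (Fin.cons s x') := by
      intro u hu
      have e := (volume_preserving_piFinSuccAbove (fun _ : Fin (n + 1) => ℝ) 0).symm
      rw [← e.lintegral_comp hu, Measure.volume_eq_prod, lintegral_prod_symm']
      · refine lintegral_congr fun y => lintegral_congr fun x => ?_
        simp [MeasurableEquiv.piFinSuccAbove, Fin.insertNthEquiv]
      · exact hu.comp e.measurable
    rw [key f hf, key g hg, key h hh]
    have hc : ∀ u : (Fin (n + 1) → ℝ) → ℝ≥0∞, Measurable u →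
        Measurable fun p : (Fin n → ℝ) × ℝ => u (Fin.cons p.2 p.1) := by
      intro u hu
      refine hu.comp ?_
      refine measurable_pi_lambda _ fun i => ?_
      refine Fin.cases ?_ (fun j => ?_) i
      · simpa using measurable_snd
      · simp; fun_prop
    refine ih (hc f hf).lintegral_prod_right' (hc g hg).lintegral_prod_right'
      (hc h hh).lintegral_prod_right' fun x y => ?_
    refine pl_one ((hc f hf).comp measurable_prodMk_left)
      ((hc g hg).comp measurable_prodMk_left) ((hc h hh).comp measurable_prodMk_left)
      fun s t => ?_
    refine (H _ _).trans (le_of_eq ?_)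
    congr 2
    ext i
    refine Fin.cases ?_ (fun j => ?_) i <;> simp

/-- Prékopa–Leindler inequality at the midpoint, on Euclidean space. -/
lemma pl {n : ℕ} {f g h : EuclideanSpace ℝ (Fin n) → ℝ≥0∞} (hf : Measurable f)
    (hg : Measurable g) (hh : Measurable h)
    (H : ∀ x y, f x * g y ≤ h ((1 / 2 : ℝ) • (x + y)) ^ 2) :
    (∫⁻ x, f x) * (∫⁻ x, g x) ≤ (∫⁻ x, h x) ^ 2 := by
  have e := EuclideanSpace.volume_preserving_symm_measurableEquiv_toLp (Fin n)
  have e' := e.symm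
  rw [← e'.lintegral_comp hf, ← e'.lintegral_comp hg, ← e'.lintegral_comp hh]
  refine pl_pi n (hf.comp e'.measurable) (hg.comp e'.measurable) (hh.comp e'.measurable)
    fun x y => ?_
  refine (H _ _).trans (le_of_eq ?_)
  congr 2
  ext i
  simp
  ring

end PC

namespace PC


/-! ### Exponentially bounded functions and exponential moments -/

/-- Euclidean space of dimension `n`. -/
abbrev E (n : ℕ) := EuclideanSpace ℝ (Fin n)

/-- The function `f` grows at most exponentially. -/
def ExpB {n : ℕ} {F : Type*} [NormedAddCommGroup F] (f : E n → F) : Prop :=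
  ∃ C c : ℝ, 0 ≤ C ∧ 0 ≤ c ∧ ∀ x, ‖f x‖ ≤ C * exp (c * ‖x‖)

/-- All exponential moments of `ν` are finite. -/
def HasExp {n : ℕ} (ν : Measure (E n)) : Prop :=
  ∀ c : ℝ, Integrable (fun x => exp (c * ‖x‖)) ν

section
variable {n : ℕ} {F : Type*} [NormedAddCommGroup F]

lemma ExpB.const (a : F) : ExpB (fun _ : E n => a) :=
  ⟨‖a‖, 0, norm_nonneg _, le_rfl, fun x => by simp⟩

lemma ExpB.of_le {f : E n → F} {g : E n → ℝ} (hg : ExpB g) (h : ∀ x, ‖f x‖ ≤ g x) :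
    ExpB f := by
  obtain ⟨C, c, hC, hc, H⟩ := hg
  exact ⟨C, c, hC, hc, fun x => (h x).trans ((le_abs_self _).trans (H x))⟩

lemma ExpB.norm {f : E n → F} (hf : ExpB f) : ExpB (fun x => ‖f x‖) := by
  obtain ⟨C, c, hC, hc, H⟩ := hf
  exact ⟨C, c, hC, hc, fun x => by simpa using H x⟩

lemma ExpB.add {f g : E n → F} (hf : ExpB f) (hg : ExpB g) : ExpB (fun x => f x + g x) := by
  obtain ⟨C, c, hC, hc, H⟩ := hf
  obtain ⟨D, d, hD, hd, H'⟩ := hg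
  refine ⟨C + D, max c d, by positivity, le_max_of_le_left hc, fun x => ?_⟩
  calc ‖f x + g x‖ ≤ ‖f x‖ + ‖g x‖ := norm_add_le _ _
    _ ≤ C * exp (c * ‖x‖) + D * exp (d * ‖x‖) := add_le_add (H x) (H' x)
    _ ≤ C * exp (max c d * ‖x‖) + D * exp (max c d * ‖x‖) := by
        gcongr
        · exact le_max_left _ _
        · exact le_max_right _ _
    _ = _ := by ring

lemma ExpB.neg {f : E n → F} (hf : ExpB f) : ExpB (fun x => - f x) := by
  obtain ⟨C, c, hC, hc, H⟩ := hf
  exact ⟨C, c, hC, hc, fun x => by simpa using H x⟩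

lemma ExpB.sub {f g : E n → F} (hf : ExpB f) (hg : ExpB g) : ExpB (fun x => f x - g x) := by
  simpa [sub_eq_add_neg] using hf.add hg.neg

lemma ExpB.smul [NormedSpace ℝ F] {f : E n → ℝ} {g : E n → F} (hf : ExpB f) (hg : ExpB g) :
    ExpB (fun x => f x • g x) := by
  obtain ⟨C, c, hC, hc, H⟩ := hf
  obtain ⟨D, d, hD, hd, H'⟩ := hg
  refine ⟨C * D, c + d, by positivity, by positivity, fun x => ?_⟩
  rw [norm_smul]
  calc ‖f x‖ * ‖g x‖ ≤ (C * exp (c * ‖x‖)) * (D * exp (d * ‖x‖)) :=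
        mul_le_mul (H x) (H' x) (norm_nonneg _) (by positivity)
    _ = _ := by rw [add_mul, exp_add]; ring

lemma ExpB.mul {f g : E n → ℝ} (hf : ExpB f) (hg : ExpB g) : ExpB (fun x => f x * g x) := by
  simpa using hf.smul hg

lemma ExpB.pow {f : E n → ℝ} (hf : ExpB f) (k : ℕ) : ExpB (fun x => f x ^ k) := by
  induction k with
  | zero => simpa using ExpB.const (1 : ℝ)
  | succ k ih => simpa [pow_succ] using ih.mul hf

lemma expB_id : ExpB (fun x : E n => x) :=
  ⟨1, 1, by simp, by simp, fun x => by
    have := add_one_le_exp ‖x‖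
    simp; linarith⟩

lemma expB_exp (c : ℝ) : ExpB (fun x : E n => exp (c * ‖x‖)) :=
  ⟨1, |c|, by simp, by simp, fun x => by
    simp only [norm_eq_abs, abs_exp, one_mul]
    gcongr
    exact le_abs_self c⟩

lemma expB_inner (v : E n) : ExpB (fun x : E n => ⟪v, x⟫) := by
  refine ((ExpB.const ‖v‖).mul expB_id.norm).of_le fun x => ?_
  exact norm_inner_le_norm v x

lemma expB_coord (i : Fin n) : ExpB (fun x : E n => x i) := by
  refine expB_id.norm.of_le fun x => ?_
  exact PiLp.norm_apply_le x i

lemma expB_exp_inner (v : E n) : ExpB (fun x : E n => exp ⟪v, x⟫) := by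
  refine (expB_exp ‖v‖).of_le fun x => ?_
  simp only [norm_eq_abs, abs_exp]
  gcongr
  exact real_inner_le_norm v x

lemma ExpB.of_bdd {f : E n → F} (C : ℝ) (h : ∀ x, ‖f x‖ ≤ C) : ExpB f :=
  (ExpB.const C).of_le h

lemma _root_.LipschitzWith.expB {f : E n → F} {L : NNReal} (hf : LipschitzWith L f) : ExpB f := by
  refine ((ExpB.const ‖f 0‖).add ((ExpB.const (L : ℝ)).mul expB_id.norm)).of_le fun x => ?_
  have := hf.dist_le_mul x 0
  rw [dist_eq_norm, dist_eq_norm, sub_zero] at this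
  have h2 := norm_add_le (f 0) (f x - f 0)
  rw [add_sub_cancel] at h2
  linarith

lemma ExpB.integrable {f : E n → F} (hf : ExpB f) {ν : Measure (E n)} (hν : HasExp ν)
    (hm : AEStronglyMeasurable f ν) : Integrable f ν := by
  obtain ⟨C, c, hC, hc, H⟩ := hf
  exact ((hν c).const_mul C).mono' hm (Filter.Eventually.of_forall H)

lemma HasExp.isFinite {ν : Measure (E n)} (hν : HasExp ν) : IsFiniteMeasure ν := by
  have := hν 0
  simp only [zero_mul, exp_zero] at this
  simpa [integrable_const_iff] using this

end

/-! ### Poincaré inequality for strongly log-concave measures -/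

/-- The measure `ν` has a density `w` which is `t`-strongly log-concave at midpoints. -/
def SLC {n : ℕ} (t : ℝ) (ν : Measure (E n)) : Prop :=
  ∃ w : E n → ℝ, Measurable w ∧ (∀ x, 0 ≤ w x) ∧
    (∀ x y, w x * w y ≤ w ((1 / 2 : ℝ) • (x + y)) ^ 2 * exp (-(t / 4) * ‖x - y‖ ^ 2)) ∧
    ν = volume.withDensity fun x => ENNReal.ofReal (w x)

/-- The infimal convolution used as a competitor in the Prékopa–Leindler inequality. -/
def infConv {n : ℕ} (f : E n → ℝ) (t : ℝ) (x : E n) : ℝ := ⨅ y, (f y + t / 4 * ‖x - y‖ ^ 2)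

section
variable {n : ℕ} {f : E n → ℝ} {L : NNReal} {t : ℝ}

lemma infConv_aux (hf : LipschitzWith L f) (ht : 0 < t) (x y : E n) :
    f x - L ^ 2 / t ≤ f y + t / 4 * ‖x - y‖ ^ 2 := by
  have h1 := hf.dist_le_mul x y
  rw [Real.dist_eq, dist_eq_norm] at h1
  have h2 := (abs_le.1 h1).2
  have h3 : 0 ≤ (L / t - ‖x - y‖ / 2) ^ 2 * t := by positivity
  have h4 : (L / t - ‖x - y‖ / 2) ^ 2 * t = L ^ 2 / t - L * ‖x - y‖ + t / 4 * ‖x - y‖ ^ 2 := by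
    field_simp; ring
  linarith

lemma infConv_bdd (hf : LipschitzWith L f) (ht : 0 < t) (x : E n) :
    BddBelow (Set.range fun y => f y + t / 4 * ‖x - y‖ ^ 2) :=
  ⟨f x - L ^ 2 / t, by rintro _ ⟨y, rfl⟩; exact infConv_aux hf ht x y⟩

lemma infConv_ge (hf : LipschitzWith L f) (ht : 0 < t) (x : E n) :
    f x - L ^ 2 / t ≤ infConv f t x := le_ciInf fun y => infConv_aux hf ht x y

lemma infConv_le (hf : LipschitzWith L f) (ht : 0 < t) (x y : E n) :
    infConv f t x ≤ f y + t / 4 * ‖x - y‖ ^ 2 := ciInf_le (infConv_bdd hf ht x) y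

lemma infConv_le_self (hf : LipschitzWith L f) (ht : 0 < t) (x : E n) :
    infConv f t x ≤ f x := by simpa using infConv_le hf ht x x

lemma infConv_lip (hf : LipschitzWith L f) (ht : 0 < t) : LipschitzWith L (infConv f t) := by
  refine LipschitzWith.of_le_add_mul L fun x x' => ?_
  have : ∀ y, infConv f t x - L * dist x x' ≤ f y + t / 4 * ‖x' - y‖ ^ 2 := by
    intro y
    have h1 := infConv_le hf ht x (y + (x - x'))
    have h2 := hf.dist_le_mul (y + (x - x')) y
    rw [Real.dist_eq, dist_eq_norm, add_sub_cancel_left, ← dist_eq_norm] at h2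
    have h3 := (abs_le.1 h2).2
    have : x - (y + (x - x')) = x' - y := by abel
    rw [this] at h1
    linarith
  have := le_ciInf this
  simp only [infConv] at *
  linarith

/-- First-order lower bound for the infimal convolution of `ε f` at a point of differentiability:
the defect is asymptotically at most `ε² ‖∇f‖² / t`. -/
lemma infConv_lower (hf : LipschitzWith L f) (ht : 0 < t) {x : E n}
    (hd : DifferentiableAt ℝ f x) {δ : ℝ} (hδ : 0 < δ) :
    ∃ ε₀ > 0, ∀ ε, 0 < ε → ε < ε₀ →
      ε * f x - ε ^ 2 * (‖fderiv ℝ f x‖ + δ) ^ 2 / t ≤ infConv (fun y => ε * f y) t x := by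
  have h1 := (hasFDerivAt_iff_isLittleO.1 hd.hasFDerivAt).def hδ
  obtain ⟨r, hr, hball⟩ := Metric.eventually_nhds_iff.1 h1
  refine ⟨r * t / (4 * (L + 1)), by positivity, fun ε hε hε' => ?_⟩
  rw [lt_div_iff₀ (by positivity)] at hε'
  refine le_ciInf fun y => ?_
  by_cases hy : dist y x < r
  · have h2 := hball hy
    rw [Real.norm_eq_abs] at h2
    have h3 := (abs_le.1 h2).1
    have h4 := (fderiv ℝ f x).le_opNorm (y - x)
    rw [Real.norm_eq_abs] at h4
    have h5 := (abs_le.1 h4).1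
    rw [norm_sub_rev x y]
    set ρ := ‖y - x‖
    set G := ‖fderiv ℝ f x‖
    have h6 : f x - (G + δ) * ρ ≤ f y := by linarith
    have h7 : 0 ≤ (ε * (G + δ) / t - ρ / 2) ^ 2 * t := by positivity
    have h8 : (ε * (G + δ) / t - ρ / 2) ^ 2 * t =
      ε ^ 2 * (G + δ) ^ 2 / t - ε * (G + δ) * ρ + t / 4 * ρ ^ 2 := by field_simp; ring
    have h9 := mul_le_mul_of_nonneg_left h6 hε.le
    linarith
  · push Not at hy
    have h2 := hf.dist_le_mul x y
    rw [Real.dist_eq, dist_comm] at h2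
    have h3 := (abs_le.1 h2).2
    rw [norm_sub_rev x y, ← dist_eq_norm]
    set ρ := dist y x
    have h4 : ε * f x - ε * f y ≤ ε * (L * ρ) := by nlinarith
    have h5 : ε * (L * ρ) ≤ t / 4 * ρ ^ 2 := by
      have : ε * (4 * (L + 1)) ≤ ρ * t := by nlinarith
      have hρ : 0 ≤ ρ := dist_nonneg
      have hL : (0 : ℝ) ≤ L := L.2
      nlinarith [mul_nonneg hε.le hρ]
    have : 0 ≤ ε ^ 2 * (‖fderiv ℝ f x‖ + δ) ^ 2 / t := by positivity
    linarith

lemma exp_cubic (x : ℝ) : 1 + x + x ^ 2 / 2 - |x| ^ 3 ≤ exp x := by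
  by_cases h : |x| ≤ 1
  · have := Real.exp_bound h (n := 3) (by norm_num)
    simp only [Finset.sum_range_succ, Finset.sum_range_zero] at this
    norm_num [Nat.factorial] at this
    have h1 := (abs_le.1 this).1
    have : 0 ≤ |x| ^ 3 := by positivity
    linarith
  · push Not at h
    have hp := exp_pos x
    rcases le_total 0 x with hx | hx
    · have := Real.quadratic_le_exp_of_nonneg hx
      have : 0 ≤ |x| ^ 3 := by positivity
      linarith
    · rw [abs_of_nonpos hx] at *
      nlinarith [mul_nonneg (sub_nonneg.2 h.le) (sub_nonneg.2 h.le)]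

/-- Exponential form of the transport-type inequality implied by Prékopa–Leindler. -/
lemma slc_exp {ν : Measure (E n)} [IsProbabilityMeasure ν] (hν : SLC t ν) (hE : HasExp ν)
    (ht : 0 < t) (hf : LipschitzWith L f) :
    (∫ x, exp (infConv f t x) ∂ν) * (∫ x, exp (-f x) ∂ν) ≤ 1 := by
  obtain ⟨w, hw, hw0, hlc, rfl⟩ := hν
  have hfc := hf.continuous
  have huc := (infConv_lip hf ht).continuous
  have hwm : Measurable fun x => ENNReal.ofReal (w x) := hw.ennreal_ofReal
  have H := pl (f := fun x => ENNReal.ofReal (w x) * ENNReal.ofReal (exp (infConv f t x)))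
    (g := fun x => ENNReal.ofReal (w x) * ENNReal.ofReal (exp (-f x)))
    (h := fun x => ENNReal.ofReal (w x)) (hwm.mul (by fun_prop)) (hwm.mul (by fun_prop)) hwm ?_
  · have h1 : ∫⁻ x, ENNReal.ofReal (w x) = 1 := by
      have := measure_univ (μ := volume.withDensity fun x => ENNReal.ofReal (w x))
      rwa [withDensity_apply _ .univ, Measure.restrict_univ] at this
    have h2 : ∀ u : E n → ℝ, Continuous u →
        ∫⁻ x, ENNReal.ofReal (w x) * ENNReal.ofReal (exp (u x)) =
        ∫⁻ x, ENNReal.ofReal (exp (u x)) ∂(volume.withDensity fun x => ENNReal.ofReal (w x)) := by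
      intro u hu
      rw [lintegral_withDensity_eq_lintegral_mul _ hwm (by fun_prop)]
      rfl
    have h3 : ∀ u : E n → ℝ, Continuous u →
        ∫ x, exp (u x) ∂(volume.withDensity fun x => ENNReal.ofReal (w x)) =
        (∫⁻ x, ENNReal.ofReal (w x) * ENNReal.ofReal (exp (u x))).toReal := by
      intro u hu
      rw [h2 u hu, integral_eq_lintegral_of_nonneg_ae (Filter.Eventually.of_forall fun x =>
        (exp_pos _).le) (by fun_prop)]
    rw [h3 _ huc, h3 (fun x => -f x) hfc.neg, ← ENNReal.toReal_mul]
    rw [h1] at H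
    refine ENNReal.toReal_le_of_le_ofReal zero_le_one ?_
    simpa using H
  · intro x y
    rw [← ENNReal.ofReal_mul (hw0 x), ← ENNReal.ofReal_mul (hw0 y),
      ← ENNReal.ofReal_mul (mul_nonneg (hw0 x) (exp_pos _).le), ← ENNReal.ofReal_pow (hw0 _)]
    refine ENNReal.ofReal_le_ofReal ?_
    calc w x * exp (infConv f t x) * (w y * exp (-f y))
        = (w x * w y) * exp (infConv f t x - f y) := by
          rw [sub_eq_add_neg, exp_add]; ring
      _ ≤ (w ((1 / 2 : ℝ) • (x + y)) ^ 2 * exp (-(t / 4) * ‖x - y‖ ^ 2)) *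
          exp (infConv f t x - f y) := mul_le_mul_of_nonneg_right (hlc x y) (exp_pos _).le
      _ = w ((1 / 2 : ℝ) • (x + y)) ^ 2 *
          exp (-(t / 4) * ‖x - y‖ ^ 2 + (infConv f t x - f y)) := by rw [exp_add]; ring
      _ ≤ w ((1 / 2 : ℝ) • (x + y)) ^ 2 * 1 := by
          gcongr
          rw [exp_le_one_iff]
          linarith [infConv_le hf ht x y]
      _ = _ := mul_one _


lemma norm_fderiv_le_lip (hf : LipschitzWith L f) (x : E n) : ‖fderiv ℝ f x‖ ≤ L :=
  norm_fderiv_le_of_lipschitz ℝ hf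

lemma norm_gradient (f : E n → ℝ) (x : E n) : ‖gradient f x‖ = ‖fderiv ℝ f x‖ := by
  simp [gradient]

lemma measurable_gradient (f : E n → ℝ) : Measurable (gradient f) := by
  unfold gradient
  exact (InnerProductSpace.toDual ℝ (E n)).symm.continuous.measurable.comp (measurable_fderiv ℝ f)

/-- Second-order expansion, at scale `ε`, of the inequality `slc_exp`. -/
lemma expand_aux {S Q B c ε A D : ℝ} (hS : 0 ≤ S) (hQ : 0 ≤ Q) (hQB : Q ≤ B) (hc : 0 ≤ c)
    (hε : 0 < ε) (hε1 : ε ≤ 1) (hε2 : ε * (S + B + c) ≤ 1 / 2)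
    (hA : 1 + ε ^ 2 * (S / 2 - Q) - ε ^ 3 * c ≤ A) (hD : 1 + ε ^ 2 * (S / 2) - ε ^ 3 * c ≤ D)
    (h : A * D ≤ 1) : S ≤ Q + ε * (2 * c + (S + B + c) ^ 2) := by
  set α := S / 2 - Q - c * ε with hα
  set β := S / 2 - c * ε with hβ
  have hcε : c * ε ≤ c := by nlinarith
  have hcε0 : 0 ≤ c * ε := by positivity
  have h1 : |α| ≤ S + B + c := abs_le.2 ⟨by linarith, by linarith⟩
  have h2 : |β| ≤ S + B + c := abs_le.2 ⟨by linarith, by linarith⟩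
  have hB : 0 ≤ S + B + c := by linarith
  have e1 : 1 + ε ^ 2 * α ≤ A := by rw [hα]; linarith
  have e2 : 1 + ε ^ 2 * β ≤ D := by rw [hβ]; linarith
  have hsm : ε ^ 2 * (S + B + c) ≤ 1 / 2 := by nlinarith
  have a1 : 0 < 1 + ε ^ 2 * α := by
    have := (abs_le.1 h1).1
    nlinarith [sq_nonneg ε]
  have a2 : 0 < 1 + ε ^ 2 * β := by
    have := (abs_le.1 h2).1
    nlinarith [sq_nonneg ε]
  have h3 : (1 + ε ^ 2 * α) * (1 + ε ^ 2 * β) ≤ 1 :=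
    (mul_le_mul e1 e2 a2.le (a1.le.trans e1)).trans h
  have h4 : ε ^ 2 * (α + β + ε ^ 2 * (α * β)) ≤ 0 := by linarith
  have h5 : α + β + ε ^ 2 * (α * β) ≤ 0 := by
    by_contra hcon
    push Not at hcon
    have : 0 < ε ^ 2 * (α + β + ε ^ 2 * (α * β)) := by positivity
    linarith
  have h6 : |α * β| ≤ (S + B + c) ^ 2 := by
    rw [abs_mul, sq]; exact mul_le_mul h1 h2 (abs_nonneg _) hB
  have h7 := (abs_le.1 h6).1
  have h8 : ε ^ 2 * (α * β) ≥ - (ε * (S + B + c) ^ 2) := by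
    have : ε ^ 2 ≤ ε := by nlinarith
    nlinarith [sq_nonneg (S + B + c), sq_nonneg ε]
  linarith

lemma exp_expand {ε a q B : ℝ} (hε : 0 < ε) (hε1 : ε ≤ 1) (hq : 0 ≤ q) (hqB : q ≤ B) :
    1 + ε * a - ε ^ 2 * q + ε ^ 2 * (a ^ 2 / 2) - ε ^ 3 * (|a| * B + (|a| + B) ^ 3)
      ≤ exp (ε * a - ε ^ 2 * q) := by
  refine le_trans ?_ (exp_cubic _)
  have h1 : |ε * a - ε ^ 2 * q| ≤ ε * (|a| + B) := by
    have e1 : |ε * a| = ε * |a| := by rw [abs_mul, abs_of_pos hε]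
    have e2 : |ε ^ 2 * q| ≤ ε * B := by
      rw [abs_of_nonneg (by positivity)]
      have : ε ^ 2 ≤ ε := by nlinarith
      exact mul_le_mul this hqB hq hε.le
    calc _ ≤ |ε * a| + |ε ^ 2 * q| := abs_sub _ _
      _ ≤ _ := by rw [e1]; linarith
  have h2 := pow_le_pow_left₀ (abs_nonneg _) h1 3
  have h3 : a * q ≤ |a| * B := by
    have := mul_le_mul (le_refl |a|) hqB hq (abs_nonneg a)
    have h := mul_le_mul_of_nonneg_right (le_abs_self a) hq
    linarith
  have h4 : ε ^ 3 * (a * q) ≤ ε ^ 3 * (|a| * B) := by gcongr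
  have h5 : 0 ≤ (ε ^ 2 * q) ^ 2 := by positivity
  nlinarith

/-- The centered case of the Poincaré inequality. -/
lemma poincare_slc_centered {ν : Measure (E n)} [IsProbabilityMeasure ν] (hν : SLC t ν)
    (hE : HasExp ν) (ht : 0 < t) (hf : LipschitzWith L f) (hd : Differentiable ℝ f)
    (h0 : ∫ x, f x ∂ν = 0) :
    ∫ x, f x ^ 2 ∂ν ≤ (1 / t) * ∫ x, ‖gradient f x‖ ^ 2 ∂ν := by
  set B : ℝ := L ^ 2 / t with hB
  have hfc := hf.continuous
  have hfB := hf.expB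
  have hfm := hfc.aestronglyMeasurable (μ := ν)
  have hfi : Integrable f ν := hfB.integrable hE hfm
  have hf2i : Integrable (fun x => f x ^ 2) ν := (hfB.pow 2).integrable hE (by fun_prop)
  set P : E n → ℝ := fun x => |f x| * B + (|f x| + B) ^ 3 with hP
  have hPi : Integrable P ν := by
    refine ExpB.integrable ?_ hE (by fun_prop)
    exact (hfB.norm.mul (.const B)).add ((hfB.norm.add (.const B)).pow 3)
  set S := ∫ x, f x ^ 2 ∂ν with hS
  set c := ∫ x, P x ∂ν with hc
  have hB0 : 0 ≤ B := by positivity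
  have hc0 : 0 ≤ c := integral_nonneg fun x => by simp only [hP, Pi.zero_apply]; positivity
  have hS0 : 0 ≤ S := integral_nonneg fun x => by simp only [Pi.zero_apply]; positivity
  set g : E n → ℝ := fun x => ‖gradient f x‖ ^ 2 / t with hg
  have hgB : ∀ x, g x ≤ B := fun x => by
    simp only [hg, hB, norm_gradient]
    gcongr
    exact norm_fderiv_le_lip hf x
  have hg0 : ∀ x, 0 ≤ g x := fun x => by simp only [hg]; positivity
  have hgm : Measurable g := by
    have := measurable_gradient f
    simp only [hg]; fun_prop
  set q : ℝ → E n → ℝ := fun ε x => (ε * f x - infConv (fun y => ε * f y) t x) / ε ^ 2 with hq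
  have hlip : ∀ ε : NNReal, LipschitzWith (ε * L) (fun y => (ε : ℝ) * f y) := fun ε => by
    refine LipschitzWith.of_dist_le_mul fun x y => ?_
    have := hf.dist_le_mul x y
    rw [Real.dist_eq] at *
    rw [← mul_sub, abs_mul, NNReal.abs_eq]
    push_cast
    rw [mul_assoc]
    exact mul_le_mul_of_nonneg_left this ε.2
  have hlip' : ∀ ε : ℝ, 0 < ε → LipschitzWith (ε.toNNReal * L) (fun y => (ε : ℝ) * f y) := by
    intro ε hε
    have := hlip ε.toNNReal
    rwa [Real.coe_toNNReal ε hε.le] at this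
  have hq0 : ∀ ε > 0, ∀ x, 0 ≤ q ε x := fun ε hε x =>
    div_nonneg (sub_nonneg.2 (infConv_le_self (hlip' ε hε) ht x)) (by positivity)
  have hqB : ∀ ε > 0, ∀ x, q ε x ≤ B := fun ε hε x => by
    have := infConv_ge (hlip' ε hε) ht x
    push_cast [Real.coe_toNNReal ε hε.le] at this
    simp only [hq, hB]
    rw [div_le_iff₀ (by positivity)]
    have e : (ε * (L : ℝ)) ^ 2 / t = L ^ 2 / t * ε ^ 2 := by ring
    linarith
  have hqm : ∀ ε > 0, Continuous (q ε) := fun ε hε => by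
    have := (infConv_lip (hlip' ε hε) ht).continuous
    simp only [hq]; fun_prop
  have hqi : ∀ ε > 0, Integrable (q ε) ν := fun ε hε =>
    Integrable.of_bound (hqm ε hε).aestronglyMeasurable B (Filter.Eventually.of_forall fun x => by
      rw [Real.norm_eq_abs, abs_of_nonneg (hq0 ε hε x)]; exact hqB ε hε x)
  have hmaxi : ∀ ε > 0, Integrable (fun x => max (q ε x) (g x)) ν := fun ε hε =>
    Integrable.of_bound ((hqm ε hε).measurable.max hgm).aestronglyMeasurable B
      (Filter.Eventually.of_forall fun x => by
        rw [Real.norm_eq_abs, abs_of_nonneg (le_max_of_le_right (hg0 x))]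
        exact max_le (hqB ε hε x) (hgB x))
  have main : ∀ ε > 0, ε ≤ 1 → ε * (S + B + c) ≤ 1 / 2 →
      S ≤ (∫ x, max (q ε x) (g x) ∂ν) + ε * (2 * c + (S + B + c) ^ 2) := by
    intro ε hε hε1 hε2
    have hQB : ∫ x, q ε x ∂ν ≤ B := by
      calc ∫ x, q ε x ∂ν ≤ ∫ _, B ∂ν := integral_mono (hqi ε hε) (integrable_const _) (hqB ε hε)
        _ = B := by simp
    have hu : ∀ x, infConv (fun y => ε * f y) t x = ε * f x - ε ^ 2 * q ε x := fun x => by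
      simp only [hq]; field_simp; ring
    have hA : 1 + ε ^ 2 * (S / 2 - ∫ x, q ε x ∂ν) - ε ^ 3 * c
        ≤ ∫ x, exp (infConv (fun y => ε * f y) t x) ∂ν := by
      have hle : ∫ x, (1 + ε * f x - ε ^ 2 * q ε x + ε ^ 2 * (f x ^ 2 / 2) - ε ^ 3 * P x) ∂ν ≤
          ∫ x, exp (infConv (fun y => ε * f y) t x) ∂ν := by
        refine integral_mono ?_ ?_ fun x => ?_
        · exact ((((integrable_const _).add (hfi.const_mul _)).sub ((hqi ε hε).const_mul _)).add
            ((hf2i.div_const 2).const_mul _)).sub (hPi.const_mul _)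
        · have hc := (infConv_lip (hlip' ε hε) ht).continuous
          have hub : ∀ x, ‖exp (infConv (fun y => ε * f y) t x)‖ ≤
              exp (ε * |f 0|) * exp (ε * L * ‖x‖) := fun x => by
            rw [Real.norm_eq_abs, abs_exp, ← exp_add]
            refine exp_le_exp.2 ((infConv_le_self (hlip' ε hε) ht x).trans ?_)
            have h1 := hf.dist_le_mul x 0
            rw [Real.dist_eq, dist_zero_right] at h1
            have h2 := (abs_le.1 h1).2
            have h3 := le_abs_self (f 0)
            nlinarith
          exact (ExpB.of_le ((ExpB.const _).mul (expB_exp _)) hub).integrable hE (by fun_prop)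
        · simp only [hu]
          exact exp_expand hε hε1 (hq0 ε hε x) (hqB ε hε x)
      refine le_trans (le_of_eq ?_) hle
      rw [integral_sub, integral_add, integral_sub, integral_add, integral_const_mul,
        integral_const_mul, integral_const_mul, integral_const_mul, show ∫ x, f x ^ 2 / 2 ∂ν = S / 2 from integral_div _ _, h0]
      · rw [show ∫ _ : E n, (1 : ℝ) ∂ν = 1 by simp]; ring
      · exact integrable_const _
      · exact hfi.const_mul _
      · exact (integrable_const _).add (hfi.const_mul _)
      · exact (hqi ε hε).const_mul _
      · exact ((integrable_const _).add (hfi.const_mul _)).sub ((hqi ε hε).const_mul _)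
      · exact (hf2i.div_const 2).const_mul _
      · exact (((integrable_const _).add (hfi.const_mul _)).sub ((hqi ε hε).const_mul _)).add
            ((hf2i.div_const 2).const_mul _)
      · exact hPi.const_mul _
    have hD : 1 + ε ^ 2 * (S / 2) - ε ^ 3 * c ≤ ∫ x, exp (-(ε * f x)) ∂ν := by
      have hle : ∫ x, (1 + -ε * f x + ε ^ 2 * (f x ^ 2 / 2) - ε ^ 3 * P x) ∂ν ≤
          ∫ x, exp (-(ε * f x)) ∂ν := by
        refine integral_mono ?_ ?_ fun x => ?_
        · exact (((integrable_const _).add (hfi.const_mul _)).add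
            ((hf2i.div_const 2).const_mul _)).sub (hPi.const_mul _)
        · have hub : ∀ x, ‖exp (-(ε * f x))‖ ≤
              exp (ε * |f 0|) * exp (ε * L * ‖x‖) := fun x => by
            rw [Real.norm_eq_abs, abs_exp, ← exp_add]
            refine exp_le_exp.2 ?_
            have h1 := hf.dist_le_mul x 0
            rw [Real.dist_eq, dist_zero_right] at h1
            have h2 := (abs_le.1 h1).1
            have h3 := neg_abs_le (f 0)
            nlinarith
          exact (ExpB.of_le ((ExpB.const _).mul (expB_exp _)) hub).integrable hE (by fun_prop)
        · have := exp_expand (a := -f x) hε hε1 le_rfl hB0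
          rw [abs_neg] at this
          simp only [hP]
          rw [show -(ε * f x) = ε * -f x - ε ^ 2 * 0 by ring]
          exact le_trans (le_of_eq (by ring)) this
      refine le_trans (le_of_eq ?_) hle
      rw [integral_sub, integral_add, integral_add, integral_const_mul,
        integral_const_mul, integral_const_mul, show ∫ x, f x ^ 2 / 2 ∂ν = S / 2 from integral_div _ _, h0]
      · rw [show ∫ _ : E n, (1 : ℝ) ∂ν = 1 by simp]; ring
      · exact integrable_const _
      · exact hfi.const_mul _
      · exact (integrable_const _).add (hfi.const_mul _)
      · exact (hf2i.div_const 2).const_mul _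
      · exact ((integrable_const _).add (hfi.const_mul _)).add ((hf2i.div_const 2).const_mul _)
      · exact hPi.const_mul _
    have h1 := expand_aux hS0 (integral_nonneg (hq0 ε hε)) hQB hc0 hε hε1 hε2 hA hD
      (slc_exp hν hE ht (hlip' ε hε))
    have h2 : ∫ x, q ε x ∂ν ≤ ∫ x, max (q ε x) (g x) ∂ν :=
      integral_mono (hqi ε hε) (hmaxi ε hε) fun x => le_max_left _ _
    linarith
  have hlim : Filter.Tendsto (fun k : ℕ => (∫ x, max (q (1 / ((k : ℝ) + 1)) x) (g x) ∂ν) +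
      1 / ((k : ℝ) + 1) * (2 * c + (S + B + c) ^ 2)) Filter.atTop
      (nhds ((∫ x, g x ∂ν) + 0 * (2 * c + (S + B + c) ^ 2))) := by
    refine Filter.Tendsto.add ?_ (tendsto_one_div_add_atTop_nhds_zero_nat.mul_const _)
    refine tendsto_integral_of_dominated_convergence (fun _ => B) (fun k => ?_)
      (integrable_const _) (fun k => ?_) ?_
    · exact (hmaxi _ (by positivity)).aestronglyMeasurable
    · refine Filter.Eventually.of_forall fun x => ?_
      rw [Real.norm_eq_abs, abs_of_nonneg (le_max_of_le_right (hg0 x))]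
      exact max_le (hqB _ (by positivity) x) (hgB x)
    · refine Filter.Eventually.of_forall fun x => ?_
      rw [Metric.tendsto_atTop]
      intro η hη
      -- choose `δ` with `(‖∇f‖ + δ)² / t < ‖∇f‖² / t + η`
      have hcont : Filter.Tendsto (fun δ : ℝ => (‖fderiv ℝ f x‖ + δ) ^ 2 / t)
          (nhdsWithin 0 (Set.Ioi 0)) (nhds (g x)) := by
        have : Continuous fun δ : ℝ => (‖fderiv ℝ f x‖ + δ) ^ 2 / t := by fun_prop
        have h := this.tendsto 0
        simp only [add_zero] at h
        simp only [hg, norm_gradient]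
        exact h.mono_left nhdsWithin_le_nhds
      obtain ⟨δ, hδ1, hδ0⟩ := ((hcont.eventually (gt_mem_nhds (show g x < g x + η by linarith))).and
        self_mem_nhdsWithin).exists
      obtain ⟨ε₀, hε₀, H⟩ := infConv_lower hf ht (hd x) (δ := δ) hδ0
      obtain ⟨N, hN⟩ := exists_nat_one_div_lt hε₀
      refine ⟨N, fun k hk => ?_⟩
      have hkε : (1 : ℝ) / (k + 1) < ε₀ := by
        refine lt_of_le_of_lt ?_ hN
        gcongr
      have hpos : (0 : ℝ) < 1 / (k + 1) := by positivity
      have h1 := H _ hpos hkε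
      have h2 : q (1 / ((k : ℝ) + 1)) x ≤ (‖fderiv ℝ f x‖ + δ) ^ 2 / t := by
        simp only [hq]
        rw [div_le_iff₀ (by positivity)]
        generalize (1 : ℝ) / (k + 1) = ε at *
        have : ε ^ 2 * (‖fderiv ℝ f x‖ + δ) ^ 2 / t = (‖fderiv ℝ f x‖ + δ) ^ 2 / t * ε ^ 2 := by
          ring
        linarith
      rw [Real.dist_eq, abs_of_nonneg (sub_nonneg.2 (le_max_right _ _)), sub_lt_iff_lt_add']
      exact max_lt (h2.trans_lt hδ1) (by linarith)
  have hfinal : S ≤ (∫ x, g x ∂ν) + 0 * (2 * c + (S + B + c) ^ 2) := by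
    refine ge_of_tendsto hlim ?_
    have hsm : Filter.Tendsto (fun k : ℕ => 1 / ((k : ℝ) + 1) * (S + B + c)) Filter.atTop
        (nhds (0 * (S + B + c))) := tendsto_one_div_add_atTop_nhds_zero_nat.mul_const _
    rw [zero_mul] at hsm
    filter_upwards [hsm.eventually (gt_mem_nhds (show (0 : ℝ) < 1 / 2 by norm_num))] with k hk
    refine main _ (by positivity) ?_ hk.le
    rw [div_le_one (by positivity)]
    have : (0 : ℝ) ≤ k := by positivity
    linarith
  have e : ∫ x, g x ∂ν = (1 / t) * ∫ x, ‖gradient f x‖ ^ 2 ∂ν := by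
    rw [← integral_const_mul]
    congr 1; ext x; simp only [hg]; ring
  rw [← e]
  linarith

/-- Brascamp–Lieb/Poincaré inequality for a `t`-strongly log-concave probability measure. -/
theorem poincare_slc {ν : Measure (E n)} [IsProbabilityMeasure ν] (hν : SLC t ν)
    (hE : HasExp ν) (ht : 0 < t) (hf : LipschitzWith L f) (hd : Differentiable ℝ f) :
    ProbabilityTheory.variance f ν ≤ (1 / t) * ∫ x, ‖gradient f x‖ ^ 2 ∂ν := by
  have hfi : Integrable f ν := hf.expB.integrable hE hf.continuous.aestronglyMeasurable
  rw [ProbabilityTheory.variance_eq_integral hfi.aemeasurable]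
  set m := ∫ x, f x ∂ν
  have h := poincare_slc_centered (f := fun x => f x - m) hν hE ht (L := L)
    (LipschitzWith.of_dist_le_mul fun x y => by
      simpa [Real.dist_eq] using hf.dist_le_mul x y) (by fun_prop) (by
      rw [integral_sub hfi (integrable_const _)]; simp [m])
  have e : gradient (fun x => f x - m) = gradient f := by
    ext1 x; simp [gradient, fderiv_sub_const]
  rwa [e] at h

end

end PC

namespace PC
open scoped ContDiff


/-! ### Laplace transforms: smoothness and derivatives -/

section laplace
variable {X V F : Type} [MeasurableSpace X] [NormedAddCommGroup V] [NormedSpace ℝ V]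
  [NormedAddCommGroup F] [NormedSpace ℝ F]

/-- The Laplace transform `v ↦ ∫ exp (S x v) f x dW(x)`, where the exponent is given by a field of
linear forms `S`. -/
def lap (W : Measure X) (S : X → V →L[ℝ] ℝ) (f : X → F) (v : V) : F :=
  ∫ x, exp (S x v) • f x ∂W

/-- The function `f` grows at most exponentially in `‖S x‖`. -/
def LapB (W : Measure X) (S : X → V →L[ℝ] ℝ) (f : X → F) : Prop :=
  AEStronglyMeasurable f W ∧ ∃ C c : ℝ, 0 ≤ C ∧ ∀ᵐ x ∂W, ‖f x‖ ≤ C * exp (c * ‖S x‖)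

/-- The exponents `S` have all exponential moments. -/
def LapM (W : Measure X) (S : X → V →L[ℝ] ℝ) : Prop :=
  AEStronglyMeasurable S W ∧ ∀ c : ℝ, Integrable (fun x => exp (c * ‖S x‖)) W

variable {W : Measure X} {S : X → V →L[ℝ] ℝ} {f : X → F}

lemma LapB.deriv (hS : LapM W S) (hf : LapB W S f) :
    LapB W S (fun x => (S x).smulRight (f x)) := by
  obtain ⟨hm, C, c, hC, H⟩ := hf
  refine ⟨?_, C, c + 1, hC, ?_⟩
  · exact ((ContinuousLinearMap.smulRightL ℝ V F).continuous₂).comp_aestronglyMeasurable₂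
      hS.1 hm
  · filter_upwards [H] with x hx
    rw [ContinuousLinearMap.norm_smulRight_apply, add_mul, exp_add, one_mul]
    have := add_one_le_exp ‖S x‖
    have h1 : ‖S x‖ ≤ exp ‖S x‖ := by linarith
    calc ‖S x‖ * ‖f x‖ ≤ exp ‖S x‖ * (C * exp (c * ‖S x‖)) :=
          mul_le_mul h1 hx (norm_nonneg _) (exp_pos _).le
      _ = _ := by ring

lemma exp_clm_le (S : V →L[ℝ] ℝ) (v : V) : exp (S v) ≤ exp (‖v‖ * ‖S‖) := by
  refine exp_le_exp.2 ((le_abs_self _).trans ?_)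
  rw [mul_comm]; exact S.le_opNorm v

lemma LapB.meas (hS : LapM W S) (hf : LapB W S f) (v : V) :
    AEStronglyMeasurable (fun x => exp (S x v) • f x) W := by
  have h1 : AEStronglyMeasurable (fun x => S x v) W :=
    (ContinuousLinearMap.apply ℝ ℝ v).continuous.comp_aestronglyMeasurable hS.1
  exact (Real.continuous_exp.comp_aestronglyMeasurable h1).smul hf.1

lemma LapB.integrable (hS : LapM W S) (hf : LapB W S f) (v : V) :
    Integrable (fun x => exp (S x v) • f x) W := by
  have hm := hf.meas hS v
  obtain ⟨_, C, c, hC, H⟩ := hf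
  refine ((hS.2 (‖v‖ + c)).const_mul C).mono' hm ?_
  filter_upwards [H] with x hx
  rw [norm_smul, Real.norm_eq_abs, abs_exp, add_mul, exp_add]
  calc _ ≤ exp (‖v‖ * ‖S x‖) * (C * exp (c * ‖S x‖)) :=
        mul_le_mul (exp_clm_le _ _) hx (norm_nonneg _) (exp_pos _).le
    _ = _ := by ring

lemma lap_hasFDerivAt [CompleteSpace F] (hS : LapM W S) (hf : LapB W S f) (v₀ : V) :
    HasFDerivAt (lap W S f) (lap W S (fun x => (S x).smulRight (f x)) v₀) v₀ := by
  have hd := hf.deriv hS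
  have hd2 := hd
  obtain ⟨_, C, c, hC, H⟩ := hd2
  unfold lap
  refine hasFDerivAt_integral_of_dominated_of_fderiv_le
    (F := fun v x => exp (S x v) • f x)
    (F' := fun v x => exp (S x v) • (S x).smulRight (f x))
    (bound := fun x => C * exp ((‖v₀‖ + 1 + c) * ‖S x‖)) (Metric.ball_mem_nhds v₀ one_pos)
    (Filter.Eventually.of_forall fun v => hf.meas hS v) (hf.integrable hS v₀) (hd.meas hS v₀)
    ?_ ((hS.2 _).const_mul C) ?_
  · filter_upwards [H] with x hx v hv
    rw [norm_smul, Real.norm_eq_abs, abs_exp, add_mul, exp_add]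
    have hv' : ‖v‖ ≤ ‖v₀‖ + 1 := by
      rw [mem_ball_iff_norm] at hv
      have := norm_sub_norm_le v v₀
      linarith
    calc _ ≤ exp ((‖v₀‖ + 1) * ‖S x‖) * (C * exp (c * ‖S x‖)) := by
          refine mul_le_mul ((exp_clm_le _ _).trans ?_) hx (norm_nonneg _) (exp_pos _).le
          gcongr
      _ = _ := by ring
  · refine Filter.Eventually.of_forall fun x v _ => ?_
    have h1 : HasFDerivAt (fun v => exp (S x v)) (exp (S x v) • S x) v :=
      (S x).hasFDerivAt.exp
    have h2 := h1.smul_const (f x)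
    convert h2 using 1
    ext u
    simp [smul_smul]

lemma lap_contDiff_nat (hS : LapM W S) (k : ℕ) : ∀ {F : Type} [NormedAddCommGroup F]
    [NormedSpace ℝ F] [CompleteSpace F] {f : X → F}, LapB W S f → ContDiff ℝ k (lap W S f) := by
  induction k with
  | zero =>
    intro F _ _ _ f hf
    rw [Nat.cast_zero, contDiff_zero]
    exact continuous_iff_continuousAt.2 fun v => (lap_hasFDerivAt hS hf v).continuousAt
  | succ k ih =>
    intro F _ _ _ f hf
    rw [Nat.cast_succ, contDiff_succ_iff_fderiv]
    refine ⟨fun v => (lap_hasFDerivAt hS hf v).differentiableAt, by simp, ?_⟩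
    have : fderiv ℝ (lap W S f) = lap W S (fun x => (S x).smulRight (f x)) :=
      funext fun v => (lap_hasFDerivAt hS hf v).fderiv
    rw [this]
    exact ih (hf.deriv hS)

lemma lap_contDiff [CompleteSpace F] (hS : LapM W S) (hf : LapB W S f) :
    ContDiff ℝ ∞ (lap W S f) := contDiff_infty.2 fun k => lap_contDiff_nat hS k hf

end laplace

/-! ### Exponential tilts of a measure -/

lemma ExpB.lapB {n : ℕ} {F : Type} [NormedAddCommGroup F] {W : Measure (E n)} {f : E n → F}
    (hf : ExpB f) (hm : AEStronglyMeasurable f W) :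
    LapB W (fun x : E n => innerSL ℝ x) f := by
  obtain ⟨C, c, hC, hc, H⟩ := hf
  exact ⟨hm, C, c, hC, Filter.Eventually.of_forall fun x => by simpa using H x⟩

section tilt
variable {n : ℕ} {F : Type} [NormedAddCommGroup F] [NormedSpace ℝ F]

/-- The exponential tilt of `W` in the direction `θ`, normalized to a probability measure. -/
def tl (W : Measure (E n)) (θ : E n) : Measure (E n) := W.tilted fun x => ⟪θ, x⟫

lemma lapM_of_hasExp {W : Measure (E n)} (hW : HasExp W) :
    LapM W (fun x : E n => innerSL ℝ x) :=
  ⟨(innerSL ℝ).continuous.aestronglyMeasurable, fun c => by simpa using hW c⟩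

variable {W : Measure (E n)}

lemma HasExp.integrable_exp_inner (hW : HasExp W) (θ : E n) :
    Integrable (fun x => exp ⟪θ, x⟫) W :=
  (expB_exp_inner θ).integrable hW (by fun_prop)

lemma tl_prob (hW : HasExp W) (h0 : W ≠ 0) (θ : E n) : IsProbabilityMeasure (tl W θ) := by
  have : NeZero W := ⟨h0⟩
  exact isProbabilityMeasure_tilted (hW.integrable_exp_inner θ)

lemma tl_ac (θ : E n) : tl W θ ≪ W := tilted_absolutelyContinuous W _

lemma integral_tl (f : E n → F) (θ : E n) :
    ∫ x, f x ∂(tl W θ) = (∫ x, exp ⟪θ, x⟫ ∂W)⁻¹ • ∫ x, exp ⟪θ, x⟫ • f x ∂W := by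
  unfold tl
  rw [integral_tilted, ← integral_smul]
  congr 1; ext x
  rw [smul_smul, div_eq_inv_mul]

lemma tl_hasExp (hW : HasExp W) (θ : E n) : HasExp (tl W θ) := by
  intro c
  unfold tl
  rw [integrable_tilted_iff]
  · exact ((expB_exp_inner θ).smul (expB_exp c)).integrable hW (by fun_prop)
  · exact hW.integrable_exp_inner θ

lemma exp_inner_integral_pos (hW : HasExp W) (h0 : W ≠ 0) (θ : E n) :
    0 < ∫ x, exp ⟪θ, x⟫ ∂W := by
  have : NeZero W := ⟨h0⟩
  exact integral_exp_pos (hW.integrable_exp_inner θ)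

/-- Expectation under the tilt, as a function of the tilt, has derivative the covariance. -/
lemma tl_hasFDerivAt [CompleteSpace F] (hW : HasExp W) (h0 : W ≠ 0) {f : E n → F} (hf : ExpB f)
    (hm : AEStronglyMeasurable f W) (θ : E n) :
    HasFDerivAt (fun θ => ∫ x, f x ∂(tl W θ))
      (∫ x, (innerSL ℝ x).smulRight (f x) ∂(tl W θ) -
        (innerSL ℝ (∫ x, x ∂(tl W θ))).smulRight (∫ x, f x ∂(tl W θ))) θ := by
  have hS := lapM_of_hasExp hW
  have h1 := lap_hasFDerivAt hS (hf.lapB hm) θ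
  have h2 := lap_hasFDerivAt hS ((ExpB.const (1 : ℝ)).lapB (W := W) (by fun_prop)) θ
  have hZ := exp_inner_integral_pos hW h0 θ
  set Z := ∫ x, exp ⟪θ, x⟫ ∂W with hZd
  have eZ : lap W (fun x : E n => innerSL ℝ x) (fun _ => (1 : ℝ)) θ = Z := by
    simp [lap, hZd, real_inner_comm]
  have h3 := (hasDerivAt_inv (x := lap W (fun x : E n => innerSL ℝ x) (fun _ => (1 : ℝ)) θ)
    (by rw [eZ]; exact hZ.ne')).comp_hasFDerivAt θ h2
  have h4 := h3.smul h1
  have ef : (fun θ => ∫ x, f x ∂(tl W θ)) = fun θ =>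
      (lap W (fun x : E n => innerSL ℝ x) (fun _ => (1 : ℝ)) θ)⁻¹ •
        lap W (fun x : E n => innerSL ℝ x) f θ := by
    ext1 θ
    rw [integral_tl]
    simp [lap, real_inner_comm]
  rw [ef]
  refine h4.congr_fderiv ?_
  have e1 : ∀ {G : Type} [NormedAddCommGroup G] [NormedSpace ℝ G] (g : E n → G),
      lap W (fun x : E n => innerSL ℝ x) g θ = Z • ∫ x, g x ∂(tl W θ) := by
    intro G _ _ g
    rw [integral_tl, smul_smul, mul_inv_cancel₀ hZ.ne', one_smul]
    simp [lap, real_inner_comm]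
  have e2 : ∫ x, (innerSL ℝ x).smulRight (1 : ℝ) ∂(tl W θ) = innerSL ℝ (∫ x, x ∂(tl W θ)) := by
    rw [← ContinuousLinearMap.integral_comp_comm _
      (expB_id.integrable (tl_hasExp hW θ) (by fun_prop))]
    congr 1; ext x u; simp; rfl
  have hP := tl_prob hW h0 θ
  simp only [Function.comp_apply, e1, e2]
  ext u
  simp [smul_smul]
  field_simp
  rw [sub_eq_add_neg, one_smul]

/-- Exponential tilts preserve strong log-concavity. -/
lemma tl_slc {t : ℝ} (hW : HasExp W) (h0 : W ≠ 0) (hs : SLC t W) (θ : E n) : SLC t (tl W θ) := by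
  obtain ⟨w, hw, hw0, hlc, hWd⟩ := hs
  have hZ := exp_inner_integral_pos hW h0 θ
  set Z := ∫ x, exp ⟪θ, x⟫ ∂W with hZd
  refine ⟨fun x => w x * (exp ⟪θ, x⟫ / Z), by fun_prop, fun x => ?_, fun x y => ?_, ?_⟩
  · exact mul_nonneg (hw0 x) (by positivity)
  · have e : exp ⟪θ, x⟫ * exp ⟪θ, y⟫ = exp ⟪θ, (1 / 2 : ℝ) • (x + y)⟫ ^ 2 := by
      rw [← exp_add, ← exp_nat_mul, inner_smul_right, inner_add_right]
      congr 1; push_cast; ring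
    calc w x * (exp ⟪θ, x⟫ / Z) * (w y * (exp ⟪θ, y⟫ / Z))
        = (w x * w y) * ((exp ⟪θ, x⟫ * exp ⟪θ, y⟫) / Z ^ 2) := by ring
      _ ≤ (w ((1 / 2 : ℝ) • (x + y)) ^ 2 * exp (-(t / 4) * ‖x - y‖ ^ 2)) *
          ((exp ⟪θ, x⟫ * exp ⟪θ, y⟫) / Z ^ 2) :=
          mul_le_mul_of_nonneg_right (hlc x y) (by positivity)
      _ = _ := by rw [e]; ring
  · unfold tl Measure.tilted
    conv_lhs => rw [hWd]
    rw [← withDensity_mul _ hw.ennreal_ofReal (by fun_prop)]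
    congr 1; ext x
    rw [Pi.mul_apply, ← ENNReal.ofReal_mul (hw0 x), ← hWd]

end tilt

end PC

namespace PC
open scoped ContDiff


/-! ### Covariances of exponentially bounded functions -/

/-- Measurable functions of at most exponential growth. -/
def Ok {n : ℕ} (f : E n → ℝ) : Prop := Measurable f ∧ ExpB f

/-- Covariance of `f` and `g` under the probability measure `ν`. -/
def cv {n : ℕ} (ν : Measure (E n)) (f g : E n → ℝ) : ℝ :=
  (∫ x, f x * g x ∂ν) - (∫ x, f x ∂ν) * ∫ x, g x ∂ν

/-- The class of Lipschitz differentiable functions, on which Poincaré inequalities are tested. -/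
def Cls {n : ℕ} (f : E n → ℝ) : Prop := (∃ L : NNReal, LipschitzWith L f) ∧ Differentiable ℝ f

/-- The Poincaré inequality with constant `C`. -/
def PI {n : ℕ} (α : Measure (E n)) (C : ℝ) : Prop :=
  ∀ f, Cls f → cv α f f ≤ C * ∫ x, ‖gradient f x‖ ^ 2 ∂α

section cv
variable {n : ℕ} {ν : Measure (E n)} {f g h : E n → ℝ}

lemma Ok.const (a : ℝ) : Ok (fun _ : E n => a) := ⟨measurable_const, ExpB.const a⟩
lemma Ok.add (hf : Ok f) (hg : Ok g) : Ok (fun x => f x + g x) := ⟨hf.1.add hg.1, hf.2.add hg.2⟩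
lemma Ok.sub (hf : Ok f) (hg : Ok g) : Ok (fun x => f x - g x) := ⟨hf.1.sub hg.1, hf.2.sub hg.2⟩
lemma Ok.mul (hf : Ok f) (hg : Ok g) : Ok (fun x => f x * g x) := ⟨hf.1.mul hg.1, hf.2.mul hg.2⟩
lemma Ok.cmul (a : ℝ) (hf : Ok f) : Ok (fun x => a * f x) := (Ok.const a).mul hf
lemma Ok.pow (hf : Ok f) (k : ℕ) : Ok (fun x => f x ^ k) := ⟨hf.1.pow_const k, hf.2.pow k⟩
lemma Ok.inner (u : E n) : Ok (fun x : E n => ⟪u, x⟫) := ⟨by fun_prop, expB_inner u⟩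
lemma Ok.coord (i : Fin n) : Ok (fun x : E n => x i) := ⟨by fun_prop, expB_coord i⟩
lemma Ok.int (hf : Ok f) (hν : HasExp ν) : Integrable f ν :=
  hf.2.integrable hν hf.1.aestronglyMeasurable
lemma Cls.ok (hf : Cls f) : Ok f := by
  obtain ⟨⟨L, hL⟩, hd⟩ := hf
  exact ⟨hd.continuous.measurable, hL.expB⟩
lemma Ok.of_bdd (hm : Measurable f) (B : ℝ) (hB : ∀ x, |f x| ≤ B) : Ok f :=
  ⟨hm, ExpB.of_bdd B hB⟩
lemma Ok.sum {ι : Type*} (s : Finset ι) {F : ι → E n → ℝ} (hF : ∀ i, Ok (F i)) :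
    Ok (fun x => ∑ i ∈ s, F i x) := by
  classical
  induction s using Finset.induction_on with
  | empty => simpa using Ok.const 0
  | insert a s ha ih => simpa [Finset.sum_insert ha] using (hF a).add ih

lemma cv_comm (f g : E n → ℝ) : cv ν f g = cv ν g f := by
  unfold cv; simp only [mul_comm]

lemma cv_add_left (hν : HasExp ν) (hf : Ok f) (hg : Ok g) (hh : Ok h) :
    cv ν (fun x => f x + g x) h = cv ν f h + cv ν g h := by
  unfold cv
  simp only [add_mul]
  rw [integral_add ((hf.mul hh).int hν) ((hg.mul hh).int hν), integral_add (hf.int hν) (hg.int hν)]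
  ring

lemma cv_cmul_left (a : ℝ) (f h : E n → ℝ) : cv ν (fun x => a * f x) h = a * cv ν f h := by
  unfold cv
  simp only [mul_assoc, integral_const_mul]
  ring

lemma cv_sub_left (hν : HasExp ν) (hf : Ok f) (hg : Ok g) (hh : Ok h) :
    cv ν (fun x => f x - g x) h = cv ν f h - cv ν g h := by
  have := cv_add_left hν hf (hg.cmul (-1)) hh
  rw [cv_cmul_left] at this
  simp only [neg_one_mul, ← sub_eq_add_neg] at this
  exact this

lemma cv_const_left [IsProbabilityMeasure ν] (a : ℝ) (h : E n → ℝ) : cv ν (fun _ => a) h = 0 := by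
  unfold cv
  simp [integral_const_mul]

lemma cv_add_right (hν : HasExp ν) (hf : Ok f) (hg : Ok g) (hh : Ok h) :
    cv ν h (fun x => f x + g x) = cv ν h f + cv ν h g := by
  rw [cv_comm, cv_add_left hν hf hg hh, cv_comm, cv_comm g]

lemma cv_sub_right (hν : HasExp ν) (hf : Ok f) (hg : Ok g) (hh : Ok h) :
    cv ν h (fun x => f x - g x) = cv ν h f - cv ν h g := by
  rw [cv_comm, cv_sub_left hν hf hg hh, cv_comm, cv_comm g]

lemma cv_cmul_right (a : ℝ) (f h : E n → ℝ) : cv ν h (fun x => a * f x) = a * cv ν h f := by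
  rw [cv_comm, cv_cmul_left, cv_comm]

lemma cv_self [IsProbabilityMeasure ν] (hν : HasExp ν) (hf : Ok f) :
    cv ν f f = ProbabilityTheory.variance f ν := by
  have h2 : MemLp f 2 ν := (memLp_two_iff_integrable_sq hf.1.aestronglyMeasurable).2
    ((hf.pow 2).int hν)
  rw [ProbabilityTheory.variance_eq_sub h2]
  simp only [cv, Pi.pow_apply, sq]

lemma cv_nonneg [IsProbabilityMeasure ν] (hν : HasExp ν) (hf : Ok f) : 0 ≤ cv ν f f := by
  rw [cv_self hν hf]; exact ProbabilityTheory.variance_nonneg f ν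

lemma cv_le_sq [IsProbabilityMeasure ν] (f : E n → ℝ) : cv ν f f ≤ ∫ x, f x ^ 2 ∂ν := by
  simp only [cv, sq]
  nlinarith [mul_self_nonneg (∫ x, f x ∂ν)]

/-- Cauchy–Schwarz. -/
lemma cv_sq_le [IsProbabilityMeasure ν] (hν : HasExp ν) (hf : Ok f) (hg : Ok g) :
    cv ν f g ^ 2 ≤ cv ν f f * cv ν g g := by
  have key : ∀ a : ℝ, 0 ≤ cv ν g g * (a * a) + 2 * cv ν f g * a + cv ν f f := by
    intro a
    have h1 := cv_nonneg hν (hf.add (hg.cmul a))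
    rw [cv_add_left hν hf (hg.cmul a) (hf.add (hg.cmul a)), cv_add_right hν hf (hg.cmul a) hf,
      cv_add_right hν hf (hg.cmul a) (hg.cmul a), cv_cmul_right, cv_cmul_right, cv_cmul_left,
      cv_cmul_left, cv_comm g f] at h1
    linarith
  have := discrim_le_zero key
  unfold discrim at this
  nlinarith

lemma PI.mono {C C' : ℝ} (h : PI ν C) (hC : C ≤ C') : PI ν C' := fun f hf =>
  (h f hf).trans (mul_le_mul_of_nonneg_right hC (integral_nonneg fun x => by positivity))

lemma PI_slc [IsProbabilityMeasure ν] (hν : HasExp ν) {t : ℝ} (ht : 0 < t) (hs : SLC t ν) :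
    PI ν (1 / t) := by
  intro f hf
  rw [cv_self hν hf.ok]
  obtain ⟨⟨L, hL⟩, hd⟩ := hf
  exact poincare_slc hs hν ht hL hd

lemma cls_inner (u : E n) : Cls (fun x : E n => ⟪u, x⟫) := by
  refine ⟨⟨‖innerSL ℝ u‖₊, ?_⟩, (innerSL ℝ u).differentiable⟩
  exact (innerSL ℝ u).lipschitz

lemma gradient_inner (u x : E n) : gradient (fun x : E n => ⟪u, x⟫) x = u := by
  refine HasGradientAt.gradient ?_
  rw [hasGradientAt_iff_hasFDerivAt]
  exact (innerSL ℝ u).hasFDerivAt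

lemma PI.lin [IsProbabilityMeasure ν] {C : ℝ} (h : PI ν C) (u : E n) :
    cv ν (fun x => ⟪u, x⟫) (fun x => ⟪u, x⟫) ≤ C * ‖u‖ ^ 2 := by
  simpa [gradient_inner] using h _ (cls_inner u)

lemma Cls.bound (hf : Cls f) : ∃ L : ℝ, 0 ≤ L ∧ ∀ x, ‖gradient f x‖ ≤ L := by
  obtain ⟨⟨L, hL⟩, hd⟩ := hf
  exact ⟨L, L.2, fun x => (norm_gradient f x).trans_le (norm_fderiv_le_lip hL x)⟩

lemma Cls.grad_ok (hf : Cls f) (u : E n) : Ok (fun x => ⟪gradient f x, u⟫) := by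
  obtain ⟨L, hL, h⟩ := hf.bound
  refine Ok.of_bdd ((measurable_gradient f).inner measurable_const) (L * ‖u‖) fun x => ?_
  exact (abs_real_inner_le_norm _ _).trans (by gcongr; exact h x)

lemma Cls.gradsq_ok (hf : Cls f) : Ok (fun x => ‖gradient f x‖ ^ 2) := by
  obtain ⟨L, hL, h⟩ := hf.bound
  refine Ok.of_bdd ((measurable_gradient f).norm.pow_const 2) (L ^ 2) fun x => ?_
  rw [abs_of_nonneg (by positivity)]
  gcongr; exact h x

lemma Cls.of_grad (hd : Differentiable ℝ f) (B : ℝ) (hB : ∀ x, ‖gradient f x‖ ≤ B) : Cls f := by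
  refine ⟨⟨B.toNNReal, ?_⟩, hd⟩
  refine lipschitzWith_of_nnnorm_fderiv_le hd fun x => ?_
  rw [← NNReal.coe_le_coe, coe_nnnorm, ← norm_gradient]
  exact (hB x).trans (le_coe_toNNReal B)

lemma inner_gradient (_ : Differentiable ℝ f) (x u : E n) : ⟪gradient f x, u⟫ = fderiv ℝ f x u :=
  inner_gradient_left

end cv

/-! ### Gaussian channels -/

/-- The expectation operator `y ↦ ∫ f dκ_y`, where `κ_y` is the tilt of `W` by `y / s`. -/
def Kop {n : ℕ} (W : Measure (E n)) (s : ℝ) (f : E n → ℝ) (y : E n) : ℝ :=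
  ∫ x, f x ∂(tl W (s⁻¹ • y))

/-- `β` is the image of `α` under the transition kernel `y ↦ tl W (y / s)`, where `W` is
`1 / s`-strongly log-concave. -/
structure Chan {n : ℕ} (s : ℝ) (α β W : Measure (E n)) : Prop where
  s_pos : 0 < s
  hW : HasExp W
  h0 : W ≠ 0
  slc : SLC (1 / s) W
  αp : IsProbabilityMeasure α
  βp : IsProbabilityMeasure β
  αE : HasExp α
  βE : HasExp β
  intg : ∀ f, Ok f → Integrable (Kop W s f) α
  eq : ∀ f, Ok f → ∫ x, f x ∂β = ∫ y, Kop W s f y ∂α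

section chan
variable {n : ℕ} {s : ℝ} {α β W : Measure (E n)} {f : E n → ℝ}

/-- Derivative of `Kop`: a covariance against a linear function. -/
lemma Kop_hasFDerivAt (hW : HasExp W) (h0 : W ≠ 0) (hf : Ok f) (y : E n) :
    Differentiable ℝ (Kop W s f) ∧ ∀ u, fderiv ℝ (Kop W s f) y u =
      s⁻¹ * cv (tl W (s⁻¹ • y)) f (fun x => ⟪u, x⟫) := by
  have key := fun y => tl_hasFDerivAt hW h0 hf.2 hf.1.aestronglyMeasurable (s⁻¹ • y)
  have h2 := fun y : E n => (key y).comp y ((hasFDerivAt_id y).const_smul s⁻¹)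
  refine ⟨fun y => (h2 y).differentiableAt, fun u => ?_⟩
  have e := (h2 y).fderiv
  have e' : fderiv ℝ (Kop W s f) y = _ := e
  rw [e']
  have hE := tl_hasExp hW (s⁻¹ • y)
  have i1 : Integrable (fun x => (innerSL ℝ x).smulRight (f x)) (tl W (s⁻¹ • y)) := by
    refine ExpB.integrable (((hf.2.mul expB_id.norm)).norm.of_le fun x => ?_) hE ?_
    · rw [ContinuousLinearMap.norm_smulRight_apply]; simp [mul_comm]
    · exact ((ContinuousLinearMap.smulRightL ℝ (E n) ℝ).continuous₂).comp_aestronglyMeasurable₂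
        (innerSL ℝ).continuous.aestronglyMeasurable hf.1.aestronglyMeasurable
  simp only [ContinuousLinearMap.comp_apply, sub_apply,
    smul_apply, ContinuousLinearMap.id_apply, map_smul,
    ContinuousLinearMap.smulRight_apply, smul_eq_mul]
  rw [ContinuousLinearMap.integral_apply i1]
  unfold cv
  have i2 := expB_id.integrable hE (by fun_prop)
  rw [integral_inner i2]
  simp only [ContinuousLinearMap.smulRight_apply, innerSL_apply_apply, smul_eq_mul, mul_comm (f _),
    real_inner_comm u]
  ring

lemma Chan.prob (c : Chan s α β W) (y : E n) : IsProbabilityMeasure (tl W (s⁻¹ • y)) :=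
  tl_prob c.hW c.h0 _

lemma Chan.exp (c : Chan s α β W) (y : E n) : HasExp (tl W (s⁻¹ • y)) := tl_hasExp c.hW _

lemma Chan.pi (c : Chan s α β W) (y : E n) : PI (tl W (s⁻¹ • y)) s := by
  have := c.prob y
  have h := PI_slc (c.exp y) (one_div_pos.2 c.s_pos) (tl_slc c.hW c.h0 c.slc (s⁻¹ • y))
  simpa using h

lemma Chan.grad_le (c : Chan s α β W) (hf : Ok f) (y : E n) :
    ‖gradient (Kop W s f) y‖ ^ 2 ≤ s⁻¹ * cv (tl W (s⁻¹ • y)) f f := by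
  have := c.prob y
  obtain ⟨hd, hD⟩ := Kop_hasFDerivAt (s := s) c.hW c.h0 hf y
  set u := gradient (Kop W s f) y
  have h1 : ‖u‖ ^ 2 = s⁻¹ * cv (tl W (s⁻¹ • y)) f (fun x => ⟪u, x⟫) := by
    rw [← hD u, ← inner_gradient hd, real_inner_self_eq_norm_sq]
  have h2 := cv_sq_le (c.exp y) hf (Ok.inner u)
  have h3 := (c.pi y).lin u
  have h4 := cv_nonneg (c.exp y) hf
  set a := cv (tl W (s⁻¹ • y)) f (fun x => ⟪u, x⟫)
  set v := cv (tl W (s⁻¹ • y)) f f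
  have hs := c.s_pos
  by_cases hu : ‖u‖ ^ 2 = 0
  · rw [hu]; positivity
  have hu' : 0 < ‖u‖ ^ 2 := lt_of_le_of_ne (by positivity) (Ne.symm hu)
  have h5 : a ^ 2 ≤ v * (s * ‖u‖ ^ 2) := h2.trans (by gcongr)
  have h6 : a = s * ‖u‖ ^ 2 := by rw [h1]; field_simp
  rw [h6] at h5
  rw [inv_mul_eq_div, le_div_iff₀ hs]
  have : 0 < s * ‖u‖ ^ 2 := by positivity
  nlinarith

lemma Chan.cls (c : Chan s α β W) (hf : Ok f) (B : ℝ)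
    (hB : ∀ y, cv (tl W (s⁻¹ • y)) f f ≤ B) : Cls (Kop W s f) := by
  have hs := c.s_pos
  refine Cls.of_grad (Kop_hasFDerivAt (s := s) c.hW c.h0 hf 0).1 (Real.sqrt (s⁻¹ * B)) fun x => ?_
  refine Real.le_sqrt_of_sq_le ((c.grad_le hf x).trans ?_)
  gcongr; exact hB x

lemma Chan.var_le_bdd (c : Chan s α β W) {B : ℝ} (hB : ∀ x, |f x| ≤ B) (y : E n) :
    cv (tl W (s⁻¹ • y)) f f ≤ B ^ 2 := by
  have := c.prob y
  refine (cv_le_sq f).trans ?_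
  have h : ∀ x, f x ^ 2 ≤ B ^ 2 := fun x => sq_le_sq.2 ((hB x).trans (le_abs_self B))
  calc ∫ x, f x ^ 2 ∂(tl W (s⁻¹ • y)) ≤ ∫ x, B ^ 2 ∂(tl W (s⁻¹ • y)) :=
        integral_mono_of_nonneg (Filter.Eventually.of_forall fun x => by positivity)
          (integrable_const _) (Filter.Eventually.of_forall h)
    _ = B ^ 2 := by simp

lemma Chan.var_le_cls (c : Chan s α β W) (hf : Cls f) :
    ∃ B, ∀ y, cv (tl W (s⁻¹ • y)) f f ≤ B := by
  obtain ⟨L, hL, h⟩ := hf.bound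
  refine ⟨s * L ^ 2, fun y => (c.pi y f hf).trans ?_⟩
  have := c.prob y
  have hs := c.s_pos
  gcongr
  calc ∫ x, ‖gradient f x‖ ^ 2 ∂(tl W (s⁻¹ • y)) ≤ ∫ x, L ^ 2 ∂(tl W (s⁻¹ • y)) :=
        integral_mono_of_nonneg (Filter.Eventually.of_forall fun x => by positivity)
          (integrable_const _) (Filter.Eventually.of_forall fun x => by
            have := h x; dsimp; gcongr)
    _ = L ^ 2 := by simp

/-- The law of total variance, with the integrability facts it rests on. -/
lemma Chan.total (c : Chan s α β W) (hf : Ok f) :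
    Integrable (fun y => Kop W s f y ^ 2) α ∧
    Integrable (fun y => cv (tl W (s⁻¹ • y)) f f) α ∧
    cv β f f = (∫ y, cv (tl W (s⁻¹ • y)) f f ∂α) + cv α (Kop W s f) (Kop W s f) := by
  have hff := hf.mul hf
  have i1 := c.intg _ hf
  have i2 := c.intg _ hff
  have e : ∀ y, cv (tl W (s⁻¹ • y)) f f = Kop W s (fun x => f x * f x) y - Kop W s f y ^ 2 := by
    intro y; simp only [cv, Kop, sq]
  have i3 : Integrable (fun y => Kop W s f y ^ 2) α := by
    refine i2.mono' (i1.1.pow 2) (Filter.Eventually.of_forall fun y => ?_)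
    have := c.prob y
    have h := cv_nonneg (c.exp y) hf
    rw [e y] at h
    rw [Real.norm_eq_abs, abs_of_nonneg (by positivity)]
    linarith
  refine ⟨i3, ?_, ?_⟩
  · simp only [e]; exact i2.sub i3
  · simp only [e]
    rw [integral_sub i2 i3]
    unfold cv
    rw [c.eq _ hff, c.eq _ hf]
    simp only [sq]
    ring

lemma Chan.contract (c : Chan s α β W) {C : ℝ} (hC : 0 ≤ C) (hP : PI α C) (hf : Ok f) (B : ℝ)
    (hB : ∀ y, cv (tl W (s⁻¹ • y)) f f ≤ B) :
    cv α (Kop W s f) (Kop W s f) ≤ C / (C + s) * cv β f f := by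
  have hcl := c.cls hf B hB
  obtain ⟨_, i2, e⟩ := c.total hf
  have hs := c.s_pos
  have h1 := hP _ hcl
  have h2 : ∫ y, ‖gradient (Kop W s f) y‖ ^ 2 ∂α ≤ ∫ y, s⁻¹ * cv (tl W (s⁻¹ • y)) f f ∂α :=
    integral_mono (hcl.gradsq_ok.int c.αE) (i2.const_mul _) fun y => c.grad_le hf y
  rw [integral_const_mul] at h2
  set V := cv α (Kop W s f) (Kop W s f)
  set I := ∫ y, cv (tl W (s⁻¹ • y)) f f ∂α
  have h3 : V ≤ C * (s⁻¹ * I) := h1.trans (by gcongr)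
  rw [e, div_mul_eq_mul_div, le_div_iff₀ (by positivity)]
  have h4 : s * V ≤ C * I := by
    calc s * V ≤ s * (C * (s⁻¹ * I)) := by gcongr
      _ = C * I := by field_simp
  nlinarith

lemma Chan.total_le (c : Chan s α β W) (hf : Cls f) :
    cv β f f ≤ s * (∫ x, ‖gradient f x‖ ^ 2 ∂β) + cv α (Kop W s f) (Kop W s f) := by
  obtain ⟨_, i2, e⟩ := c.total hf.ok
  rw [e, c.eq _ hf.gradsq_ok, ← integral_const_mul]
  refine add_le_add ?_ le_rfl
  exact integral_mono i2 ((c.intg _ hf.gradsq_ok).const_mul _) fun y => c.pi y f hf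

end chan

/-! ### Integration by parts -/
section ibp
variable {n : ℕ} {f b ρ : E n → ℝ} {ν : Measure (E n)}

lemma withDensity_int (hρm : Measurable ρ) (hρ : ∀ x, 0 ≤ ρ x) (f : E n → ℝ) :
    ∫ x, f x ∂(volume.withDensity fun x => ENNReal.ofReal (ρ x)) = ∫ x, ρ x * f x := by
  rw [integral_withDensity_eq_integral_toReal_smul hρm.ennreal_ofReal (by simp)]
  simp [ENNReal.toReal_ofReal, hρ]

lemma withDensity_intg (hρm : Measurable ρ) (hρ : ∀ x, 0 ≤ ρ x) (f : E n → ℝ) :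
    Integrable f (volume.withDensity fun x => ENNReal.ofReal (ρ x)) ↔
      Integrable (fun x => ρ x * f x) := by
  rw [integrable_withDensity_iff_integrable_smul' hρm.ennreal_ofReal (by simp)]
  simp [ENNReal.toReal_ofReal, hρ]

/-- Integration by parts against a density `ρ` with logarithmic derivative `-b` along `u`. -/
lemma ibp (hρ : ∀ x, 0 ≤ ρ x) (hρd : Differentiable ℝ ρ)
    (hν : ν = volume.withDensity fun x => ENNReal.ofReal (ρ x)) (hE : HasExp ν) (u : E n)
    (hb : Ok b) (hder : ∀ x, fderiv ℝ ρ x u = -(ρ x * b x)) (hd : Differentiable ℝ f) (hf : Ok f)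
    (hf' : Ok (fun x => fderiv ℝ f x u)) :
    ∫ x, fderiv ℝ f x u ∂ν = ∫ x, f x * b x ∂ν := by
  have hm : Measurable ρ := hρd.continuous.measurable
  have key := integral_mul_fderiv_eq_neg_fderiv_mul_of_integrable (μ := (volume : Measure (E n)))
    (f := ρ) (g := f) (v := u) ?_ ?_ ?_ (fun x _ => hρd x) (fun x _ => hd x)
  · rw [hν, withDensity_int hm hρ, withDensity_int hm hρ, key, ← integral_neg]
    congr 1; ext x; rw [hder]; ring
  · simp only [hder]
    have := (withDensity_intg hm hρ _).1 (hν ▸ (hf.mul hb).int hE)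
    refine this.neg.congr (Filter.Eventually.of_forall fun x => ?_)
    simp; ring
  · exact (withDensity_intg hm hρ _).1 (hν ▸ hf'.int hE)
  · exact (withDensity_intg hm hρ _).1 (hν ▸ hf.int hE)

lemma ibp_cv [IsProbabilityMeasure ν] (hρ : ∀ x, 0 ≤ ρ x) (hρd : Differentiable ℝ ρ)
    (hν : ν = volume.withDensity fun x => ENNReal.ofReal (ρ x)) (hE : HasExp ν) (u : E n)
    (hb : Ok b) (hder : ∀ x, fderiv ℝ ρ x u = -(ρ x * b x)) (hd : Differentiable ℝ f) (hf : Ok f)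
    (hf' : Ok (fun x => fderiv ℝ f x u)) :
    ∫ x, fderiv ℝ f x u ∂ν = cv ν f b := by
  have h1 := ibp hρ hρd hν hE u hb hder (f := fun _ => (1 : ℝ)) (by fun_prop) (Ok.const 1)
    (by simpa using Ok.const 0)
  have h2 := ibp hρ hρd hν hE u hb hder hd hf hf'
  simp at h1
  rw [h2, cv, ← h1]; simp

end ibp

end PC

namespace PC
open scoped ContDiff


/-! ### Gaussian smoothing -/

/-- The unnormalized Gaussian kernel of variance `s`. -/
def gk {n : ℕ} (s : ℝ) (z : E n) : ℝ := exp (-(‖z‖ ^ 2 / (2 * s)))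

/-- The normalization of `gk`. -/
def gZ (n : ℕ) (s : ℝ) : ℝ := ∫ z : E n, gk s z

/-- The measure `ν` reweighted by the Gaussian kernel. -/
def gw {n : ℕ} (s : ℝ) (ν : Measure (E n)) : Measure (E n) :=
  ν.withDensity fun x => ENNReal.ofReal (gk s x)

/-- The density of the convolution of `p` with the Gaussian of variance `s`. -/
def dn {n : ℕ} (p : Measure (E n)) (s : ℝ) (y : E n) : ℝ := (gZ n s)⁻¹ * ∫ x, gk s (y - x) ∂p

/-- The convolution of `p` with the Gaussian of variance `s`. -/
def sm {n : ℕ} (p : Measure (E n)) (s : ℝ) : Measure (E n) :=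
  volume.withDensity fun y => ENNReal.ofReal (dn p s y)

section
variable {n : ℕ} {s : ℝ} {p ν : Measure (E n)} {f : E n → ℝ}

lemma gk_pos (s : ℝ) (z : E n) : 0 < gk s z := exp_pos _

lemma gk_cont (s : ℝ) : Continuous (gk (n := n) s) := by unfold gk; fun_prop

lemma gk_le_one (hs : 0 < s) (z : E n) : gk s z ≤ 1 := by
  unfold gk
  rw [exp_le_one_iff]
  have : 0 ≤ ‖z‖ ^ 2 / (2 * s) := by positivity
  linarith

lemma gk_neg (s : ℝ) (z : E n) : gk s (-z) = gk s z := by simp [gk]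

lemma gk_sub (hs : 0 < s) (x y : E n) :
    gk s (y - x) = gk s y * (gk s x * exp ⟪s⁻¹ • y, x⟫) := by
  unfold gk
  rw [← exp_add, ← exp_add, norm_sub_sq_real, inner_smul_left]
  congr 1
  simp
  field_simp
  ring

lemma gw_intg (f : E n → ℝ) : Integrable f (gw s ν) ↔ Integrable (fun x => gk s x * f x) ν := by
  unfold gw
  rw [integrable_withDensity_iff_integrable_smul' (gk_cont s).measurable.ennreal_ofReal (by simp)]
  simp [ENNReal.toReal_ofReal, (gk_pos s _).le]

lemma gw_int (f : E n → ℝ) : ∫ x, f x ∂(gw s ν) = ∫ x, gk s x * f x ∂ν := by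
  unfold gw
  rw [integral_withDensity_eq_integral_toReal_smul (gk_cont s).measurable.ennreal_ofReal (by simp)]
  simp [ENNReal.toReal_ofReal, (gk_pos s _).le]

lemma gauss_hasExp (hs : 0 < s) : HasExp (gw s (volume : Measure (E n))) := by
  intro c
  rw [gw_intg]
  have h1 : Integrable (fun z : E n => exp (-(1 / (4 * s)) * ‖z‖ ^ 2)) := by
    have h := GaussianFourier.integrable_cexp_neg_mul_sq_norm_add (V := E n)
      (b := ((1 / (4 * s) : ℝ) : ℂ)) (by rw [Complex.ofReal_re]; positivity) 0 0
    have h2 := h.norm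
    refine h2.congr (Filter.Eventually.of_forall fun z => ?_)
    simp only [zero_mul, add_zero, Complex.norm_exp]
    congr 1
    norm_cast
  refine (h1.const_mul (exp (c ^ 2 * s))).mono' ?_ (Filter.Eventually.of_forall fun z => ?_)
  · have := gk_cont (n := n) s; fun_prop
  · unfold gk
    rw [Real.norm_eq_abs, ← exp_add, abs_exp, ← exp_add]
    apply exp_le_exp.2
    have : 0 ≤ (c * (2 * s) - ‖z‖) ^ 2 / (4 * s) := by positivity
    have e : (c * (2 * s) - ‖z‖) ^ 2 / (4 * s) =
      c ^ 2 * s - c * ‖z‖ + 1 / (4 * s) * ‖z‖ ^ 2 := by field_simp; ring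
    have e2 : ‖z‖ ^ 2 / (2 * s) = 2 * (1 / (4 * s) * ‖z‖ ^ 2) := by field_simp; ring
    rw [e2]; linarith

lemma gk_intg (hs : 0 < s) : Integrable (gk (n := n) s) := by
  have := gauss_hasExp (n := n) hs 0
  rw [gw_intg] at this
  simpa using this

lemma gZ_pos (hs : 0 < s) : 0 < gZ n s := by
  unfold gZ
  rw [integral_pos_iff_support_of_nonneg (fun z => (gk_pos s z).le) (gk_intg hs)]
  have : Function.support (gk (n := n) s) = Set.univ := by
    ext z; simp [(gk_pos s z).ne']
  rw [this]; simp [NeZero.ne]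

lemma gw_hasExp (hs : 0 < s) (hν : HasExp ν) : HasExp (gw s ν) := by
  intro c
  rw [gw_intg]
  refine (hν c).mono' ?_ (Filter.Eventually.of_forall fun z => ?_)
  · have := gk_cont (n := n) s; fun_prop
  · rw [Real.norm_eq_abs, abs_of_pos (mul_pos (gk_pos s z) (exp_pos _))]
    exact mul_le_of_le_one_left (exp_pos _).le (gk_le_one hs z)

lemma gw_ne_zero (hν : ν ≠ 0) : gw s ν ≠ 0 := by
  unfold gw
  intro h
  rw [withDensity_eq_zero_iff (gk_cont s).measurable.ennreal_ofReal.aemeasurable] at h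
  apply hν
  have h2 : ∀ᵐ x ∂ν, False := by
    filter_upwards [h] with x hx
    have := gk_pos s x
    simp at hx
    linarith
  simpa using h2

lemma gw_slc {t : ℝ} (hs : 0 < s) (h : SLC t ν) : SLC (t + 1 / s) (gw s ν) := by
  obtain ⟨w, hw, hw0, hlc, hWd⟩ := h
  have hgm := (gk_cont (n := n) s).measurable
  refine ⟨fun x => w x * gk s x, hw.mul hgm, fun x => mul_nonneg (hw0 x) (gk_pos s x).le,
    fun x y => ?_, ?_⟩
  · have e : gk s x * gk s y =
        gk s ((1 / 2 : ℝ) • (x + y)) ^ 2 * exp (-(1 / s / 4) * ‖x - y‖ ^ 2) := by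
      unfold gk
      rw [← exp_add, ← exp_nat_mul, ← exp_add]
      congr 1
      have h1 := parallelogram_law_with_norm ℝ x y
      rw [norm_smul, mul_pow]
      have h2 : ‖x + y‖ ^ 2 = 2 * ‖x‖ ^ 2 + 2 * ‖y‖ ^ 2 - ‖x - y‖ ^ 2 := by nlinarith
      rw [h2]
      norm_num
      field_simp
      ring
    calc w x * gk s x * (w y * gk s y) = (w x * w y) * (gk s x * gk s y) := by ring
      _ ≤ (w ((1 / 2 : ℝ) • (x + y)) ^ 2 * exp (-(t / 4) * ‖x - y‖ ^ 2)) * (gk s x * gk s y) :=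
          mul_le_mul_of_nonneg_right (hlc x y) (mul_pos (gk_pos _ _) (gk_pos _ _)).le
      _ = _ := by
          have e3 : -((t + 1 / s) / 4) * ‖x - y‖ ^ 2 =
            -(t / 4) * ‖x - y‖ ^ 2 + -(1 / s / 4) * ‖x - y‖ ^ 2 := by ring
          rw [e, e3, exp_add]; ring
  · unfold gw
    conv_lhs => rw [hWd]
    rw [← withDensity_mul _ hw.ennreal_ofReal hgm.ennreal_ofReal]
    congr 1; ext x
    rw [Pi.mul_apply, ← ENNReal.ofReal_mul (hw0 x)]

lemma SLC.mono {t t' : ℝ} (h : SLC t ν) (ht : t' ≤ t) : SLC t' ν := by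
  obtain ⟨w, hw, hw0, hlc, hWd⟩ := h
  refine ⟨w, hw, hw0, fun x y => (hlc x y).trans ?_, hWd⟩
  refine mul_le_mul_of_nonneg_left (exp_le_exp.2 ?_) (by positivity)
  nlinarith [sq_nonneg ‖x - y‖]

lemma slc_volume : SLC 0 (volume : Measure (E n)) :=
  ⟨fun _ => 1, measurable_const, fun _ => zero_le_one, by simp, by simp⟩

lemma Kop_gw (hs : 0 < s) (f : E n → ℝ) (y : E n) :
    Kop (gw s ν) s f y = (∫ x, gk s (y - x) ∂ν)⁻¹ * ∫ x, f x * gk s (y - x) ∂ν := by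
  unfold Kop
  rw [integral_tl, smul_eq_mul, gw_int, gw_int]
  simp only [gk_sub hs, integral_const_mul, smul_eq_mul]
  have : ∀ x, f x * (gk s y * (gk s x * exp ⟪s⁻¹ • y, x⟫)) =
    gk s y * (gk s x * (exp ⟪s⁻¹ • y, x⟫ * f x)) := fun x => by ring
  simp only [this, integral_const_mul]
  have := (gk_pos s y).ne'
  by_cases h0 : (∫ x, gk s x * exp ⟪s⁻¹ • y, x⟫ ∂ν) = 0
  · simp [h0]
  · field_simp

lemma joint [SFinite p] (hs : 0 < s) (hp : HasExp p) {F : E n → E n → ℝ}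
    (hF : Measurable (Function.uncurry F)) {C c : ℝ}
    (hb : ∀ x y, |F x y| ≤ C * (exp (c * ‖x‖) * exp (c * ‖y‖))) (hc : 0 ≤ c) (hC : 0 ≤ C) :
    Integrable (fun z : E n × E n => F z.1 z.2 * gk s (z.2 - z.1)) (p.prod volume) := by
  have h1 := gauss_hasExp (n := n) hs c
  rw [gw_intg] at h1
  have h2 := (hp (2 * c)).mul_prod h1
  have h3 := ((measurePreserving_prod_neg_add p (volume : Measure (E n))).integrable_comp
    h2.aestronglyMeasurable).2 h2
  have hg := (gk_cont (n := n) s).measurable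
  refine (h3.const_mul C).mono' ?_ (Filter.Eventually.of_forall fun z => ?_)
  · exact (hF.mul (hg.comp (measurable_snd.sub measurable_fst))).aestronglyMeasurable
  · obtain ⟨x, y⟩ := z
    simp only [Function.comp_apply]
    rw [norm_mul, Real.norm_eq_abs, Real.norm_eq_abs, abs_of_pos (gk_pos s _),
      show -x + y = y - x by abel]
    have h4 : exp (c * ‖x‖) * exp (c * ‖y‖) ≤ exp (2 * c * ‖x‖) * exp (c * ‖y - x‖) := by
      rw [← exp_add, ← exp_add]
      apply exp_le_exp.2
      have := norm_add_le x (y - x)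
      rw [add_sub_cancel] at this
      nlinarith
    calc |F x y| * gk s (y - x) ≤ C * (exp (2 * c * ‖x‖) * exp (c * ‖y - x‖)) * gk s (y - x) :=
          mul_le_mul_of_nonneg_right ((hb x y).trans (by gcongr)) (gk_pos _ _).le
      _ = _ := by ring

lemma joint_fst [SFinite p] (hs : 0 < s) (hp : HasExp p) (hf : Ok f) :
    Integrable (fun z : E n × E n => f z.1 * gk s (z.2 - z.1)) (p.prod volume) := by
  obtain ⟨hm, C, c, hC, hc, H⟩ := hf
  refine joint hs hp (F := fun x _ => f x) (hm.comp measurable_fst) (C := C) (c := c)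
    (fun x y => (H x).trans ?_) hc hC
  have : 1 ≤ exp (c * ‖y‖) := one_le_exp (by positivity)
  have := exp_pos (c * ‖x‖)
  gcongr
  nlinarith

lemma joint_snd [SFinite p] (hs : 0 < s) (hp : HasExp p) (hf : Ok f) :
    Integrable (fun z : E n × E n => f z.2 * gk s (z.2 - z.1)) (p.prod volume) := by
  obtain ⟨hm, C, c, hC, hc, H⟩ := hf
  refine joint hs hp (F := fun _ y => f y) (hm.comp measurable_snd) (C := C) (c := c)
    (fun x y => (H y).trans ?_) hc hC
  have : 1 ≤ exp (c * ‖x‖) := one_le_exp (by positivity)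
  have := exp_pos (c * ‖y‖)
  gcongr
  nlinarith

lemma gk_shift (s : ℝ) (x : E n) : ∫ y, gk s (y - x) = gZ n s :=
  integral_sub_right_eq_self (gk (n := n) s) x

lemma gk_intg_fin [IsFiniteMeasure p] (hs : 0 < s) (y : E n) :
    Integrable (fun x => gk s (y - x)) p := by
  refine Integrable.of_bound (C := 1) ((gk_cont s).comp (by fun_prop)).aestronglyMeasurable
    (Filter.Eventually.of_forall fun x => ?_)
  rw [Real.norm_eq_abs, abs_of_pos (gk_pos s _)]
  exact gk_le_one hs _

lemma gk_int_pos [IsProbabilityMeasure p] (hs : 0 < s) (y : E n) : 0 < ∫ x, gk s (y - x) ∂p := by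
  rw [integral_pos_iff_support_of_nonneg (fun z => (gk_pos s _).le) (gk_intg_fin hs y)]
  have : (Function.support fun x => gk (n := n) s (y - x)) = Set.univ := by
    ext z; simp [(gk_pos s _).ne']
  rw [this]; simp

lemma dn_meas [SFinite p] : Measurable (dn p s) := by
  unfold dn
  refine measurable_const.mul ?_
  refine (StronglyMeasurable.integral_prod_right (f := fun y x => gk s (y - x)) ?_).measurable
  exact ((gk_cont s).comp (continuous_fst.sub continuous_snd)).stronglyMeasurable

lemma dn_pos [IsProbabilityMeasure p] (hs : 0 < s) (y : E n) : 0 < dn p s y :=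
  mul_pos (inv_pos.2 (gZ_pos hs)) (gk_int_pos hs y)

/-- Integration against the Gaussian convolution. -/
lemma sm_int [IsProbabilityMeasure p] (hs : 0 < s) (hp : HasExp p) (hf : Ok f) :
    Integrable f (sm p s) ∧
    ∫ y, f y ∂(sm p s) = (gZ n s)⁻¹ * ∫ x, (∫ y, f y * gk s (y - x)) ∂p := by
  have hj := joint_snd hs hp hf
  have e : ∀ y, dn p s y * f y = (gZ n s)⁻¹ * ∫ x, f y * gk s (y - x) ∂p := by
    intro y; unfold dn; rw [integral_const_mul]; ring
  unfold sm
  rw [withDensity_intg dn_meas (fun y => (dn_pos hs y).le),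
    withDensity_int dn_meas (fun y => (dn_pos hs y).le)]
  simp only [e]
  refine ⟨hj.integral_prod_right.const_mul _, ?_⟩
  rw [integral_const_mul]
  congr 1
  exact (integral_integral_swap (f := fun x y => f y * gk s (y - x)) hj).symm

lemma sm_hasExp [IsProbabilityMeasure p] (hs : 0 < s) (hp : HasExp p) : HasExp (sm p s) := by
  intro c
  exact (sm_int hs hp ⟨by fun_prop, expB_exp c⟩).1

lemma sm_prob [IsProbabilityMeasure p] (hs : 0 < s) (hp : HasExp p) :
    IsProbabilityMeasure (sm p s) := by
  have h := (sm_int hs hp (Ok.const 1)).2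
  have := (sm_hasExp hs hp).isFinite
  simp only [one_mul, gk_shift, integral_const, probReal_univ, smul_eq_mul, mul_one] at h
  rw [inv_mul_cancel₀ (gZ_pos hs).ne'] at h
  rw [Measure.real, ENNReal.toReal_eq_one_iff] at h
  exact ⟨h⟩

lemma chan_fwd [IsProbabilityMeasure p] (hs : 0 < s) (hp : HasExp p) :
    Chan s p (sm p s) (gw s volume) := by
  have hE := gauss_hasExp (n := n) hs
  have e : ∀ f : E n → ℝ, Kop (gw s volume) s f = fun x => (gZ n s)⁻¹ * ∫ y, f y * gk s (y - x) := by
    intro f; ext x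
    rw [Kop_gw hs]
    have e1 : ∀ y, gk s (x - y) = gk s (y - x) := fun y => by rw [← gk_neg, neg_sub]
    simp only [e1, gk_shift]
  refine ⟨hs, hE, gw_ne_zero (NeZero.ne _), ?_, inferInstance, sm_prob hs hp, hp, sm_hasExp hs hp,
    fun f hf => ?_, fun f hf => ?_⟩
  · simpa using gw_slc hs (slc_volume (n := n))
  · rw [e]
    exact (joint_snd hs hp hf).integral_prod_left.const_mul _
  · rw [(sm_int hs hp hf).2, e, integral_const_mul]

lemma chan_bwd [IsProbabilityMeasure p] (hs : 0 < s) (hp : HasExp p) (hl : SLC 0 p) :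
    Chan s (sm p s) p (gw s p) := by
  have hE := gw_hasExp hs hp
  have hdp := fun y => (dn_pos (p := p) hs y).le
  have e : ∀ (f : E n → ℝ) y, dn p s y * Kop (gw s p) s f y =
      (gZ n s)⁻¹ * ∫ x, f x * gk s (y - x) ∂p := by
    intro f y
    rw [Kop_gw hs, dn]
    have := (gk_int_pos (p := p) hs y).ne'
    field_simp
  refine ⟨hs, hE, gw_ne_zero (NeZero.ne _), ?_, sm_prob hs hp, inferInstance, sm_hasExp hs hp, hp,
    fun f hf => ?_, fun f hf => ?_⟩
  · simpa using gw_slc hs hl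
  · unfold sm
    rw [withDensity_intg dn_meas hdp]
    simp only [e]
    exact (joint_fst hs hp hf).integral_prod_right.const_mul _
  · unfold sm
    rw [withDensity_int dn_meas hdp]
    simp only [e]
    rw [integral_const_mul, ← integral_integral_swap (joint_fst hs hp hf)]
    simp only [integral_const_mul, gk_shift, integral_mul_const]
    have := (gZ_pos (n := n) hs).ne'
    field_simp

end

end PC

namespace PC
open scoped ContDiff


/-! ### Improved Lichnerowicz inequality -/

section
variable {n : ℕ} {s : ℝ} {p ν : Measure (E n)} {f ψ : E n → ℝ}

lemma tl_density (hψ : Differentiable ℝ ψ)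
    (hν : ν = volume.withDensity fun x => ENNReal.ofReal (exp (-ψ x))) (θ : E n) :
    tl (gw s ν) θ = volume.withDensity fun x => ENNReal.ofReal
      (exp (-ψ x) * gk s x * (exp ⟪θ, x⟫ / ∫ x, exp ⟪θ, x⟫ ∂(gw s ν))) := by
  have hm := hψ.continuous.measurable
  have hgm := (gk_cont (n := n) s).measurable
  have h1 : gw s ν = volume.withDensity fun x => ENNReal.ofReal (exp (-ψ x) * gk s x) := by
    unfold gw
    conv_lhs => rw [hν]
    rw [← withDensity_mul _ (by fun_prop) hgm.ennreal_ofReal]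
    congr 1; ext x
    rw [Pi.mul_apply, ← ENNReal.ofReal_mul (exp_pos _).le]
  unfold tl Measure.tilted
  conv_lhs => rw [h1]
  rw [← withDensity_mul _ (by fun_prop) (by fun_prop)]
  congr 1; ext x
  rw [Pi.mul_apply, ← ENNReal.ofReal_mul (mul_pos (exp_pos _) (gk_pos _ _)).le, ← h1]

/-- Integration by parts for the posterior kernels `tl (gw s ν) (y / s)`. -/
lemma kop_ibp (hs : 0 < s) (hψ : Differentiable ℝ ψ) (hg : ∀ u, Ok (fun x => ⟪gradient ψ x, u⟫))
    (hν : ν = volume.withDensity fun x => ENNReal.ofReal (exp (-ψ x))) (hE : HasExp (gw s ν))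
    (h0 : gw s ν ≠ 0) (hf : Cls f) (u y : E n) :
    Kop (gw s ν) s (fun x => ⟪gradient f x, u⟫) y =
      cv (tl (gw s ν) (s⁻¹ • y)) f (fun x => ⟪gradient ψ x, u⟫) +
        s⁻¹ * cv (tl (gw s ν) (s⁻¹ • y)) f (fun x => ⟪u, x⟫) := by
  set θ := s⁻¹ • y with hθ
  have hP := tl_prob hE h0 θ
  have hEt := tl_hasExp hE θ
  have hZ := exp_inner_integral_pos hE h0 θ
  set Z := ∫ x, exp ⟪θ, x⟫ ∂(gw s ν) with hZd
  have hcov := tl_density (s := s) hψ hν θ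
  set b : E n → ℝ := fun x => (⟪gradient ψ x, u⟫ + s⁻¹ * ⟪u, x⟫) - ⟪θ, u⟫ with hb
  have hbo : Ok b := ((hg u).add ((Ok.inner u).cmul s⁻¹)).sub (Ok.const _)
  have hder : ∀ x, HasFDerivAt (fun x => exp (-ψ x) * gk s x * (exp ⟪θ, x⟫ / Z))
      ((exp (-ψ x) * gk s x * (exp ⟪θ, x⟫ / Z)) •
        (-(fderiv ℝ ψ x) - s⁻¹ • innerSL ℝ x + innerSL ℝ θ)) x := by
    intro x
    have e : (fun x => exp (-ψ x) * gk s x * (exp ⟪θ, x⟫ / Z)) =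
        fun x => exp (-ψ x - (2 * s)⁻¹ * ‖x‖ ^ 2 + ⟪θ, x⟫) * Z⁻¹ := by
      ext x; unfold gk
      rw [exp_add, sub_eq_add_neg, exp_add, div_eq_mul_inv, div_eq_inv_mul]; ring
    rw [e, congrFun e x]
    have h1 : HasFDerivAt (fun x => -ψ x - (2 * s)⁻¹ * ‖x‖ ^ 2 + ⟪θ, x⟫)
        (-(fderiv ℝ ψ x) - (2 * s)⁻¹ • (2 • innerSL ℝ x) + innerSL ℝ θ) x :=
      (((hψ x).hasFDerivAt.neg).sub ((hasStrictFDerivAt_norm_sq x).hasFDerivAt.const_mul _)).add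
        (innerSL ℝ θ).hasFDerivAt
    refine (h1.exp.mul_const Z⁻¹).congr_fderiv ?_
    ext v
    simp
    field_simp
  have key := ibp_cv (ν := tl (gw s ν) θ) (f := f) (b := b)
    (ρ := fun x => exp (-ψ x) * gk s x * (exp ⟪θ, x⟫ / Z))
    (fun x => by have := gk_pos s x; positivity) (fun x => (hder x).differentiableAt) hcov hEt u
    hbo (fun x => ?_) hf.2 hf.ok (by simpa only [inner_gradient hf.2] using hf.grad_ok u)
  · unfold Kop
    simp only [inner_gradient hf.2]
    rw [key, hb, cv_sub_right hEt ((hg u).add ((Ok.inner u).cmul s⁻¹)) (Ok.const _) hf.ok,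
      cv_add_right hEt (hg u) ((Ok.inner u).cmul s⁻¹) hf.ok, cv_cmul_right,
      cv_comm f (fun _ => ⟪θ, u⟫), cv_const_left]
    simp only [inner_gradient hψ]
    ring
  · rw [(hder x).fderiv]
    simp only [hb, inner_gradient hψ]
    simp [real_inner_comm]
    ring

/-- The vector `∫ ∇f dα`. -/
def vg (α : Measure (E n)) (f : E n → ℝ) : E n := ∫ x, gradient f x ∂α

lemma Cls.grad_intg {α : Measure (E n)} [IsFiniteMeasure α] (hf : Cls f) :
    Integrable (gradient f) α := by
  obtain ⟨L, hL, h⟩ := hf.bound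
  exact Integrable.of_bound (measurable_gradient f).aestronglyMeasurable L
    (Filter.Eventually.of_forall h)

lemma vg_inner {α : Measure (E n)} [IsFiniteMeasure α] (hf : Cls f) (u : E n) :
    ⟪vg α f, u⟫ = ∫ x, ⟪gradient f x, u⟫ ∂α := by
  unfold vg
  rw [real_inner_comm, ← integral_inner hf.grad_intg]
  simp only [real_inner_comm]

lemma norm_sq_sum (x : E n) : ‖x‖ ^ 2 = ∑ i, ⟪x, EuclideanSpace.single i (1 : ℝ)⟫ ^ 2 := by
  rw [EuclideanSpace.norm_sq_eq]
  simp [EuclideanSpace.inner_single_right]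

lemma sum_cv_grad {α : Measure (E n)} [IsProbabilityMeasure α] (hα : HasExp α) (hf : Cls f) :
    ∑ i, cv α (fun x => ⟪gradient f x, EuclideanSpace.single i (1 : ℝ)⟫)
      (fun x => ⟪gradient f x, EuclideanSpace.single i (1 : ℝ)⟫) =
      (∫ x, ‖gradient f x‖ ^ 2 ∂α) - ‖vg α f‖ ^ 2 := by
  unfold cv
  rw [Finset.sum_sub_distrib, norm_sq_sum, ← integral_finsetSum _ fun i _ =>
    ((hf.grad_ok _).mul (hf.grad_ok _)).int hα]
  congr 1
  · simp only [norm_sq_sum (gradient f _), sq]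
  · refine Finset.sum_congr rfl fun i _ => ?_
    rw [vg_inner hf, sq]

lemma vg_norm_le {α : Measure (E n)} [IsProbabilityMeasure α] (hα : HasExp α) (hf : Cls f) :
    ‖vg α f‖ ^ 2 ≤ ∫ x, ‖gradient f x‖ ^ 2 ∂α := by
  have := sum_cv_grad hα hf
  have h2 : 0 ≤ ∑ i, cv α (fun x => ⟪gradient f x, EuclideanSpace.single i (1 : ℝ)⟫)
      (fun x => ⟪gradient f x, EuclideanSpace.single i (1 : ℝ)⟫) :=
    Finset.sum_nonneg fun i _ => cv_nonneg hα (hf.grad_ok _)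
  linarith

/-- The vector-valued average of `∇f` under the channel: its second moment contracts. -/
lemma Chan.kgrad {α β W : Measure (E n)} (c : Chan s α β W) {C : ℝ} (hC : 0 ≤ C) (hP : PI α C)
    (hf : Cls f) :
    Integrable (fun y => ‖vg (tl W (s⁻¹ • y)) f‖ ^ 2) α ∧
    ∫ y, ‖vg (tl W (s⁻¹ • y)) f‖ ^ 2 ∂α ≤
      C / (C + s) * ((∫ x, ‖gradient f x‖ ^ 2 ∂β) - ‖vg β f‖ ^ 2) + ‖vg β f‖ ^ 2 := by
  have hα := c.αp
  have hβ := c.βp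
  obtain ⟨L, hL, hLb⟩ := hf.bound
  have e : ∀ y, ‖vg (tl W (s⁻¹ • y)) f‖ ^ 2 = ∑ i,
      Kop W s (fun x => ⟪gradient f x, EuclideanSpace.single i (1 : ℝ)⟫) y ^ 2 := by
    intro y
    have := c.prob y
    rw [norm_sq_sum]
    refine Finset.sum_congr rfl fun i _ => ?_
    rw [vg_inner hf]; rfl
  simp only [e]
  have hi := fun i => (c.total (hf.grad_ok (EuclideanSpace.single i (1 : ℝ)))).1
  refine ⟨integrable_finsetSum _ fun i _ => hi i, ?_⟩
  rw [integral_finsetSum _ fun i _ => hi i, ← sum_cv_grad c.βE hf, Finset.mul_sum,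
    norm_sq_sum (vg β f), ← Finset.sum_add_distrib]
  refine Finset.sum_le_sum fun i _ => ?_
  set g : E n → ℝ := fun x => ⟪gradient f x, EuclideanSpace.single i (1 : ℝ)⟫ with hg
  have h1 := c.contract hC hP (hf.grad_ok (EuclideanSpace.single i (1 : ℝ))) (L ^ 2)
    (c.var_le_bdd (B := L) fun x => ?_)
  · have h2 : ∫ y, Kop W s g y ^ 2 ∂α = cv α (Kop W s g) (Kop W s g) +
        ⟪vg β f, EuclideanSpace.single i (1 : ℝ)⟫ ^ 2 := by
      rw [vg_inner hf, c.eq _ (hf.grad_ok _)]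
      simp only [cv, sq]; ring
    rw [h2]
    exact add_le_add h1 le_rfl
  · refine (abs_real_inner_le_norm _ _).trans ?_
    simpa using hLb x

/-- The smoothed measure satisfies a self-improved Poincaré inequality. -/
lemma fwd_var [IsProbabilityMeasure p] (hs : 0 < s) (hp : HasExp p) {C : ℝ} (hC : 0 ≤ C)
    (hP : PI p C) (hf : Cls f) :
    cv (sm p s) f f ≤ s * (∫ x, ‖gradient f x‖ ^ 2 ∂(sm p s)) +
      C * (C / (C + s) * ((∫ x, ‖gradient f x‖ ^ 2 ∂(sm p s)) - ‖vg (sm p s) f‖ ^ 2) +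
        ‖vg (sm p s) f‖ ^ 2) := by
  have c := chan_fwd hs hp
  refine (c.total_le hf).trans (add_le_add le_rfl ?_)
  obtain ⟨B, hB⟩ := c.var_le_cls hf
  have h1 := hP _ (c.cls hf.ok B hB)
  refine h1.trans ?_
  gcongr
  have e : ∀ y, gradient (Kop (gw s volume) s f) y = vg (tl (gw s volume) (s⁻¹ • y)) f := by
    intro y
    have := c.prob y
    refine ext_inner_right ℝ fun u => ?_
    obtain ⟨hd, hD⟩ := Kop_hasFDerivAt (s := s) c.hW c.h0 hf.ok y
    rw [inner_gradient hd, hD, vg_inner hf]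
    have h2 := kop_ibp (ν := (volume : Measure (E n))) (ψ := fun _ => 0) hs (by fun_prop)
      (fun u => by simpa using Ok.const 0) (by simp) c.hW c.h0 hf u y
    unfold Kop at h2
    rw [h2]
    simp [cv]
  simp only [e]
  exact (c.kgrad hC hP hf).2


/-- The measure `p = e^{-ψ} dx` has potential `ψ` with `t ≤ ∇²ψ`, `‖∇²ψ‖ ≤ k`, and with
`M`-Lipschitz Hessian `H`. -/
structure Nice (p : Measure (E n)) (ψ : E n → ℝ) (H : E n → E n →L[ℝ] E n) (t k M : ℝ) : Prop where
  diff : Differentiable ℝ ψ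
  dens : p = volume.withDensity fun x => ENNReal.ofReal (exp (-ψ x))
  hess : ∀ x, HasFDerivAt (gradient ψ) (H x) x
  lower : ∀ x u, t * ‖u‖ ^ 2 ≤ ⟪H x u, u⟫
  upper : ∀ x, ‖H x‖ ≤ k
  lip : ∀ x y, ‖H x - H y‖ ≤ M * ‖x - y‖
  hk : 0 ≤ k
  hM : 0 ≤ M
  ht : 0 ≤ t

variable {H : E n → E n →L[ℝ] E n} {t k M : ℝ}

lemma Nice.grad_lip (N : Nice p ψ H t k M) : LipschitzWith k.toNNReal (gradient ψ) := by
  refine lipschitzWith_of_nnnorm_fderiv_le (fun x => (N.hess x).differentiableAt) fun x => ?_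
  rw [← NNReal.coe_le_coe, coe_nnnorm, (N.hess x).fderiv]
  exact (N.upper x).trans (le_coe_toNNReal k)

lemma Nice.grad_ok (N : Nice p ψ H t k M) (u : E n) : Ok (fun x => ⟪gradient ψ x, u⟫) := by
  refine ⟨(measurable_gradient ψ).inner measurable_const, ?_⟩
  refine ((N.grad_lip.expB.norm).mul (ExpB.const ‖u‖)).of_le fun x => ?_
  exact abs_real_inner_le_norm _ _

lemma integral_sq_sub_mean {α : Measure (E n)} [IsProbabilityMeasure α] (hα : HasExp α) {C : ℝ}
    (hP : PI α C) : ∫ x, ‖x - ∫ z, z ∂α‖ ^ 2 ∂α ≤ n * C := by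
  have i0 := expB_id.integrable hα (by fun_prop)
  have e : ∀ i : Fin n, ∫ x, ⟪x - ∫ z, z ∂α, EuclideanSpace.single i (1 : ℝ)⟫ ^ 2 ∂α =
      cv α (fun x => ⟪EuclideanSpace.single i (1 : ℝ), x⟫)
        (fun x => ⟪EuclideanSpace.single i (1 : ℝ), x⟫) := by
    intro i
    set u := EuclideanSpace.single i (1 : ℝ)
    have e1 : ∀ x : E n, ⟪x - ∫ z, z ∂α, u⟫ ^ 2 =
        (⟪u, x⟫ * ⟪u, x⟫ - (2 * ∫ x, ⟪u, x⟫ ∂α) * ⟪u, x⟫) + (∫ x, ⟪u, x⟫ ∂α) ^ 2 := by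
      intro x
      rw [inner_sub_left, real_inner_comm, real_inner_comm u (∫ z, z ∂α), ← integral_inner i0]
      ring
    simp only [e1]
    rw [integral_add ((((Ok.inner u).mul (Ok.inner u)).sub ((Ok.inner u).cmul _)).int hα)
      (integrable_const _), integral_sub (((Ok.inner u).mul (Ok.inner u)).int hα)
      (((Ok.inner u).cmul _).int hα), integral_const_mul]
    simp [cv]; ring
  have e2 : ∀ x : E n, ‖x - ∫ z, z ∂α‖ ^ 2 =
      ∑ i : Fin n, ⟪x - ∫ z, z ∂α, EuclideanSpace.single i (1 : ℝ)⟫ ^ 2 := fun x => norm_sq_sum _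
  simp only [e2]
  rw [integral_finsetSum]
  · calc _ ≤ ∑ i : Fin n, C := Finset.sum_le_sum fun i _ => by
          rw [e i]; simpa using hP.lin (EuclideanSpace.single i (1 : ℝ))
      _ = n * C := by simp
  · intro i _
    refine Ok.int (Ok.pow ⟨by fun_prop, ?_⟩ 2) hα
    refine (expB_id.norm.add (ExpB.const ‖∫ z, z ∂α‖)).of_le fun x => ?_
    exact (abs_real_inner_le_norm _ _).trans (by simpa using norm_sub_le _ _)

/-- The averaged gradient is, up to an error controlled by the Lipschitz constant of the Hessian,
`(1 + s H) ∇F` with `F = Kop f`. -/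
lemma bwd_grad [IsProbabilityMeasure p] (hs : 0 < s) (hp : HasExp p) (hl : SLC 0 p)
    (N : Nice p ψ H t k M) (hf : Cls f) (y : E n) :
    ∃ (B : E n →L[ℝ] E n) (e : E n), (∀ u, t * ‖u‖ ^ 2 ≤ ⟪B u, u⟫) ∧ ‖B‖ ≤ k ∧
      ‖e‖ ^ 2 ≤ n * s ^ 2 * M ^ 2 * cv (tl (gw s p) (s⁻¹ • y)) f f ∧
      vg (tl (gw s p) (s⁻¹ • y)) f =
        gradient (Kop (gw s p) s f) y + s • B (gradient (Kop (gw s p) s f) y) + e := by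
  have c := chan_bwd hs hp hl
  have hκ := c.prob y
  have hκE := c.exp y
  have hPI := c.pi y
  obtain ⟨hd, hD⟩ := Kop_hasFDerivAt (s := s) c.hW c.h0 hf.ok y
  set κ := tl (gw s p) (s⁻¹ • y) with hκd
  set m := ∫ z, z ∂κ with hm
  set B := H m with hB
  set G := gradient (Kop (gw s p) s f) y with hG
  have hcG : ∀ u, cv κ f (fun x => ⟪u, x⟫) = s * ⟪G, u⟫ := by
    intro u
    rw [hG, inner_gradient hd, hD]
    field_simp
  refine ⟨B, vg κ f - G - s • B G, N.lower m, N.upper m, ?_, by abel⟩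
  set e := vg κ f - G - s • B G with he
  set h : E n → ℝ := fun x => ⟪gradient ψ x, e⟫ - ⟪ContinuousLinearMap.adjoint B e, x⟫ with hh
  have hho : Ok h := (N.grad_ok e).sub (Ok.inner _)
  have hcls : Cls h := by
    refine ⟨⟨k.toNNReal * ‖e‖₊ + ‖innerSL ℝ (ContinuousLinearMap.adjoint B e)‖₊, ?_⟩, ?_⟩
    · refine LipschitzWith.sub ?_ (innerSL ℝ _).lipschitz
      refine LipschitzWith.of_dist_le_mul fun x y => ?_
      rw [Real.dist_eq, ← inner_sub_left]
      refine (abs_real_inner_le_norm _ _).trans ?_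
      have := N.grad_lip.dist_le_mul x y
      rw [dist_eq_norm] at this
      push_cast
      nlinarith [norm_nonneg e]
    · intro x
      exact ((N.hess x).differentiableAt.inner ℝ (differentiableAt_const _)).sub
        (innerSL ℝ _).differentiableAt
  have hgh : ∀ x, ‖gradient h x‖ ≤ M * ‖x - m‖ * ‖e‖ := by
    intro x
    rw [norm_gradient]
    refine ContinuousLinearMap.opNorm_le_bound _ (by have := N.hM; positivity) fun v => ?_
    have h1 : HasFDerivAt h (((innerSL ℝ e).comp (H x)) -
        innerSL ℝ (ContinuousLinearMap.adjoint B e)) x := by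
      have h2 := (innerSL ℝ e).hasFDerivAt.comp x (N.hess x)
      refine HasFDerivAt.sub ?_ (innerSL ℝ _).hasFDerivAt
      refine h2.congr_of_eventuallyEq (Filter.Eventually.of_forall fun z => ?_)
      simp [real_inner_comm]
    rw [h1.fderiv]
    have e1 : (((innerSL ℝ e).comp (H x)) - innerSL ℝ (ContinuousLinearMap.adjoint B e)) v =
        ⟪e, (H x - B) v⟫ := by
      simp [ContinuousLinearMap.adjoint_inner_left, inner_sub_right]
    rw [e1]
    refine (abs_real_inner_le_norm _ _).trans ?_
    calc ‖e‖ * ‖(H x - B) v‖ ≤ ‖e‖ * (M * ‖x - m‖ * ‖v‖) := by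
          gcongr
          exact ((H x - B).le_opNorm v).trans (by gcongr; exact N.lip x m)
      _ = _ := by ring
  have hvar : cv κ h h ≤ s * (M ^ 2 * ‖e‖ ^ 2 * (n * s)) := by
    refine (hPI h hcls).trans ?_
    gcongr
    calc ∫ x, ‖gradient h x‖ ^ 2 ∂κ ≤ ∫ x, M ^ 2 * ‖e‖ ^ 2 * ‖x - m‖ ^ 2 ∂κ := by
          refine integral_mono (hcls.gradsq_ok.int hκE) ?_ fun x => ?_
          · refine Integrable.const_mul ?_ _
            refine Ok.int (Ok.pow (f := fun x => ‖x - m‖) ⟨by fun_prop, ?_⟩ 2) hκE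
            exact (expB_id.sub (ExpB.const m)).norm
          · calc ‖gradient h x‖ ^ 2 ≤ (M * ‖x - m‖ * ‖e‖) ^ 2 := by gcongr; exact hgh x
              _ = _ := by ring
      _ ≤ _ := by
          rw [integral_const_mul]
          gcongr
          exact integral_sq_sub_mean hκE hPI
  have hce : ‖e‖ ^ 2 = cv κ f h := by
    have h1 := kop_ibp hs N.diff N.grad_ok N.dens c.hW c.h0 hf e y
    unfold Kop at h1
    rw [← vg_inner hf, ← hκd, hcG] at h1
    have h2 := cv_sub_right hκE (N.grad_ok e) (Ok.inner (ContinuousLinearMap.adjoint B e)) hf.ok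
    rw [hcG, ContinuousLinearMap.adjoint_inner_right] at h2
    rw [← real_inner_self_eq_norm_sq, hh, h2]
    nth_rw 1 [he]
    rw [inner_sub_left, inner_sub_left, h1, inner_smul_left]
    simp
    field_simp
    ring
  have hcs := cv_sq_le hκE hf.ok hho
  have hv0 := cv_nonneg hκE hf.ok
  by_cases h0 : ‖e‖ ^ 2 = 0
  · rw [h0]; positivity
  have h0' : 0 < ‖e‖ ^ 2 := lt_of_le_of_ne (by positivity) (Ne.symm h0)
  rw [← hce] at hcs
  have := hcs.trans (mul_le_mul_of_nonneg_left hvar hv0)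
  nlinarith

end

end PC

namespace PC
open scoped ContDiff


/-! ### Near-extremal functions of the Poincaré inequality -/

section
variable {n : ℕ} {s : ℝ} {p ν : Measure (E n)} {f ψ : E n → ℝ}
variable {H : E n → E n →L[ℝ] E n} {t k M : ℝ}

/-- For a near-extremal function of the Poincaré inequality, the mean gradient is controlled by
the covariance of the measure. -/
lemma near_ext [IsProbabilityMeasure p] (hp : HasExp p) (hs : 0 < s) {C A : ℝ} (hC : 0 < C)
    (hA : 0 ≤ A) (hP : PI p C)
    (hcov : ∀ u : E n, cv p (fun x => ⟪u, x⟫) (fun x => ⟪u, x⟫) ≤ A * ‖u‖ ^ 2) (hf : Cls f)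
    (hD : ∫ x, ‖gradient f x‖ ^ 2 ∂p = 1) (hV : C - s ^ 2 ≤ cv p f f) :
    √C * ‖vg p f‖ ≤ √A + s := by
  set v := vg p f with hv
  set c := cv p f (fun x => ⟪v, x⟫) with hc
  have hlin := Ok.inner v
  have key : ∀ a : ℝ, 0 ≤ (C * ‖v‖ ^ 2) * (a * a) + (-2 * (C * ‖v‖ ^ 2 - c)) * a + s ^ 2 := by
    intro a
    have hcl : Cls (fun x => f x - a * ⟪v, x⟫) := by
      obtain ⟨⟨L, hL⟩, hd⟩ := hf
      refine ⟨⟨L + ‖innerSL ℝ (a • v)‖₊, ?_⟩, ?_⟩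
      · have h1 := hL.sub (innerSL ℝ (a • v)).lipschitz
        simpa [inner_smul_left] using h1
      · exact hd.sub ((innerSL ℝ v).differentiable.const_mul a)
    have hgr : ∀ x, gradient (fun x => f x - a * ⟪v, x⟫) x = gradient f x - a • v := by
      intro x
      refine ext_inner_right ℝ fun u => ?_
      rw [inner_gradient hcl.2, inner_sub_left, inner_gradient hf.2]
      have h1 := (hf.2 x).hasFDerivAt.sub (((innerSL ℝ v).hasFDerivAt (x := x)).const_mul a)
      have h2 : fderiv ℝ (fun x => f x - a * ⟪v, x⟫) x = _ := h1.fderiv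
      rw [h2]; simp [inner_smul_left]
    have h1 := hP _ hcl
    simp only [hgr] at h1
    have e1 : ∫ x, ‖gradient f x - a • v‖ ^ 2 ∂p = 1 - 2 * a * ‖v‖ ^ 2 + a ^ 2 * ‖v‖ ^ 2 := by
      have e2 : ∀ x, ‖gradient f x - a • v‖ ^ 2 =
          (‖gradient f x‖ ^ 2 - 2 * a * ⟪gradient f x, v⟫) + a ^ 2 * ‖v‖ ^ 2 := by
        intro x
        rw [norm_sub_sq_real, inner_smul_right, norm_smul, mul_pow]
        simp; ring
      simp only [e2]
      rw [integral_add ((hf.gradsq_ok.sub ((hf.grad_ok v).cmul (2 * a))).int hp)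
        (integrable_const _), integral_sub (hf.gradsq_ok.int hp)
        (((hf.grad_ok v).int hp).const_mul _), hD, integral_const_mul, ← vg_inner hf, ← hv,
        real_inner_self_eq_norm_sq]
      simp
    have e3 : cv p (fun x => f x - a * ⟪v, x⟫) (fun x => f x - a * ⟪v, x⟫) =
        cv p f f - 2 * a * c + a ^ 2 * cv p (fun x => ⟪v, x⟫) (fun x => ⟪v, x⟫) := by
      rw [cv_sub_left hp hf.ok (hlin.cmul a) (hf.ok.sub (hlin.cmul a)),
        cv_sub_right hp hf.ok (hlin.cmul a) hf.ok,
        cv_sub_right hp hf.ok (hlin.cmul a) (hlin.cmul a), cv_cmul_right, cv_cmul_right,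
        cv_cmul_left, cv_cmul_left]
      have hc' : cv p (fun x => ⟪v, x⟫) f = c := cv_comm _ _
      rw [hc', ← hc]
      ring
    rw [e1, e3] at h1
    have h4 : 0 ≤ a ^ 2 * cv p (fun x => ⟪v, x⟫) (fun x => ⟪v, x⟫) :=
      mul_nonneg (sq_nonneg a) (cv_nonneg hp hlin)
    nlinarith
  have hdis := discrim_le_zero key
  unfold discrim at hdis
  have hc2 : c ^ 2 ≤ C * (A * ‖v‖ ^ 2) := by
    refine (cv_sq_le hp hf.ok hlin).trans ?_
    refine mul_le_mul ?_ (hcov v) (cv_nonneg hp hlin) hC.le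
    have := hP f hf
    rwa [hD, mul_one] at this
  set V := ‖v‖ with hVd
  have hV0 : 0 ≤ V := norm_nonneg _
  have hC' := Real.sq_sqrt hC.le
  have hA' := Real.sq_sqrt hA
  have hC0 : 0 < √C := Real.sqrt_pos.2 hC
  have hA0 : 0 ≤ √A := Real.sqrt_nonneg A
  have a1 : C * V ^ 2 - c ≤ s * √C * V := by
    refine abs_le_of_sq_le_sq' (b := s * √C * V) ?_ (by positivity) |>.2
    rw [mul_pow, mul_pow, hC']; nlinarith
  have a2 : c ≤ √C * √A * V := by
    refine abs_le_of_sq_le_sq' (b := √C * √A * V) ?_ (by positivity) |>.2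
    rw [mul_pow, mul_pow, hC', hA']; nlinarith
  by_cases hV0' : V = 0
  · rw [hV0']; simp; positivity
  have hVp : 0 < V := lt_of_le_of_ne hV0 (Ne.symm hV0')
  have a3 : √C * V * (√C * V) ≤ √C * V * (√A + s) := by
    have : √C * V * (√C * V) = C * V ^ 2 := by linear_combination V ^ 2 * hC'
    rw [this]; nlinarith
  exact le_of_mul_le_mul_left a3 (by positivity)

lemma lich_step [IsProbabilityMeasure p] (hp : HasExp p) (hs : 0 < s) (hs1 : s ≤ 1) (hl : SLC 0 p)
    (N : Nice p ψ H t k M) {C : ℝ} (hC : 0 < C) (hP : PI p C) (hf : Cls f)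
    (hD : ∫ x, ‖gradient f x‖ ^ 2 ∂p = 1) :
    ∃ D w : ℝ, 0 ≤ D ∧ D ≤ 1 ∧ 0 ≤ w ∧
      w ≤ ‖vg p f‖ + s * √(2 * k ^ 2 + 2 * (n * M ^ 2)) ∧
      cv p f f ≤ s + (s * D + C * (C / (C + s) * (D - w ^ 2) + w ^ 2)) ∧
      ∀ η > 0, (1 + s * t) ^ 2 * D ≤
        (1 + η) * ((C + s) / (C + s + s) * (1 - ‖vg p f‖ ^ 2) + ‖vg p f‖ ^ 2) +
          (1 + 1 / η) * (n * M ^ 2 * s ^ 3) := by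
  have c := chan_bwd hs hp hl
  have hα := c.αp
  obtain ⟨B0, hB0⟩ := c.var_le_cls hf
  have hF := c.cls hf.ok B0 hB0
  set F := Kop (gw s p) s f with hFd
  set α := sm p s with hαd
  set κ := fun y => tl (gw s p) (s⁻¹ • y) with hκ
  obtain ⟨_, i2, e2⟩ := c.total hf.ok
  have hvars : ∫ y, cv (κ y) f f ∂α ≤ s := by
    have h1 : ∫ y, cv (κ y) f f ∂α ≤ ∫ y, s * Kop (gw s p) s (fun x => ‖gradient f x‖ ^ 2) y ∂α :=
      integral_mono i2 ((c.intg _ hf.gradsq_ok).const_mul _) fun y => c.pi y f hf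
    rw [integral_const_mul, ← c.eq _ hf.gradsq_ok, hD, mul_one] at h1
    exact h1
  set D := ∫ y, ‖gradient F y‖ ^ 2 ∂α with hDd
  set w := ‖vg α F‖ with hw
  have hD0 : 0 ≤ D := integral_nonneg fun y => by positivity
  have hD1 : D ≤ 1 := by
    have h1 : D ≤ ∫ y, s⁻¹ * cv (κ y) f f ∂α :=
      integral_mono (hF.gradsq_ok.int c.αE) (i2.const_mul _) fun y => c.grad_le hf.ok y
    rw [integral_const_mul] at h1
    calc D ≤ s⁻¹ * s := h1.trans (by gcongr)
      _ = 1 := by field_simp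
  have hPα : PI α (C + s) := by
    intro g hg
    have h1 := fwd_var hs hp hC.le hP hg
    have h2 := vg_norm_le c.αE hg
    refine h1.trans ?_
    set Dg := ∫ x, ‖gradient g x‖ ^ 2 ∂(sm p s)
    have h3 : C / (C + s) ≤ 1 := by rw [div_le_one (by positivity)]; linarith
    have h4 : C / (C + s) * (Dg - ‖vg (sm p s) g‖ ^ 2) + ‖vg (sm p s) g‖ ^ 2 ≤ Dg := by
      nlinarith
    nlinarith
  choose B e hB1 hB2 he hBe using fun y => bwd_grad hs hp hl N hf y
  refine ⟨D, w, hD0, hD1, norm_nonneg _, ?_, ?_, ?_⟩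
  · -- comparison of the two mean gradients
    set z := vg α F - vg p f with hz
    have hz2 : ‖z‖ ^ 2 ≤ s ^ 2 * (2 * k ^ 2 + 2 * (n * M ^ 2)) := by
      obtain ⟨L, hL, hLb⟩ := hf.bound
      have hKo : Ok (Kop (gw s p) s (fun x => ⟪gradient f x, z⟫)) := by
        refine Ok.of_bdd
          (Kop_hasFDerivAt (s := s) c.hW c.h0 (hf.grad_ok z) 0).1.continuous.measurable (L * ‖z‖)
          fun y => ?_
        have := c.prob y
        have h := norm_integral_le_of_norm_le_const (μ := tl (gw s p) (s⁻¹ • y))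
          (f := fun x => ⟪gradient f x, z⟫) (C := L * ‖z‖)
          (Filter.Eventually.of_forall fun x => (abs_real_inner_le_norm _ _).trans (by
            gcongr; exact hLb x))
        rw [Real.norm_eq_abs, probReal_univ, mul_one] at h
        exact h
      have hgo := (hF.grad_ok z).sub hKo
      have hcn := cv_nonneg c.αE hgo
      have e1 : ∫ y, (⟪gradient F y, z⟫ - Kop (gw s p) s (fun x => ⟪gradient f x, z⟫) y) ∂α =
          ‖z‖ ^ 2 := by
        rw [integral_sub ((hF.grad_ok z).int c.αE) (hKo.int c.αE), ← vg_inner hF,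
          ← c.eq _ (hf.grad_ok z), ← vg_inner hf, ← inner_sub_left, ← hz,
          real_inner_self_eq_norm_sq]
      have e3 : ∫ y, (⟪gradient F y, z⟫ - Kop (gw s p) s (fun x => ⟪gradient f x, z⟫) y) ^ 2 ∂α ≤
          ∫ y, (2 * s ^ 2 * k ^ 2 * ‖gradient F y‖ ^ 2 + 2 * (n * s ^ 2 * M ^ 2) * cv (κ y) f f) *
            ‖z‖ ^ 2 ∂α := by
        refine integral_mono ((hgo.pow 2).int c.αE) ((((hF.gradsq_ok.int c.αE).const_mul _).add
          (i2.const_mul _)).mul_const _) fun y => ?_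
        have := c.prob y
        have e4 : ⟪gradient F y, z⟫ - Kop (gw s p) s (fun x => ⟪gradient f x, z⟫) y =
            -⟪s • B y (gradient F y) + e y, z⟫ := by
          have : Kop (gw s p) s (fun x => ⟪gradient f x, z⟫) y = ⟪vg (κ y) f, z⟫ :=
            (vg_inner hf z).symm
          rw [this, ← inner_sub_left, ← inner_neg_left]
          congr 1
          have := hBe y
          simp only [hκ]
          rw [this]; abel
        dsimp only
        rw [e4, neg_sq, ← sq_abs]
        have h5 := abs_real_inner_le_norm (s • B y (gradient F y) + e y) z
        have h6 : ‖s • B y (gradient F y) + e y‖ ≤ s * k * ‖gradient F y‖ + ‖e y‖ := by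
          refine (norm_add_le _ _).trans ?_
          rw [norm_smul, Real.norm_eq_abs, abs_of_pos hs, mul_assoc]
          gcongr
          exact ((B y).le_opNorm _).trans (by gcongr; exact hB2 y)
        calc |⟪s • B y (gradient F y) + e y, z⟫| ^ 2
            ≤ ((s * k * ‖gradient F y‖ + ‖e y‖) * ‖z‖) ^ 2 := by
              gcongr; exact h5.trans (by gcongr)
          _ ≤ (2 * s ^ 2 * k ^ 2 * ‖gradient F y‖ ^ 2 + 2 * ‖e y‖ ^ 2) * ‖z‖ ^ 2 := by
              rw [mul_pow]
              gcongr
              nlinarith [sq_nonneg (s * k * ‖gradient F y‖ - ‖e y‖)]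
          _ ≤ _ := by
              have := he y
              refine mul_le_mul_of_nonneg_right ?_ (by positivity)
              change _ ≤ _ + 2 * (n * s ^ 2 * M ^ 2) * cv (tl (gw s p) (s⁻¹ • y)) f f
              linarith
      rw [integral_mul_const, integral_add ((hF.gradsq_ok.int c.αE).const_mul _) (i2.const_mul _),
        integral_const_mul, integral_const_mul, ← hDd] at e3
      have e5 : (‖z‖ ^ 2) ^ 2 ≤ (s ^ 2 * (2 * k ^ 2 + 2 * (n * M ^ 2))) * ‖z‖ ^ 2 := by
        have h7 : (‖z‖ ^ 2) ^ 2 ≤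
            ∫ y, (⟪gradient F y, z⟫ - Kop (gw s p) s (fun x => ⟪gradient f x, z⟫) y) ^ 2 ∂α := by
          rw [← e1]
          simp only [cv, ← sq] at hcn
          linarith
        refine h7.trans (e3.trans ?_)
        gcongr
        have h8 : 2 * s ^ 2 * k ^ 2 * D ≤ 2 * s ^ 2 * k ^ 2 * 1 := by gcongr
        have h9 : 2 * (n * s ^ 2 * M ^ 2) * ∫ y, cv (κ y) f f ∂α ≤
            2 * (n * s ^ 2 * M ^ 2) * 1 := by
          gcongr; exact hvars.trans hs1
        nlinarith
      by_cases hz0 : ‖z‖ ^ 2 = 0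
      · rw [hz0]; positivity
      · have : 0 < ‖z‖ ^ 2 := lt_of_le_of_ne (by positivity) (Ne.symm hz0)
        nlinarith
    have hz3 : ‖z‖ ≤ s * √(2 * k ^ 2 + 2 * (n * M ^ 2)) := by
      refine abs_le_of_sq_le_sq' ?_ (by positivity) |>.2
      rw [mul_pow, Real.sq_sqrt (by positivity)]; exact hz2
    have : vg α F = vg p f + z := by rw [hz]; abel
    rw [hw, this]
    exact (norm_add_le _ _).trans (by gcongr)
  · have h1 := c.total_le hf
    rw [hD, mul_one] at h1
    exact h1.trans (add_le_add le_rfl (fwd_var hs hp hC.le hP hF))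
  · intro η hη
    have hk := c.kgrad (by positivity : 0 ≤ C + s) hPα hf
    rw [hD] at hk
    have h1 : (1 + s * t) ^ 2 * D ≤ ∫ y, ((1 + η) * ‖vg (κ y) f‖ ^ 2 +
        (1 + 1 / η) * (n * s ^ 2 * M ^ 2 * cv (κ y) f f)) ∂α := by
      rw [hDd, ← integral_const_mul]
      refine integral_mono ((hF.gradsq_ok.int c.αE).const_mul _)
        ((hk.1.const_mul _).add ((i2.const_mul _).const_mul _)) fun y => ?_
      dsimp only
      set G := gradient F y
      have h2 : (1 + s * t) * ‖G‖ ≤ ‖G + s • B y G‖ := by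
        by_cases hG : ‖G‖ = 0
        · rw [hG]; simp
        have hG' : 0 < ‖G‖ := lt_of_le_of_ne (norm_nonneg _) (Ne.symm hG)
        have h3 := real_inner_le_norm (G + s • B y G) G
        rw [inner_add_left, inner_smul_left, real_inner_self_eq_norm_sq] at h3
        have h4 := hB1 y G
        simp at h3
        refine le_of_mul_le_mul_right (?_ : _ * ‖G‖ ≤ _ * ‖G‖) hG'
        nlinarith
      have h5 : G + s • B y G = vg (κ y) f - e y := by
        have := hBe y
        simp only [hκ]; rw [this]; abel
      rw [h5] at h2
      have h6 := h2.trans (norm_sub_le _ _)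
      have ht := N.ht
      have h8 := he y
      calc (1 + s * t) ^ 2 * ‖G‖ ^ 2 = ((1 + s * t) * ‖G‖) ^ 2 := by ring
        _ ≤ (‖vg (κ y) f‖ + ‖e y‖) ^ 2 := by gcongr
        _ ≤ (1 + η) * ‖vg (κ y) f‖ ^ 2 + (1 + 1 / η) * ‖e y‖ ^ 2 := by
            have h7 : 0 ≤ (η * ‖vg (κ y) f‖ - ‖e y‖) ^ 2 / η := by positivity
            have e7 : (η * ‖vg (κ y) f‖ - ‖e y‖) ^ 2 / η = η * ‖vg (κ y) f‖ ^ 2 -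
              2 * ‖vg (κ y) f‖ * ‖e y‖ + 1 / η * ‖e y‖ ^ 2 := by field_simp; ring
            nlinarith
        _ ≤ _ := by gcongr
    rw [integral_add (hk.1.const_mul _) ((i2.const_mul _).const_mul _), integral_const_mul,
      integral_const_mul, integral_const_mul] at h1
    refine h1.trans ?_
    refine add_le_add ?_ ?_
    · gcongr; exact hk.2
    · have : (n * M ^ 2 * s ^ 3 : ℝ) = n * s ^ 2 * M ^ 2 * s := by ring
      rw [this]
      gcongr

end

end PC

namespace PC
open scoped ContDiff


/-! ### Passage to the limit in the semigroup argument -/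

set_option maxHeartbeats 1000000 in
/-- The passage to the limit of infinitesimally small times in the semigroup argument. -/
lemma lich_limit {t C A R m : ℝ} (ht : 0 ≤ t) (hC : 0 < C) (hA : 0 ≤ A) (hR : 0 ≤ R) (hm : 0 ≤ m)
    (h : ∀ s, 0 < s → s ≤ 1 → ∃ V D w : ℝ, 0 ≤ V ∧ V ≤ 1 ∧ 0 ≤ D ∧ D ≤ 1 ∧ 0 ≤ w ∧
      √C * V ≤ √A + s ∧ w ≤ V + s * R ∧
      C - s ^ 2 ≤ s + (s * D + C * (C / (C + s) * (D - w ^ 2) + w ^ 2)) ∧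
      ∀ η > 0, (1 + s * t) ^ 2 * D ≤
        (1 + η) * ((C + s) / (C + s + s) * (1 - V ^ 2) + V ^ 2) + (1 + 1 / η) * (m * s ^ 3)) :
    t * C ^ 2 ≤ A := by
  set Q1 := 2 / C ^ 2 + 1 + 2 * m with hQ1
  set Q3 := 1 + 1 / C + 2 * R + R ^ 2 with hQ3
  set Q := C * Q1 + Q3 + 2 * t * (2 + Q3) with hQ
  have key : ∀ σ, 0 < σ → σ ≤ 1 → 2 * (t * C ^ 2) ≤ 2 * A + σ * (4 * √A + 2 + Q * C) := by
    intro σ hσ hσ1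
    have hs0 : 0 < σ ^ 2 := by positivity
    have hs1 : σ ^ 2 ≤ 1 := pow_le_one₀ hσ.le hσ1
    obtain ⟨V, D, w, hV0, hV1, hD0, hD1, hw0, h1, h2, h3, h4⟩ := h (σ ^ 2) hs0 hs1
    have h4 := h4 (σ ^ 3) (by positivity)
    have e1 : (1 + 1 / σ ^ 3) * (m * (σ ^ 2) ^ 3) = m * σ ^ 6 + m * σ ^ 3 := by
      field_simp
    have e2 : σ ^ 6 ≤ σ ^ 3 := pow_le_pow_of_le_one hσ.le hσ1 (by norm_num)
    have e2' : σ ^ 4 ≤ σ ^ 3 := pow_le_pow_of_le_one hσ.le hσ1 (by norm_num)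
    have hV2 : V ^ 2 ≤ 1 := pow_le_one₀ hV0 hV1
    have hV2' : 0 ≤ V ^ 2 := by positivity
    set s := σ ^ 2 with hs
    have hs2 : s ^ 2 = σ ^ 4 := by rw [hs]; ring
    have e3 : (C + s) / (C + s + s) ≤ 1 - s / C + 2 * s ^ 2 / C ^ 2 := by
      rw [div_le_iff₀ (by positivity)]
      have : (1 - s / C + 2 * s ^ 2 / C ^ 2) * (C + s + s) = C + s + 4 * s ^ 3 / C ^ 2 := by
        field_simp; ring
      rw [this]
      have : 0 ≤ 4 * s ^ 3 / C ^ 2 := by positivity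
      linarith
    have e4 : (C + s) / (C + s + s) ≤ 1 := by rw [div_le_one (by positivity)]; linarith
    set ρ := (C + s) / (C + s + s)
    have e5 : ρ * (1 - V ^ 2) + V ^ 2 ≤ 1 := by nlinarith
    have e6 : ρ * (1 - V ^ 2) + V ^ 2 ≤ 1 - s / C * (1 - V ^ 2) + 2 / C ^ 2 * σ ^ 3 := by
      have a1 : ρ * (1 - V ^ 2) ≤ (1 - s / C + 2 * s ^ 2 / C ^ 2) * (1 - V ^ 2) :=
        mul_le_mul_of_nonneg_right e3 (by linarith)
      have a2 : 2 * s ^ 2 / C ^ 2 * (1 - V ^ 2) ≤ 2 * s ^ 2 / C ^ 2 * 1 := by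
        gcongr; linarith
      have a3 : 2 * s ^ 2 / C ^ 2 ≤ 2 / C ^ 2 * σ ^ 3 := by
        rw [hs2, mul_div_right_comm]; gcongr
      linarith
    have hσ3 : 0 < σ ^ 3 := by positivity
    have e7 : (1 + σ ^ 3) * (ρ * (1 - V ^ 2) + V ^ 2) ≤
        1 - s / C * (1 - V ^ 2) + 2 / C ^ 2 * σ ^ 3 + σ ^ 3 := by
      nlinarith only [e5, e6, hσ3]
    have e8 : (1 + 2 * s * t) * D ≤ 1 - s / C * (1 - V ^ 2) + Q1 * σ ^ 3 := by
      have : (1 + 2 * s * t) * D ≤ (1 + s * t) ^ 2 * D := by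
        refine mul_le_mul_of_nonneg_right ?_ hD0
        nlinarith only [sq_nonneg (s * t)]
      rw [e1] at h4
      have : m * σ ^ 6 ≤ m * σ ^ 3 := by gcongr
      rw [hQ1]; linarith
    have e9 : w ^ 2 ≤ V ^ 2 + s * (2 * R + R ^ 2) := by
      have a1 : w ^ 2 ≤ (V + s * R) ^ 2 := by gcongr
      have a2 : V * (s * R) ≤ 1 * (s * R) := by gcongr
      have a3 : s * (s * R ^ 2) ≤ 1 * (s * R ^ 2) := by gcongr
      linarith
    have e10 : C - s - s * V ^ 2 - Q3 * s ^ 2 ≤ C * D := by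
      have a1 : s + (s * D + C * (C / (C + s) * (D - w ^ 2) + w ^ 2)) =
          s + (C + s ^ 2 / (C + s)) * D + (C * s / (C + s)) * w ^ 2 := by
        field_simp; ring
      have a2 : s ^ 2 / (C + s) * D ≤ s ^ 2 / C * 1 := by gcongr; linarith
      have a3 : C * s / (C + s) * w ^ 2 ≤ s * w ^ 2 := by
        gcongr
        rw [div_le_iff₀ (by positivity)]; nlinarith only [hs0]
      have a4 : s * w ^ 2 ≤ s * (V ^ 2 + s * (2 * R + R ^ 2)) := by gcongr
      have a5 : s ^ 2 / C = 1 / C * s ^ 2 := by ring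
      rw [a1] at h3
      rw [hQ3]; linarith
    have hQ1p : 0 ≤ Q1 := by positivity
    have hQ3p : 0 ≤ Q3 := by positivity
    have e11 : (1 + 2 * s * t) * (C - s - s * V ^ 2 - Q3 * s ^ 2) ≤
        C - s * (1 - V ^ 2) + C * Q1 * σ ^ 3 := by
      have a1 := mul_le_mul_of_nonneg_left e10 (by positivity : 0 ≤ 1 + 2 * s * t)
      have a2 := mul_le_mul_of_nonneg_left e8 hC.le
      have a3 : C * (1 - s / C * (1 - V ^ 2) + Q1 * σ ^ 3) =
        C - s * (1 - V ^ 2) + C * Q1 * σ ^ 3 := by field_simp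
      rw [a3] at a2
      linarith
    have e12 : s * (2 * t * C) ≤ s * (2 * V ^ 2 + Q * σ) := by
      have a1 : s * (s * V ^ 2) ≤ s * (s * 1) := by gcongr
      have a2 : s * (s * (Q3 * s)) ≤ s * (s * (Q3 * 1)) := by gcongr
      have a3 : s ^ 2 ≤ σ ^ 3 := by rw [hs2]; exact e2'
      have a4 : Q3 * s ^ 2 ≤ Q3 * σ ^ 3 := by gcongr
      have a5 : 2 * t * (s * (s + s * V ^ 2 + Q3 * s ^ 2)) ≤ 2 * t * ((2 + Q3) * σ ^ 3) := by
        refine mul_le_mul_of_nonneg_left ?_ (by positivity)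
        linarith
      have a6 : s * (Q * σ) = Q * σ ^ 3 := by rw [hs]; ring
      rw [mul_add, a6, hQ]
      linarith
    have e13 : 2 * t * C ≤ 2 * V ^ 2 + Q * σ := le_of_mul_le_mul_left e12 hs0
    have e14 : C * V ^ 2 ≤ (√A + s) ^ 2 := by
      have : C * V ^ 2 = (√C * V) ^ 2 := by rw [mul_pow, Real.sq_sqrt hC.le]
      rw [this]; gcongr
    have e15 : (√A + s) ^ 2 ≤ A + σ * (2 * √A + 1) := by
      have a1 := Real.sq_sqrt hA
      have a2 : s ≤ σ := by rw [hs]; nlinarith only [hσ, hσ1]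
      have a3 : √A * s ≤ √A * σ := by gcongr
      have a4 : s * s ≤ 1 * σ := by gcongr
      linarith
    have e16 := mul_le_mul_of_nonneg_left e13 hC.le
    linarith
  set Z := 4 * √A + 2 + Q * C with hZ
  have hZp : 0 < Z := by positivity
  by_contra hcon
  push Not at hcon
  set d := t * C ^ 2 - A
  have hd : 0 < d := by simp only [d]; linarith
  have h1 := key (min 1 (d / Z)) (lt_min one_pos (by positivity)) (min_le_left _ _)
  have h2 : min 1 (d / Z) * Z ≤ d := by
    calc min 1 (d / Z) * Z ≤ d / Z * Z := by gcongr; exact min_le_right _ _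
      _ = d := by field_simp
  simp only [d] at h2 hd
  linarith

section
variable {n : ℕ} {s : ℝ} {p ν : Measure (E n)} {f ψ : E n → ℝ}
variable {H : E n → E n →L[ℝ] E n} {t k M : ℝ}

lemma Cls.cmul (a : ℝ) (hf : Cls f) : Cls (fun x => a * f x) := by
  obtain ⟨⟨L, hL⟩, hd⟩ := hf
  refine ⟨⟨‖a‖₊ * L, ?_⟩, hd.const_mul a⟩
  exact (lipschitzWith_smul a).comp hL

lemma gradient_cmul (a : ℝ) (hf : Cls f) (x : E n) :
    gradient (fun x => a * f x) x = a • gradient f x := by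
  refine ext_inner_right ℝ fun u => ?_
  rw [inner_gradient (hf.cmul a).2, inner_smul_left, inner_gradient hf.2]
  have h2 : fderiv ℝ (fun x => a * f x) x = _ := ((hf.2 x).hasFDerivAt.const_mul a).fderiv
  rw [h2]; simp

/-- The improved Lichnerowicz inequality for measures with a regular density. -/
lemma lichn [IsProbabilityMeasure p] (hp : HasExp p) (hl : SLC 0 p) (N : Nice p ψ H t k M)
    (ht : 0 < t) {A C₁ : ℝ} (hA : 0 ≤ A) (hP : PI p C₁)
    (hcov : ∀ u : E n, cv p (fun x => ⟪u, x⟫) (fun x => ⟪u, x⟫) ≤ A * ‖u‖ ^ 2) :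
    PI p √(A / t) := by
  set S := {C : ℝ | 0 ≤ C ∧ PI p C} with hS
  have hne : S.Nonempty := ⟨max C₁ 0, le_max_right _ _, hP.mono (le_max_left _ _)⟩
  have hbd : BddBelow S := ⟨0, fun C hC => hC.1⟩
  set C := sInf S with hCd
  have hC0 : 0 ≤ C := le_csInf hne fun C hC => hC.1
  have hPC : PI p C := by
    intro f hf
    set D := ∫ x, ‖gradient f x‖ ^ 2 ∂p
    have hD0 : 0 ≤ D := integral_nonneg fun y => by positivity
    by_contra hcon
    push Not at hcon
    have h1 : ∀ C' ∈ S, cv p f f ≤ C' * D := fun C' hC' => hC'.2 f hf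
    by_cases hD : D = 0
    · obtain ⟨C', hC'⟩ := hne
      have := h1 C' hC'
      rw [hD, mul_zero] at this hcon; linarith
    · have hDp : 0 < D := lt_of_le_of_ne hD0 (Ne.symm hD)
      have : cv p f f / D ≤ C := le_csInf hne fun C' hC' => by
        rw [div_le_iff₀ hDp]; exact h1 C' hC'
      rw [div_le_iff₀ hDp] at this
      linarith
  refine hPC.mono ?_
  rcases hC0.eq_or_lt with h0 | hCp
  · rw [← h0]; positivity
  have hmain : t * C ^ 2 ≤ A := by
    refine lich_limit (R := √(2 * k ^ 2 + 2 * (n * M ^ 2))) (m := n * M ^ 2) ht.le hCp hA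
      (by positivity) (by positivity) fun s hs hs1 => ?_
    have hnot : max (C - s ^ 2) 0 ∉ S := by
      intro hmem
      have := csInf_le hbd hmem
      rw [← hCd] at this
      rcases le_max_iff.1 this with h | h
      · have : 0 < s ^ 2 := by positivity
        linarith
      · linarith
    have : ¬ PI p (max (C - s ^ 2) 0) := fun h => hnot ⟨le_max_right _ _, h⟩
    unfold PI at this
    push Not at this
    obtain ⟨f, hf, hlt⟩ := this
    set D := ∫ x, ‖gradient f x‖ ^ 2 ∂p with hD
    have hD0 : 0 ≤ D := integral_nonneg fun y => by positivity
    have hDp : 0 < D := by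
      refine lt_of_le_of_ne hD0 fun h => ?_
      have := hPC f hf
      rw [← hD, ← h, mul_zero] at this
      rw [← h, mul_zero] at hlt
      linarith
    have hr : (√D)⁻¹ ^ 2 = D⁻¹ := by rw [inv_pow, Real.sq_sqrt hD0]
    have hg := hf.cmul (√D)⁻¹
    have hgD : ∫ x, ‖gradient (fun x => (√D)⁻¹ * f x) x‖ ^ 2 ∂p = 1 := by
      simp only [gradient_cmul _ hf, norm_smul, mul_pow, Real.norm_eq_abs, sq_abs, hr]
      rw [integral_const_mul, ← hD]
      field_simp
    have hgV : C - s ^ 2 ≤ cv p (fun x => (√D)⁻¹ * f x) (fun x => (√D)⁻¹ * f x) := by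
      rw [cv_cmul_left, cv_cmul_right, ← mul_assoc, ← sq, hr]
      rw [inv_mul_eq_div, le_div_iff₀ hDp]
      exact (mul_le_mul_of_nonneg_right (le_max_left _ _) hD0).trans hlt.le
    have a1 := near_ext hp hs hCp hA hPC hcov hg hgD hgV
    obtain ⟨D', w, b1, b2, b3, b4, b5, b6⟩ := lich_step hp hs hs1 hl N hCp hPC hg hgD
    have a2 := vg_norm_le hp hg
    rw [hgD] at a2
    refine ⟨‖vg p _‖, D', w, norm_nonneg _, ?_, b1, b2, b3, a1, b4, hgV.trans b5, b6⟩
    nlinarith [norm_nonneg (vg p fun x => (√D)⁻¹ * f x)]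
  refine Real.le_sqrt_of_sq_le ?_
  rw [le_div_iff₀ ht]; linarith

end

end PC

namespace PC
open scoped ContDiff


/-! ### Regularity of Gaussian convolutions -/

section
variable {n : ℕ} {s : ℝ} {p ν W : Measure (E n)} {f ψ : E n → ℝ} {R t : ℝ}

lemma hasExp_of_bdd [IsFiniteMeasure ν] (hR : ∀ᵐ x ∂ν, ‖x‖ ≤ R) : HasExp ν := by
  intro c
  refine Integrable.of_bound (C := exp (|c| * R)) (by fun_prop) ?_
  filter_upwards [hR] with x hx
  rw [Real.norm_eq_abs, abs_of_pos (exp_pos _)]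
  refine exp_le_exp.2 ?_
  calc c * ‖x‖ ≤ |c| * ‖x‖ := by gcongr; exact le_abs_self c
    _ ≤ |c| * R := by gcongr

/-- Convolution with a Gaussian preserves log-concavity. -/
lemma sm_slc [IsProbabilityMeasure p] (hs : 0 < s) (hl : SLC 0 p) :
    SLC 0 (sm p s) := by
  obtain ⟨w, hw, hw0, hlc, hWd⟩ := hl
  refine ⟨dn p s, dn_meas, fun y => (dn_pos hs y).le, fun a b => ?_, rfl⟩
  have hkey : ∀ y, ENNReal.ofReal (∫ x, gk s (y - x) ∂p) =
      ∫⁻ x, ENNReal.ofReal (w x * gk s (y - x)) := by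
    intro y
    have hm : Measurable fun x => ENNReal.ofReal (gk s (y - x)) :=
      ((gk_cont s).comp (continuous_const.sub continuous_id)).measurable.ennreal_ofReal
    rw [ofReal_integral_eq_lintegral_ofReal (gk_intg_fin hs y)
      (Filter.Eventually.of_forall fun x => (gk_pos _ _).le)]
    conv_lhs => rw [hWd]
    rw [lintegral_withDensity_eq_lintegral_mul _ hw.ennreal_ofReal hm]
    refine lintegral_congr fun x => ?_
    rw [Pi.mul_apply, ← ENNReal.ofReal_mul (hw0 x)]
  have hmm : ∀ y, Measurable fun x => ENNReal.ofReal (w x * gk s (y - x)) := fun y =>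
    (hw.mul ((gk_cont s).comp (continuous_const.sub continuous_id)).measurable).ennreal_ofReal
  have h1 := pl (hmm a) (hmm b) (hmm ((1 / 2 : ℝ) • (a + b))) fun x y => by
    rw [← ENNReal.ofReal_mul (mul_nonneg (hw0 x) (gk_pos _ _).le),
      ← ENNReal.ofReal_pow (mul_nonneg (hw0 _) (gk_pos _ _).le)]
    refine ENNReal.ofReal_le_ofReal ?_
    have e1 : gk s (a - x) * gk s (b - y) ≤
        gk s ((1 / 2 : ℝ) • (a + b) - (1 / 2 : ℝ) • (x + y)) ^ 2 := by
      unfold gk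
      rw [← exp_add, ← exp_nat_mul]
      refine exp_le_exp.2 ?_
      have h2 := parallelogram_law_with_norm ℝ (a - x) (b - y)
      have h3 : (1 / 2 : ℝ) • (a + b) - (1 / 2 : ℝ) • (x + y) =
        (1 / 2 : ℝ) • ((a - x) + (b - y)) := by module
      rw [h3, norm_smul, mul_pow]
      have h4 : 0 ≤ ‖a - x - (b - y)‖ * ‖a - x - (b - y)‖ := by positivity
      norm_num
      rw [← sub_nonneg]
      have : ‖b - y‖ ^ 2 / (2 * s) + ‖a - x‖ ^ 2 / (2 * s) -
          2 * (1 / 4 * ‖a - x + (b - y)‖ ^ 2 / (2 * s)) =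
        (2 * (‖b - y‖ ^ 2 + ‖a - x‖ ^ 2) - ‖a - x + (b - y)‖ ^ 2) / (4 * s) := by
        field_simp; ring
      rw [this]
      refine div_nonneg ?_ (by positivity)
      nlinarith
    have e2 : w x * w y ≤ w ((1 / 2 : ℝ) • (x + y)) ^ 2 := by simpa using hlc x y
    calc w x * gk s (a - x) * (w y * gk s (b - y)) =
        (w x * w y) * (gk s (a - x) * gk s (b - y)) := by ring
      _ ≤ w ((1 / 2 : ℝ) • (x + y)) ^ 2 *
        gk s ((1 / 2 : ℝ) • (a + b) - (1 / 2 : ℝ) • (x + y)) ^ 2 := by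
          refine mul_le_mul e2 e1 (mul_pos (gk_pos _ _) (gk_pos _ _)).le (by positivity)
      _ = _ := by ring
  rw [← hkey, ← hkey, ← hkey, ← ENNReal.ofReal_mul (gk_int_pos hs a).le,
    ← ENNReal.ofReal_pow (gk_int_pos hs _).le,
    ENNReal.ofReal_le_ofReal_iff (sq_nonneg _)] at h1
  simp only [zero_div, neg_zero, zero_mul, exp_zero, mul_one]
  unfold dn
  have hZ := gZ_pos (n := n) hs
  calc _ = (gZ n s)⁻¹ ^ 2 * ((∫ x, gk s (a - x) ∂p) * ∫ x, gk s (b - x) ∂p) := by ring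
    _ ≤ (gZ n s)⁻¹ ^ 2 * (∫ x, gk s ((1 / 2 : ℝ) • (a + b) - x) ∂p) ^ 2 := by gcongr
    _ = _ := by ring

/-- Posterior covariance operator of the exponential tilt. -/
def tcov (W : Measure (E n)) (θ : E n) : E n →L[ℝ] E n :=
  (∫ x, (innerSL ℝ x).smulRight x ∂(tl W θ)) -
    (innerSL ℝ (∫ x, x ∂(tl W θ))).smulRight (∫ x, x ∂(tl W θ))

lemma smulRight_norm (x y : E n) : ‖(innerSL ℝ x).smulRight y‖ = ‖x‖ * ‖y‖ := by
  rw [ContinuousLinearMap.norm_smulRight_apply, innerSL_apply_norm]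

lemma expB_smulRight : ExpB (fun x : E n => (innerSL ℝ x).smulRight x) :=
  ExpB.of_le (g := fun x => ‖x‖ * ‖x‖) (expB_id.norm.mul expB_id.norm)
    fun x => (smulRight_norm x x).le

lemma cont_smulRight : Continuous (fun x : E n => (innerSL ℝ x).smulRight x) := by
  have : (fun x : E n => (innerSL ℝ x).smulRight x) =
    fun x => ContinuousLinearMap.smulRightL ℝ (E n) (E n) (innerSL ℝ x) x := rfl
  rw [this]
  fun_prop

lemma tmean_hasFDerivAt (hW : HasExp W) (h0 : W ≠ 0) (θ : E n) :
    HasFDerivAt (fun θ => ∫ x, x ∂(tl W θ)) (tcov W θ) θ :=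
  tl_hasFDerivAt hW h0 expB_id (by fun_prop) θ

lemma tcov_inner (hW : HasExp W) (h0 : W ≠ 0) (θ u v : E n) :
    ⟪tcov W θ u, v⟫ = cv (tl W θ) (fun x => ⟪u, x⟫) (fun x => ⟪v, x⟫) := by
  have := tl_prob hW h0 θ
  have hE := tl_hasExp hW θ
  have i1 : Integrable (fun x : E n => (innerSL ℝ x).smulRight x) (tl W θ) :=
    expB_smulRight.integrable hE cont_smulRight.aestronglyMeasurable
  have i2 : Integrable (fun x : E n => x) (tl W θ) := expB_id.integrable hE (by fun_prop)
  unfold tcov cv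
  rw [sub_apply, inner_sub_left, ContinuousLinearMap.integral_apply i1]
  have e1 : ∀ w : E n, ∫ x, ⟪w, x⟫ ∂(tl W θ) = ⟪w, ∫ x, x ∂(tl W θ)⟫ := fun w =>
    integral_inner i2 w
  rw [e1, e1]
  have i3 : Integrable (fun x : E n => (innerSL ℝ x).smulRight x u) (tl W θ) :=
    i1.apply_continuousLinearMap u
  rw [real_inner_comm, ← integral_inner i3]
  congr 1
  · refine integral_congr_ae (Filter.Eventually.of_forall fun x => ?_)
    simp [inner_smul_right, real_inner_comm]
  · simp [inner_smul_left, real_inner_comm]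

lemma tl_ae {P : E n → Prop} (hR : ∀ᵐ x ∂W, P x) (θ : E n) : ∀ᵐ x ∂(tl W θ), P x :=
  (tl_ac θ).ae_le hR

lemma tmean_norm (hW : HasExp W) (h0 : W ≠ 0) (hR : ∀ᵐ x ∂W, ‖x‖ ≤ R) (θ : E n) :
    ‖∫ x, x ∂(tl W θ)‖ ≤ R := by
  have := tl_prob hW h0 θ
  simpa using norm_integral_le_of_norm_le_const (tl_ae hR θ)

/-- Averages of a bounded function against exponential tilts of a measure of bounded support are
Lipschitz in the tilt. -/
lemma tl_lip {F : Type} [NormedAddCommGroup F] [NormedSpace ℝ F] [CompleteSpace F]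
    (hW : HasExp W) (h0 : W ≠ 0) (hR : ∀ᵐ x ∂W, ‖x‖ ≤ R) {g : E n → F} (hg : ExpB g)
    (hm : AEStronglyMeasurable g W) {B : ℝ} (_ : 0 ≤ B) (hB : ∀ᵐ x ∂W, ‖g x‖ ≤ B) (θ θ' : E n) :
    ‖∫ x, g x ∂(tl W θ) - ∫ x, g x ∂(tl W θ')‖ ≤ 2 * R * B * ‖θ - θ'‖ := by
  refine Convex.norm_image_sub_le_of_norm_hasFDerivWithin_le (s := Set.univ) (𝕜 := ℝ)
    (f := fun θ => ∫ x, g x ∂(tl W θ))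
    (fun θ _ => (tl_hasFDerivAt hW h0 hg hm θ).hasFDerivWithinAt) (fun θ _ => ?_) convex_univ
    (Set.mem_univ _) (Set.mem_univ _)
  have := tl_prob hW h0 θ
  have hR0 : 0 ≤ R := (norm_nonneg _).trans (tmean_norm hW h0 hR θ)
  have h1 : ‖∫ x, (innerSL ℝ x).smulRight (g x) ∂(tl W θ)‖ ≤ R * B := by
    have : ∀ᵐ x ∂(tl W θ), ‖(innerSL ℝ x).smulRight (g x)‖ ≤ R * B := by
      filter_upwards [tl_ae hR θ, tl_ae hB θ] with x h1 h2
      rw [ContinuousLinearMap.norm_smulRight_apply, innerSL_apply_norm]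
      gcongr
    simpa using norm_integral_le_of_norm_le_const this
  have h2 : ‖∫ x, g x ∂(tl W θ)‖ ≤ B := by
    simpa using norm_integral_le_of_norm_le_const (tl_ae hB θ)
  refine (norm_sub_le _ _).trans ?_
  rw [ContinuousLinearMap.norm_smulRight_apply, innerSL_apply_norm]
  have h3 := tmean_norm hW h0 hR θ
  have h4 : ‖∫ x, x ∂(tl W θ)‖ * ‖∫ x, g x ∂(tl W θ)‖ ≤ R * B := by gcongr
  linarith

lemma tcov_lip (hW : HasExp W) (h0 : W ≠ 0) (hR : ∀ᵐ x ∂W, ‖x‖ ≤ R) (θ θ' : E n) :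
    ‖tcov W θ - tcov W θ'‖ ≤ 6 * R ^ 3 * ‖θ - θ'‖ := by
  have hR0 : 0 ≤ R := (norm_nonneg _).trans (tmean_norm hW h0 hR θ)
  have h1 := tl_lip hW h0 hR expB_smulRight cont_smulRight.aestronglyMeasurable
    (B := R ^ 2) (by positivity) (by
      filter_upwards [hR] with x hx
      rw [smulRight_norm, ← sq]; gcongr) θ θ'
  have h2 := tl_lip hW h0 hR (g := fun x => x) expB_id (by fun_prop) hR0 hR θ θ'
  have h3 := tmean_norm hW h0 hR θ
  have h4 := tmean_norm hW h0 hR θ'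
  unfold tcov
  set a := ∫ x, x ∂(tl W θ)
  set b := ∫ x, x ∂(tl W θ')
  set P := ∫ x, (innerSL ℝ x).smulRight x ∂(tl W θ)
  set Q := ∫ x, (innerSL ℝ x).smulRight x ∂(tl W θ')
  have e : P - (innerSL ℝ a).smulRight a - (Q - (innerSL ℝ b).smulRight b) =
      (P - Q) - ((innerSL ℝ (a - b)).smulRight a + (innerSL ℝ b).smulRight (a - b)) := by
    ext1 u
    simp only [sub_apply, add_apply, ContinuousLinearMap.smulRight_apply, innerSL_apply_apply, inner_sub_left]
    module
  rw [e]
  refine (norm_sub_le _ _).trans ?_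
  have h5 := norm_add_le ((innerSL ℝ (a - b)).smulRight a) ((innerSL ℝ b).smulRight (a - b))
  rw [smulRight_norm, smulRight_norm] at h5
  have h6 : ‖a - b‖ * ‖a‖ ≤ (2 * R * R * ‖θ - θ'‖) * R := by gcongr
  have h7 : ‖b‖ * ‖a - b‖ ≤ R * (2 * R * R * ‖θ - θ'‖) := by gcongr
  nlinarith

lemma tcov_norm (hW : HasExp W) (h0 : W ≠ 0) (hR : ∀ᵐ x ∂W, ‖x‖ ≤ R) (θ : E n) :
    ‖tcov W θ‖ ≤ 2 * R ^ 2 := by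
  have := tl_prob hW h0 θ
  have hR0 : 0 ≤ R := (norm_nonneg _).trans (tmean_norm hW h0 hR θ)
  have h3 := tmean_norm hW h0 hR θ
  have h1 : ‖∫ x, (innerSL ℝ x).smulRight x ∂(tl W θ)‖ ≤ R ^ 2 := by
    have : ∀ᵐ x ∂(tl W θ), ‖(innerSL ℝ x).smulRight x‖ ≤ R ^ 2 := by
      filter_upwards [tl_ae hR θ] with x h1
      rw [smulRight_norm, ← sq]
      gcongr
    simpa using norm_integral_le_of_norm_le_const this
  unfold tcov
  refine (norm_sub_le _ _).trans ?_
  rw [smulRight_norm]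
  have : ‖∫ x, x ∂(tl W θ)‖ * ‖∫ x, x ∂(tl W θ)‖ ≤ R * R := by gcongr
  nlinarith

end

end PC

namespace PC
open scoped ContDiff


/-! ### Smoothed strongly log-concave measures -/

section
variable {n : ℕ} {s : ℝ} {p ν W : Measure (E n)} {f ψ : E n → ℝ} {R t : ℝ}

lemma logLap_hasGradientAt (hW : HasExp W) (h0 : W ≠ 0) (θ : E n) :
    HasGradientAt (fun θ => log (∫ x, exp ⟪θ, x⟫ ∂W)) (∫ x, x ∂(tl W θ)) θ := by
  have hpos := exp_inner_integral_pos hW h0 θ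
  have hL : (fun θ => ∫ x, exp ⟪θ, x⟫ ∂W) =
      lap W (fun x : E n => innerSL ℝ x) (fun _ => (1 : ℝ)) := by
    ext θ; unfold lap; simp [real_inner_comm]
  have hB : LapB W (fun x : E n => innerSL ℝ x) (fun _ => (1 : ℝ)) :=
    (ExpB.const (1 : ℝ)).lapB aestronglyMeasurable_const
  have h1 := lap_hasFDerivAt (lapM_of_hasExp hW) hB θ
  rw [← hL] at h1
  have h2 := h1.log hpos.ne'
  rw [hasGradientAt_iff_hasFDerivAt]
  refine h2.congr_fderiv (Eq.symm ?_)
  ext u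
  have i1 : Integrable (fun x => exp ⟪θ, x⟫ • x) W := by
    have : ExpB (fun x : E n => exp ⟪θ, x⟫ • x) := (expB_exp_inner θ).smul expB_id
    exact this.integrable hW (by fun_prop)
  have i2 := (hB.deriv (lapM_of_hasExp hW)).integrable (lapM_of_hasExp hW) θ
  rw [InnerProductSpace.toDual_apply_apply, integral_tl, inner_smul_left, real_inner_comm,
    ← integral_inner i1, smul_apply]
  unfold lap
  rw [ContinuousLinearMap.integral_apply i2]
  simp [inner_smul_right, real_inner_comm]

/-- The Gaussian regularization of a compactly supported strongly log-concave measure has a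
density as regular as needed. -/
lemma sm_nice [IsProbabilityMeasure ν] (hs : 0 < s) (hR : ∀ᵐ x ∂ν, ‖x‖ ≤ R) (hl : SLC t ν)
    (ht : 0 ≤ t) : ∃ ψ H k M, Nice (sm ν s) ψ H (t / (1 + t * s)) k M := by
  have hν := hasExp_of_bdd hR
  have hν0 : ν ≠ 0 := IsProbabilityMeasure.ne_zero ν
  set W := gw s ν with hWd
  have hW : HasExp W := gw_hasExp hs hν
  have h0 : W ≠ 0 := gw_ne_zero hν0
  have hWR : ∀ᵐ x ∂W, ‖x‖ ≤ R := (withDensity_absolutelyContinuous _ _).ae_le hR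
  have hR0 : 0 ≤ R := (norm_nonneg _).trans (tmean_norm hW h0 hWR 0)
  set ψ : E n → ℝ := fun y => log (gZ n s) + ‖y‖ ^ 2 / (2 * s) -
    log (∫ x, exp ⟪s⁻¹ • y, x⟫ ∂W) with hψ
  have hgr : ∀ y, HasGradientAt ψ (s⁻¹ • (y - ∫ x, x ∂(tl W (s⁻¹ • y)))) y := by
    intro y
    rw [hasGradientAt_iff_hasFDerivAt]
    have h1 := ((hasStrictFDerivAt_norm_sq y).hasFDerivAt.mul_const (2 * s)⁻¹).const_add
      (log (gZ n s))
    have h2 := (hasGradientAt_iff_hasFDerivAt.1 (logLap_hasGradientAt hW h0 (s⁻¹ • y))).comp y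
      ((hasFDerivAt_id y).const_smul s⁻¹)
    refine (h1.sub h2).congr_fderiv ?_
    ext u
    simp
    field_simp
  have hgr' : gradient ψ = fun y => s⁻¹ • (y - ∫ x, x ∂(tl W (s⁻¹ • y))) :=
    funext fun y => (hgr y).gradient
  refine ⟨ψ, fun y => s⁻¹ • (ContinuousLinearMap.id ℝ (E n) - s⁻¹ • tcov W (s⁻¹ • y)),
    s⁻¹ * (1 + s⁻¹ * (2 * R ^ 2)), s⁻¹ * (s⁻¹ * (6 * R ^ 3 * s⁻¹)),
    fun y => (hasGradientAt_iff_hasFDerivAt.1 (hgr y)).differentiableAt, ?_, ?_, ?_, ?_, ?_,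
    by positivity, by positivity, by positivity⟩
  · unfold sm
    congr 1; ext y; congr 1
    have hpos := exp_inner_integral_pos hW h0 (s⁻¹ • y)
    have : -ψ y = -log (gZ n s) + -(‖y‖ ^ 2 / (2 * s)) + log (∫ x, exp ⟪s⁻¹ • y, x⟫ ∂W) := by
      rw [hψ]; ring
    rw [this, exp_add, exp_add, exp_neg, exp_log (gZ_pos hs), exp_log hpos]
    unfold dn
    rw [hWd, gw_int, mul_assoc]
    simp only [gk_sub hs, integral_const_mul]
    rfl
  · intro y
    rw [hgr']
    have h2 := (tmean_hasFDerivAt hW h0 (s⁻¹ • y)).comp y ((hasFDerivAt_id y).const_smul s⁻¹)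
    refine (((hasFDerivAt_id y).sub h2).const_smul s⁻¹).congr_fderiv ?_
    ext1 u
    simp
  · intro y u
    have := tl_prob hW h0 (s⁻¹ • y)
    have hts : 0 < t + 1 / s := by positivity
    have h1 := (PI_slc (tl_hasExp hW (s⁻¹ • y)) hts
      (tl_slc hW h0 (gw_slc hs hl) (s⁻¹ • y))).lin u
    rw [← tcov_inner hW h0] at h1
    simp only [smul_apply, sub_apply, ContinuousLinearMap.id_apply, inner_smul_left,
      inner_sub_left, real_inner_self_eq_norm_sq]
    simp only [conj_trivial]
    have e1 : t / (1 + t * s) * ‖u‖ ^ 2 =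
        s⁻¹ * (‖u‖ ^ 2 - s⁻¹ * (1 / (t + 1 / s) * ‖u‖ ^ 2)) := by
      have : t * s + 1 ≠ 0 := by positivity
      field_simp; ring
    rw [e1]; gcongr
  · intro y
    rw [norm_smul, Real.norm_eq_abs, abs_of_pos (inv_pos.2 hs)]
    gcongr
    refine (norm_sub_le _ _).trans ?_
    gcongr
    · exact ContinuousLinearMap.norm_id_le
    · rw [norm_smul, Real.norm_eq_abs, abs_of_pos (inv_pos.2 hs)]
      gcongr; exact tcov_norm hW h0 hWR _
  · intro y z
    have : s⁻¹ • (ContinuousLinearMap.id ℝ (E n) - s⁻¹ • tcov W (s⁻¹ • y)) -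
      s⁻¹ • (ContinuousLinearMap.id ℝ (E n) - s⁻¹ • tcov W (s⁻¹ • z)) =
      s⁻¹ • (s⁻¹ • (tcov W (s⁻¹ • z) - tcov W (s⁻¹ • y))) := by module
    rw [this, norm_smul, norm_smul, Real.norm_eq_abs, abs_of_pos (inv_pos.2 hs)]
    have h1 := tcov_lip hW h0 hWR (s⁻¹ • z) (s⁻¹ • y)
    rw [← smul_sub, norm_smul, Real.norm_eq_abs, abs_of_pos (inv_pos.2 hs), norm_sub_rev z y] at h1
    calc _ ≤ s⁻¹ * (s⁻¹ * (6 * R ^ 3 * (s⁻¹ * ‖y - z‖))) := by gcongr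
      _ = _ := by ring

lemma PI_sm [IsProbabilityMeasure p] (hs : 0 < s) (hp : HasExp p) {C : ℝ} (hC : 0 < C)
    (hP : PI p C) : PI (sm p s) (C + s) := by
  intro g hg
  have := sm_prob hs hp
  have h1 := fwd_var hs hp hC.le hP hg
  have h2 := vg_norm_le (sm_hasExp hs hp) hg
  refine h1.trans ?_
  set Dg := ∫ x, ‖gradient g x‖ ^ 2 ∂(sm p s)
  have h3 : C / (C + s) ≤ 1 := by rw [div_le_one (by positivity)]; linarith
  have h4 : C / (C + s) * (Dg - ‖vg (sm p s) g‖ ^ 2) + ‖vg (sm p s) g‖ ^ 2 ≤ Dg := by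
    nlinarith
  nlinarith

lemma Kop_lin (hs : 0 < s) (u y : E n) : Kop (gw s volume) s (fun x => ⟪u, x⟫) y = ⟪u, y⟫ := by
  have hZ := gZ_pos (n := n) hs
  rw [Kop_gw hs]
  have e1 : ∫ x, gk s (y - x) = gZ n s := integral_sub_left_eq_self (gk s) volume y
  have e2 : ∫ x, ⟪u, x⟫ * gk s (y - x) = ∫ z, ⟪u, y - z⟫ * gk s z := by
    rw [← integral_sub_left_eq_self (fun z => ⟪u, y - z⟫ * gk s z) volume y]
    simp
  have i1 : Integrable (fun z : E n => gk s z * ⟪u, z⟫) :=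
    gw_intg _ |>.1 ((Ok.inner u).int (gauss_hasExp hs))
  have e3 : ∫ z : E n, gk s z * ⟪u, z⟫ = 0 := by
    have h1 := integral_neg_eq_self (fun z : E n => gk s z * ⟪u, z⟫) volume
    simp only [gk_neg, inner_neg_right, mul_neg, integral_neg] at h1
    linarith
  have e4 : ∀ z : E n, ⟪u, y - z⟫ * gk s z = ⟪u, y⟫ * gk s z - gk s z * ⟪u, z⟫ := fun z => by
    rw [inner_sub_right]; ring
  rw [e1, e2]
  simp only [e4]
  rw [integral_sub ((gk_intg hs).const_mul _) i1, e3, integral_const_mul]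
  change (gZ n s)⁻¹ * (⟪u, y⟫ * gZ n s - 0) = _
  field_simp; ring

lemma sm_cov [IsProbabilityMeasure p] (hs : 0 < s) (hp : HasExp p) {A : ℝ}
    (hcov : ∀ u : E n, cv p (fun x => ⟪u, x⟫) (fun x => ⟪u, x⟫) ≤ A * ‖u‖ ^ 2) (u : E n) :
    cv (sm p s) (fun x => ⟪u, x⟫) (fun x => ⟪u, x⟫) ≤ (A + s) * ‖u‖ ^ 2 := by
  have c := chan_fwd hs hp
  have := c.βp
  have h1 := c.total_le (cls_inner u)
  have h2 : Kop (gw s volume) s (fun x => ⟪u, x⟫) = fun x => ⟪u, x⟫ := funext (Kop_lin hs u)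
  rw [h2] at h1
  simp only [gradient_inner] at h1
  simp at h1
  have := hcov u
  linarith

lemma sm_lip [IsProbabilityMeasure p] (hs : 0 < s) (hp : HasExp p) {F : E n → ℝ} {L : NNReal}
    (hF : LipschitzWith L F) :
    |∫ x, F x ∂(sm p s) - ∫ x, F x ∂p| ≤ L * (√s * (1 + n)) := by
  have c := chan_fwd hs hp
  have hFo : Ok F := ⟨hF.continuous.measurable, hF.expB⟩
  have hi := c.intg F hFo
  rw [c.eq F hFo, ← integral_sub hi (hFo.int hp)]
  suffices hy : ∀ y, ‖Kop (gw s volume) s F y - F y‖ ≤ L * (√s * (1 + n)) by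
    have := norm_integral_le_of_norm_le_const (μ := p) (Filter.Eventually.of_forall hy)
    rwa [probReal_univ, mul_one] at this
  intro y
  have := c.prob y
  have hE := c.exp y
  have hsq := integral_sq_sub_mean hE (c.pi y)
  have i0 : Integrable (fun x : E n => x) (tl (gw s volume) (s⁻¹ • y)) :=
    expB_id.integrable hE (by fun_prop)
  have hmean : ∫ z, z ∂(tl (gw s volume) (s⁻¹ • y)) = y := by
    refine ext_inner_left ℝ fun u => ?_
    rw [← integral_inner i0]
    exact Kop_lin hs u y
  rw [hmean] at hsq
  have hsp := Real.sqrt_pos.2 hs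
  have hss := Real.sq_sqrt hs.le
  have i2 : Integrable (fun x : E n => ‖x - y‖ ^ 2) (tl (gw s volume) (s⁻¹ • y)) :=
    ExpB.integrable ((expB_id.sub (ExpB.const y)).norm.pow 2) hE (by fun_prop)
  have hb : |Kop (gw s volume) s F y - F y| ≤
      ∫ x, L * (√s + (√s)⁻¹ * ‖x - y‖ ^ 2) ∂(tl (gw s volume) (s⁻¹ • y)) := by
    have : Kop (gw s volume) s F y - F y =
        ∫ x, (F x - F y) ∂(tl (gw s volume) (s⁻¹ • y)) := by
      rw [integral_sub (hFo.int hE) (integrable_const _)]; simp [Kop]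
    rw [this, ← Real.norm_eq_abs]
    refine norm_integral_le_of_norm_le (((integrable_const _).add (i2.const_mul _)).const_mul _)
      (Filter.Eventually.of_forall fun x => ?_)
    have h1 := hF.dist_le_mul x y
    rw [dist_eq_norm, dist_eq_norm] at h1
    refine h1.trans ?_
    gcongr
    have : 0 ≤ (√s)⁻¹ * (‖x - y‖ - √s) ^ 2 := by positivity
    have e : (√s)⁻¹ * (‖x - y‖ - √s) ^ 2 = (√s)⁻¹ * ‖x - y‖ ^ 2 - 2 * ‖x - y‖ + √s := by
      field_simp; ring
    have := norm_nonneg (x - y)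
    linarith
  rw [Real.norm_eq_abs]
  refine hb.trans ?_
  rw [integral_const_mul, integral_add (integrable_const _) (i2.const_mul _), integral_const_mul]
  simp only [integral_const, probReal_univ, one_smul]
  have : (√s)⁻¹ * ∫ x, ‖x - y‖ ^ 2 ∂(tl (gw s volume) (s⁻¹ • y)) ≤ √s * n := by
    calc _ ≤ (√s)⁻¹ * (n * s) := by gcongr
      _ = √s * n := by
        rw [inv_mul_eq_div, div_eq_iff hsp.ne']
        linear_combination -(n : ℝ) * hss
  have hL : (0 : ℝ) ≤ L := L.2
  have := mul_le_mul_of_nonneg_left (add_le_add_right this (√s)) hL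
  linarith

end

end PC

namespace PC
open scoped ContDiff


/-! ### The Lichnerowicz inequality in general, and third moments -/

section
variable {n : ℕ} {s : ℝ} {p ν W : Measure (E n)} {f : E n → ℝ} {R t A : ℝ}

lemma contDiff_gradsq (hf : ContDiff ℝ ∞ f) : ContDiff ℝ ∞ (fun x => ‖gradient f x‖ ^ 2) := by
  have h1 : ContDiff ℝ ∞ (gradient f) := by
    have : gradient f = fun x => (InnerProductSpace.toDual ℝ (E n)).symm (fderiv ℝ f x) := rfl
    rw [this]
    exact (InnerProductSpace.toDual ℝ (E n)).symm.contDiff.comp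
      (hf.fderiv_right (m := ∞) (by simp))
  exact h1.norm_sq ℝ

lemma sm_tendsto [IsProbabilityMeasure p] (hp : HasExp p) {F : E n → ℝ} {L : NNReal}
    (hF : LipschitzWith L F) :
    Filter.Tendsto (fun s => ∫ x, F x ∂(sm p s)) (nhdsWithin 0 (Set.Ioi 0))
      (nhds (∫ x, F x ∂p)) := by
  rw [tendsto_iff_dist_tendsto_zero]
  have h1 : Filter.Tendsto (fun s : ℝ => L * (√s * (1 + n))) (nhdsWithin 0 (Set.Ioi 0))
      (nhds 0) := by
    have : Continuous fun s : ℝ => (L : ℝ) * (√s * (1 + n)) := by fun_prop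
    have h := this.tendsto 0
    simp only [Real.sqrt_zero, zero_mul, mul_zero] at h
    exact h.mono_left nhdsWithin_le_nhds
  refine squeeze_zero' (Filter.Eventually.of_forall fun _ => dist_nonneg) ?_ h1
  filter_upwards [self_mem_nhdsWithin] with s hs
  rw [Real.dist_eq]
  exact sm_lip hs hp hF

/-- The improved Lichnerowicz inequality: a `t`-strongly log-concave compactly supported measure
whose covariance is at most `A` satisfies a Poincaré inequality with constant `√(A / t)` for smooth functions. -/
theorem lich [IsProbabilityMeasure ν] (hR : ∀ᵐ x ∂ν, ‖x‖ ≤ R) (hl : SLC t ν) (ht : 0 < t)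
    (hA : 0 ≤ A)
    (hcov : ∀ u : E n, cv ν (fun x => ⟪u, x⟫) (fun x => ⟪u, x⟫) ≤ A * ‖u‖ ^ 2)
    (hf : ContDiff ℝ ∞ f) : cv ν f f ≤ √(A / t) * ∫ x, ‖gradient f x‖ ^ 2 ∂ν := by
  have hν := hasExp_of_bdd hR
  set r := max R 0
  have hr0 : 0 ≤ r := le_max_right _ _
  let χ : ContDiffBump (0 : E n) := ⟨r + 1, r + 2, by linarith, by linarith⟩
  set g : E n → ℝ := fun x => χ x * f x with hg
  have hgs : ContDiff ℝ ∞ g := χ.contDiff.mul hf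
  have hgc : HasCompactSupport g := χ.hasCompactSupport.mul_right
  have hloc : ∀ᵐ x ∂ν, g =ᶠ[nhds x] f := by
    filter_upwards [hR] with x hx
    have : x ∈ Metric.ball (0 : E n) χ.rIn := by
      rw [mem_ball_zero_iff]
      exact lt_of_le_of_lt (hx.trans (le_max_left _ _)) (lt_add_one r)
    filter_upwards [χ.eventuallyEq_one_of_mem_ball this] with y hy
    simp [hg, hy]
  have hfg : ∀ᵐ x ∂ν, f x = g x := by
    filter_upwards [hloc] with x hx
    exact hx.eq_of_nhds.symm
  have e1 : cv ν f f = cv ν g g := by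
    unfold cv
    rw [integral_congr_ae (hfg), integral_congr_ae (g := fun x => g x * g x)]
    filter_upwards [hfg] with x hx
    rw [hx]
  have e2 : ∫ x, ‖gradient f x‖ ^ 2 ∂ν = ∫ x, ‖gradient g x‖ ^ 2 ∂ν := by
    refine integral_congr_ae ?_
    filter_upwards [hloc] with x hx
    simp only [norm_gradient, hx.fderiv_eq]
  rw [e1, e2]
  obtain ⟨L1, hL1⟩ := hgs.lipschitzWith_of_hasCompactSupport hgc (by simp)
  have hcls : Cls g := ⟨⟨L1, hL1⟩, hgs.differentiable (by simp)⟩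
  obtain ⟨L2, hL2⟩ := (hgs.mul hgs).lipschitzWith_of_hasCompactSupport hgc.mul_right (by simp)
  have hgc3 : HasCompactSupport (fun x => ‖gradient g x‖ ^ 2) := by
    refine (hgc.fderiv ℝ).mono fun x hx => ?_
    simp only [norm_gradient, Function.mem_support] at hx ⊢
    intro h; simp [h] at hx
  obtain ⟨L3, hL3⟩ := (contDiff_gradsq hgs).lipschitzWith_of_hasCompactSupport hgc3 (by simp)
  have t1 : Filter.Tendsto (fun s => cv (sm ν s) g g) (nhdsWithin 0 (Set.Ioi 0))
      (nhds (cv ν g g)) :=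
    (sm_tendsto hν hL2).sub ((sm_tendsto hν hL1).mul (sm_tendsto hν hL1))
  have t2 : Filter.Tendsto (fun s => √((A + s) / (t / (1 + t * s))) *
      ∫ x, ‖gradient g x‖ ^ 2 ∂(sm ν s)) (nhdsWithin 0 (Set.Ioi 0))
      (nhds (√(A / t) * ∫ x, ‖gradient g x‖ ^ 2 ∂ν)) := by
    refine Filter.Tendsto.mul ?_ (sm_tendsto hν hL3)
    have : ContinuousAt (fun s : ℝ => √((A + s) / (t / (1 + t * s)))) 0 := by
      refine ContinuousAt.sqrt (ContinuousAt.div (by fun_prop) ?_ (by simpa using ht.ne'))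
      exact ContinuousAt.div (by fun_prop) (by fun_prop) (by simp)
    have h := this.tendsto
    simp only [mul_zero, add_zero, div_one] at h
    exact h.mono_left nhdsWithin_le_nhds
  refine le_of_tendsto_of_tendsto t1 t2 ?_
  filter_upwards [self_mem_nhdsWithin] with s hs
  have hs : 0 < s := hs
  obtain ⟨ψ, H, k, M, hN⟩ := sm_nice hs hR hl ht.le
  have := sm_prob hs hν
  exact lichn (sm_hasExp hs hν) (sm_slc hs (hl.mono ht.le)) hN (by positivity) (by positivity)
    (PI_sm hs hν (by positivity) (PI_slc hν ht hl)) (sm_cov hs hν hcov) g hcls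

lemma inner_center [IsProbabilityMeasure ν] (hν : HasExp ν) (u : E n) {g : E n → ℝ} (hg : Ok g) :
    ∫ x, ⟪u, x - ∫ z, z ∂ν⟫ * g x ∂ν = cv ν (fun x => ⟪u, x⟫) g := by
  unfold cv
  have i0 : Integrable (fun x : E n => x) ν := expB_id.integrable hν (by fun_prop)
  rw [integral_inner i0]
  simp only [inner_sub_right, sub_mul]
  rw [integral_sub (((Ok.inner u).mul hg).int hν) ((hg.int hν).const_mul _), integral_const_mul]

lemma Ok.innerc (u a : E n) : Ok (fun x : E n => ⟪u, x - a⟫) := by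
  simp only [inner_sub_right]
  exact (Ok.inner u).sub (Ok.const _)

lemma cv_inner_sub [IsProbabilityMeasure ν] (hν : HasExp ν) (u a : E n) {g : E n → ℝ}
    (hg : Ok g) : cv ν (fun x => ⟪u, x - a⟫) g = cv ν (fun x => ⟪u, x⟫) g := by
  simp only [inner_sub_right]
  rw [cv_sub_left hν (Ok.inner u) (Ok.const _) hg, cv_const_left, sub_zero]

/-- Bound on the third-moment tensor, contracted with one vector `u`: by Cauchy–Schwarz and the
Poincaré inequality `lich` for the quadratic form with these coefficients. -/
theorem tri_bound [IsProbabilityMeasure ν] (hR : ∀ᵐ x ∂ν, ‖x‖ ≤ R) (hl : SLC t ν) (ht : 0 < t)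
    (hA : 0 ≤ A)
    (hcov : ∀ u : E n, cv ν (fun x => ⟪u, x⟫) (fun x => ⟪u, x⟫) ≤ A * ‖u‖ ^ 2)
    (v : OrthonormalBasis (Fin n) ℝ (E n)) (u : E n) :
    ∑ b, ∑ c, (∫ x, ⟪u, x - ∫ z, z ∂ν⟫ * (⟪v b, x - ∫ z, z ∂ν⟫ * ⟪v c, x - ∫ z, z ∂ν⟫) ∂ν) ^ 2 ≤
      4 * √(A / t) * A ^ 2 * ‖u‖ ^ 2 := by
  have hν := hasExp_of_bdd hR
  set a := ∫ z, z ∂ν with ha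
  set T : Fin n → Fin n → ℝ := fun b c =>
    ∫ x, ⟪u, x - a⟫ * (⟪v b, x - a⟫ * ⟪v c, x - a⟫) ∂ν with hT
  have hTs : ∀ b c, T b c = T c b := fun b c => by
    simp only [hT, mul_comm (⟪v b, _⟫ : ℝ)]
  change ∑ b, ∑ c, T b c ^ 2 ≤ _
  set S := ∑ b, ∑ c, T b c ^ 2 with hS
  set q : E n → ℝ := fun x => ∑ b, ∑ c, T b c * (⟪v b, x - a⟫ * ⟪v c, x - a⟫) with hq
  have hqo : Ok q := Ok.sum _ fun b => Ok.sum _ fun c =>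
    ((Ok.innerc (v b) a).mul (Ok.innerc (v c) a)).cmul _
  have hqs : ContDiff ℝ ∞ q := by
    refine ContDiff.sum fun b _ => ContDiff.sum fun c _ => contDiff_const.mul
      (ContDiff.mul ?_ ?_)
    · exact contDiff_const.inner ℝ (contDiff_id.sub contDiff_const)
    · exact contDiff_const.inner ℝ (contDiff_id.sub contDiff_const)
  have hcq : cv ν (fun x => ⟪u, x⟫) q = S := by
    rw [← inner_center hν u hqo]
    simp only [hq, Finset.mul_sum]
    rw [integral_finsetSum]
    · refine Finset.sum_congr rfl fun b _ => ?_
      rw [integral_finsetSum]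
      · refine Finset.sum_congr rfl fun c _ => ?_
        rw [sq, ← integral_const_mul]
        refine integral_congr_ae (Filter.Eventually.of_forall fun x => ?_)
        dsimp only; ring
      · intro c _
        exact ((Ok.innerc u a).mul
          (((Ok.innerc (v b) a).mul (Ok.innerc (v c) a)).cmul _)).int hν
    · intro b _
      exact (Ok.sum _ fun c => ((Ok.innerc u a).mul
          (((Ok.innerc (v b) a).mul (Ok.innerc (v c) a)).cmul _))).int hν
  set w : Fin n → E n := fun c => ∑ b, T b c • v b with hw
  have hwn : ∀ c, ‖w c‖ ^ 2 = ∑ b, T b c ^ 2 := by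
    intro c
    rw [← v.sum_sq_inner_right]
    refine Finset.sum_congr rfl fun b _ => ?_
    simp only [hw, inner_sum, inner_smul_right, orthonormal_iff_ite.1 v.orthonormal]
    simp
  have hgr : ∀ x, ‖gradient q x‖ ^ 2 = 4 * ∑ c, ⟪w c, x - a⟫ ^ 2 := by
    intro x
    rw [← v.sum_sq_inner_left, Finset.mul_sum]
    refine Finset.sum_congr rfl fun d _ => ?_
    rw [inner_gradient (hqs.differentiable (by simp))]
    have hl : ∀ b, HasFDerivAt (fun x => ⟪v b, x - a⟫) (innerSL ℝ (v b)) x := fun b => by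
      simp only [inner_sub_right]
      exact ((innerSL ℝ (v b)).hasFDerivAt (x := x)).sub_const _
    have hd : HasFDerivAt q (∑ b, ∑ c, T b c • (⟪v b, x - a⟫ • innerSL ℝ (v c) +
        ⟪v c, x - a⟫ • innerSL ℝ (v b))) x :=
      HasFDerivAt.fun_sum fun b _ => HasFDerivAt.fun_sum fun c _ =>
        ((hl b).mul (hl c)).const_mul (T b c)
    have e : fderiv ℝ q x (v d) = 2 * ⟪w d, x - a⟫ := by
      rw [hd.fderiv]
      simp only [FunLike.coe_sum, Finset.sum_apply, smul_apply, add_apply, innerSL_apply_apply,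
        orthonormal_iff_ite.1 v.orthonormal, smul_eq_mul, mul_ite, mul_one, mul_zero, mul_add,
        Finset.sum_add_distrib, Finset.sum_ite_eq', Finset.mem_univ, if_true]
      rw [Finset.sum_comm (f := fun b c => if b = d then T b c * ⟪v c, x - a⟫ else 0)]
      simp only [Finset.sum_ite_eq', Finset.mem_univ, if_true, hw, sum_inner, inner_smul_left,
        conj_trivial]
      rw [two_mul]
      congr 1
      exact Finset.sum_congr rfl fun b _ => by rw [hTs]
    rw [e]; ring
  have hwi : ∀ c, ∫ x, ⟪w c, x - a⟫ ^ 2 ∂ν ≤ A * ∑ b, T b c ^ 2 := by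
    intro c
    rw [← hwn]
    refine le_of_eq_of_le ?_ (hcov (w c))
    simp only [sq]
    rw [inner_center hν _ (Ok.innerc _ _), cv_comm, cv_inner_sub hν _ _ (Ok.inner _)]
  have hDq : ∫ x, ‖gradient q x‖ ^ 2 ∂ν ≤ 4 * (A * S) := by
    simp only [hgr]
    rw [integral_const_mul, integral_finsetSum _ fun c _ => ((Ok.innerc (w c) a).pow 2).int hν]
    gcongr
    rw [hS, Finset.sum_comm, Finset.mul_sum]
    exact Finset.sum_le_sum fun c _ => hwi c
  have h1 := cv_sq_le hν (Ok.inner u) hqo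
  have h2 := lich hR hl ht hA hcov hqs
  have hS0 : 0 ≤ S := Finset.sum_nonneg fun b _ => Finset.sum_nonneg fun c _ => sq_nonneg _
  rw [hcq] at h1
  have h3 : S ^ 2 ≤ (A * ‖u‖ ^ 2) * (√(A / t) * (4 * (A * S))) := by
    refine h1.trans (mul_le_mul (hcov u) (h2.trans (by gcongr)) (cv_nonneg hν hqo)
      (by positivity))
  rcases hS0.eq_or_lt with h | h
  · rw [← h]; positivity
  · refine le_of_mul_le_mul_right (a := S) ?_ h
    nlinarith

end

end PC

namespace PC
open scoped ContDiff


/-! ### The standard Gaussian measure and the heat equation -/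

/-- The standard Gaussian measure. -/
def ga (n : ℕ) : Measure (E n) := ENNReal.ofReal (gZ n 1)⁻¹ • gw 1 volume

section
variable {n : ℕ}

lemma ga_hasExp : HasExp (ga n) := fun c =>
  (gauss_hasExp (n := n) one_pos c).smul_measure (by simp)

lemma ga_int (f : E n → ℝ) : ∫ x, f x ∂(ga n) = (gZ n 1)⁻¹ * ∫ x, gk 1 x * f x := by
  unfold ga
  rw [integral_smul_measure, gw_int, ENNReal.toReal_ofReal (inv_nonneg.2 (gZ_pos one_pos).le),
    smul_eq_mul]

instance ga_prob : IsProbabilityMeasure (ga n) := by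
  have h := ga_int (n := n) (fun _ => 1)
  have := (ga_hasExp (n := n)).isFinite
  simp only [mul_one, integral_const, smul_eq_mul] at h
  rw [show ∫ x : E n, gk 1 x = gZ n 1 from rfl, inv_mul_cancel₀ (gZ_pos one_pos).ne'] at h
  refine ⟨?_⟩
  rw [← ENNReal.ofReal_one, ← h, Measure.real, ENNReal.ofReal_toReal (measure_ne_top _ _)]

lemma ga_intg_gk {f : E n → ℝ} (hf : ExpB f) (hm : AEStronglyMeasurable f volume) :
    Integrable (fun x => gk 1 x * f x) := by
  rw [← gw_intg]
  exact hf.integrable (gauss_hasExp one_pos) (hm.mono_ac (withDensity_absolutelyContinuous _ _))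

/-- Gaussian integration by parts. -/
lemma ga_ibp {ψ ψ' : E n → ℝ} {u : E n} (h : ∀ x, HasLineDerivAt ℝ ψ (ψ' x) x u)
    (hc : Continuous ψ) (hc' : Continuous ψ') (hb : ExpB ψ) (hb' : ExpB ψ') :
    ∫ x, ⟪u, x⟫ * ψ x ∂(ga n) = ∫ x, ψ' x ∂(ga n) := by
  rw [ga_int, ga_int]
  congr 1
  have hg : ∀ x : E n, HasLineDerivAt ℝ (gk 1) (-(⟪u, x⟫ * gk 1 x)) x u := by
    intro x
    have h1 : HasFDerivAt (fun x : E n => -(‖x‖ ^ 2 / (2 * 1)))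
        (-((2 : ℝ)⁻¹ • (2 • (innerSL ℝ x)))) x := by
      have := ((hasStrictFDerivAt_norm_sq x).hasFDerivAt.const_mul (2 : ℝ)⁻¹).neg
      refine this.congr_of_eventuallyEq (Filter.Eventually.of_forall fun y => ?_)
      simp; ring
    have h2 := (h1.exp.hasLineDerivAt u)
    have e : ∀ y : E n, exp (-(‖y‖ ^ 2 / (2 * 1))) = gk 1 y := fun y => rfl
    simp only [e] at h2
    have e2 : (gk 1 x • -((2 : ℝ)⁻¹ • (2 • (innerSL ℝ x)))) u = -(⟪u, x⟫ * gk 1 x) := by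
      simp only [smul_apply, neg_apply, innerSL_apply_apply, real_inner_comm u x, smul_eq_mul,
        nsmul_eq_mul]
      push_cast; ring
    rw [e2] at h2
    exact h2
  have i := integral_bilinear_hasLineDerivAt_right_eq_neg_left_of_integrable
    (μ := (volume : Measure (E n))) (f := gk 1) (f' := fun x => -(⟪u, x⟫ * gk 1 x)) (g := ψ) (g' := ψ') (v := u)
    (B := ContinuousLinearMap.mul ℝ ℝ) ?_ ?_ ?_ (fun x _ => hg x) (fun x _ => h x)
  · simp only [ContinuousLinearMap.mul_apply', neg_mul, integral_neg, neg_neg] at i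
    rw [i]
    congr 1; ext x; ring
  · have := (ga_intg_gk ((expB_inner u).mul hb) (by fun_prop)).neg
    refine this.congr (Filter.Eventually.of_forall fun x => ?_)
    simp; ring
  · exact ga_intg_gk hb' (by fun_prop)
  · exact ga_intg_gk hb (by fun_prop)

/-- Differentiation in time of a Gaussian average at time `s`: the second-order term comes from
Gaussian integration by parts. -/
lemma heat {N : ℝ × E n → ℝ} {N' : ℝ × E n → ℝ × E n →L[ℝ] ℝ} {N2 : Fin n → E n → ℝ}
    {t a b C c : ℝ} (ht : t ∈ Set.Ioo a b) (ha : 0 < a) (hC : 0 ≤ C) (hc : 0 ≤ c)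
    (h1 : ∀ z : ℝ × E n, z.1 ∈ Set.Ioo a b → HasFDerivAt N (N' z) z)
    (hm : ContinuousOn N' (Set.Ioo a b ×ˢ Set.univ))
    (hb : ∀ z : ℝ × E n, z.1 ∈ Set.Ioo a b → ‖N z‖ ≤ C * exp (c * ‖z.2‖))
    (hb1 : ∀ z : ℝ × E n, z.1 ∈ Set.Ioo a b → ‖N' z‖ ≤ C * exp (c * ‖z.2‖))
    (h2 : ∀ θ k, HasLineDerivAt ℝ (fun θ => N' (t, θ) (0, EuclideanSpace.single k 1)) (N2 k θ) θ
      (EuclideanSpace.single k 1))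
    (hc2 : ∀ k, Continuous (N2 k)) (hb2 : ∀ k, ExpB (N2 k)) :
    HasDerivAt (fun s => ∫ g, N (s, √s • g) ∂(ga n))
      (∫ g, (N' (t, √t • g) (1, 0) + (1 / 2) * ∑ k, N2 k (√t • g)) ∂(ga n)) t := by
  have ht0 : 0 < t := ha.trans ht.1
  have hb0 : 0 < b := ht0.trans ht.2
  have hst : 0 < √t := Real.sqrt_pos.2 ht0
  have hexp : ∀ (z : ℝ) (g : E n), z ∈ Set.Ioo a b →
      C * exp (c * ‖√z • g‖) ≤ C * exp (c * √b * ‖g‖) := by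
    intro z g hz
    rw [norm_smul, Real.norm_eq_abs, abs_of_nonneg (Real.sqrt_nonneg z), mul_assoc c]
    have := Real.sqrt_le_sqrt hz.2.le
    gcongr
  have hNc : ∀ s ∈ Set.Ioo a b, Continuous fun g : E n => N (s, √s • g) := fun s hs =>
    continuous_iff_continuousAt.2 fun g =>
      (h1 (s, √s • g) hs).continuousAt.comp (f := fun g : E n => (s, √s • g)) (by fun_prop)
  have hN'c : ∀ s ∈ Set.Ioo a b, Continuous fun g : E n => N' (s, √s • g) := fun s hs =>
    hm.comp_continuous (f := fun g : E n => (s, √s • g)) (by fun_prop) fun g => by simpa using hs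
  set D : ℝ → E n → ℝ := fun s g => N' (s, √s • g) (1, (1 / (2 * √s)) • g) with hD
  have key := hasDerivAt_integral_of_dominated_loc_of_deriv_le (μ := ga n) (𝕜 := ℝ)
    (F := fun s g => N (s, √s • g)) (F' := D) (x₀ := t) (s := Set.Ioo a b)
    (bound := fun g => C * exp (c * √b * ‖g‖) * (1 + (1 / (2 * √a)) * ‖g‖))
    (Ioo_mem_nhds ht.1 ht.2)
    (Filter.eventually_of_mem (Ioo_mem_nhds ht.1 ht.2) fun s hs =>
      (hNc s hs).aestronglyMeasurable)
    ?_ ?_ ?_ ?_ ?_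
  · refine key.2.congr_deriv ?_
    have hX : ∀ u : E n, ExpB fun g : E n => N' (t, √t • g) (0, u) := by
      intro u
      refine ⟨C * ‖u‖, c * √b, by positivity, by positivity, fun g => ?_⟩
      refine (ContinuousLinearMap.le_opNorm _ _).trans ?_
      have : ‖((0 : ℝ), u)‖ = ‖u‖ := by simp [Prod.norm_def]
      rw [this, mul_right_comm]
      exact mul_le_mul_of_nonneg_right ((hb1 _ ht).trans (hexp t g ht)) (norm_nonneg _)
    have hXc : ∀ u : E n, Continuous fun g : E n => N' (t, √t • g) (0, u) := fun u =>
      (hN'c t ht).clm_apply continuous_const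
    have hY : ExpB fun g : E n => N' (t, √t • g) (1, 0) := by
      refine ⟨C, c * √b, by positivity, by positivity, fun g => ?_⟩
      refine (ContinuousLinearMap.le_opNorm _ _).trans ?_
      have : ‖((1 : ℝ), (0 : E n))‖ = 1 := by simp [Prod.norm_def]
      rw [this, mul_one]
      exact (hb1 _ ht).trans (hexp t g ht)
    have hYc : Continuous fun g : E n => N' (t, √t • g) (1, 0) :=
      (hN'c t ht).clm_apply continuous_const
    have hZ : ∀ k, ExpB fun g : E n => N2 k (√t • g) := by
      intro k
      obtain ⟨C2, c2, hC2, hc2', H⟩ := hb2 k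
      refine ⟨C2, c2 * √t, hC2, by positivity, fun g => (H _).trans (le_of_eq ?_)⟩
      rw [norm_smul, Real.norm_eq_abs, abs_of_nonneg (Real.sqrt_nonneg t), mul_assoc]
    have hZc : ∀ k, Continuous fun g : E n => N2 k (√t • g) := fun k =>
      (hc2 k).comp (by fun_prop)
    have ibp : ∀ k, ∫ g, ⟪EuclideanSpace.single k (1 : ℝ), g⟫ *
        N' (t, √t • g) (0, EuclideanSpace.single k 1) ∂(ga n) =
        √t * ∫ g, N2 k (√t • g) ∂(ga n) := by
      intro k
      rw [← integral_const_mul]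
      refine ga_ibp (fun x => ?_) (hXc _) ((hZc k).const_mul _) (hX _)
        ((ExpB.const _).mul (hZ k))
      have h := h2 (√t • x) k
      unfold HasLineDerivAt at h ⊢
      have h3 : HasDerivAt (fun τ : ℝ => √t * τ) √t 0 := by
        simpa using (hasDerivAt_id (0 : ℝ)).const_mul √t
      have h' : HasDerivAt (fun τ : ℝ => N' (t, √t • x + τ • EuclideanSpace.single k 1)
          (0, EuclideanSpace.single k 1)) (N2 k (√t • x)) (√t * 0) := by
        rw [mul_zero]; exact h
      have h4 := h'.comp (0 : ℝ) h3
      rw [mul_comm]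
      refine h4.congr_of_eventuallyEq (Filter.Eventually.of_forall fun τ => ?_)
      simp [smul_add, smul_smul]
    have hsplit : ∀ g : E n, D t g = N' (t, √t • g) (1, 0) +
        ∑ k, (1 / (2 * √t)) * (⟪EuclideanSpace.single k (1 : ℝ), g⟫ *
          N' (t, √t • g) (0, EuclideanSpace.single k 1)) := by
      intro g
      have hg : g = ∑ k, ⟪EuclideanSpace.single k (1 : ℝ), g⟫ • EuclideanSpace.single k (1 : ℝ) := by
        have := (EuclideanSpace.basisFun (Fin n) ℝ).sum_repr' g
        simpa using this.symm
      have e1 : ((1 : ℝ), (1 / (2 * √t)) • g) = (1, 0) +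
          (1 / (2 * √t)) • ∑ k, ⟪EuclideanSpace.single k (1 : ℝ), g⟫ •
            ((0 : ℝ), EuclideanSpace.single k (1 : ℝ)) := by
        refine Prod.ext ?_ ?_
        · simp [Prod.fst_sum]
        · simp only [Prod.snd_add, Prod.smul_snd, Prod.snd_sum, zero_add]
          rw [← hg]
      simp only [hD]
      rw [e1, map_add, map_smul, map_sum, smul_eq_mul, Finset.mul_sum]
      simp only [map_smul, smul_eq_mul]
    simp only [hsplit]
    have iX : ∀ k, Integrable (fun g : E n => ⟪EuclideanSpace.single k (1 : ℝ), g⟫ *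
          N' (t, √t • g) (0, EuclideanSpace.single k 1)) (ga n) := fun k =>
      ((expB_inner _).mul (hX _)).integrable ga_hasExp
        ((by fun_prop : Continuous fun g : E n => ⟪EuclideanSpace.single k (1 : ℝ), g⟫).mul
          (hXc _)).aestronglyMeasurable
    have iZ : ∀ k, Integrable (fun g : E n => N2 k (√t • g)) (ga n) := fun k =>
      (hZ k).integrable ga_hasExp (hZc k).aestronglyMeasurable
    have iY := hY.integrable ga_hasExp hYc.aestronglyMeasurable
    rw [integral_add iY (integrable_finsetSum _ fun k _ => (iX k).const_mul _),
      integral_add iY ((integrable_finsetSum _ fun k _ => iZ k).const_mul _),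
      integral_finsetSum _ fun k _ => (iX k).const_mul _, integral_const_mul,
      integral_finsetSum _ fun k _ => iZ k, Finset.mul_sum]
    congr 1
    refine Finset.sum_congr rfl fun k _ => ?_
    rw [integral_const_mul, ibp]
    field_simp
  · refine ExpB.integrable ⟨C, c * √b, hC, by positivity, fun g => ?_⟩ ga_hasExp
      (hNc t ht).aestronglyMeasurable
    exact (hb _ ht).trans (hexp t g ht)
  · exact ((hN'c t ht).clm_apply (by fun_prop)).aestronglyMeasurable
  · refine Filter.Eventually.of_forall fun g s hs => ?_
    have hs0 : 0 < s := ha.trans hs.1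
    refine (ContinuousLinearMap.le_opNorm _ _).trans ?_
    refine mul_le_mul ((hb1 _ hs).trans (hexp s g hs)) ?_ (norm_nonneg _) (by positivity)
    have hsa : √a ≤ √s := Real.sqrt_le_sqrt hs.1.le
    have hsa0 : 0 < √a := Real.sqrt_pos.2 ha
    have hle : 1 / (2 * √s) * ‖g‖ ≤ 1 / (2 * √a) * ‖g‖ := by gcongr
    have hnn : 0 ≤ 1 / (2 * √a) * ‖g‖ := by positivity
    rw [Prod.norm_def, norm_smul, Real.norm_eq_abs (1 / (2 * √s)), abs_of_nonneg (by positivity)]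
    refine max_le ?_ ?_
    · simp only [norm_one]; linarith
    · linarith
  · refine (((ExpB.const C).mul (expB_exp (c * √b))).mul
      ((ExpB.const 1).add ((ExpB.const _).mul expB_id.norm))).integrable ga_hasExp
        (by fun_prop)
  · refine Filter.Eventually.of_forall fun g s hs => ?_
    have hs0 : 0 < s := ha.trans hs.1
    have h3 : HasDerivAt (fun s => (s, √s • g)) (1, (1 / (2 * √s)) • g) s :=
      (hasDerivAt_id s).prodMk ((Real.hasDerivAt_sqrt hs0.ne').smul_const g)
    exact (h1 (s, √s • g) hs).comp_hasDerivAt s h3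

end

end PC

namespace PC
open scoped ContDiff


/-! ### Gaussian tilts and the Itô formula -/

/-- The exponent `⟪θ, x⟫ - t ‖x‖² / 2`, linear in `(t, θ)`. -/
def Sx {n : ℕ} (x : E n) : ℝ × E n →L[ℝ] ℝ :=
  (innerSL ℝ x).comp (ContinuousLinearMap.snd ℝ ℝ (E n)) -
    (‖x‖ ^ 2 / 2) • ContinuousLinearMap.fst ℝ ℝ (E n)

/-- The unnormalized expectation of `f` under the Gaussian tilt of `μ` with parameter
`z = (t, θ)`. -/
def lp {n : ℕ} {F : Type} [NormedAddCommGroup F] [NormedSpace ℝ F] (μ : Measure (E n))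
    (f : E n → F) (z : ℝ × E n) : F := lap μ Sx f z

/-- The normalization of the tilt. -/
def mz {n : ℕ} (μ : Measure (E n)) (z : ℝ × E n) : ℝ := lp μ (fun _ => (1 : ℝ)) z

/-- The expectation of `f` under the Gaussian tilt of `μ` with parameter `z = (t, θ)`. -/
def mn {n : ℕ} {F : Type} [NormedAddCommGroup F] [NormedSpace ℝ F] (μ : Measure (E n))
    (f : E n → F) (z : ℝ × E n) : F := (mz μ z)⁻¹ • lp μ f z

/-- The expectation at time `t` of a function of the tilt parameter `θ`, along the stochastic
localization process started at `μ`: under the law of `θ_t`, which has density `mz μ (t, ·)` with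
respect to the centered Gaussian of variance `t`. -/
def EE {n : ℕ} (μ : Measure (E n)) (t : ℝ) (Ψ : E n → ℝ) : ℝ :=
  ∫ g, mz μ (t, √t • g) * Ψ (√t • g) ∂(ga n)

/-- Almost everywhere bounded measurable functions. -/
def Bd {n : ℕ} {F : Type} [NormedAddCommGroup F] (μ : Measure (E n)) (f : E n → F) : Prop :=
  AEStronglyMeasurable f μ ∧ ∃ C, ∀ᵐ x ∂μ, ‖f x‖ ≤ C

section
variable {n : ℕ} {F V : Type} [NormedAddCommGroup F] [NormedSpace ℝ F] [NormedAddCommGroup V]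
  [NormedSpace ℝ V] {μ : Measure (E n)} {R : ℝ} {f : E n → F}

lemma Sx_apply (x : E n) (z : ℝ × E n) : Sx x z = ⟪x, z.2⟫ - ‖x‖ ^ 2 / 2 * z.1 := by
  simp [Sx]

lemma Sx_cont : Continuous (Sx (n := n)) := by unfold Sx; fun_prop

lemma Bd.of_cont {f : E n → F} (hR : ∀ᵐ x ∂μ, ‖x‖ ≤ R) (hf : Continuous f) : Bd μ f := by
  refine ⟨hf.aestronglyMeasurable, ?_⟩
  obtain ⟨C, hC⟩ := (isCompact_closedBall (0 : E n) R).exists_bound_of_continuousOn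
    hf.continuousOn
  refine ⟨C, ?_⟩
  filter_upwards [hR] with x hx
  exact hC x (by simpa using hx)

lemma Bd.smul {c : E n → ℝ} (hc : Bd μ c) (hf : Bd μ f) : Bd μ (fun x => c x • f x) := by
  obtain ⟨h1, C, hC⟩ := hc
  obtain ⟨h2, D, hD⟩ := hf
  refine ⟨h1.smul h2, C * D, ?_⟩
  filter_upwards [hC, hD] with x h3 h4
  rw [norm_smul]
  exact mul_le_mul h3 h4 (norm_nonneg _) ((norm_nonneg _).trans h3)

lemma Bd.sSx (hR : ∀ᵐ x ∂μ, ‖x‖ ≤ R) (hf : Bd μ f) : Bd μ (fun x => (Sx x).smulRight (f x)) := by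
  obtain ⟨h1, C, hC⟩ := Bd.of_cont hR (Sx_cont (n := n))
  obtain ⟨h2, D, hD⟩ := hf
  refine ⟨((ContinuousLinearMap.smulRightL ℝ _ F).continuous₂).comp_aestronglyMeasurable₂
      h1 h2, C * D, ?_⟩
  filter_upwards [hC, hD] with x h3 h4
  rw [ContinuousLinearMap.norm_smulRight_apply]
  exact mul_le_mul h3 h4 (norm_nonneg _) ((norm_nonneg _).trans h3)

lemma Bd.lapB (hf : Bd μ f) : LapB μ Sx f := by
  obtain ⟨h1, C, hC⟩ := hf
  refine ⟨h1, max C 0, 0, le_max_right _ _, ?_⟩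
  filter_upwards [hC] with x hx
  simpa using Or.inl hx

variable [IsProbabilityMeasure μ]

lemma lapM_Sx (hR : ∀ᵐ x ∂μ, ‖x‖ ≤ R) : LapM μ Sx := by
  refine ⟨Sx_cont.aestronglyMeasurable, fun c => ?_⟩
  obtain ⟨h, C, hC⟩ := Bd.of_cont (f := fun x => exp (c * ‖Sx x‖)) hR
    (by have := Sx_cont (n := n); fun_prop)
  exact Integrable.of_bound h C hC

lemma lp_intg (hR : ∀ᵐ x ∂μ, ‖x‖ ≤ R) (hf : Bd μ f) (z : ℝ × E n) :
    Integrable (fun x => exp (Sx x z) • f x) μ := hf.lapB.integrable (lapM_Sx hR) z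

lemma lp_contDiff [CompleteSpace F] (hR : ∀ᵐ x ∂μ, ‖x‖ ≤ R) (hf : Bd μ f) :
    ContDiff ℝ ∞ (lp μ f) := lap_contDiff (lapM_Sx hR) hf.lapB

lemma lp_hasFDerivAt [CompleteSpace F] (hR : ∀ᵐ x ∂μ, ‖x‖ ≤ R) (hf : Bd μ f) (z : ℝ × E n) :
    HasFDerivAt (lp μ f) (lp μ (fun x => (Sx x).smulRight (f x)) z) z :=
  lap_hasFDerivAt (lapM_Sx hR) hf.lapB z

lemma lp_apply [CompleteSpace F] (hR : ∀ᵐ x ∂μ, ‖x‖ ≤ R) (hf : Bd μ f) (z w : ℝ × E n) :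
    lp μ (fun x => (Sx x).smulRight (f x)) z w = lp μ (fun x => Sx x w • f x) z := by
  unfold lp lap
  rw [ContinuousLinearMap.integral_apply (lp_intg hR (hf.sSx hR) z)]
  rfl

lemma lp_bound (hR : ∀ᵐ x ∂μ, ‖x‖ ≤ R) (hf : Bd μ f) :
    ∃ C, 0 ≤ C ∧ ∀ z : ℝ × E n, 0 ≤ z.1 → ‖lp μ f z‖ ≤ C * exp (R * ‖z.2‖) := by
  obtain ⟨_, C, hC⟩ := hf
  refine ⟨max C 0, le_max_right _ _, fun z hz => ?_⟩
  unfold lp lap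
  have := norm_integral_le_of_norm_le_const (μ := μ) (f := fun x => exp (Sx x z) • f x)
    (C := max C 0 * exp (R * ‖z.2‖)) ?_
  · simpa using this
  · filter_upwards [hR, hC] with x hx hx2
    rw [norm_smul, Real.norm_eq_abs, abs_exp, mul_comm]
    refine mul_le_mul (hx2.trans (le_max_left _ _)) (exp_le_exp.2 ?_) (exp_pos _).le
      (le_max_right _ _)
    rw [Sx_apply]
    have h1 := real_inner_le_norm x z.2
    have h2 : ‖x‖ * ‖z.2‖ ≤ R * ‖z.2‖ := by gcongr
    have h3 : 0 ≤ ‖x‖ ^ 2 / 2 * z.1 := by positivity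
    linarith

lemma bd_one : Bd μ (fun _ => (1 : ℝ)) := ⟨by fun_prop, 1, by simp⟩

lemma mz_pos (hR : ∀ᵐ x ∂μ, ‖x‖ ≤ R) (z : ℝ × E n) : 0 < mz μ z := by
  unfold mz lp lap
  simp only [smul_eq_mul, mul_one]
  exact integral_exp_pos (by simpa using lp_intg hR bd_one z)

lemma mz_contDiff (hR : ∀ᵐ x ∂μ, ‖x‖ ≤ R) : ContDiff ℝ ∞ (mz μ) := lp_contDiff hR bd_one

lemma mn_contDiff [CompleteSpace F] (hR : ∀ᵐ x ∂μ, ‖x‖ ≤ R) (hf : Bd μ f) :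
    ContDiff ℝ ∞ (mn μ f) :=
  ((mz_contDiff hR).inv fun z => (mz_pos hR z).ne').smul (lp_contDiff hR hf)

lemma mn_bound (hR : ∀ᵐ x ∂μ, ‖x‖ ≤ R) {C : ℝ} (hC : ∀ᵐ x ∂μ, ‖f x‖ ≤ C) (z : ℝ × E n) :
    ‖mn μ f z‖ ≤ C := by
  have hm := mz_pos hR z
  unfold mn
  rw [norm_smul, norm_inv, Real.norm_eq_abs, abs_of_pos hm, inv_mul_le_iff₀ hm, mul_comm]
  unfold mz lp lap
  rw [← integral_const_mul]
  refine norm_integral_le_of_norm_le (((lp_intg hR bd_one z)).const_mul C) ?_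
  filter_upwards [hC] with x hx
  rw [norm_smul, Real.norm_eq_abs, abs_exp, smul_eq_mul, mul_one, mul_comm]
  gcongr

lemma lp_eq (hR : ∀ᵐ x ∂μ, ‖x‖ ≤ R) (z : ℝ × E n) : lp μ f z = mz μ z • mn μ f z := by
  unfold mn; rw [smul_smul, mul_inv_cancel₀ (mz_pos hR z).ne', one_smul]

end

end PC

namespace PC
open scoped ContDiff


/-! ### Itô formula -/

/-- The covariance of `s` with `⟪·, u⟫` under the Gaussian tilt with parameter `z`; it is the
derivative of `mn μ s` in the direction `u`. -/
def dk {n : ℕ} {V : Type} [NormedAddCommGroup V] [NormedSpace ℝ V] (μ : Measure (E n))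
    (s : E n → V) (u : E n) (z : ℝ × E n) : V :=
  mn μ (fun x => ⟪x, u⟫ • s x) z - mn μ (fun x => ⟪x, u⟫) z • mn μ s z

/-- Functions on `(a, b) × V` which are continuously differentiable, with a continuous second
derivative in the space variable. -/
structure C12 {V : Type} [NormedAddCommGroup V] [NormedSpace ℝ V] (F Ft : ℝ × V → ℝ)
    (Fy : ℝ × V → V →L[ℝ] ℝ) (F2 : ℝ × V → V →L[ℝ] V →L[ℝ] ℝ) (a b : ℝ) : Prop where
  d1 : ∀ z : ℝ × V, z.1 ∈ Set.Ioo a b → HasFDerivAt F ((Ft z) • ContinuousLinearMap.fst ℝ ℝ V +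
    (Fy z).comp (ContinuousLinearMap.snd ℝ ℝ V)) z
  ct : ContinuousOn Ft (Set.Ioo a b ×ˢ Set.univ)
  cy : ContinuousOn Fy (Set.Ioo a b ×ˢ Set.univ)
  c2 : ContinuousOn F2 (Set.Ioo a b ×ˢ Set.univ)
  d2 : ∀ t ∈ Set.Ioo a b, ∀ y, HasFDerivAt (fun y => Fy (t, y)) (F2 (t, y)) y

section
variable {n : ℕ} {V : Type} [NormedAddCommGroup V] [NormedSpace ℝ V] [FiniteDimensional ℝ V]
  {μ : Measure (E n)} {R : ℝ} {s : E n → V} [IsProbabilityMeasure μ]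

lemma bd_inner (hR : ∀ᵐ x ∂μ, ‖x‖ ≤ R) (u : E n) : Bd μ (fun x => ⟪x, u⟫) :=
  Bd.of_cont hR (by fun_prop)

/-- Derivative of `lp` along a spatial line. -/
lemma lp_line (hR : ∀ᵐ x ∂μ, ‖x‖ ≤ R) (hs : Bd μ s) (t : ℝ) (θ u : E n) :
    HasDerivAt (fun τ : ℝ => lp μ s (t, θ + τ • u)) (lp μ (fun x => ⟪x, u⟫ • s x) (t, θ)) 0 := by
  have : CompleteSpace V := FiniteDimensional.complete ℝ V
  have h1 : HasDerivAt (fun τ : ℝ => (t, θ + τ • u)) (0, u) 0 := by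
    refine (hasDerivAt_const _ _).prodMk ?_
    simpa using ((hasDerivAt_id (0 : ℝ)).smul_const u).const_add θ
  have h2 : HasFDerivAt (lp μ s) (lp μ (fun x => (Sx x).smulRight (s x)) (t, θ))
      (t, θ + (0 : ℝ) • u) := by
    simpa using lp_hasFDerivAt hR hs (t, θ)
  have := h2.comp_hasDerivAt (0 : ℝ) h1
  rw [lp_apply hR hs] at this
  simp only [Sx_apply, mul_zero, sub_zero] at this
  exact this

lemma mz_line (hR : ∀ᵐ x ∂μ, ‖x‖ ≤ R) (t : ℝ) (θ u : E n) :
    HasDerivAt (fun τ : ℝ => mz μ (t, θ + τ • u)) (lp μ (fun x => ⟪x, u⟫) (t, θ)) 0 := by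
  have := lp_line hR (bd_one (μ := μ)) t θ u
  simp only [smul_eq_mul, mul_one] at this
  exact this

lemma dk_eq (hR : ∀ᵐ x ∂μ, ‖x‖ ≤ R) (u : E n) (z : ℝ × E n) :
    mz μ z • dk μ s u z = lp μ (fun x => ⟪x, u⟫ • s x) z - lp μ (fun x => ⟪x, u⟫) z • mn μ s z := by
  unfold dk
  rw [lp_eq hR, lp_eq (f := fun x => ⟪x, u⟫) hR, smul_sub, smul_eq_mul, mul_smul]

lemma mn_line (hR : ∀ᵐ x ∂μ, ‖x‖ ≤ R) (hs : Bd μ s) (t : ℝ) (θ u : E n) :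
    HasDerivAt (fun τ : ℝ => mn μ s (t, θ + τ • u)) (dk μ s u (t, θ)) 0 := by
  have hm := (mz_pos hR (t, θ)).ne'
  have h0 : mz μ (t, θ + (0 : ℝ) • u) ≠ 0 := by simpa using hm
  have h := ((mz_line hR t θ u).fun_inv h0).smul (lp_line hR hs t θ u)
  refine h.congr_deriv ?_
  have e := dk_eq (s := s) hR u (t, θ)
  have e' : dk μ s u (t, θ) = (mz μ (t, θ))⁻¹ • (lp μ (fun x => ⟪x, u⟫ • s x) (t, θ) -
      lp μ (fun x => ⟪x, u⟫) (t, θ) • mn μ s (t, θ)) := by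
    rw [← e, smul_smul, inv_mul_cancel₀ hm, one_smul]
  rw [e']
  simp only [zero_smul, add_zero]
  unfold mn
  rw [smul_sub, smul_smul, smul_smul, sub_eq_add_neg, ← neg_smul]
  congr 2
  field_simp

/-- The Itô formula for functions of `(t, mn μ s (t, θ))`. -/
theorem ito (hR : ∀ᵐ x ∂μ, ‖x‖ ≤ R) (hs : Bd μ s) {F Ft : ℝ × V → ℝ} {Fy : ℝ × V → V →L[ℝ] ℝ}
    {F2 : ℝ × V → V →L[ℝ] V →L[ℝ] ℝ} {a b t : ℝ} (hF : C12 F Ft Fy F2 a b) (ha : 0 ≤ a)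
    (ht : t ∈ Set.Ioo a b) :
    HasDerivAt (fun t => EE μ t fun θ => F (t, mn μ s (t, θ)))
      (EE μ t fun θ => Ft (t, mn μ s (t, θ)) + (1 / 2) * ∑ k : Fin n,
        F2 (t, mn μ s (t, θ)) (dk μ s (EuclideanSpace.single k 1) (t, θ))
          (dk μ s (EuclideanSpace.single k 1) (t, θ))) t := by
  have : CompleteSpace V := FiniteDimensional.complete ℝ V
  have : ProperSpace V := FiniteDimensional.proper ℝ V
  obtain ⟨a', haa', ha't⟩ := exists_between ht.1
  obtain ⟨b', htb', hbb'⟩ := exists_between ht.2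
  have ha'0 : 0 < a' := ha.trans_lt haa'
  have hsub : Set.Ioo a' b' ⊆ Set.Ioo a b := Set.Ioo_subset_Ioo haa'.le hbb'.le
  have ht' : t ∈ Set.Ioo a' b' := ⟨ha't, htb'⟩
  -- all the data are bounded on the compact set where `(t, mn μ s)` takes its values
  obtain ⟨B, hB⟩ := hs.2
  have hcomp : IsCompact (Set.Icc a' b' ×ˢ Metric.closedBall (0 : V) B) :=
    isCompact_Icc.prod (isCompact_closedBall _ _)
  have hss : Set.Icc a' b' ×ˢ Metric.closedBall (0 : V) B ⊆ Set.Ioo a b ×ˢ Set.univ := by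
    rintro ⟨p, y⟩ ⟨h1, h2⟩
    exact ⟨⟨haa'.trans_le h1.1, h1.2.trans_lt hbb'⟩, trivial⟩
  have hFc : ContinuousOn F (Set.Ioo a b ×ˢ Set.univ) := fun z hz =>
    (hF.d1 z hz.1).continuousAt.continuousWithinAt
  obtain ⟨C0, hC0⟩ := hcomp.exists_bound_of_continuousOn (hFc.mono hss)
  obtain ⟨C1, hC1⟩ := hcomp.exists_bound_of_continuousOn (hF.ct.mono hss)
  obtain ⟨C2, hC2⟩ := hcomp.exists_bound_of_continuousOn (hF.cy.mono hss)
  obtain ⟨C3, hC3⟩ := hcomp.exists_bound_of_continuousOn (E := V →L[ℝ] V →L[ℝ] ℝ)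
    (f := F2) (hF.c2.mono hss)
  set S : ℝ × E n → V := mn μ s with hS
  have hSc : Continuous S := (mn_contDiff hR hs).continuous
  have hmem : ∀ z : ℝ × E n, z.1 ∈ Set.Ioo a' b' →
      (z.1, S z) ∈ Set.Icc a' b' ×ˢ Metric.closedBall (0 : V) B := fun z hz =>
    ⟨Set.Ioo_subset_Icc_self hz, by simpa using mn_bound hR hB z⟩
  have hSB : ∀ z, ‖S z‖ ≤ B := mn_bound hR hB
  have hB0 : 0 ≤ B := (norm_nonneg _).trans (hSB 0)
  have hS0 : (t, S (t, 0)) ∈ Set.Icc a' b' ×ˢ Metric.closedBall (0 : V) B := hmem (t, 0) ht'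
  have hC00 : 0 ≤ C0 := (norm_nonneg _).trans (hC0 _ hS0)
  have hC10 : 0 ≤ C1 := (norm_nonneg _).trans (hC1 _ hS0)
  have hC20 : 0 ≤ C2 := (norm_nonneg _).trans (hC2 _ hS0)
  have hC30 : 0 ≤ C3 := (norm_nonneg _).trans (hC3 _ hS0)
  set m' : ℝ × E n → ℝ × E n →L[ℝ] ℝ := lp μ (fun x => (Sx x).smulRight (1 : ℝ)) with hm'
  set G' : ℝ × E n → ℝ × E n →L[ℝ] V := lp μ (fun x => (Sx x).smulRight (s x)) with hG'
  have hone := bd_one (μ := μ)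
  have hm'd : ∀ z, HasFDerivAt (mz μ) (m' z) z := lp_hasFDerivAt hR hone
  have hG'd : ∀ z, HasFDerivAt (lp μ s) (G' z) z := lp_hasFDerivAt hR hs
  have hmc : Continuous (mz μ) := (mz_contDiff hR).continuous
  have hm'c : Continuous m' := (lp_contDiff hR (hone.sSx hR)).continuous
  have hG'c : Continuous G' := (lp_contDiff hR (hs.sSx hR)).continuous
  set N : ℝ × E n → ℝ := fun z => mz μ z * F (z.1, S z) with hN
  set N' : ℝ × E n → ℝ × E n →L[ℝ] ℝ := fun z =>
    (mz μ z * Ft (z.1, S z)) • ContinuousLinearMap.fst ℝ ℝ (E n) +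
      (Fy (z.1, S z)).comp (G' z - (m' z).smulRight (S z)) + F (z.1, S z) • m' z with hN'
  set e : Fin n → E n := fun k => EuclideanSpace.single k 1 with he
  set N2 : Fin n → E n → ℝ := fun k θ =>
    mz μ (t, θ) * F2 (t, S (t, θ)) (dk μ s (e k) (t, θ)) (dk μ s (e k) (t, θ)) +
      Fy (t, S (t, θ)) (lp μ (fun x => ⟪x, e k⟫ • ⟪x, e k⟫ • s x) (t, θ) -
        lp μ (fun x => ⟪x, e k⟫ • ⟪x, e k⟫) (t, θ) • S (t, θ)) +
      F (t, S (t, θ)) * lp μ (fun x => ⟪x, e k⟫ • ⟪x, e k⟫) (t, θ) with hN2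
  have hik := fun k => bd_inner hR (e k)
  have hdkc : ∀ k, Continuous (dk μ s (e k)) := fun k =>
    ((mn_contDiff hR ((hik k).smul hs)).continuous).sub
      (((mn_contDiff hR (hik k)).continuous).smul hSc)
  have hpair : Continuous fun z : ℝ × E n => (z.1, S z) := continuous_fst.prodMk hSc
  have hFt : ∀ θ, (t, S (t, θ)) ∈ Set.Ioo a b ×ˢ (Set.univ : Set V) := fun θ => ⟨ht, trivial⟩
  have hts : Continuous fun θ : E n => (t, S (t, θ)) := by fun_prop
  have cF : Continuous fun θ => F (t, S (t, θ)) := hFc.comp_continuous hts hFt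
  have cFt : Continuous fun θ => Ft (t, S (t, θ)) := hF.ct.comp_continuous hts hFt
  have cFy : Continuous fun θ => Fy (t, S (t, θ)) := hF.cy.comp_continuous hts hFt
  have cF2 : Continuous fun θ => F2 (t, S (t, θ)) := hF.c2.comp_continuous hts hFt
  have clp : ∀ {W : Type} [NormedAddCommGroup W] [NormedSpace ℝ W] [CompleteSpace W]
      {f : E n → W}, Bd μ f → Continuous (lp μ f) := fun h => (lp_contDiff hR h).continuous
  have cc : Continuous fun θ : E n => (t, θ) := by fun_prop
  obtain ⟨M0, hM0, hM0b⟩ := lp_bound hR hone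
  obtain ⟨M1, hM1, hM1b⟩ := lp_bound hR (hone.sSx hR)
  obtain ⟨M2, hM2, hM2b⟩ := lp_bound hR (hs.sSx hR)
  have hR0 : 0 ≤ R := by
    obtain ⟨x, hx⟩ := hR.exists
    exact (norm_nonneg x).trans hx
  have key := heat (N := N) (N' := N') (N2 := N2) (C := M0 * C0 + (M0 * C1 + C2 * (M2 + M1 * B) +
      C0 * M1)) (c := R) ht' ha'0
    (by positivity) hR0 ?_ ?_ ?_ ?_ ?_ ?_ ?_
  · unfold EE
    refine key.congr_deriv ?_
    congr 1
    ext g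
    set z := (t, √t • g) with hz
    have hsum : ∀ {W : Type} [NormedAddCommGroup W] [NormedSpace ℝ W] [CompleteSpace W]
        {f : E n → W}, Bd μ f →
        ∑ k, lp μ (fun x => ⟪x, e k⟫ • ⟪x, e k⟫ • f x) z = - (2 : ℝ) •
          lp μ (fun x => Sx x (1, 0) • f x) z := by
      intro W _ _ _ f hf
      unfold lp lap
      rw [← integral_finsetSum _ fun k _ => lp_intg hR ((hik k).smul ((hik k).smul hf)) z,
        ← integral_smul]
      refine integral_congr_ae (Filter.Eventually.of_forall fun x => ?_)
      have hx : ∑ k, ⟪x, e k⟫ * ⟪x, e k⟫ = ‖x‖ ^ 2 := by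
        rw [EuclideanSpace.norm_sq_eq]
        refine Finset.sum_congr rfl fun k _ => ?_
        simp [he, sq, EuclideanSpace.inner_single_right]
      have hx2 : ∑ k, ⟪x, e k⟫ • ⟪x, e k⟫ • f x = (‖x‖ ^ 2) • f x := by
        rw [← hx, Finset.sum_smul]
        simp only [mul_smul]
      dsimp only
      rw [← Finset.smul_sum, hx2, smul_comm (-(2 : ℝ))]
      congr 1
      rw [← mul_smul]
      congr 1
      rw [Sx_apply]; simp; ring
    have hs1 := hsum hs
    have hs2 := hsum hone
    simp only [smul_eq_mul, mul_one] at hs2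
    have e1 : G' z (1, 0) = lp μ (fun x => Sx x (1, 0) • s x) z := lp_apply hR hs z _
    have e2 : m' z (1, 0) = lp μ (fun x => Sx x (1, 0)) z := by
      simpa using lp_apply hR hone z (1, 0)
    simp only [hN', hN2, add_apply, smul_apply, ContinuousLinearMap.comp_apply, sub_apply,
      ContinuousLinearMap.smulRight_apply, smul_eq_mul, ← hz, Finset.sum_add_distrib,
      ← map_sum, Finset.sum_sub_distrib, ← Finset.sum_smul, ← Finset.mul_sum]
    rw [hs1, hs2, e1, e2]
    simp only [ContinuousLinearMap.coe_fst', map_sub, map_smul, smul_eq_mul]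
    rw [show (t : ℝ) = z.1 from rfl]
    ring
  · intro z hz
    have hSd : HasFDerivAt S (fderiv ℝ S z) z :=
      ((mn_contDiff hR hs).differentiable (by simp) z).hasFDerivAt
    have hSG : mz μ z • fderiv ℝ S z = G' z - (m' z).smulRight (S z) := by
      have h1 := (hm'd z).smul hSd
      have h2 : (fun z => mz μ z • S z) = lp μ s := by ext z; rw [lp_eq hR]
      rw [show (mz μ • S) = lp μ s from h2] at h1
      rw [← h1.unique (hG'd z)]
      simp
    have h1 : HasFDerivAt (fun z : ℝ × E n => (z.1, S z))
      ((ContinuousLinearMap.fst ℝ ℝ (E n)).prod (fderiv ℝ S z)) z := hasFDerivAt_fst.prodMk hSd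
    have h2 := (hF.d1 (z.1, S z) (hsub hz)).comp z h1
    refine ((hm'd z).mul h2).congr_fderiv ?_
    simp only [hN']
    rw [← hSG]
    ext w <;> simp
  · refine ContinuousOn.add (ContinuousOn.add ?_ ?_) ?_
    · refine ContinuousOn.smul (ContinuousOn.mul hmc.continuousOn ?_) continuousOn_const
      exact hF.ct.comp hpair.continuousOn fun z hz => ⟨hsub hz.1, trivial⟩
    · refine ContinuousOn.clm_comp ?_ ?_
      · exact hF.cy.comp hpair.continuousOn fun z hz => ⟨hsub hz.1, trivial⟩
      · refine Continuous.continuousOn (hG'c.sub ?_)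
        exact (((ContinuousLinearMap.smulRightL ℝ (ℝ × E n) V).continuous₂).comp
          (hm'c.prodMk hSc))
    · refine ContinuousOn.smul (f := fun z : ℝ × E n => F (z.1, S z)) ?_ hm'c.continuousOn
      exact hFc.comp hpair.continuousOn fun z hz => ⟨hsub hz.1, trivial⟩
  · intro z hz
    have hz0 : 0 ≤ z.1 := (ha'0.trans hz.1).le
    simp only [hN]
    have hex := exp_pos (R * ‖z.2‖)
    calc ‖mz μ z * F (z.1, S z)‖ = ‖mz μ z‖ * ‖F (z.1, S z)‖ := norm_mul _ _
      _ ≤ (M0 * exp (R * ‖z.2‖)) * C0 := mul_le_mul (hM0b z hz0) (hC0 _ (hmem z hz))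
          (norm_nonneg _) (by positivity)
      _ = M0 * C0 * exp (R * ‖z.2‖) := by ring
      _ ≤ _ := by
        refine mul_le_mul_of_nonneg_right ?_ hex.le
        have : 0 ≤ M0 * C1 + C2 * (M2 + M1 * B) + C0 * M1 := by positivity
        linarith
  · intro z hz
    have hz0 : 0 ≤ z.1 := (ha'0.trans hz.1).le
    simp only [hN']
    have hex := exp_pos (R * ‖z.2‖)
    have q1 : ‖(mz μ z * Ft (z.1, S z)) • ContinuousLinearMap.fst ℝ ℝ (E n)‖ ≤
        (M0 * exp (R * ‖z.2‖)) * C1 := by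
      rw [norm_smul, norm_mul]
      refine (mul_le_of_le_one_right (by positivity)
        (ContinuousLinearMap.norm_fst_le ℝ ℝ (E n))).trans ?_
      exact mul_le_mul (hM0b z hz0) (hC1 _ (hmem z hz)) (norm_nonneg _) (by positivity)
    have q2 : ‖(Fy (z.1, S z)).comp (G' z - (m' z).smulRight (S z))‖ ≤
        C2 * (M2 * exp (R * ‖z.2‖) + (M1 * exp (R * ‖z.2‖)) * B) := by
      refine (ContinuousLinearMap.opNorm_comp_le _ _).trans ?_
      refine mul_le_mul (hC2 _ (hmem z hz)) ?_ (norm_nonneg _) hC20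
      refine (norm_sub_le _ _).trans (add_le_add (hM2b z hz0) ?_)
      rw [ContinuousLinearMap.norm_smulRight_apply]
      exact mul_le_mul (hM1b z hz0) (hSB z) (norm_nonneg _) (by positivity)
    have q3 : ‖F (z.1, S z) • m' z‖ ≤ C0 * (M1 * exp (R * ‖z.2‖)) := by
      rw [norm_smul]
      exact mul_le_mul (hC0 _ (hmem z hz)) (hM1b z hz0) (norm_nonneg _) hC00
    refine (norm_add₃_le).trans ((add_le_add (add_le_add q1 q2) q3).trans ?_)
    have : 0 ≤ M0 * C0 * exp (R * ‖z.2‖) := by positivity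
    linarith
  · intro θ k
    have hz := lp_line hR ((hik k).smul hs) t θ (e k)
    have hz2 := lp_line hR (hik k) t θ (e k)
    have hSl := mn_line hR hs t θ (e k)
    have hml := mz_line hR t θ (e k)
    have e1 : ∀ θ, N' (t, θ) (0, e k) = Fy (t, S (t, θ)) (lp μ (fun x => ⟪x, e k⟫ • s x) (t, θ) -
        lp μ (fun x => ⟪x, e k⟫) (t, θ) • S (t, θ)) +
        F (t, S (t, θ)) * lp μ (fun x => ⟪x, e k⟫) (t, θ) := by
      intro θ
      have e1 : G' (t, θ) (0, e k) = lp μ (fun x => ⟪x, e k⟫ • s x) (t, θ) := by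
        rw [hG', lp_apply hR hs]; simp [Sx_apply]
      have e2 : m' (t, θ) (0, e k) = lp μ (fun x => ⟪x, e k⟫) (t, θ) := by
        rw [hm', lp_apply hR hone]; simp [Sx_apply]
      simp [hN', e1, e2]
    have hFyl : HasDerivAt (fun τ : ℝ => Fy (t, S (t, θ + τ • e k)))
        (F2 (t, S (t, θ)) (dk μ s (e k) (t, θ))) 0 := by
      have h : HasFDerivAt (fun y => Fy (t, y)) (F2 (t, S (t, θ))) (S (t, θ + (0 : ℝ) • e k)) := by
        simpa using hF.d2 t ht (S (t, θ))
      exact h.comp_hasDerivAt (0 : ℝ) hSl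
    have hFl : HasDerivAt (fun τ : ℝ => F (t, S (t, θ + τ • e k)))
        (Fy (t, S (t, θ)) (dk μ s (e k) (t, θ))) 0 := by
      have h := hF.d1 (t, S (t, θ + (0 : ℝ) • e k)) ht
      have h' := h.comp_hasDerivAt (0 : ℝ) ((hasDerivAt_const (0 : ℝ) t).prodMk hSl)
      simp only [add_apply, smul_apply, ContinuousLinearMap.comp_apply,
        ContinuousLinearMap.coe_fst', ContinuousLinearMap.coe_snd', zero_smul, add_zero,
        smul_zero, zero_add] at h'
      exact h'
    have hfin := (hFyl.clm_apply (hz.sub (hz2.smul hSl))).add (hFl.mul hz2)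
    suffices h : HasDerivAt (fun τ : ℝ => N' (t, θ + τ • e k) (0, e k)) (N2 k θ) 0 from h
    simp only [e1]
    refine hfin.congr_deriv ?_
    have hd := dk_eq (s := s) hR (e k) (t, θ)
    simp only [zero_smul, add_zero, hN2, Pi.sub_apply, Pi.smul_apply']
    rw [← hS] at hd ⊢
    rw [← hd]
    simp only [map_smul, map_sub, map_add, smul_eq_mul]
    ring
  · intro k
    have c1 : Continuous fun θ : E n => mz μ (t, θ) := hmc.comp cc
    have c2 : Continuous fun θ : E n => dk μ s (e k) (t, θ) := (hdkc k).comp cc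
    have c3 : Continuous fun θ : E n => lp μ (fun x => ⟪x, e k⟫ • ⟪x, e k⟫ • s x) (t, θ) :=
      (clp ((hik k).smul ((hik k).smul hs))).comp cc
    have c4 : Continuous fun θ : E n => lp μ (fun x => ⟪x, e k⟫ • ⟪x, e k⟫) (t, θ) :=
      (clp ((hik k).smul (hik k))).comp cc
    have c5 : Continuous fun θ : E n => S (t, θ) := hSc.comp cc
    exact ((c1.mul ((cF2.clm_apply c2).clm_apply c2)).add
      (cFy.clm_apply (c3.sub (c4.smul c5)))).add (cF.mul c4)
  · intro k
    have bF : ∀ {W : Type} [NormedAddCommGroup W] [NormedSpace ℝ W]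
        {f : E n → W}, Bd μ f → ExpB fun θ => lp μ f (t, θ) := by
      intro W _ _ f hf
      obtain ⟨C, hC, h⟩ := lp_bound hR hf
      exact ⟨C, R, hC, hR0, fun θ => h (t, θ) (ha'0.trans ht'.1).le⟩
    have b1 : ExpB fun θ => F2 (t, S (t, θ)) := ExpB.of_bdd C3 fun θ => hC3 _ (hmem (t, θ) ht')
    have b2 : ExpB fun θ => Fy (t, S (t, θ)) := ExpB.of_bdd C2 fun θ => hC2 _ (hmem (t, θ) ht')
    have b3 : ExpB fun θ => F (t, S (t, θ)) := ExpB.of_bdd C0 fun θ => hC0 _ (hmem (t, θ) ht')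
    have b5 : ExpB fun θ => S (t, θ) := ExpB.of_bdd B fun θ => hSB _
    have bapp : ∀ {W Y : Type} [NormedAddCommGroup W] [NormedSpace ℝ W] [NormedAddCommGroup Y]
        [NormedSpace ℝ Y]
        {f : E n → W →L[ℝ] Y} {g : E n → W}, ExpB f → ExpB g → ExpB fun θ => f θ (g θ) := by
      intro W Y _ _ _ _ f g hf hg
      exact (hf.norm.mul hg.norm).of_le fun x => ContinuousLinearMap.le_opNorm _ _
    have b6 : ExpB fun θ => dk μ s (e k) (t, θ) := by
      obtain ⟨_, D1, hD1⟩ := (hik k).smul hs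
      obtain ⟨_, D2, hD2⟩ := hik k
      exact (ExpB.of_bdd D1 fun θ => mn_bound hR hD1 _).sub
        ((ExpB.of_bdd D2 fun θ => mn_bound hR hD2 _).smul b5)
    exact (((bF hone).mul (bapp (bapp b1 b6) b6)).add
      (bapp b2 ((bF ((hik k).smul ((hik k).smul hs))).sub
        ((bF ((hik k).smul (hik k))).smul b5)))).add (b3.mul (bF ((hik k).smul (hik k))))

end

end PC

namespace PC
open scoped ContDiff


/-! ### Expectations along the localization process -/

/-- Bounded measurable functions. -/
def Bm {n : ℕ} (Ψ : E n → ℝ) : Prop := Measurable Ψ ∧ ∃ C, ∀ θ, |Ψ θ| ≤ C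

/-- The Gaussian tilt of `μ`, with density proportional to `exp (⟪θ, x⟫ - t ‖x‖² / 2)`. For `t = 0`
the conventions `1 / 0 = 0` and `x / 0 = 0` make `gw (1 / t) μ = μ`. -/
def tt {n : ℕ} (μ : Measure (E n)) (t : ℝ) (θ : E n) : Measure (E n) := tl (gw (1 / t) μ) θ

section
variable {n : ℕ} {V : Type} [NormedAddCommGroup V] [NormedSpace ℝ V] [FiniteDimensional ℝ V]
  {μ : Measure (E n)} {R t : ℝ} {s : E n → V} {Ψ Φ : E n → ℝ}

lemma Bm.const (c : ℝ) : Bm (fun _ : E n => c) := ⟨measurable_const, |c|, fun _ => le_rfl⟩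

lemma Bm.add (h : Bm Ψ) (h' : Bm Φ) : Bm (fun θ => Ψ θ + Φ θ) := by
  obtain ⟨h1, C, hC⟩ := h
  obtain ⟨h2, D, hD⟩ := h'
  exact ⟨h1.add h2, C + D, fun θ => (abs_add_le _ _).trans (add_le_add (hC θ) (hD θ))⟩

lemma Bm.mul (h : Bm Ψ) (h' : Bm Φ) : Bm (fun θ => Ψ θ * Φ θ) := by
  obtain ⟨h1, C, hC⟩ := h
  obtain ⟨h2, D, hD⟩ := h'
  refine ⟨h1.mul h2, C * D, fun θ => ?_⟩
  rw [abs_mul]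
  exact mul_le_mul (hC θ) (hD θ) (abs_nonneg _) ((abs_nonneg _).trans (hC θ))

variable [IsProbabilityMeasure μ]

lemma EE_intg (hR : ∀ᵐ x ∂μ, ‖x‖ ≤ R) (ht : 0 ≤ t) (h : Bm Ψ) :
    Integrable (fun g => mz μ (t, √t • g) * Ψ (√t • g)) (ga n) := by
  obtain ⟨hm, C, hC⟩ := h
  obtain ⟨M, hM, hMb⟩ := lp_bound hR (bd_one (μ := μ))
  have hc := (mz_contDiff (μ := μ) hR).continuous
  have hi : Integrable (fun g => mz μ (t, √t • g)) (ga n) := by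
    refine (((expB_exp (R * √t)).integrable ga_hasExp (by fun_prop)).const_mul M).mono'
      (hc.comp (by fun_prop : Continuous fun g : E n => (t, √t • g))).aestronglyMeasurable
      (Filter.Eventually.of_forall fun g => ?_)
    refine (hMb (t, √t • g) ht).trans (le_of_eq ?_)
    simp only [norm_smul, Real.norm_eq_abs, abs_of_nonneg (Real.sqrt_nonneg t), mul_assoc]
  exact hi.mul_bdd (c := C)
    (hm.comp (by fun_prop : Measurable fun g : E n => √t • g)).aestronglyMeasurable
    (Filter.Eventually.of_forall fun g => hC _)

lemma EE_mono (hR : ∀ᵐ x ∂μ, ‖x‖ ≤ R) (ht : 0 ≤ t) (h : Bm Ψ) (h' : Bm Φ)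
    (hle : ∀ θ, Ψ θ ≤ Φ θ) : EE μ t Ψ ≤ EE μ t Φ :=
  integral_mono (EE_intg hR ht h) (EE_intg hR ht h') fun _ =>
    mul_le_mul_of_nonneg_left (hle _) (mz_pos hR _).le

lemma EE_add (hR : ∀ᵐ x ∂μ, ‖x‖ ≤ R) (ht : 0 ≤ t) (h : Bm Ψ) (h' : Bm Φ) :
    EE μ t (fun θ => Ψ θ + Φ θ) = EE μ t Ψ + EE μ t Φ := by
  unfold EE
  rw [← integral_add (EE_intg hR ht h) (EE_intg hR ht h')]
  simp only [mul_add]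

lemma EE_cmul {ν : Measure (E n)} (c : ℝ) (Ψ : E n → ℝ) :
    EE ν t (fun θ => c * Ψ θ) = c * EE ν t Ψ := by
  unfold EE
  rw [← integral_const_mul]
  congr 1; ext g; ring

lemma EE_zero (Ψ : E n → ℝ) : EE μ 0 Ψ = Ψ 0 := by
  have h : mz μ (0, 0) = 1 := by
    simp [mz, lp, lap, Sx_apply]
  simp [EE, h]

lemma EE_cont (hR : ∀ᵐ x ∂μ, ‖x‖ ≤ R) (hs : Bd μ s) {F : ℝ × V → ℝ} {T : ℝ}
    (hF : ContinuousOn F (Set.Icc 0 T ×ˢ Set.univ)) :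
    ContinuousOn (fun t => EE μ t fun θ => F (t, mn μ s (t, θ))) (Set.Icc 0 T) := by
  have : CompleteSpace V := FiniteDimensional.complete ℝ V
  have : ProperSpace V := FiniteDimensional.proper ℝ V
  obtain ⟨B, hB⟩ := hs.2
  have hcomp : IsCompact (Set.Icc 0 T ×ˢ Metric.closedBall (0 : V) B) :=
    isCompact_Icc.prod (isCompact_closedBall _ _)
  obtain ⟨C, hC⟩ := hcomp.exists_bound_of_continuousOn
    (hF.mono (Set.prod_mono le_rfl (Set.subset_univ _)))
  obtain ⟨M, hM, hMb⟩ := lp_bound hR (bd_one (μ := μ))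
  have hc := (mz_contDiff (μ := μ) hR).continuous
  have hSc : Continuous (mn μ s) := (mn_contDiff hR hs).continuous
  have hR0 : 0 ≤ R := by
    obtain ⟨x, hx⟩ := hR.exists
    exact (norm_nonneg x).trans hx
  unfold EE
  refine continuousOn_of_dominated (bound := fun g => M * exp (R * √T * ‖g‖) * C) ?_ ?_ ?_ ?_
  · intro t ht
    have h1 : Continuous fun g : E n => (t, √t • g) := by fun_prop
    refine ((hc.comp h1).mul ?_).aestronglyMeasurable
    exact hF.comp_continuous (f := fun g : E n => (t, mn μ s (t, √t • g)))
      (continuous_const.prodMk (hSc.comp h1)) fun g => ⟨ht, trivial⟩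
  · intro t ht
    refine Filter.Eventually.of_forall fun g => ?_
    rw [norm_mul]
    refine mul_le_mul ((hMb _ ht.1).trans ?_) (hC _ ⟨ht, by simpa using mn_bound hR hB _⟩)
      (norm_nonneg _) (by positivity)
    have := Real.sqrt_le_sqrt ht.2
    simp only [norm_smul, Real.norm_eq_abs, abs_of_nonneg (Real.sqrt_nonneg t), mul_assoc]
    gcongr
  · exact (((expB_exp (R * √T)).integrable ga_hasExp (by fun_prop)).const_mul M).mul_const C
  · refine Filter.Eventually.of_forall fun g => ?_
    have h1 : Continuous fun t : ℝ => (t, √t • g) := by fun_prop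
    refine (hc.comp h1).continuousOn.mul ?_
    exact hF.comp (f := fun t : ℝ => (t, mn μ s (t, √t • g)))
      (continuous_id.prodMk (hSc.comp h1)).continuousOn fun t ht => ⟨ht, trivial⟩

/-- Expectations under the tilts are martingales. -/
lemma EE_lin (hR : ∀ᵐ x ∂μ, ‖x‖ ≤ R) (hs : Bd μ s) (ht : 0 ≤ t) (ℓ : V →L[ℝ] ℝ) (c : ℝ) :
    EE μ t (fun θ => ℓ (mn μ s (t, θ)) + c) = ℓ (mn μ s (0, 0)) + c := by
  rcases ht.eq_or_lt with h | h
  · rw [← h, EE_zero]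
  have hF : C12 (fun z : ℝ × V => ℓ z.2 + c) (fun _ => 0) (fun _ => ℓ) (fun _ => 0) 0 t :=
    ⟨fun z _ => by
      simpa using ((ℓ.comp (ContinuousLinearMap.snd ℝ ℝ V)).hasFDerivAt (x := z)).add_const c,
      continuousOn_const, continuousOn_const, continuousOn_const,
      fun t _ y => hasFDerivAt_const _ _⟩
  have hd := fun x hx => ito hR hs hF le_rfl (t := x) hx
  have hcont := EE_cont (F := fun z : ℝ × V => ℓ z.2 + c) (T := t) hR hs (by fun_prop)
  have hm : ∀ x ∈ Set.Ioo 0 t, HasDerivAt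
      (fun t => EE μ t fun θ => ℓ (mn μ s (t, θ)) + c) 0 x := fun x hx => by
    refine (hd x hx).congr_deriv ?_
    simp [EE]
  have h1 := monotoneOn_of_deriv_nonneg (convex_Icc 0 t) hcont
    (fun x hx => (hm x (by simpa using hx)).differentiableAt.differentiableWithinAt)
    (fun x hx => (hm x (by simpa using hx)).deriv.ge)
  have h2 := antitoneOn_of_deriv_nonpos (convex_Icc 0 t) hcont
    (fun x hx => (hm x (by simpa using hx)).differentiableAt.differentiableWithinAt)
    (fun x hx => (hm x (by simpa using hx)).deriv.le)
  have h3 := le_antisymm (h2 ⟨le_rfl, ht⟩ ⟨ht, le_rfl⟩ ht) (h1 ⟨le_rfl, ht⟩ ⟨ht, le_rfl⟩ ht)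
  simp only at h3
  rw [h3, EE_zero]

end

end PC

namespace PC
open scoped ContDiff


/-! ### Traces of operators -/

/-- The trace of an operator, as a continuous linear functional. -/
def trc (n : ℕ) : (E n →L[ℝ] E n) →L[ℝ] ℝ :=
  LinearMap.toContinuousLinearMap ((LinearMap.trace ℝ (E n)).comp (ContinuousLinearMap.coeLM ℝ))

section
variable {n : ℕ} {M T W : E n →L[ℝ] E n}

lemma trc_apply (B : E n →L[ℝ] E n) : trc n B = LinearMap.trace ℝ (E n) (B : E n →ₗ[ℝ] E n) := rfl

lemma trc_basis (v : OrthonormalBasis (Fin n) ℝ (E n)) (B : E n →L[ℝ] E n) :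
    trc n B = ∑ a, ⟪v a, B (v a)⟫ := by
  rw [trc_apply, LinearMap.trace_eq_sum_inner _ v]; rfl

lemma trc_mul_comm (A B : E n →L[ℝ] E n) : trc n (A * B) = trc n (B * A) := by
  rw [trc_apply, trc_apply]
  exact LinearMap.trace_mul_comm ℝ (A : E n →ₗ[ℝ] E n) (B : E n →ₗ[ℝ] E n)

lemma curve_deriv (M T W : E n →L[ℝ] E n) (τ : ℝ) :
    HasDerivAt (fun τ : ℝ => M + τ • T - τ ^ 2 • W) (T - (2 * τ) • W) τ := by
  have h1 : HasDerivAt (fun τ : ℝ => τ • T) T τ := by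
    simpa using (hasDerivAt_id τ).smul_const T
  have h2 : HasDerivAt (fun τ : ℝ => τ ^ 2 • W) ((2 * τ) • W) τ := by
    simpa using (hasDerivAt_pow 2 τ).smul_const W
  exact (h1.const_add M).sub h2

lemma tr_curve1 (M T W : E n →L[ℝ] E n) (m : ℕ) (τ : ℝ) :
    HasDerivAt (fun τ : ℝ => trc n ((M + τ • T - τ ^ 2 • W) ^ (m + 1)))
      ((m + 1) * trc n ((M + τ • T - τ ^ 2 • W) ^ m * (T - (2 * τ) • W))) τ := by
  have h := (trc n).hasFDerivAt.comp_hasDerivAt τ ((curve_deriv M T W τ).fun_pow' (m + 1))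
  refine h.congr_deriv ?_
  rw [map_sum]
  have : ∀ i ∈ Finset.range (m + 1), trc n ((M + τ • T - τ ^ 2 • W) ^ ((m + 1).pred - i) *
      (T - (2 * τ) • W) * (M + τ • T - τ ^ 2 • W) ^ i) =
      trc n ((M + τ • T - τ ^ 2 • W) ^ m * (T - (2 * τ) • W)) := by
    intro i hi
    have hi' : i ≤ m := Nat.lt_succ_iff.1 (Finset.mem_range.1 hi)
    rw [trc_mul_comm, ← mul_assoc, ← pow_add]
    congr 3
    simp; omega
  rw [Finset.sum_congr rfl this]
  simp

lemma tr_curve2 (M T W : E n →L[ℝ] E n) (m : ℕ) :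
    HasDerivAt (fun τ : ℝ => (m + 1) * trc n ((M + τ • T - τ ^ 2 • W) ^ m * (T - (2 * τ) • W)))
      ((m + 1) * (∑ i ∈ Finset.range m, trc n (M ^ (m - 1 - i) * T * M ^ i * T) -
        2 * trc n (M ^ m * W))) 0 := by
  have h1 := (curve_deriv M T W 0).fun_pow' m
  have h2 : HasDerivAt (fun τ : ℝ => T - (2 * τ) • W) (-((2 : ℝ) • W)) 0 := by
    have : HasDerivAt (fun τ : ℝ => (2 * τ) • W) ((2 : ℝ) • W) 0 := by
      simpa using ((hasDerivAt_id (0 : ℝ)).const_mul 2).smul_const W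
    simpa using this.const_sub T
  have h := ((trc n).hasFDerivAt.comp_hasDerivAt (0 : ℝ) (h1.mul h2)).const_mul ((m : ℝ) + 1)
  refine h.congr_deriv ?_
  have e1 : M + (0 : ℝ) • T - (0 : ℝ) ^ 2 • W = M := by ext; simp
  have e2 : T - (2 * (0 : ℝ)) • W = T := by ext; simp
  have e3 : M ^ m * -((2 : ℝ) • W) = -((2 : ℝ) • (M ^ m * W)) := by
    refine ContinuousLinearMap.ext fun x => ?_
    simp only [mul_apply_eq_comp, neg_apply, smul_apply, map_neg, map_smul]
  congr 1
  rw [e1, e2, e3, Finset.sum_mul, map_add, map_sum, map_neg, map_smul, smul_eq_mul]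
  simp only [Nat.pred_eq_sub_one, sub_eq_add_neg]

/-- The operator `M` is diagonal in the orthonormal basis `v`, with eigenvalues `lam`. -/
def Dg (v : OrthonormalBasis (Fin n) ℝ (E n)) (lam : Fin n → ℝ) (M : E n →L[ℝ] E n) : Prop :=
  ∀ a, M (v a) = lam a • v a

lemma exists_dg (hM : ∀ x y, ⟪M x, y⟫ = ⟪x, M y⟫) : ∃ v lam, Dg v lam M := by
  have h : (M : E n →ₗ[ℝ] E n).IsSymmetric := hM
  exact ⟨h.eigenvectorBasis (by simp), h.eigenvalues (by simp),
    fun a => h.apply_eigenvectorBasis (by simp) a⟩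

variable {v : OrthonormalBasis (Fin n) ℝ (E n)} {lam : Fin n → ℝ}

lemma Dg.pow (h : Dg v lam M) (i : ℕ) (a : Fin n) : (M ^ i) (v a) = lam a ^ i • v a := by
  induction i with
  | zero => simp
  | succ i ih =>
    rw [pow_succ, mul_apply_eq_comp, h a, map_smul, ih, smul_smul, pow_succ, mul_comm]

lemma Dg.inner_pow (h : Dg v lam M) (i : ℕ) (a : Fin n) (y : E n) :
    ⟪v a, (M ^ i) y⟫ = lam a ^ i * ⟪v a, y⟫ := by
  conv_lhs => rw [← v.sum_repr' y]
  conv_rhs => rw [← v.sum_repr' y]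
  simp only [map_sum, map_smul, h.pow, inner_sum, inner_smul_right]
  rw [Finset.mul_sum]
  refine Finset.sum_congr rfl fun b _ => ?_
  by_cases hab : a = b
  · subst hab; ring
  · simp [v.orthonormal.2 hab]

lemma Dg.trc_pow (h : Dg v lam M) (m : ℕ) : trc n (M ^ m) = ∑ a, lam a ^ m := by
  rw [trc_basis v]
  simp [h.pow, inner_smul_right]

lemma Dg.trc_four (h : Dg v lam M) (hT : ∀ x y, ⟪T x, y⟫ = ⟪x, T y⟫) (i j : ℕ) :
    trc n (M ^ i * T * M ^ j * T) = ∑ a, ∑ b, lam a ^ i * lam b ^ j * ⟪v b, T (v a)⟫ ^ 2 := by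
  rw [trc_basis v]
  refine Finset.sum_congr rfl fun a _ => ?_
  simp only [mul_apply_eq_comp, h.inner_pow]
  rw [← hT, ← v.sum_inner_mul_inner, Finset.mul_sum]
  refine Finset.sum_congr rfl fun b _ => ?_
  rw [h.inner_pow, real_inner_comm]; ring

lemma Dg.abs_le (h : Dg v lam M) (a : Fin n) : |lam a| ≤ ‖M‖ := by
  have := M.le_opNorm (v a)
  rwa [h a, norm_smul, v.orthonormal.1 a, mul_one, mul_one] at this

lemma Dg.norm_le (h : Dg v lam M) {r : ℝ} (hr : 0 ≤ r) (hl : ∀ a, |lam a| ≤ r) : ‖M‖ ≤ r := by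
  refine M.opNorm_le_bound hr fun x => ?_
  refine (sq_le_sq₀ (norm_nonneg _) (by positivity)).1 ?_
  rw [mul_pow, ← v.sum_sq_norm_inner_right (M x), ← v.sum_sq_norm_inner_right x, Finset.mul_sum]
  refine Finset.sum_le_sum fun a _ => ?_
  have := h.inner_pow 1 a x
  rw [pow_one, pow_one] at this
  rw [this, norm_mul, mul_pow]
  gcongr
  exact hl a

lemma Dg.norm_pow_le (h : Dg v lam M) (hn : 0 < n) {m : ℕ} (hm : Even m) :
    ‖M‖ ^ m ≤ trc n (M ^ m) := by
  have : Nonempty (Fin n) := ⟨⟨0, hn⟩⟩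
  obtain ⟨a, ha⟩ := Finite.exists_max fun a => |lam a|
  rw [h.trc_pow]
  calc ‖M‖ ^ m ≤ |lam a| ^ m := by
        gcongr; exact h.norm_le (abs_nonneg _) ha
    _ = lam a ^ m := hm.pow_abs _
    _ ≤ _ := Finset.single_le_sum (f := fun a => lam a ^ m) (fun b _ => hm.pow_nonneg _)
        (Finset.mem_univ a)

lemma pow_mul_le (x y : ℝ) (i j : ℕ) : x ^ i * y ^ j ≤ |x| ^ (i + j) + |y| ^ (i + j) := by
  have h : x ^ i * y ^ j ≤ |x| ^ i * |y| ^ j := by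
    rw [← abs_pow, ← abs_pow, ← abs_mul]; exact le_abs_self _
  refine h.trans ?_
  rcases le_total |x| |y| with h | h
  · have : |x| ^ i * |y| ^ j ≤ |y| ^ i * |y| ^ j := by gcongr
    rw [← pow_add] at this
    have := pow_nonneg (abs_nonneg x) (i + j)
    linarith
  · have : |x| ^ i * |y| ^ j ≤ |x| ^ i * |x| ^ j := by gcongr
    rw [← pow_add] at this
    have := pow_nonneg (abs_nonneg y) (i + j)
    linarith

lemma Dg.trc_four_le (h : Dg v lam M) (hT : ∀ x y, ⟪T x, y⟫ = ⟪x, T y⟫) (i j : ℕ) :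
    trc n (M ^ i * T * M ^ j * T) ≤ 2 * ∑ a, |lam a| ^ (i + j) * ∑ b, ⟪v b, T (v a)⟫ ^ 2 := by
  rw [h.trc_four hT]
  have h1 : ∑ a, ∑ b, lam a ^ i * lam b ^ j * ⟪v b, T (v a)⟫ ^ 2 ≤
      ∑ a, ∑ b, (|lam a| ^ (i + j) * ⟪v b, T (v a)⟫ ^ 2 + |lam b| ^ (i + j) * ⟪v b, T (v a)⟫ ^ 2) := by
    refine Finset.sum_le_sum fun a _ => Finset.sum_le_sum fun b _ => ?_
    rw [← add_mul]
    gcongr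
    exact pow_mul_le _ _ _ _
  refine h1.trans (le_of_eq ?_)
  simp only [Finset.sum_add_distrib]
  have h2 : ∑ a, ∑ b, |lam b| ^ (i + j) * ⟪v b, T (v a)⟫ ^ 2 =
      ∑ a, ∑ b, |lam a| ^ (i + j) * ⟪v b, T (v a)⟫ ^ 2 := by
    rw [Finset.sum_comm]
    refine Finset.sum_congr rfl fun a _ => Finset.sum_congr rfl fun b _ => ?_
    rw [← hT, real_inner_comm]
  rw [h2, two_mul]
  simp only [Finset.mul_sum]

/-- Power sums of lower order are controlled by power sums of higher order, up to a cutoff at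
scale `ε`. -/
lemma pow_sub_le {x ε : ℝ} (hε : 0 < ε) (m k : ℕ) :
    |x| ^ m ≤ (|x| ^ (m + k) + ε ^ (m + k)) / ε ^ k := by
  rw [le_div_iff₀ (by positivity), pow_add, pow_add]
  rcases le_total |x| ε with h | h
  · have h1 : |x| ^ m ≤ ε ^ m := by gcongr
    have : |x| ^ m * ε ^ k ≤ ε ^ m * ε ^ k := by gcongr
    have : 0 ≤ |x| ^ m * |x| ^ k := by positivity
    linarith
  · have : |x| ^ m * ε ^ k ≤ |x| ^ m * |x| ^ k := by gcongr
    have : 0 ≤ ε ^ m * ε ^ k := by positivity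
    linarith

end

end PC

namespace PC
open scoped ContDiff


/-! ### Evolution of the covariance -/

section
variable {n : ℕ} {F : Type} [NormedAddCommGroup F] [NormedSpace ℝ F]
  {μ : Measure (E n)} {R t : ℝ} [IsProbabilityMeasure μ]

lemma mn_tt (f : E n → F) (ht : 0 < t) (θ : E n) : mn μ f (t, θ) = ∫ x, f x ∂(tt μ t θ) := by
  have e : ∀ x : E n, exp (Sx x (t, θ)) = gk (1 / t) x * exp ⟪θ, x⟫ := fun x => by
    rw [Sx_apply, gk, ← exp_add, real_inner_comm]
    congr 1
    field_simp
    ring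
  unfold tt
  rw [integral_tl]
  have h1 : ∫ x, exp ⟪θ, x⟫ • f x ∂(gw (1 / t) μ) = lp μ f (t, θ) := by
    unfold gw lp lap
    rw [integral_withDensity_eq_integral_toReal_smul (gk_cont _).measurable.ennreal_ofReal
      (by simp)]
    refine integral_congr_ae (Filter.Eventually.of_forall fun x => ?_)
    simp only [ENNReal.toReal_ofReal (gk_pos _ _).le, smul_smul, e]
  have h2 : ∫ x, exp ⟪θ, x⟫ ∂(gw (1 / t) μ) = mz μ (t, θ) := by
    rw [gw_int]
    unfold mz lp lap
    refine integral_congr_ae (Filter.Eventually.of_forall fun x => ?_)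
    simp [e]
  rw [h1, h2, mn]

lemma mn_zero (f : E n → F) : mn μ f (0, 0) = ∫ x, f x ∂μ := by
  simp [mn, mz, lp, lap, Sx_apply]

lemma gwt_hasExp (hR : ∀ᵐ x ∂μ, ‖x‖ ≤ R) (ht : 0 < t) : HasExp (gw (1 / t) μ) :=
  gw_hasExp (by positivity) (hasExp_of_bdd hR)

lemma gwt_ne : gw (1 / t) μ ≠ 0 := gw_ne_zero (IsProbabilityMeasure.ne_zero μ)

lemma tt_prob (hR : ∀ᵐ x ∂μ, ‖x‖ ≤ R) (ht : 0 < t) (θ : E n) :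
    IsProbabilityMeasure (tt μ t θ) :=
  tl_prob (gwt_hasExp hR ht) gwt_ne θ

lemma tt_ae {P : E n → Prop} (hP : ∀ᵐ x ∂μ, P x) (θ : E n) : ∀ᵐ x ∂(tt μ t θ), P x :=
  tl_ae ((withDensity_absolutelyContinuous μ _).ae_le hP) θ

lemma tt_slc (hR : ∀ᵐ x ∂μ, ‖x‖ ≤ R) (hl : SLC 0 μ) (ht : 0 < t) (θ : E n) :
    SLC t (tt μ t θ) := by
  have := gw_slc (s := 1 / t) (by positivity) hl
  simp only [zero_add, one_div_one_div] at this
  exact tl_slc (gwt_hasExp hR ht) gwt_ne this θ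

lemma tt_hasExp (hR : ∀ᵐ x ∂μ, ‖x‖ ≤ R) (ht : 0 < t) (θ : E n) : HasExp (tt μ t θ) :=
  tl_hasExp (gwt_hasExp hR ht) θ

lemma EE_const (hR : ∀ᵐ x ∂μ, ‖x‖ ≤ R) (ht : 0 ≤ t) (c : ℝ) : EE μ t (fun _ => c) = c := by
  simpa using EE_lin (s := fun _ => (0 : ℝ)) hR (Bd.of_cont hR (by fun_prop)) ht 0 c

lemma EE_mn (hR : ∀ᵐ x ∂μ, ‖x‖ ≤ R) (ht : 0 ≤ t) {f : E n → ℝ} (hf : Bd μ f) :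
    EE μ t (fun θ => mn μ f (t, θ)) = ∫ x, f x ∂μ := by
  have := EE_lin hR hf ht (ContinuousLinearMap.id ℝ ℝ) 0
  simpa [mn_zero] using this

/-- The covariance operator of the Gaussian tilt. -/
def cm (μ : Measure (E n)) (t : ℝ) (θ : E n) : E n →L[ℝ] E n := tcov (gw (1 / t) μ) θ

lemma cm_inner (hR : ∀ᵐ x ∂μ, ‖x‖ ≤ R) (ht : 0 < t) (θ u v : E n) :
    ⟪cm μ t θ u, v⟫ = cv (tt μ t θ) (fun x => ⟪u, x⟫) (fun x => ⟪v, x⟫) :=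
  tcov_inner (gwt_hasExp hR ht) gwt_ne θ u v

lemma cm_symm (hR : ∀ᵐ x ∂μ, ‖x‖ ≤ R) (ht : 0 < t) (θ u v : E n) :
    ⟪cm μ t θ u, v⟫ = ⟪u, cm μ t θ v⟫ := by
  rw [cm_inner hR ht, real_inner_comm, cm_inner hR ht, cv_comm]

lemma cm_dk (hR : ∀ᵐ x ∂μ, ‖x‖ ≤ R) (ht : 0 < t) (θ u : E n) :
    dk μ (fun x => x) u (t, θ) = cm μ t θ u := by
  have hE := tt_hasExp hR ht θ
  have i1 : Integrable (fun x : E n => (innerSL ℝ x).smulRight x) (tt μ t θ) :=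
    expB_smulRight.integrable hE cont_smulRight.aestronglyMeasurable
  have i2 : Integrable (fun x : E n => x) (tt μ t θ) := expB_id.integrable hE (by fun_prop)
  unfold dk cm tcov
  rw [mn_tt _ ht, mn_tt _ ht, mn_tt _ ht, sub_apply]
  change _ = (∫ x, (innerSL ℝ x).smulRight x ∂(tt μ t θ)) u - _
  rw [ContinuousLinearMap.integral_apply i1]
  have : ∫ x, ⟪x, u⟫ ∂(tt μ t θ) = ⟪∫ x, x ∂(tt μ t θ), u⟫ := by
    rw [real_inner_comm, ← integral_inner i2]
    simp only [real_inner_comm]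
  rw [this]
  rfl

/-- The first two moments: the state on which the evolution of the covariance is autonomous. -/
def ss (x : E n) : E n × (E n →L[ℝ] E n) := (x, (innerSL ℝ x).smulRight x)

lemma ss_cont : Continuous (ss (n := n)) := continuous_id.prodMk cont_smulRight

/-- The covariance operator minus the identity, as a function of the first two moments. -/
def Mm (y : E n × (E n →L[ℝ] E n)) : E n →L[ℝ] E n := y.2 - (innerSL ℝ y.1).smulRight y.1 - 1

lemma ss_intg (hR : ∀ᵐ x ∂μ, ‖x‖ ≤ R) (ht : 0 < t) (θ : E n) {c : E n → ℝ} (hc : Ok c) :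
    Integrable (fun x => c x • x) (tt μ t θ) ∧
      Integrable (fun x => c x • (innerSL ℝ x).smulRight x) (tt μ t θ) := by
  have hE := tt_hasExp hR ht θ
  refine ⟨(hc.2.smul expB_id).integrable hE ?_, (hc.2.smul expB_smulRight).integrable hE ?_⟩
  · exact hc.1.aestronglyMeasurable.smul (by fun_prop)
  · exact hc.1.aestronglyMeasurable.smul cont_smulRight.aestronglyMeasurable

lemma mn_pair (hR : ∀ᵐ x ∂μ, ‖x‖ ≤ R) (ht : 0 < t) (θ : E n) {c : E n → ℝ} (hc : Ok c) :
    mn μ (fun x => c x • ss x) (t, θ) = (∫ x, c x • x ∂(tt μ t θ),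
      ∫ x, c x • (innerSL ℝ x).smulRight x ∂(tt μ t θ)) := by
  rw [mn_tt _ ht]
  exact integral_pair (ss_intg hR ht θ hc).1 (ss_intg hR ht θ hc).2

lemma mn_ss (hR : ∀ᵐ x ∂μ, ‖x‖ ≤ R) (ht : 0 < t) (θ : E n) :
    mn μ ss (t, θ) = (∫ x, x ∂(tt μ t θ), ∫ x, (innerSL ℝ x).smulRight x ∂(tt μ t θ)) := by
  simpa using mn_pair hR ht θ (Ok.const (n := n) 1)

lemma Mm_ss (hR : ∀ᵐ x ∂μ, ‖x‖ ≤ R) (ht : 0 < t) (θ : E n) :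
    Mm (mn μ ss (t, θ)) = cm μ t θ - 1 := by
  rw [mn_ss hR ht]; rfl

/-- The derivative of the covariance operator in the direction `u`, in terms of the derivatives of
the first two moments. -/
def Td (μ : Measure (E n)) (u : E n) (z : ℝ × E n) : E n →L[ℝ] E n :=
  (dk μ ss u z).2 - (innerSL ℝ (dk μ ss u z).1).smulRight (mn μ ss z).1 -
    (innerSL ℝ (mn μ ss z).1).smulRight (dk μ ss u z).1

lemma Mm_curve (u : E n) (z : ℝ × E n) (τ : ℝ) :
    Mm (mn μ ss z + τ • dk μ ss u z) = Mm (mn μ ss z) + τ • Td μ u z -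
      τ ^ 2 • (innerSL ℝ (dk μ ss u z).1).smulRight (dk μ ss u z).1 := by
  refine ContinuousLinearMap.ext fun x => ?_
  simp only [Mm, Td, Prod.fst_add, Prod.snd_add, Prod.smul_fst, Prod.smul_snd, sub_apply, add_apply,
    smul_apply, ContinuousLinearMap.smulRight_apply, innerSL_apply_apply, inner_add_left,
    inner_smul_left, conj_trivial]
  module

lemma dk_ss_fst (hR : ∀ᵐ x ∂μ, ‖x‖ ≤ R) (ht : 0 < t) (θ u : E n) :
    (dk μ ss u (t, θ)).1 = cm μ t θ u := by
  rw [← cm_dk hR ht]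
  have h := mn_pair hR ht θ (c := fun x => ⟪x, u⟫) (by simpa [real_inner_comm] using Ok.inner u)
  unfold dk
  rw [h, mn_ss hR ht, mn_tt _ ht, mn_tt _ ht, mn_tt _ ht]
  rfl

lemma Td_inner (hR : ∀ᵐ x ∂μ, ‖x‖ ≤ R) (ht : 0 < t) (θ u b c : E n) :
    ⟪b, Td μ u (t, θ) c⟫ = ∫ x, ⟪u, x - ∫ z, z ∂(tt μ t θ)⟫ *
      (⟪b, x - ∫ z, z ∂(tt μ t θ)⟫ * ⟪c, x - ∫ z, z ∂(tt μ t θ)⟫) ∂(tt μ t θ) := by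
  have hE := tt_hasExp hR ht θ
  have := tt_prob hR ht θ
  have hok : Ok (fun x : E n => ⟪x, u⟫) := by simpa [real_inner_comm] using Ok.inner u
  have h := mn_pair hR ht θ hok
  have hu : mn μ (fun x => ⟪x, u⟫) (t, θ) = ∫ x, ⟪u, x⟫ ∂(tt μ t θ) := by
    rw [mn_tt _ ht]; simp only [real_inner_comm]
  have hd : (dk μ ss u (t, θ)).2 = (∫ x, ⟪x, u⟫ • (innerSL ℝ x).smulRight x ∂(tt μ t θ)) -
      (∫ x, ⟪u, x⟫ ∂(tt μ t θ)) • ∫ x, (innerSL ℝ x).smulRight x ∂(tt μ t θ) := by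
    unfold dk
    rw [h, mn_ss hR ht, hu]
    rfl
  have i0 : Integrable (fun x : E n => x) (tt μ t θ) := expB_id.integrable hE (by fun_prop)
  have iP : ∀ c' : E n → ℝ, Ok c' → ⟪b, (∫ x, c' x • (innerSL ℝ x).smulRight x ∂(tt μ t θ)) c⟫ =
      ∫ x, c' x * (⟪b, x⟫ * ⟪c, x⟫) ∂(tt μ t θ) := fun c' hc' => by
    have i1 := (ss_intg hR ht θ hc').2
    rw [ContinuousLinearMap.integral_apply i1, ← integral_inner (i1.apply_continuousLinearMap c)]
    refine integral_congr_ae (Filter.Eventually.of_forall fun x => ?_)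
    simp only [smul_apply, ContinuousLinearMap.smulRight_apply, innerSL_apply_apply,
      inner_smul_right, real_inner_comm x c]
    ring
  have iP1 := iP (fun _ => 1) (Ok.const 1)
  simp only [one_smul, one_mul] at iP1
  have im : ∀ w : E n, ⟪w, ∫ z, z ∂(tt μ t θ)⟫ = ∫ x, ⟪w, x⟫ ∂(tt μ t θ) := fun w =>
    (integral_inner i0 w).symm
  have lhs : ⟪b, Td μ u (t, θ) c⟫ = (∫ x, ⟪u, x⟫ * (⟪b, x⟫ * ⟪c, x⟫) ∂(tt μ t θ)) -
      (∫ x, ⟪u, x⟫ ∂(tt μ t θ)) * (∫ x, ⟪b, x⟫ * ⟪c, x⟫ ∂(tt μ t θ)) -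
      cv (tt μ t θ) (fun x => ⟪u, x⟫) (fun x => ⟪c, x⟫) * (∫ x, ⟪b, x⟫ ∂(tt μ t θ)) -
      (∫ x, ⟪c, x⟫ ∂(tt μ t θ)) * cv (tt μ t θ) (fun x => ⟪u, x⟫) (fun x => ⟪b, x⟫) := by
    unfold Td
    rw [dk_ss_fst hR ht, hd, mn_ss hR ht]
    simp only [sub_apply, smul_apply, inner_sub_right, inner_smul_right,
      ContinuousLinearMap.smulRight_apply, innerSL_apply_apply]
    rw [iP _ hok, iP1, cm_inner hR ht, real_inner_comm (cm μ t θ u) b, cm_inner hR ht,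
      real_inner_comm c, im, im]
    simp only [real_inner_comm u]
  rw [lhs]
  simp only [inner_sub_right, im]
  set ν := tt μ t θ
  set U := ∫ x, ⟪u, x⟫ ∂ν
  set B := ∫ x, ⟪b, x⟫ ∂ν
  set C := ∫ x, ⟪c, x⟫ ∂ν
  have oU := Ok.inner u
  have oB := Ok.inner b
  have oC := Ok.inner c
  have e : ∀ x : E n, (⟪u, x⟫ - U) * ((⟪b, x⟫ - B) * (⟪c, x⟫ - C)) =
      ⟪u, x⟫ * (⟪b, x⟫ * ⟪c, x⟫) - U * (⟪b, x⟫ * ⟪c, x⟫) - B * (⟪u, x⟫ * ⟪c, x⟫) -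
      C * (⟪u, x⟫ * ⟪b, x⟫) + ((B * C) * ⟪u, x⟫ + (U * C) * ⟪b, x⟫ + (U * B) * ⟪c, x⟫ -
        U * B * C) := fun x => by ring
  simp only [e]
  have j1 := (oU.mul (oB.mul oC)).int hE
  have j2 := ((oB.mul oC).int hE).const_mul U
  have j3 := ((oU.mul oC).int hE).const_mul B
  have j4 := ((oU.mul oB).int hE).const_mul C
  have j5 := (oU.int hE).const_mul (B * C)
  have j6 := (oB.int hE).const_mul (U * C)
  have j7 := (oC.int hE).const_mul (U * B)
  rw [integral_add (((j1.sub' j2).sub' j3).sub' j4) (((j5.fun_add j6).fun_add j7).sub' (integrable_const (U * B * C))),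
    integral_sub ((j1.sub' j2).sub' j3) j4, integral_sub (j1.sub' j2) j3, integral_sub j1 j2,
    integral_sub ((j5.fun_add j6).fun_add j7) (integrable_const (U * B * C)), integral_add (j5.fun_add j6) j7,
    integral_add j5 j6]
  simp only [integral_const_mul, integral_const, probReal_univ, smul_eq_mul]
  unfold cv
  ring

end

end PC

namespace PC
open scoped ContDiff


/-! ### Drift of the power trace -/

lemma second_line {V : Type} [NormedAddCommGroup V] [NormedSpace ℝ V] {f : V → ℝ}
    (hf : ContDiff ℝ 2 f) (y v : V) {g' : ℝ → ℝ} {c : ℝ}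
    (h1 : ∀ τ : ℝ, HasDerivAt (fun τ : ℝ => f (y + τ • v)) (g' τ) τ) (h2 : HasDerivAt g' c 0) :
    fderiv ℝ (fderiv ℝ f) y v v = c := by
  have hl : ∀ τ : ℝ, HasDerivAt (fun τ : ℝ => y + τ • v) v τ := fun τ => by
    simpa using ((hasDerivAt_id τ).smul_const v).const_add y
  have e : g' = fun τ => fderiv ℝ f (y + τ • v) v := by
    ext τ
    refine (h1 τ).unique ?_
    exact ((hf.differentiable (by norm_num)) (y + τ • v)).hasFDerivAt.comp_hasDerivAt τ (hl τ)
  have hf' : ContDiff ℝ 1 (fderiv ℝ f) := hf.fderiv_right (by norm_num)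
  have h3 : HasFDerivAt (fderiv ℝ f) (fderiv ℝ (fderiv ℝ f) y) (y + (0 : ℝ) • v) := by
    simpa using ((hf'.differentiable (by norm_num)) y).hasFDerivAt
  have h4 : HasDerivAt (fun τ : ℝ => fderiv ℝ f (y + τ • v)) (fderiv ℝ (fderiv ℝ f) y v) 0 :=
    h3.comp_hasDerivAt (0 : ℝ) (hl 0)
  have h5 : HasDerivAt (fun τ : ℝ => fderiv ℝ f (y + τ • v) v)
      (fderiv ℝ (fderiv ℝ f) y v v) 0 :=
    (ContinuousLinearMap.apply ℝ ℝ v).hasFDerivAt.comp_hasDerivAt (0 : ℝ) h4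
  rw [e] at h2
  exact h5.unique h2

lemma C12.of_contDiff {V : Type} [NormedAddCommGroup V] [NormedSpace ℝ V] {f : V → ℝ}
    (hf : ContDiff ℝ 2 f) (a b : ℝ) : C12 (fun z : ℝ × V => f z.2) (fun _ => 0)
      (fun z => fderiv ℝ f z.2) (fun z => fderiv ℝ (fderiv ℝ f) z.2) a b := by
  have hf' : ContDiff ℝ 1 (fderiv ℝ f) := hf.fderiv_right (by norm_num)
  have hf'' : ContDiff ℝ 0 (fderiv ℝ (fderiv ℝ f)) := hf'.fderiv_right (by norm_num)
  refine ⟨fun z _ => ?_, continuousOn_const, (hf'.continuous.comp continuous_snd).continuousOn,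
    (hf''.continuous.comp continuous_snd).continuousOn, fun t _ y => ?_⟩
  · have h := ((hf.differentiable (by norm_num)) z.2).hasFDerivAt.comp z
      (hasFDerivAt_snd (𝕜 := ℝ) (E := ℝ) (F := V) (p := z))
    refine h.congr_fderiv ?_
    simp
  · exact ((hf'.differentiable (by norm_num)) y).hasFDerivAt

section
variable {n : ℕ} {μ : Measure (E n)} {R t : ℝ} [IsProbabilityMeasure μ]

lemma trc_rank (N : E n →L[ℝ] E n) (w : E n) :
    trc n (N * (innerSL ℝ w).smulRight w) = ⟪w, N w⟫ := by
  set v := EuclideanSpace.basisFun (Fin n) ℝ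
  rw [trc_basis v]
  simp only [mul_apply_eq_comp, ContinuousLinearMap.smulRight_apply, innerSL_apply_apply, map_smul,
    inner_smul_right]
  rw [v.sum_inner_mul_inner]

/-- The squared Hilbert–Schmidt size of a slice of the third-moment tensor of the tilt. -/
lemma Td_sum (hR : ∀ᵐ x ∂μ, ‖x‖ ≤ R) (hl : SLC 0 μ) (ht : 0 < t) (θ : E n)
    (v : OrthonormalBasis (Fin n) ℝ (E n)) (a : Fin n) {A : ℝ} (hA : ‖cm μ t θ‖ ≤ A) :
    ∑ k, ∑ b, ⟪v b, Td μ (EuclideanSpace.single k 1) (t, θ) (v a)⟫ ^ 2 ≤ 4 * √(A / t) * A ^ 2 := by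
  have hE := tt_hasExp hR ht θ
  have := tt_prob hR ht θ
  have h0 : 0 ≤ A := (norm_nonneg _).trans hA
  have h := tri_bound (A := A) (tt_ae hR θ) (tt_slc hR hl ht θ) ht h0 (fun u => ?_) v (v a)
  swap
  · rw [← cm_inner hR ht]
    calc ⟪cm μ t θ u, u⟫ ≤ ‖cm μ t θ u‖ * ‖u‖ := real_inner_le_norm _ _
      _ ≤ (A * ‖u‖) * ‖u‖ := by gcongr; exact (cm μ t θ).le_of_opNorm_le hA u
      _ = _ := by ring
  rw [v.orthonormal.1 a, one_pow, mul_one] at h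
  refine le_trans (le_of_eq ?_) h
  rw [Finset.sum_comm]
  refine Finset.sum_congr rfl fun b _ => ?_
  simp only [Td_inner hR ht]
  set ν := tt μ t θ
  set m := ∫ z, z ∂ν
  have oB := Ok.innerc (v b) m
  have oC := Ok.innerc (v a) m
  have hi : Integrable (fun x => (⟪v b, x - m⟫ * ⟪v a, x - m⟫) • (x - m)) ν :=
    ((oB.mul oC).2.smul (expB_id.sub (ExpB.const m))).integrable hE
      ((oB.mul oC).1.aestronglyMeasurable.smul (by fun_prop))
  have e : ∀ u : E n, ∫ x, ⟪u, x - m⟫ * (⟪v b, x - m⟫ * ⟪v a, x - m⟫) ∂ν =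
      ⟪u, ∫ x, (⟪v b, x - m⟫ * ⟪v a, x - m⟫) • (x - m) ∂ν⟫ := fun u => by
    rw [← integral_inner hi]
    refine integral_congr_ae (Filter.Eventually.of_forall fun x => ?_)
    simp only [inner_smul_right]; ring
  have e2 : ∀ c, ∫ x, ⟪v a, x - m⟫ * (⟪v b, x - m⟫ * ⟪v c, x - m⟫) ∂ν =
      ⟪v c, ∫ x, (⟪v b, x - m⟫ * ⟪v a, x - m⟫) • (x - m) ∂ν⟫ := fun c => by
    rw [← e]; congr 1; ext x; ring
  simp only [e, e2]
  have p1 := (EuclideanSpace.basisFun (Fin n) ℝ).sum_sq_norm_inner_right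
    (∫ x, (⟪v b, x - m⟫ * ⟪v a, x - m⟫) • (x - m) ∂ν)
  have p2 := v.sum_sq_norm_inner_right
    (∫ x, (⟪v b, x - m⟫ * ⟪v a, x - m⟫) • (x - m) ∂ν)
  simp only [Real.norm_eq_abs, sq_abs] at p1 p2
  rw [p2, ← p1]
  simp

/-- The drift of the power trace of `cov - 1` along stochastic localization. -/
lemma gen_bound (hR : ∀ᵐ x ∂μ, ‖x‖ ≤ R) (hl : SLC 0 μ) (ht : 0 < t) (ht1 : t ≤ 1) (θ : E n)
    (p : ℕ) (hp : Even p) :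
    ∑ k, ((p + 1 : ℕ) + 1 : ℝ) * (∑ i ∈ Finset.range (p + 1), trc n ((cm μ t θ - 1) ^ (p + 1 - 1 - i) *
        Td μ (EuclideanSpace.single k 1) (t, θ) * (cm μ t θ - 1) ^ i *
        Td μ (EuclideanSpace.single k 1) (t, θ)) - 2 * trc n ((cm μ t θ - 1) ^ (p + 1) *
        (innerSL ℝ (cm μ t θ (EuclideanSpace.single k 1))).smulRight
          (cm μ t θ (EuclideanSpace.single k 1)))) ≤
      512 * (p + 2) ^ 2 / √t * (1 + ‖cm μ t θ - 1‖) ^ 3 *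
        (trc n ((cm μ t θ - 1) ^ (p + 2)) + n * (1 / 8) ^ (p + 2)) := by
  set C := cm μ t θ
  set M := C - 1 with hM
  have hC : C = M + 1 := by rw [hM]; abel
  have hCs : ∀ x y, ⟪C x, y⟫ = ⟪x, C y⟫ := fun x y => cm_symm hR ht θ x y
  have hMs : ∀ x y, ⟪M x, y⟫ = ⟪x, M y⟫ := fun x y => by
    simp [hM, inner_sub_left, inner_sub_right, hCs]
  obtain ⟨v, lam, hD⟩ := exists_dg hMs
  have hA1 : ‖C‖ ≤ 1 + ‖M‖ := by
    rw [hC, add_comm 1]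
    refine (norm_add_le _ _).trans ?_
    gcongr
    exact ContinuousLinearMap.norm_id_le
  set A := 1 + ‖M‖ with hAd
  have hA : 1 ≤ A := by rw [hAd]; linarith [norm_nonneg M]
  set G := trc n (M ^ (p + 2)) + n * (1 / 8 : ℝ) ^ (p + 2) with hG
  have hev : Even (p + 2) := hp.add (by decide)
  have hGs : G = ∑ a, (|lam a| ^ (p + 2) + (1 / 8) ^ (p + 2)) := by
    rw [hG, hD.trc_pow, Finset.sum_add_distrib]
    simp [hev.pow_abs]
  have s2 : ∑ a, |lam a| ^ p ≤ 64 * G := by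
    rw [hGs, Finset.mul_sum]
    refine Finset.sum_le_sum fun a _ => ?_
    have := pow_sub_le (x := lam a) (ε := 1 / 8) (by norm_num) p 2
    refine this.trans (le_of_eq ?_)
    norm_num; ring
  have s1 : ∑ a, |lam a| ^ (p + 1) ≤ 8 * G := by
    rw [hGs, Finset.mul_sum]
    refine Finset.sum_le_sum fun a _ => ?_
    have := pow_sub_le (x := lam a) (ε := 1 / 8) (by norm_num) (p + 1) 1
    refine this.trans (le_of_eq ?_)
    norm_num; ring
  have hG0 : 0 ≤ G := by
    rw [hGs]; exact Finset.sum_nonneg fun a _ => by positivity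
  have hTs : ∀ u x y, ⟪Td μ u (t, θ) x, y⟫ = ⟪x, Td μ u (t, θ) y⟫ := fun u x y => by
    rw [real_inner_comm, Td_inner hR ht, Td_inner hR ht]
    congr 1; ext z; ring
  have hB : ∑ k, ∑ i ∈ Finset.range (p + 1), trc n (M ^ (p + 1 - 1 - i) *
        Td μ (EuclideanSpace.single k 1) (t, θ) * M ^ i *
        Td μ (EuclideanSpace.single k 1) (t, θ)) ≤
      (p + 1) * (2 * (64 * G * (4 * √(A / t) * A ^ 2))) := by
    calc _ ≤ ∑ k : Fin n, ∑ i ∈ Finset.range (p + 1), 2 * ∑ a, |lam a| ^ p *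
          ∑ b, ⟪v b, Td μ (EuclideanSpace.single k 1) (t, θ) (v a)⟫ ^ 2 := by
          refine Finset.sum_le_sum fun k _ => Finset.sum_le_sum fun i hi => ?_
          have := hD.trc_four_le (hTs (EuclideanSpace.single k 1)) (p + 1 - 1 - i) i
          rwa [show p + 1 - 1 - i + i = p by have := Finset.mem_range.1 hi; omega] at this
      _ = (p + 1) * (2 * ∑ a, |lam a| ^ p *
          ∑ k, ∑ b, ⟪v b, Td μ (EuclideanSpace.single k 1) (t, θ) (v a)⟫ ^ 2) := by
          simp only [Finset.sum_const, Finset.card_range, nsmul_eq_mul, Nat.cast_add, Nat.cast_one]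
          rw [← Finset.mul_sum, ← Finset.mul_sum, Finset.sum_comm]
          simp only [Finset.mul_sum]
      _ ≤ (p + 1) * (2 * ∑ a, |lam a| ^ p * (4 * √(A / t) * A ^ 2)) := by
          gcongr with a _
          exact Td_sum hR hl ht θ v a hA1
      _ ≤ _ := by
          rw [← Finset.sum_mul]
          gcongr
  have hW : -(8 * G * A ^ 2) ≤ ∑ k, trc n (M ^ (p + 1) *
      (innerSL ℝ (C (EuclideanSpace.single k 1))).smulRight (C (EuclideanSpace.single k 1))) := by
    have e1 : ∑ k, trc n (M ^ (p + 1) * (innerSL ℝ (C (EuclideanSpace.single k 1))).smulRight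
        (C (EuclideanSpace.single k 1))) = trc n (C * M ^ (p + 1) * C) := by
      rw [trc_basis (EuclideanSpace.basisFun (Fin n) ℝ)]
      refine Finset.sum_congr rfl fun k _ => ?_
      rw [trc_rank, hCs]
      simp [mul_apply_eq_comp]
    have hCv : ∀ a, C (v a) = (lam a + 1) • v a := fun a => by
      rw [hC, add_apply, hD a, add_smul, one_smul]; rfl
    have e2 : trc n (C * M ^ (p + 1) * C) = ∑ a, (lam a + 1) ^ 2 * lam a ^ (p + 1) := by
      rw [trc_basis v]
      refine Finset.sum_congr rfl fun a _ => ?_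
      simp only [mul_apply_eq_comp]
      rw [← hCs, hCv, map_smul, hD.pow, inner_smul_left, inner_smul_right, inner_smul_right,
        real_inner_self_eq_norm_sq, v.orthonormal.1 a, conj_trivial]
      ring
    rw [e1, e2]
    have e3 : -(A ^ 2 * ∑ a, |lam a| ^ (p + 1)) ≤ ∑ a, (lam a + 1) ^ 2 * lam a ^ (p + 1) := by
      rw [Finset.mul_sum, ← Finset.sum_neg_distrib]
      refine Finset.sum_le_sum fun a _ => ?_
      have h1 : (lam a + 1) ^ 2 ≤ A ^ 2 := by
        refine sq_le_sq' ?_ ?_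
        · have := hD.abs_le a; have := neg_abs_le (lam a); rw [hAd]; linarith
        · have := hD.abs_le a; have := le_abs_self (lam a); rw [hAd]; linarith
      have h2 : |(lam a + 1) ^ 2 * lam a ^ (p + 1)| ≤ A ^ 2 * |lam a| ^ (p + 1) := by
        rw [abs_mul, abs_pow (lam a), abs_of_nonneg (sq_nonneg _)]; gcongr
      exact (abs_le.1 h2).1
    have e4 : A ^ 2 * ∑ a, |lam a| ^ (p + 1) ≤ 8 * G * A ^ 2 := by
      rw [mul_comm]; gcongr
    linarith
  rw [← Finset.mul_sum, Finset.sum_sub_distrib, ← Finset.mul_sum]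
  have hst : 0 < √t := Real.sqrt_pos.2 ht
  have hst1 : √t ≤ 1 := Real.sqrt_le_one.2 ht1
  have hsq : √(A / t) ≤ A / √t := by
    rw [Real.sqrt_div (by linarith)]
    gcongr
    exact Real.sqrt_le_iff.2 ⟨by linarith, by nlinarith⟩
  have hB' : (p + 1 : ℝ) * (2 * (64 * G * (4 * √(A / t) * A ^ 2))) ≤
      (p + 1) * (512 * (G * (A ^ 3 / √t))) := by
    calc (p + 1 : ℝ) * (2 * (64 * G * (4 * √(A / t) * A ^ 2))) ≤
        (p + 1) * (2 * (64 * G * (4 * (A / √t) * A ^ 2))) := by gcongr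
      _ = _ := by ring
  have hW' : 8 * G * A ^ 2 ≤ 8 * (G * (A ^ 3 / √t)) := by
    have : A ^ 2 ≤ A ^ 3 / √t := by
      rw [le_div_iff₀ hst]
      calc A ^ 2 * √t ≤ A ^ 2 * A := by gcongr; linarith
        _ = _ := by ring
    calc 8 * G * A ^ 2 ≤ 8 * G * (A ^ 3 / √t) := by gcongr
      _ = _ := by ring
  set X := G * (A ^ 3 / √t)
  have hX : 0 ≤ X := by positivity
  calc _ ≤ ((p + 1 : ℕ) + 1 : ℝ) * ((p + 1) * (512 * X) + 16 * X) := by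
        gcongr; linarith
    _ ≤ ((p + 1 : ℕ) + 1 : ℝ) * ((p + 2) * (512 * X)) := by
        gcongr; linarith
    _ = _ := by simp only [X]; push_cast; field_simp; ring

end

end PC

namespace PC
open scoped ContDiff


/-! ### The covariance stays close to the identity -/

lemma exp_sub_one_ge {y : ℝ} (hy : 0 ≤ y) : y * (3 + y) ^ 3 / 8 ≤ 7 * (exp y - 1) := by
  have h := Real.sum_le_exp_of_nonneg hy 5
  simp only [Finset.sum_range_succ, Finset.sum_range_zero, Nat.factorial] at h
  norm_num at h
  have h2 := mul_nonneg hy hy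
  have h3 := mul_nonneg h2 hy
  have h4 := mul_nonneg h3 hy
  nlinarith [h2, h3, h4]

/-- The saturated potential `x ↦ 2⁻ᵐ (1 - exp (-2ᵐ x))` absorbs the growth of the drift. -/
lemma phi_bound {m : ℕ} (hm : m ≠ 0) {x ρ : ℝ} (hρ : 0 ≤ ρ) (hx : ρ ^ m ≤ x) :
    exp (-(2 ^ m * x)) * ((1 + ρ) ^ 3 * x) ≤ 7 * ((1 / 2) ^ m * (1 - exp (-(2 ^ m * x)))) := by
  have hx0 : 0 ≤ x := (pow_nonneg hρ m).trans hx
  set y := 2 ^ m * x with hy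
  have hy0 : 0 ≤ y := by positivity
  have h1 : 2 * ρ ≤ 1 + y := by
    by_contra hc
    push Not at hc
    have h2 : 2 * ρ ≤ (2 * ρ) ^ m := le_self_pow₀ (by linarith) hm
    have h3 : (2 * ρ) ^ m ≤ y := by rw [mul_pow, hy]; gcongr
    linarith
  have h4 : (1 + ρ) ^ 3 ≤ ((3 + y) / 2) ^ 3 := by
    gcongr; linarith
  have hxy : x = (1 / 2) ^ m * y := by
    rw [hy, ← mul_assoc, ← mul_pow]; norm_num
  have h5 : (1 + ρ) ^ 3 * x ≤ (1 / 2) ^ m * (7 * (exp y - 1)) := by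
    calc (1 + ρ) ^ 3 * x ≤ ((3 + y) / 2) ^ 3 * x := by gcongr
      _ = (1 / 2) ^ m * (y * (3 + y) ^ 3 / 8) := by
        conv_lhs => rw [hxy]
        ring
      _ ≤ _ := by gcongr; exact exp_sub_one_ge hy0
  calc exp (-y) * ((1 + ρ) ^ 3 * x) ≤ exp (-y) * ((1 / 2) ^ m * (7 * (exp y - 1))) := by gcongr
    _ = 7 * ((1 / 2) ^ m * (exp (-y) * exp y - exp (-y))) := by ring
    _ = _ := by rw [← exp_add]; simp

section
variable {n : ℕ} {μ : Measure (E n)} {R t : ℝ} [IsProbabilityMeasure μ]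

/-- The regularized power trace of the centered covariance. -/
def Gm (p : ℕ) (y : E n × (E n →L[ℝ] E n)) : ℝ := trc n (Mm y ^ (p + 2)) + n * (1 / 8) ^ (p + 2)

/-- The potential controlling the operator norm of the centered covariance. -/
def Fm (p : ℕ) (y : E n × (E n →L[ℝ] E n)) : ℝ :=
  (1 / 2) ^ (p + 2) * (1 - exp (-(2 ^ (p + 2) * Gm p y)))

lemma Mm_contDiff : ContDiff ℝ 2 (Mm (n := n)) := by
  have : Mm (n := n) = fun y =>
    y.2 - ContinuousLinearMap.smulRightL ℝ (E n) (E n) (innerSL ℝ y.1) y.1 - 1 := rfl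
  rw [this]
  refine (contDiff_snd.sub ?_).sub contDiff_const
  have hi : ContDiff ℝ 2 fun y : E n × (E n →L[ℝ] E n) => innerSL ℝ y.1 :=
    ContinuousLinearMap.contDiff (𝕜 := ℝ) ((innerSL ℝ (E := E n)).comp (ContinuousLinearMap.fst ℝ (E n) (E n →L[ℝ] E n)))
  exact ((ContinuousLinearMap.smulRightL ℝ (E n) (E n)).contDiff.comp
    hi).clm_apply contDiff_fst

lemma Gm_contDiff (p : ℕ) : ContDiff ℝ 2 (Gm (n := n) p) :=
  ((trc n).contDiff.comp (Mm_contDiff.pow (p + 2))).add contDiff_const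

lemma Fm_contDiff (p : ℕ) : ContDiff ℝ 2 (Fm (n := n) p) := by
  have := Gm_contDiff (n := n) p
  unfold Fm
  fun_prop

lemma Fm_drift (hR : ∀ᵐ x ∂μ, ‖x‖ ≤ R) (hl : SLC 0 μ) (ht : 0 < t) (ht1 : t ≤ 1) (hn : 0 < n)
    (θ : E n) (p : ℕ) (hp : Even p) :
    ∑ k, fderiv ℝ (fderiv ℝ (Fm p)) (mn μ ss (t, θ)) (dk μ ss (EuclideanSpace.single k 1) (t, θ))
      (dk μ ss (EuclideanSpace.single k 1) (t, θ)) ≤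
      3584 * (p + 2) ^ 2 / √t * Fm p (mn μ ss (t, θ)) := by
  set y := mn μ ss (t, θ) with hy
  have hMy : Mm y = cm μ t θ - 1 := Mm_ss hR ht θ
  set e := exp (-(2 ^ (p + 2) * Gm p y)) with he
  have key : ∀ k : Fin n, fderiv ℝ (fderiv ℝ (Fm p)) y (dk μ ss (EuclideanSpace.single k 1) (t, θ))
      (dk μ ss (EuclideanSpace.single k 1) (t, θ)) ≤ e * (((p + 1 : ℕ) + 1 : ℝ) *
      (∑ i ∈ Finset.range (p + 1), trc n ((cm μ t θ - 1) ^ (p + 1 - 1 - i) *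
        Td μ (EuclideanSpace.single k 1) (t, θ) * (cm μ t θ - 1) ^ i *
        Td μ (EuclideanSpace.single k 1) (t, θ)) - 2 * trc n ((cm μ t θ - 1) ^ (p + 1) *
        (innerSL ℝ (cm μ t θ (EuclideanSpace.single k 1))).smulRight
          (cm μ t θ (EuclideanSpace.single k 1))))) := by
    intro k
    have hcv : ∀ τ : ℝ, Mm (y + τ • dk μ ss (EuclideanSpace.single k 1) (t, θ)) =
        (cm μ t θ - 1) + τ • Td μ (EuclideanSpace.single k 1) (t, θ) - τ ^ 2 •
        (innerSL ℝ (cm μ t θ (EuclideanSpace.single k 1))).smulRight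
          (cm μ t θ (EuclideanSpace.single k 1)) := fun τ => by
      rw [hy, Mm_curve, Mm_ss hR ht, dk_ss_fst hR ht]
    set d := dk μ ss (EuclideanSpace.single k 1) (t, θ)
    set M := cm μ t θ - 1
    set T := Td μ (EuclideanSpace.single k 1) (t, θ)
    set W := (innerSL ℝ (cm μ t θ (EuclideanSpace.single k 1))).smulRight
          (cm μ t θ (EuclideanSpace.single k 1))
    set c2 := ((p + 1 : ℕ) + 1 : ℝ) * (∑ i ∈ Finset.range (p + 1), trc n (M ^ (p + 1 - 1 - i) *
        T * M ^ i * T) - 2 * trc n (M ^ (p + 1) * W)) with hc2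
    set g : ℝ → ℝ := fun τ => Gm p (y + τ • d) with hg
    set g' : ℝ → ℝ := fun τ =>
      ((p + 1 : ℕ) + 1 : ℝ) * trc n ((M + τ • T - τ ^ 2 • W) ^ (p + 1) * (T - (2 * τ) • W)) with hg'
    have d1 : ∀ τ, HasDerivAt g (g' τ) τ := fun τ => by
      have := (tr_curve1 M T W (p + 1) τ).add_const (n * (1 / 8 : ℝ) ^ (p + 2))
      simp only [hg, Gm, hcv]
      exact this
    have d2 : HasDerivAt g' c2 0 := tr_curve2 M T W (p + 1)
    have dE : ∀ τ, HasDerivAt (fun τ => exp (-(2 ^ (p + 2) * g τ)))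
        (exp (-(2 ^ (p + 2) * g τ)) * -(2 ^ (p + 2) * g' τ)) τ := fun τ =>
      ((d1 τ).const_mul (2 ^ (p + 2))).neg.exp
    have h1 : ∀ τ : ℝ, HasDerivAt (fun τ : ℝ => Fm p (y + τ • d))
        (exp (-(2 ^ (p + 2) * g τ)) * g' τ) τ := fun τ => by
      refine (((dE τ).const_sub 1).const_mul ((1 / 2) ^ (p + 2))).congr_deriv ?_
      have : (1 / 2 : ℝ) ^ (p + 2) * 2 ^ (p + 2) = 1 := by rw [← mul_pow]; norm_num
      linear_combination exp (-(2 ^ (p + 2) * g τ)) * g' τ * this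
    have h2 := (dE 0).mul d2
    rw [second_line (Fm_contDiff p) y d h1 h2]
    have y0 : y + (0 : ℝ) • d = y := by
      have : (0 : ℝ) • d = 0 := zero_smul ℝ d
      rw [this]; exact add_zero y
    have g0 : g 0 = Gm p y := by simp only [hg, y0]
    rw [g0, ← he]
    have : 0 ≤ e * 2 ^ (p + 2) * (g' 0 * g' 0) :=
      mul_nonneg (by positivity) (mul_self_nonneg _)
    linarith
  refine (Finset.sum_le_sum fun k _ => key k).trans ?_
  rw [← Finset.mul_sum]
  refine (mul_le_mul_of_nonneg_left (gen_bound hR hl ht ht1 θ p hp) (exp_pos _).le).trans ?_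
  rw [← hMy]
  have hsy : ∀ x z, ⟪Mm y x, z⟫ = ⟪x, Mm y z⟫ := fun x z => by
    simp [hMy, inner_sub_left, inner_sub_right, cm_symm hR ht]
  obtain ⟨v, lam, hD⟩ := exists_dg hsy
  have hb := hD.norm_pow_le hn (hp.add (by decide : Even 2))
  have hph := phi_bound (m := p + 2) (by omega) (norm_nonneg (Mm y)) (x := Gm p y)
    (hb.trans (by unfold Gm; simp))
  have hK : 0 ≤ 512 * ((p : ℝ) + 2) ^ 2 / √t := by positivity
  have eG : trc n (Mm y ^ (p + 2)) + n * (1 / 8) ^ (p + 2) = Gm p y := rfl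
  calc _ = 512 * ((p : ℝ) + 2) ^ 2 / √t * (e * ((1 + ‖Mm y‖) ^ 3 * Gm p y)) := by
        rw [eG]; ring
    _ ≤ 512 * ((p : ℝ) + 2) ^ 2 / √t * (7 * ((1 / 2) ^ (p + 2) * (1 - e))) := by gcongr
    _ = _ := by rw [he]; unfold Fm; ring

lemma Bm.of_mn {V : Type} [NormedAddCommGroup V] [NormedSpace ℝ V] [FiniteDimensional ℝ V]
    {s : E n → V} (hR : ∀ᵐ x ∂μ, ‖x‖ ≤ R) (hs : Bd μ s) {Φ : V → ℝ} (hΦ : Continuous Φ) (t : ℝ) :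
    Bm (fun θ => Φ (mn μ s (t, θ))) := by
  have : CompleteSpace V := FiniteDimensional.complete ℝ V
  have : ProperSpace V := FiniteDimensional.proper ℝ V
  obtain ⟨B, hB⟩ := hs.2
  obtain ⟨C, hC⟩ := (isCompact_closedBall (0 : V) B).exists_bound_of_continuousOn hΦ.continuousOn
  refine ⟨?_, C, fun θ => hC _ (by simpa using mn_bound hR hB _)⟩
  have h1 : Continuous fun θ : E n => mn μ s (t, θ) :=
    (mn_contDiff hR hs).continuous.comp (by fun_prop)
  exact (hΦ.comp h1).measurable

/-- Comparison without integrability of the smaller function: a non-integrable function has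
integral `0` by convention. -/
lemma EE_le (hR : ∀ᵐ x ∂μ, ‖x‖ ≤ R) (ht : 0 ≤ t) {Ψ Φ : E n → ℝ} (h : Bm Φ) (h0 : ∀ θ, 0 ≤ Φ θ)
    (hle : ∀ θ, Ψ θ ≤ Φ θ) : EE μ t Ψ ≤ EE μ t Φ := by
  by_cases hi : Integrable (fun g => mz μ (t, √t • g) * Ψ (√t • g)) (ga n)
  · exact integral_mono hi (EE_intg hR ht h) fun _ =>
      mul_le_mul_of_nonneg_left (hle _) (mz_pos hR _).le
  · unfold EE
    rw [integral_undef hi]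
    exact integral_nonneg fun g => mul_nonneg (mz_pos hR _).le (h0 _)

lemma Gm_ge (hR : ∀ᵐ x ∂μ, ‖x‖ ≤ R) (ht : 0 < t) (hn : 0 < n) (θ : E n) (p : ℕ) (hp : Even p) :
    ‖cm μ t θ - 1‖ ^ (p + 2) ≤ Gm p (mn μ ss (t, θ)) := by
  have hsy : ∀ x z, ⟪(cm μ t θ - 1) x, z⟫ = ⟪x, (cm μ t θ - 1) z⟫ := fun x z => by
    simp [inner_sub_left, inner_sub_right, cm_symm hR ht]
  obtain ⟨v, lam, hD⟩ := exists_dg hsy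
  refine (hD.norm_pow_le hn (hp.add (by decide : Even 2))).trans ?_
  unfold Gm
  rw [Mm_ss hR ht]
  simp

lemma Fm_nonneg (hR : ∀ᵐ x ∂μ, ‖x‖ ≤ R) (ht : 0 < t) (hn : 0 < n) (θ : E n) (p : ℕ)
    (hp : Even p) : 0 ≤ Fm p (mn μ ss (t, θ)) := by
  have h := (pow_nonneg (norm_nonneg _) _).trans (Gm_ge hR ht hn θ p hp)
  unfold Fm
  have : exp (-(2 ^ (p + 2) * Gm p (mn μ ss (t, θ)))) ≤ 1 := by
    rw [exp_le_one_iff]; simp only [Left.neg_nonpos_iff]; positivity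
  have : 0 ≤ 1 - exp (-(2 ^ (p + 2) * Gm p (mn μ ss (t, θ)))) := by linarith
  positivity

/-- Growth of the potential: its logarithmic derivative is `O(m² / √t)`. -/
lemma Fm_growth (hR : ∀ᵐ x ∂μ, ‖x‖ ≤ R) (hl : SLC 0 μ) (hn : 0 < n)
    (hm : ∫ x, x ∂μ = 0) (hc : ∫ x, (innerSL ℝ x).smulRight x ∂μ = 1) (p : ℕ) (hp : Even p)
    (ht : 0 < t) (ht1 : t ≤ 1) :
    EE μ t (fun θ => Fm p (mn μ ss (t, θ))) ≤
      n * (1 / 8) ^ (p + 2) * exp (3584 * (p + 2) ^ 2 * √t) := by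
  have hs : Bd μ (ss (n := n)) := Bd.of_cont hR ss_cont
  set K : ℝ := 1792 * (p + 2) ^ 2 with hK
  set f : ℝ → ℝ := fun t => EE μ t (fun θ => Fm p (mn μ ss (t, θ))) with hf
  have hcont : ContinuousOn f (Set.Icc 0 t) :=
    EE_cont (F := fun z => Fm p z.2) hR hs
      ((Fm_contDiff p).continuous.comp continuous_snd).continuousOn
  have hd := fun x (hx : x ∈ Set.Ioo 0 t) =>
    ito hR hs (C12.of_contDiff (Fm_contDiff (n := n) p) 0 t) le_rfl hx
  have hle : ∀ x (hx : x ∈ Set.Ioo 0 t), (EE μ x fun θ => 0 + (1 / 2) * ∑ k : Fin n,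
      fderiv ℝ (fderiv ℝ (Fm p)) (mn μ ss (x, θ)) (dk μ ss (EuclideanSpace.single k 1) (x, θ))
        (dk μ ss (EuclideanSpace.single k 1) (x, θ))) ≤ K / √x * f x := by
    intro x hx
    have hb : Bm (fun θ => Fm p (mn μ ss (x, θ))) :=
      Bm.of_mn hR hs (Fm_contDiff p).continuous x
    rw [hf, ← EE_cmul]
    refine EE_le hR hx.1.le ((Bm.const _).mul hb) (fun θ => ?_) fun θ => ?_
    · have := Fm_nonneg hR hx.1 hn θ p hp
      positivity
    · have := Fm_drift hR hl hx.1 (hx.2.le.trans ht1) hn θ p hp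
      rw [hK]
      calc _ ≤ 0 + 1 / 2 * (3584 * ((p : ℝ) + 2) ^ 2 / √x * Fm p (mn μ ss (x, θ))) := by gcongr
        _ = _ := by ring
  have hdE : ∀ x ∈ Set.Ioo 0 t, HasDerivAt (fun x => exp (-(2 * K * √x)))
      (exp (-(2 * K * √x)) * -(K / √x)) x := fun x hx => by
    refine ((Real.hasDerivAt_sqrt hx.1.ne').const_mul (2 * K)).neg.exp.congr_deriv ?_
    simp only [Pi.neg_apply]; ring
  have hanti : AntitoneOn (fun x => f x * exp (-(2 * K * √x))) (Set.Icc 0 t) := by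
    refine antitoneOn_of_deriv_nonpos (convex_Icc 0 t) (hcont.mul (by fun_prop)) ?_ ?_
    · intro x hx
      rw [interior_Icc] at hx
      exact ((hd x hx).mul (hdE x hx)).differentiableAt.differentiableWithinAt
    · intro x hx
      rw [interior_Icc] at hx
      have h1 := ((hd x hx).mul (hdE x hx)).deriv
      change deriv (fun x => f x * exp (-(2 * K * √x))) x = _ at h1
      rw [h1]
      have h2 := mul_le_mul_of_nonneg_right (hle x hx) (exp_pos (-(2 * K * √x))).le
      have h3 : K / √x * f x * exp (-(2 * K * √x)) +
        f x * (exp (-(2 * K * √x)) * -(K / √x)) = 0 := by ring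
      change _ + f x * (exp (-(2 * K * √x)) * -(K / √x)) ≤ 0
      linarith
  have h0 := hanti ⟨le_rfl, ht.le⟩ ⟨ht.le, le_rfl⟩ ht.le
  have hf0 : f 0 ≤ n * (1 / 8) ^ (p + 2) := by
    rw [hf]
    simp only
    rw [EE_zero, mn_zero]
    have hi1 : Integrable (fun x : E n => x) μ :=
      expB_id.integrable (hasExp_of_bdd hR) (by fun_prop)
    have hi2 : Integrable (fun x : E n => (innerSL ℝ x).smulRight x) μ :=
      expB_smulRight.integrable (hasExp_of_bdd hR) cont_smulRight.aestronglyMeasurable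
    have e : ∫ x, ss x ∂μ = ((0 : E n), (1 : E n →L[ℝ] E n)) := by
      rw [← hm, ← hc]; exact integral_pair hi1 hi2
    have eM : Mm ((0 : E n), (1 : E n →L[ℝ] E n)) = 0 := by
      refine ContinuousLinearMap.ext fun x => ?_
      simp [Mm]
    rw [e]
    have eG : Gm p ((0 : E n), (1 : E n →L[ℝ] E n)) = n * (1 / 8) ^ (p + 2) := by
      unfold Gm; rw [eM]; simp
    unfold Fm
    rw [eG]
    set x : ℝ := n * (1 / 8) ^ (p + 2)
    have := Real.add_one_le_exp (-(2 ^ (p + 2) * x))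
    calc (1 / 2 : ℝ) ^ (p + 2) * (1 - exp (-(2 ^ (p + 2) * x))) ≤
        (1 / 2) ^ (p + 2) * (2 ^ (p + 2) * x) := by gcongr; linarith
      _ = x := by rw [← mul_assoc, ← mul_pow]; norm_num
  simp only [Real.sqrt_zero, mul_zero, neg_zero, exp_zero, mul_one] at h0
  have h1 := h0.trans hf0
  rw [exp_neg, ← div_eq_mul_inv, div_le_iff₀ (exp_pos _)] at h1
  refine h1.trans (le_of_eq ?_)
  rw [hK]; ring_nf

/-- A weight which dominates the indicator of the event that the covariance is far from the
identity. -/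
def chi (p : ℕ) (μ : Measure (E n)) (t : ℝ) (θ : E n) : ℝ :=
  2 * 2 ^ (p + 2) * Fm p (mn μ ss (t, θ))

lemma chi_bm (hR : ∀ᵐ x ∂μ, ‖x‖ ≤ R) (p : ℕ) : Bm (chi p μ t) :=
  (Bm.const _).mul (Bm.of_mn hR (Bd.of_cont hR ss_cont) (Fm_contDiff p).continuous t)

lemma chi_nonneg (hR : ∀ᵐ x ∂μ, ‖x‖ ≤ R) (ht : 0 < t) (hn : 0 < n) (θ : E n) (p : ℕ)
    (hp : Even p) : 0 ≤ chi p μ t θ := by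
  have := Fm_nonneg hR ht hn θ p hp
  unfold chi; positivity

lemma chi_ge (hR : ∀ᵐ x ∂μ, ‖x‖ ≤ R) (ht : 0 < t) (hn : 0 < n) (θ : E n) (p : ℕ)
    (hp : Even p) (h : 1 / 2 < ‖cm μ t θ - 1‖) : 1 ≤ chi p μ t θ := by
  have h1 : (1 / 2 : ℝ) ^ (p + 2) ≤ Gm p (mn μ ss (t, θ)) :=
    (pow_le_pow_left₀ (by norm_num) h.le _).trans (Gm_ge hR ht hn θ p hp)
  have h2 : 1 ≤ 2 ^ (p + 2) * Gm p (mn μ ss (t, θ)) := by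
    calc (1 : ℝ) = 2 ^ (p + 2) * (1 / 2) ^ (p + 2) := by rw [← mul_pow]; norm_num
      _ ≤ _ := by gcongr
  unfold chi Fm
  have h3 : exp (-(2 ^ (p + 2) * Gm p (mn μ ss (t, θ)))) ≤ 1 / 2 := by
    refine (exp_le_exp.2 (neg_le_neg h2)).trans ?_
    have := Real.exp_one_gt_d9
    rw [exp_neg, one_div]
    exact inv_anti₀ (by norm_num) (by linarith)
  have e : (2 : ℝ) ^ (p + 2) * (1 / 2) ^ (p + 2) = 1 := by rw [← mul_pow]; norm_num
  calc (1 : ℝ) ≤ 2 * (1 - exp (-(2 ^ (p + 2) * Gm p (mn μ ss (t, θ))))) := by linarith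
    _ = 2 * (2 ^ (p + 2) * (1 / 2) ^ (p + 2)) *
      (1 - exp (-(2 ^ (p + 2) * Gm p (mn μ ss (t, θ))))) := by rw [e]; ring
    _ = _ := by ring

/-- The covariance is far from the identity with small probability: the right-hand side is small
for `p` of order `log n` and `√t` of order `1 / p`. -/
lemma chi_EE (hR : ∀ᵐ x ∂μ, ‖x‖ ≤ R) (hl : SLC 0 μ) (hn : 0 < n)
    (hm : ∫ x, x ∂μ = 0) (hc : ∫ x, (innerSL ℝ x).smulRight x ∂μ = 1) (p : ℕ) (hp : Even p)
    (ht : 0 < t) (ht1 : t ≤ 1) :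
    EE μ t (chi p μ t) ≤ 2 * n * (1 / 4) ^ (p + 2) * exp (3584 * (p + 2) ^ 2 * √t) := by
  unfold chi
  rw [EE_cmul]
  calc _ ≤ 2 * 2 ^ (p + 2) * (n * (1 / 8) ^ (p + 2) * exp (3584 * (p + 2) ^ 2 * √t)) := by
        gcongr; exact Fm_growth hR hl hn hm hc p hp ht ht1
    _ = 2 * n * (2 * (1 / 8)) ^ (p + 2) * exp (3584 * (p + 2) ^ 2 * √t) := by
        rw [mul_pow]; ring
    _ = _ := by norm_num

end

end PC

namespace PC
open scoped ContDiff


/-! ### Gaussian averages of gauges -/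

/-- Nonnegative sublinear functions bounded by a multiple of the norm; the gauges of convex bodies
around the origin. -/
structure Sub {n : ℕ} (N : E n → ℝ) (L : ℝ) : Prop where
  nn : ∀ x, 0 ≤ N x
  add : ∀ x y, N (x + y) ≤ N x + N y
  hom : ∀ c : ℝ, 0 < c → ∀ x, N (c • x) = c * N x
  le : ∀ x, N x ≤ L * ‖x‖

/-- The standard Gaussian average of the translates of `N`. -/
def U {n : ℕ} (N : E n → ℝ) (w : E n) : ℝ := ∫ g, N (w + g) ∂(ga n)

section
variable {n : ℕ} {N : E n → ℝ} {L : ℝ}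

lemma Sub.cont (h : Sub N L) : Continuous N := by
  have hl : LipschitzWith (Real.toNNReal L) N := by
    refine LipschitzWith.of_le_add_mul _ fun x y => ?_
    have h1 := h.add y (x - y)
    rw [add_sub_cancel] at h1
    rw [dist_eq_norm]
    have h2 := h.le (x - y)
    have h3 := mul_le_mul_of_nonneg_right (Real.le_coe_toNNReal L) (norm_nonneg (x - y))
    linarith
  exact hl.continuous

lemma Sub.expB (h : Sub N L) : ExpB N := by
  refine ((ExpB.const L).mul expB_id.norm).of_le fun x => ?_
  rw [norm_of_nonneg (h.nn x)]
  exact h.le x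

lemma Sub.trans_expB (h : Sub N L) (w : E n) : ExpB fun x => N (w + x) := by
  refine ((ExpB.const (N w)).add h.expB).of_le fun x => ?_
  rw [norm_of_nonneg (h.nn _)]
  exact h.add w x

lemma Sub.intg (h : Sub N L) (w : E n) : Integrable (fun x => N (w + x)) (ga n) :=
  (h.trans_expB w).integrable ga_hasExp
    (h.cont.comp (continuous_const.add continuous_id)).aestronglyMeasurable

lemma ga_neg (f : E n → ℝ) : ∫ x, f (-x) ∂(ga n) = ∫ x, f x ∂(ga n) := by
  rw [ga_int, ga_int]
  congr 1
  rw [← integral_neg_eq_self]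
  simp [gk_neg]

lemma U_ge (h : Sub N L) (w : E n) : N w ≤ U N w := by
  have h1 : ∫ g, N (w + -g) ∂(ga n) = U N w := ga_neg fun g => N (w + g)
  have hi : Integrable (fun g => N (w + -g)) (ga n) := by
    refine ExpB.integrable (((ExpB.const (N w)).add ((ExpB.const L).mul expB_id.norm)).of_le
      fun x => ?_) ga_hasExp (h.cont.comp (by fun_prop)).aestronglyMeasurable
    rw [norm_of_nonneg (h.nn _)]
    have := h.le (-x)
    rw [norm_neg] at this
    exact (h.add w (-x)).trans (by linarith)
  have h2 : ∫ _ : E n, N w ∂(ga n) ≤ ∫ g, (1 / 2 * N (w + g) + 1 / 2 * N (w + -g)) ∂(ga n) := by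
    refine integral_mono (integrable_const _) (((h.intg w).const_mul _).add (hi.const_mul _))
      fun g => ?_
    have h3 := h.add ((1 / 2 : ℝ) • (w + g)) ((1 / 2 : ℝ) • (w + -g))
    have e : (1 / 2 : ℝ) • (w + g) + (1 / 2 : ℝ) • (w + -g) = w := by module
    rw [e, h.hom _ (by norm_num), h.hom _ (by norm_num)] at h3
    exact h3
  rw [integral_add ((h.intg w).const_mul _) (hi.const_mul _), integral_const_mul,
    integral_const_mul, h1, integral_const, probReal_univ, one_smul] at h2
  have : ∫ g, N (w + g) ∂(ga n) = U N w := rfl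
  linarith

lemma U_le (h : Sub N L) (w : E n) : U N w ≤ N w + U N 0 := by
  have h0 := h.intg 0
  have h2 : U N w ≤ ∫ g, (N w + N (0 + g)) ∂(ga n) := by
    refine integral_mono (h.intg w) ((integrable_const _).add h0) fun g => ?_
    simpa using h.add w g
  rwa [integral_add (integrable_const _) h0, integral_const, probReal_univ, one_smul] at h2

lemma U_conv (h : Sub N L) : ConvexOn ℝ Set.univ (U N) := by
  refine ⟨convex_univ, fun x _ y _ a b ha hb hab => ?_⟩
  rcases ha.eq_or_lt with rfl | ha
  · have : b = 1 := by linarith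
    simp [this]
  rcases hb.eq_or_lt with rfl | hb
  · have : a = 1 := by linarith
    simp [this]
  simp only [smul_eq_mul]
  unfold U
  rw [← integral_const_mul, ← integral_const_mul, ← integral_add ((h.intg x).const_mul _)
    ((h.intg y).const_mul _)]
  refine integral_mono (h.intg _) (((h.intg x).const_mul _).add ((h.intg y).const_mul _))
    fun g => ?_
  have h3 := h.add (a • (x + g)) (b • (y + g))
  rw [h.hom _ ha, h.hom _ hb] at h3
  have e : a • (x + g) + b • (y + g) = a • x + b • y + (a + b) • g := by module
  rw [e, hab, one_smul] at h3
  exact h3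

lemma U_nonneg (h : Sub N L) (w : E n) : 0 ≤ U N w := integral_nonneg fun _ => h.nn _

/-- The Gaussian Laplace transform of a weight. -/
def lg (f : E n → ℝ) (w : E n) : ℝ := lap (ga n) (fun x : E n => innerSL ℝ x) f w

lemma lg_eq (f : E n → ℝ) (w : E n) : lg f w = ∫ x, exp ⟪x, w⟫ * f x ∂(ga n) := rfl

lemma U_eq (N : E n → ℝ) (w : E n) : U N w = exp (-(‖w‖ ^ 2 / 2)) * lg N w := by
  unfold U
  rw [lg_eq, ga_int, ga_int, mul_left_comm]
  congr 1
  rw [← integral_const_mul, ← integral_sub_right_eq_self (fun x => gk 1 x * N (w + x)) w]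
  congr 1; ext x
  rw [gk_sub one_pos, add_sub_cancel, inv_one, one_smul]
  unfold gk
  rw [mul_one]
  ring

lemma lg_contDiff {f : E n → ℝ} (hf : ExpB f) (hc : Continuous f) : ContDiff ℝ ∞ (lg f) :=
  lap_contDiff (lapM_of_hasExp ga_hasExp) (hf.lapB hc.aestronglyMeasurable)

lemma U_contDiff (h : Sub N L) : ContDiff ℝ ∞ (U N) := by
  have e : U N = fun w => exp (-(‖w‖ ^ 2 / 2)) * lg N w := funext (U_eq N)
  have := lg_contDiff h.expB h.cont
  have h2 : ContDiff ℝ ∞ fun w : E n => ‖w‖ ^ 2 := contDiff_norm_sq ℝ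
  rw [e]
  fun_prop

lemma lg_line {f : E n → ℝ} (hf : ExpB f) (hc : Continuous f) (w v : E n) (τ : ℝ) :
    HasDerivAt (fun τ : ℝ => lg f (w + τ • v)) (lg (fun x => ⟪v, x⟫ * f x) (w + τ • v)) τ := by
  have hS := lapM_of_hasExp (ga_hasExp (n := n))
  have hB := hf.lapB (W := ga n) hc.aestronglyMeasurable
  have h1 := lap_hasFDerivAt hS hB (w + τ • v)
  have hl : HasDerivAt (fun τ : ℝ => w + τ • v) v τ := by
    simpa using ((hasDerivAt_id τ).smul_const v).const_add w
  refine (h1.comp_hasDerivAt τ hl).congr_deriv ?_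
  have hi := (hB.deriv hS).integrable hS (w + τ • v)
  unfold lap lg lap
  rw [ContinuousLinearMap.integral_apply hi]
  refine integral_congr_ae (Filter.Eventually.of_forall fun x => ?_)
  simp [real_inner_comm]

/-- The scaling identity: the Euler relation for a homogeneous function integrated against a
shifted Gaussian. -/
lemma euler (h : Sub N L) (w : E n) :
    ∫ x, exp ⟪x, w⟫ * (N x * (1 + n + ⟪w, x⟫ - ‖x‖ ^ 2)) ∂(ga n) = 0 := by
  set q : ℝ → E n → ℝ := fun c z => N z * exp (c * ⟪z, w⟫ - c ^ 2 * ‖z‖ ^ 2 / 2) with hq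
  set q' : ℝ → E n → ℝ := fun c z => N z * (exp (c * ⟪z, w⟫ - c ^ 2 * ‖z‖ ^ 2 / 2) *
    (⟪z, w⟫ - c * ‖z‖ ^ 2)) with hq'
  have hc := h.cont
  have hJ : ∀ c : ℝ, 0 < c → ∫ z, q c z = (c ^ (n + 1))⁻¹ * ∫ z, q 1 z := by
    intro c hc0
    have h1 := Measure.integral_comp_smul_of_nonneg (volume : Measure (E n)) (q 1) c (hR := hc0.le)
    have h2 : (fun z => q 1 (c • z)) = fun z => c * q c z := by
      ext z
      simp only [hq]
      rw [h.hom c hc0, inner_smul_left, norm_smul, norm_of_nonneg hc0.le]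
      simp only [conj_trivial]
      ring_nf
    rw [h2, integral_const_mul] at h1
    rw [finrank_euclideanSpace, Fintype.card_fin, smul_eq_mul] at h1
    rw [pow_succ, mul_inv, mul_comm (c ^ n)⁻¹, mul_assoc, ← h1, inv_mul_cancel_left₀ hc0.ne']
  have hqi : ∀ c : ℝ, Integrable (q 1) := fun _ => by
    have := ga_intg_gk ((expB_exp_inner w).mul h.expB) (by fun_prop)
    refine this.congr (Filter.Eventually.of_forall fun z => ?_)
    simp only [hq, gk]
    rw [one_mul, one_pow, one_mul, sub_eq_neg_add ⟪z, w⟫, exp_add, mul_one, real_inner_comm z w]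
    ring
  have hbi : Integrable fun z : E n => gk 4 z * (N z * (exp (2 * ‖w‖ * ‖z‖) *
      (‖z‖ * ‖w‖ + 2 * ‖z‖ ^ 2))) := by
    have hb : ExpB fun z : E n => N z * (exp (2 * ‖w‖ * ‖z‖) * (‖z‖ * ‖w‖ + 2 * ‖z‖ ^ 2)) :=
      h.expB.mul ((expB_exp _).mul ((expB_id.norm.mul (.const _)).add
        ((ExpB.const _).mul (expB_id.norm.pow 2))))
    exact (gw_intg _).1 (hb.integrable (gauss_hasExp (by norm_num))
      (by fun_prop : Continuous _).aestronglyMeasurable)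
  have hd := (hasDerivAt_integral_of_dominated_loc_of_deriv_le (μ := (volume : Measure (E n)))
    (F := q) (F' := q') (x₀ := (1 : ℝ)) (s := Metric.ball 1 (1 / 2)) (bound := fun z => gk 4 z *
      (N z * (exp (2 * ‖w‖ * ‖z‖) * (‖z‖ * ‖w‖ + 2 * ‖z‖ ^ 2))))
    (Metric.ball_mem_nhds _ (by norm_num))
    (Filter.Eventually.of_forall fun c =>
      (by simp only [hq]; fun_prop : Continuous (q c)).aestronglyMeasurable) (hqi 1)
    (by simp only [hq']; fun_prop : Continuous (q' 1)).aestronglyMeasurable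
    (Filter.Eventually.of_forall fun z c hcm => ?_) hbi
    (Filter.Eventually.of_forall fun z c _ => ?_))
  · have hi' := hd.1
    have h1 : HasDerivAt (fun c : ℝ => (c ^ (n + 1))⁻¹ * ∫ z, q 1 z)
        (-((n : ℝ) + 1) * ∫ z, q 1 z) 1 := by
      have := (((hasDerivAt_pow (n + 1) (1 : ℝ)).inv (by simp)).mul_const (∫ z, q 1 z))
      refine this.congr_deriv ?_
      simp
    have h2 := hd.2.unique (h1.congr_of_eventuallyEq (by
      filter_upwards [lt_mem_nhds (one_pos : (0 : ℝ) < 1)] with c hc0 using hJ c hc0))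
    rw [ga_int]
    have e : (fun x => gk 1 x * (exp ⟪x, w⟫ * (N x * (1 + n + ⟪w, x⟫ - ‖x‖ ^ 2)))) =
        fun x => q' 1 x + (n + 1) * q 1 x := by
      ext x
      simp only [hq, hq', gk]
      rw [one_mul, one_pow, one_mul, sub_eq_neg_add ⟪x, w⟫, exp_add, mul_one,
        real_inner_comm w x]
      ring
    rw [e, integral_add hi' ((hqi 1).const_mul _), integral_const_mul, h2]
    ring
  · have hcc : |c - 1| < 1 / 2 := by simpa [dist_eq_norm] using hcm
    rw [abs_lt] at hcc
    have hN := h.nn z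
    have hi : |⟪z, w⟫| ≤ ‖z‖ * ‖w‖ := abs_real_inner_le_norm z w
    have hc2 : c * ⟪z, w⟫ ≤ 2 * ‖w‖ * ‖z‖ := by
      calc c * ⟪z, w⟫ ≤ c * (‖z‖ * ‖w‖) :=
            mul_le_mul_of_nonneg_left ((le_abs_self _).trans hi) (by linarith)
        _ ≤ 2 * (‖z‖ * ‖w‖) := by gcongr; linarith
        _ = _ := by ring
    have hc3 : ‖z‖ ^ 2 / (2 * 4) ≤ c ^ 2 * ‖z‖ ^ 2 / 2 := by
      have : (1 / 4 : ℝ) ≤ c ^ 2 := by nlinarith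
      have := mul_le_mul_of_nonneg_right this (sq_nonneg ‖z‖)
      linarith
    simp only [hq', gk, norm_mul, norm_of_nonneg hN, norm_eq_abs, abs_exp]
    rw [mul_left_comm (exp _) (N z), ← mul_assoc (exp _) (exp _), ← exp_add]
    gcongr
    · linarith
    · refine (abs_sub _ _).trans (add_le_add hi ?_)
      rw [abs_of_nonneg (by have := sq_nonneg ‖z‖; apply mul_nonneg <;> linarith)]
      gcongr; linarith
  · have h1 : HasDerivAt (fun c : ℝ => c * ⟪z, w⟫ - c ^ 2 * ‖z‖ ^ 2 / 2)
        (⟪z, w⟫ - c * ‖z‖ ^ 2) c := by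
      have := ((hasDerivAt_id c).mul_const ⟪z, w⟫).sub
        ((((hasDerivAt_id c).pow 2).mul_const (‖z‖ ^ 2)).div_const 2)
      refine this.congr_deriv ?_
      simp; ring
    exact (h1.exp).const_mul (N z)

lemma expB_sq : ExpB fun x : E n => ‖x‖ ^ 2 := expB_id.norm.pow 2

/-- The first and second directional derivatives of the Gaussian average. -/
lemma U_line (h : Sub N L) (w v : E n) :
    (∀ τ : ℝ, HasDerivAt (fun τ : ℝ => U N (w + τ • v)) (exp (-(‖w + τ • v‖ ^ 2 / 2)) *
      (lg (fun x => ⟪v, x⟫ * N x) (w + τ • v) - ⟪v, w + τ • v⟫ * lg N (w + τ • v))) τ) ∧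
    HasDerivAt (fun τ : ℝ => exp (-(‖w + τ • v‖ ^ 2 / 2)) *
      (lg (fun x => ⟪v, x⟫ * N x) (w + τ • v) - ⟪v, w + τ • v⟫ * lg N (w + τ • v)))
      (exp (-(‖w‖ ^ 2 / 2)) * (lg (fun x => ⟪v, x⟫ * (⟪v, x⟫ * N x)) w -
        2 * ⟪v, w⟫ * lg (fun x => ⟪v, x⟫ * N x) w + (⟪v, w⟫ ^ 2 - ‖v‖ ^ 2) * lg N w)) 0 := by
  have hl : ∀ τ : ℝ, HasDerivAt (fun τ : ℝ => w + τ • v) v τ := fun τ => by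
    simpa using ((hasDerivAt_id τ).smul_const v).const_add w
  have hE : ∀ τ : ℝ, HasDerivAt (fun τ : ℝ => exp (-(‖w + τ • v‖ ^ 2 / 2)))
      (exp (-(‖w + τ • v‖ ^ 2 / 2)) * -⟪v, w + τ • v⟫) τ := fun τ => by
    refine (((hl τ).norm_sq.div_const 2).neg.exp).congr_deriv ?_
    rw [real_inner_comm v]
    simp only [Pi.neg_apply]
    ring
  have hv : Continuous fun x => ⟪v, x⟫ * N x := by have := h.cont; fun_prop
  have h1 := lg_line h.expB h.cont w v
  have h2 := lg_line ((expB_inner v).mul h.expB) hv w v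
  have hi : HasDerivAt (fun τ : ℝ => ⟪v, w + τ • v⟫) (‖v‖ ^ 2) 0 := by
    have := (innerSL ℝ v).hasFDerivAt.comp_hasDerivAt 0 (hl 0)
    refine this.congr_deriv ?_
    simp
  constructor
  · intro τ
    have e : (fun τ : ℝ => U N (w + τ • v)) =
        fun τ : ℝ => exp (-(‖w + τ • v‖ ^ 2 / 2)) * lg N (w + τ • v) :=
      funext fun τ => U_eq N _
    rw [e]
    refine ((hE τ).mul (h1 τ)).congr_deriv ?_
    ring
  · refine ((hE 0).mul ((h2 0).sub (hi.mul (h1 0)))).congr_deriv ?_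
    simp only [zero_smul, add_zero]
    simp only [Pi.sub_apply, Pi.mul_apply, zero_smul, add_zero]
    ring

lemma U_fderiv (h : Sub N L) (w v : E n) : fderiv ℝ (U N) w v = exp (-(‖w‖ ^ 2 / 2)) *
    (lg (fun x => ⟪v, x⟫ * N x) w - ⟪v, w⟫ * lg N w) := by
  have h1 := (U_line h w v).1 0
  have hl : HasDerivAt (fun τ : ℝ => w + τ • v) v 0 := by
    simpa using ((hasDerivAt_id (0 : ℝ)).smul_const v).const_add w
  have hd : HasFDerivAt (U N) (fderiv ℝ (U N) (w + (0 : ℝ) • v)) (w + (0 : ℝ) • v) :=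
    ((U_contDiff h).differentiable (by norm_num) _).hasFDerivAt
  have h2 := hd.comp_hasDerivAt (0 : ℝ) hl
  have h3 := h2.unique h1
  simpa using h3

lemma U_second (h : Sub N L) (w v : E n) : fderiv ℝ (fderiv ℝ (U N)) w v v =
    exp (-(‖w‖ ^ 2 / 2)) * (lg (fun x => ⟪v, x⟫ * (⟪v, x⟫ * N x)) w -
        2 * ⟪v, w⟫ * lg (fun x => ⟪v, x⟫ * N x) w + (⟪v, w⟫ ^ 2 - ‖v‖ ^ 2) * lg N w) :=
  second_line ((U_contDiff h).of_le (by norm_cast)) w v (U_line h w v).1 (U_line h w v).2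

lemma U_second_nonneg (h : Sub N L) (w v : E n) : 0 ≤ fderiv ℝ (fderiv ℝ (U N)) w v v := by
  rw [U_second h]
  obtain ⟨h1, h2⟩ := U_line h w v
  have hc : ConvexOn ℝ Set.univ fun τ : ℝ => U N (w + τ • v) := by
    have := (U_conv h).comp_affineMap (AffineMap.lineMap w (w + v))
    refine (this : ConvexOn ℝ Set.univ _).congr fun τ _ => ?_
    simp [AffineMap.lineMap_apply, add_comm]
  have hm : Monotone fun τ : ℝ => exp (-(‖w + τ • v‖ ^ 2 / 2)) *
      (lg (fun x => ⟪v, x⟫ * N x) (w + τ • v) - ⟪v, w + τ • v⟫ * lg N (w + τ • v)) := by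
    intro x y hxy
    rcases hxy.eq_or_lt with rfl | hxy
    · exact le_rfl
    · exact (hc.le_slope_of_hasDerivAt (Set.mem_univ _) (Set.mem_univ _) hxy (h1 x)).trans
        (hc.slope_le_of_hasDerivAt (Set.mem_univ _) (Set.mem_univ _) hxy (h1 y))
  rw [← h2.deriv]
  exact hm.deriv_nonneg

/-- The Laplacian of the Gaussian average. -/
def lpU (N : E n → ℝ) (w : E n) : ℝ :=
  ∑ k, fderiv ℝ (fderiv ℝ (U N)) w (EuclideanSpace.single k 1) (EuclideanSpace.single k 1)

lemma lg_sum {f : Fin n → E n → ℝ} (hf : ∀ k, ExpB (f k)) (hc : ∀ k, Continuous (f k)) (w : E n) :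
    lg (fun x => ∑ k, f k x) w = ∑ k, lg (f k) w := by
  simp only [lg_eq, Finset.mul_sum]
  exact integral_finsetSum _ fun k _ => ((expB_exp_inner w).mul (hf k)).integrable ga_hasExp
    (by have := hc k; fun_prop : Continuous _).aestronglyMeasurable |>.congr
      (Filter.Eventually.of_forall fun x => by simp [real_inner_comm])

lemma lg_cmul (c : ℝ) (f : E n → ℝ) (w : E n) : lg (fun x => c * f x) w = c * lg f w := by
  simp only [lg_eq, mul_left_comm _ c]
  exact integral_const_mul _ _

lemma lg_intg {f : E n → ℝ} (hf : ExpB f) (hc : Continuous f) (w : E n) :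
    Integrable (fun x => exp ⟪x, w⟫ * f x) (ga n) :=
  (((expB_exp_inner w).mul hf).integrable ga_hasExp
    (by fun_prop : Continuous _).aestronglyMeasurable).congr
      (Filter.Eventually.of_forall fun x => by simp [real_inner_comm])

lemma lpU_eq (h : Sub N L) (w : E n) : lpU N w = U N w - fderiv ℝ (U N) w w := by
  have hc := h.cont
  unfold lpU
  simp only [U_second h]
  have hsq : ∀ x : E n, ∑ k, ⟪EuclideanSpace.single k (1 : ℝ), x⟫ ^ 2 = ‖x‖ ^ 2 := fun x => by
    simp [EuclideanSpace.norm_sq_eq, EuclideanSpace.inner_single_left]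
  have h1 : ∑ k : Fin n, lg (fun x => ⟪EuclideanSpace.single k (1 : ℝ), x⟫ *
      (⟪EuclideanSpace.single k (1 : ℝ), x⟫ * N x)) w = lg (fun x => ‖x‖ ^ 2 * N x) w := by
    rw [← lg_sum (fun k => (expB_inner _).mul ((expB_inner _).mul h.expB)) (fun k => by fun_prop)]
    congr 1; ext x
    rw [← hsq, Finset.sum_mul]
    exact Finset.sum_congr rfl fun k _ => by ring
  have h2 : ∑ k : Fin n, 2 * ⟪EuclideanSpace.single k (1 : ℝ), w⟫ *
      lg (fun x => ⟪EuclideanSpace.single k (1 : ℝ), x⟫ * N x) w =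
      2 * lg (fun x => ⟪w, x⟫ * N x) w := by
    simp only [mul_assoc]
    rw [← Finset.mul_sum]
    congr 1
    simp only [← lg_cmul]
    rw [← lg_sum (fun k => (ExpB.const _).mul ((expB_inner _).mul h.expB)) (fun k => by fun_prop)]
    refine congrArg (fun f => lg f w) (funext fun x => ?_)
    simp only [← mul_assoc]
    rw [← Finset.sum_mul]
    congr 1
    simp [EuclideanSpace.inner_single_left, PiLp.inner_apply, mul_comm]
  have h3 : ∑ k : Fin n, (⟪EuclideanSpace.single k (1 : ℝ), w⟫ ^ 2 -
      ‖(EuclideanSpace.single k (1 : ℝ) : E n)‖ ^ 2) * lg N w = (‖w‖ ^ 2 - n) * lg N w := by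
    rw [← Finset.sum_mul, Finset.sum_sub_distrib, hsq]
    simp
  rw [← Finset.mul_sum, Finset.sum_add_distrib, Finset.sum_sub_distrib, U_fderiv h, U_eq, h1, h2,
    h3]
  have he := euler h w
  have e : (fun x => exp ⟪x, w⟫ * (N x * (1 + n + ⟪w, x⟫ - ‖x‖ ^ 2))) = fun x =>
      ((1 + n) * (exp ⟪x, w⟫ * N x) + exp ⟪x, w⟫ * (⟪w, x⟫ * N x)) -
        exp ⟪x, w⟫ * (‖x‖ ^ 2 * N x) := by ext x; ring
  have i1 := lg_intg h.expB hc w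
  have i2 := lg_intg ((expB_inner w).mul h.expB) (by fun_prop) w
  have i3 := lg_intg (expB_sq.mul h.expB) (by fun_prop) w
  rw [e, integral_sub ((i1.const_mul _).fun_add i2) i3, integral_add (i1.const_mul _) i2,
    integral_const_mul, ← lg_eq, ← lg_eq, ← lg_eq] at he
  rw [real_inner_self_eq_norm_sq]
  linear_combination (-exp (-(‖w‖ ^ 2 / 2))) * he

/-- Convexity of the average bounds its Laplacian by the value at the origin. -/
lemma lpU_le (h : Sub N L) (w : E n) : lpU N w ≤ U N 0 := by
  rw [lpU_eq h]
  have hl : HasDerivAt (fun τ : ℝ => w + τ • (-w)) (-w) 0 := by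
    simpa using ((hasDerivAt_id (0 : ℝ)).smul_const (-w)).const_add w
  have hd : HasFDerivAt (U N) (fderiv ℝ (U N) w) (w + (0 : ℝ) • (-w)) := by
    rw [zero_smul, add_zero]
    exact ((U_contDiff h).differentiable (by norm_num) _).hasFDerivAt
  have h2 := hd.comp_hasDerivAt (0 : ℝ) hl
  have hc : ConvexOn ℝ Set.univ fun τ : ℝ => U N (w + τ • (-w)) := by
    have := (U_conv h).comp_affineMap (AffineMap.lineMap w (w + -w))
    refine (this : ConvexOn ℝ Set.univ _).congr fun τ _ => ?_
    simp [AffineMap.lineMap_apply, add_comm]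
  have h3 := hc.le_slope_of_hasDerivAt (Set.mem_univ _) (Set.mem_univ _) one_pos h2
  simp [slope_def_field] at h3
  linarith

lemma lpU_nonneg (h : Sub N L) (w : E n) : 0 ≤ lpU N w :=
  Finset.sum_nonneg fun _ _ => U_second_nonneg h _ _

end

end PC

namespace PC
open scoped ContDiff


/-! ### Gauges along the localization process -/

section
variable {n : ℕ} {N : E n → ℝ} {L a b : ℝ} {ρ ρ' : ℝ → ℝ}

/-- The average of `N` over a Gaussian of standard deviation `ρ t` centered at the point. -/
def Fr (N : E n → ℝ) (ρ : ℝ → ℝ) (z : ℝ × E n) : ℝ := ρ z.1 * U N ((ρ z.1)⁻¹ • z.2)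

lemma Fr_C12 (h : Sub N L) (h0 : ∀ t ∈ Set.Ioo a b, 0 < ρ t)
    (hd : ∀ t ∈ Set.Ioo a b, HasDerivAt ρ (ρ' t) t) (hc : ContinuousOn ρ' (Set.Ioo a b)) :
    C12 (Fr N ρ) (fun z => ρ' z.1 * lpU N ((ρ z.1)⁻¹ • z.2))
      (fun z => fderiv ℝ (U N) ((ρ z.1)⁻¹ • z.2))
      (fun z => (ρ z.1)⁻¹ • fderiv ℝ (fderiv ℝ (U N)) ((ρ z.1)⁻¹ • z.2)) a b := by
  have hU : ContDiff ℝ 2 (U N) := (U_contDiff h).of_le (by norm_cast)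
  have hU' : ContDiff ℝ 1 (fderiv ℝ (U N)) := hU.fderiv_right (by norm_num)
  have hU'' : ContDiff ℝ 0 (fderiv ℝ (fderiv ℝ (U N))) := hU'.fderiv_right (by norm_num)
  have hcρ : ContinuousOn (fun z : ℝ × E n => ρ z.1) (Set.Ioo a b ×ˢ Set.univ) := fun z hz =>
    ((hd z.1 hz.1).continuousAt.comp continuous_fst.continuousAt).continuousWithinAt
  have hci : ContinuousOn (fun z : ℝ × E n => (ρ z.1)⁻¹) (Set.Ioo a b ×ˢ Set.univ) :=
    hcρ.inv₀ fun z hz => (h0 z.1 hz.1).ne'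
  have hcw : ContinuousOn (fun z : ℝ × E n => (ρ z.1)⁻¹ • z.2) (Set.Ioo a b ×ˢ Set.univ) :=
    hci.smul continuousOn_snd
  have hlp : Continuous (lpU N) := by
    unfold lpU
    have := hU''.continuous
    fun_prop
  refine ⟨fun z hz => ?_, ?_, hU'.continuous.comp_continuousOn hcw,
    hci.smul (hU''.continuous.comp_continuousOn hcw), fun t ht y => ?_⟩
  · have hp := h0 z.1 hz
    have h1 : HasFDerivAt (fun z : ℝ × E n => ρ z.1) (ρ' z.1 • ContinuousLinearMap.fst ℝ ℝ (E n)) z :=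
      (hd z.1 hz).comp_hasFDerivAt z hasFDerivAt_fst
    have h2 : HasFDerivAt (fun z : ℝ × E n => (ρ z.1)⁻¹)
        ((-ρ' z.1 / ρ z.1 ^ 2) • ContinuousLinearMap.fst ℝ ℝ (E n)) z :=
      ((hd z.1 hz).fun_inv hp.ne').comp_hasFDerivAt z hasFDerivAt_fst
    have h3 := h2.fun_smul (hasFDerivAt_snd (𝕜 := ℝ) (E := ℝ) (F := E n) (p := z))
    have h4 := ((hU.differentiable (by norm_num) ((ρ z.1)⁻¹ • z.2)).hasFDerivAt).comp z h3
    refine (h1.mul h4).congr_fderiv ?_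
    refine ContinuousLinearMap.ext fun y => ?_
    rw [lpU_eq h]
    simp only [_root_.add_apply, _root_.smul_apply,
      ContinuousLinearMap.comp_apply, ContinuousLinearMap.smulRight_apply,
      ContinuousLinearMap.coe_fst', ContinuousLinearMap.coe_snd', map_add, map_smul, smul_eq_mul,
      Function.comp]
    field_simp
    ring
  · exact (hc.comp continuousOn_fst fun z hz => hz.1).mul (hlp.comp_continuousOn hcw)
  · have h1 : HasFDerivAt (fun y : E n => (ρ t)⁻¹ • y) ((ρ t)⁻¹ • ContinuousLinearMap.id ℝ (E n)) y :=
      ((ρ t)⁻¹ • ContinuousLinearMap.id ℝ (E n)).hasFDerivAt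
    have h4 := ((hU'.differentiable (by norm_num) ((ρ t)⁻¹ • y)).hasFDerivAt).comp y h1
    refine h4.congr_fderiv ?_
    refine ContinuousLinearMap.ext fun v => ?_
    simp

lemma Fr_cont (h : Sub N L) {S : Set ℝ} (h0 : ∀ t ∈ S, 0 < ρ t) (hc : ContinuousOn ρ S) :
    ContinuousOn (Fr N ρ) (S ×ˢ Set.univ) := by
  have hcρ : ContinuousOn (fun z : ℝ × E n => ρ z.1) (S ×ˢ Set.univ) :=
    hc.comp continuousOn_fst fun z hz => hz.1
  exact hcρ.mul ((U_contDiff h).continuous.comp_continuousOn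
    ((hcρ.inv₀ fun z hz => (h0 z.1 hz.1).ne').smul continuousOn_snd))

variable {μ : Measure (E n)} {R : ℝ} [IsProbabilityMeasure μ]

/-- Integration of a pointwise drift bound along the localization process; `σ = ± 1` gives upper
and lower bounds. -/
lemma EE_growth (hR : ∀ᵐ x ∂μ, ‖x‖ ≤ R) (h : Sub N L) (ha : 0 ≤ a) (hab : a ≤ b)
    (h0 : ∀ t ∈ Set.Icc 0 b, 0 < ρ t) (hcρ : ContinuousOn ρ (Set.Icc 0 b))
    (hd : ∀ t ∈ Set.Ioo a b, HasDerivAt ρ (ρ' t) t) (hc : ContinuousOn ρ' (Set.Ioo a b))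
    (σ ε : ℝ) (Φ : ℝ → E n → ℝ) (hΦ : ∀ x ∈ Set.Ioo a b, Bm (Φ x)) (hΦ0 : ∀ x ∈ Set.Ioo a b,
    ∀ θ, 0 ≤ Φ x θ) (hε : ∀ x ∈ Set.Ioo a b, EE μ x (Φ x) ≤ ε)
    (hle : ∀ x ∈ Set.Ioo a b, ∀ θ w, σ * (ρ' x * lpU N w + 1 / 2 * ((ρ x)⁻¹ *
      ∑ k, fderiv ℝ (fderiv ℝ (U N)) w (cm μ x θ (EuclideanSpace.single k 1))
        (cm μ x θ (EuclideanSpace.single k 1)))) ≤ Φ x θ) :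
    σ * EE μ b (fun θ => Fr N ρ (b, mn μ (fun x => x) (b, θ))) ≤
      σ * EE μ a (fun θ => Fr N ρ (a, mn μ (fun x => x) (a, θ))) + ε * (b - a) := by
  have hs : Bd μ (fun x : E n => x) := Bd.of_cont hR continuous_id
  have hsub : ∀ t ∈ Set.Ioo a b, t ∈ Set.Icc 0 b := fun t ht => ⟨ha.trans ht.1.le, ht.2.le⟩
  have hC := Fr_C12 h (fun t ht => h0 t (hsub t ht)) hd hc
  have hcont := (EE_cont hR hs (Fr_cont h h0 hcρ)).mono (Set.Icc_subset_Icc_left ha)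
  set f := fun t => EE μ t fun θ => Fr N ρ (t, mn μ (fun x => x) (t, θ)) with hf
  have hder : ∀ x ∈ Set.Ioo a b, ∃ f', HasDerivAt f f' x ∧ σ * f' ≤ ε := by
    intro x hx
    refine ⟨_, ito hR hs hC ha hx, ?_⟩
    rw [← EE_cmul]
    refine (EE_le hR (ha.trans hx.1.le) (hΦ x hx) (hΦ0 x hx) fun θ => ?_).trans (hε x hx)
    refine le_trans (le_of_eq ?_) (hle x hx θ ((ρ x)⁻¹ • mn μ (fun x => x) (x, θ)))
    simp only [cm_dk hR (ha.trans_lt hx.1), _root_.smul_apply, smul_eq_mul,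
      Finset.mul_sum]
  have hanti : AntitoneOn (fun x => σ * f x - ε * x) (Set.Icc a b) := by
    have hD : ∀ x ∈ Set.Ioo a b, ∃ g', HasDerivAt (fun x => σ * f x - ε * x) g' x ∧ g' ≤ 0 := by
      intro x hx
      obtain ⟨f', h1, h2⟩ := hder x hx
      exact ⟨_, (h1.const_mul σ).sub ((hasDerivAt_id x).const_mul ε), by linarith⟩
    refine antitoneOn_of_deriv_nonpos (convex_Icc a b)
      ((continuousOn_const.mul hcont).sub (by fun_prop)) ?_ ?_
    · intro x hx
      rw [interior_Icc] at hx
      obtain ⟨g', h1, -⟩ := hD x hx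
      exact h1.differentiableAt.differentiableWithinAt
    · intro x hx
      rw [interior_Icc] at hx
      obtain ⟨g', h1, h2⟩ := hD x hx
      rw [h1.deriv]; exact h2
  have := hanti ⟨le_rfl, hab⟩ ⟨hab, le_rfl⟩ hab
  simp only at this
  linarith

/-- The trace of a bilinear form does not depend on the orthonormal basis. -/
lemma bil_trace (v : OrthonormalBasis (Fin n) ℝ (E n)) (B : E n →L[ℝ] E n →L[ℝ] ℝ) :
    ∑ k, B (EuclideanSpace.single k 1) (EuclideanSpace.single k 1) = ∑ i, B (v i) (v i) := by
  set B' : E n →L[ℝ] E n := ∑ k, (B.flip (EuclideanSpace.single k 1)).smulRight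
    (EuclideanSpace.single k 1) with hB'
  have hB : ∀ x y, ⟪B' x, y⟫ = B x y := fun x y => by
    conv_rhs => rw [← (EuclideanSpace.basisFun (Fin n) ℝ).sum_repr y, map_sum]
    rw [hB', _root_.sum_apply, sum_inner]
    refine Finset.sum_congr rfl fun k _ => ?_
    simp [inner_smul_left, EuclideanSpace.inner_single_left, mul_comm]
  have h1 := (trc_basis (EuclideanSpace.basisFun (Fin n) ℝ) B').symm.trans (trc_basis v B')
  have hB2 : ∀ x y, ⟪y, B' x⟫ = B x y := fun x y => by rw [real_inner_comm, hB]
  simp only [hB2, EuclideanSpace.basisFun_apply] at h1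
  exact h1

/-- For `A` symmetric and `B` positive semidefinite, the trace of `A B A` lies between multiples of
the trace of `B`, by diagonalizing `A`. -/
lemma bil_bound {B : E n →L[ℝ] E n →L[ℝ] ℝ} (hB : ∀ v, 0 ≤ B v v) {A : E n →L[ℝ] E n}
    (hA : ∀ x y, ⟪A x, y⟫ = ⟪x, A y⟫) {c C : ℝ}
    (h : ∀ v, ‖v‖ = 1 → c ≤ ⟪A v, v⟫ ^ 2 ∧ ⟪A v, v⟫ ^ 2 ≤ C) :
    c * ∑ k, B (EuclideanSpace.single k 1) (EuclideanSpace.single k 1) ≤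
      ∑ k, B (A (EuclideanSpace.single k 1)) (A (EuclideanSpace.single k 1)) ∧
    ∑ k, B (A (EuclideanSpace.single k 1)) (A (EuclideanSpace.single k 1)) ≤
      C * ∑ k, B (EuclideanSpace.single k 1) (EuclideanSpace.single k 1) := by
  obtain ⟨v, lam, hD⟩ := exists_dg hA
  have h1 := bil_trace v (B.bilinearComp A A)
  simp only [ContinuousLinearMap.bilinearComp_apply] at h1
  rw [h1, bil_trace v B, Finset.mul_sum, Finset.mul_sum]
  have hl : ∀ i, ⟪A (v i), v i⟫ = lam i := fun i => by
    rw [hD i, inner_smul_left]; simp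
  have e : ∀ i, B (A (v i)) (A (v i)) = lam i ^ 2 * B (v i) (v i) := fun i => by
    rw [hD i]; simp; ring
  constructor
  · refine Finset.sum_le_sum fun i _ => ?_
    rw [e]
    have := (h (v i) (by simp)).1
    rw [hl] at this
    exact mul_le_mul_of_nonneg_right this (hB _)
  · refine Finset.sum_le_sum fun i _ => ?_
    rw [e]
    have := (h (v i) (by simp)).2
    rw [hl] at this
    exact mul_le_mul_of_nonneg_right this (hB _)

variable {t : ℝ}

lemma cm_near {μ : Measure (E n)} {θ v : E n} (h : ‖cm μ t θ - 1‖ ≤ 1 / 2) (hv : ‖v‖ = 1) :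
    1 / 4 ≤ ⟪cm μ t θ v, v⟫ ^ 2 ∧ ⟪cm μ t θ v, v⟫ ^ 2 ≤ 9 / 4 := by
  have h1 : |⟪(cm μ t θ - 1) v, v⟫| ≤ 1 / 2 := by
    refine (abs_real_inner_le_norm _ _).trans ?_
    rw [hv, mul_one]
    have := (cm μ t θ - 1).le_opNorm v
    rw [hv, mul_one] at this
    exact this.trans h
  have h2 : ⟪(cm μ t θ - 1) v, v⟫ = ⟪cm μ t θ v, v⟫ - 1 := by
    simp only [_root_.sub_apply, inner_sub_left, one_apply_eq_self]
    rw [real_inner_self_eq_norm_sq, hv]; norm_num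
  rw [h2, abs_le] at h1
  constructor <;> nlinarith

lemma cm_nonneg (hR : ∀ᵐ x ∂μ, ‖x‖ ≤ R) (ht : 0 < t) (θ v : E n) : 0 ≤ ⟪cm μ t θ v, v⟫ := by
  have := tt_prob hR ht θ
  rw [cm_inner hR ht, cv_self (tt_hasExp hR ht θ) (Ok.inner v)]
  exact ProbabilityTheory.variance_nonneg _ _

lemma cm_le_sq (hR : ∀ᵐ x ∂μ, ‖x‖ ≤ R) (ht : 0 < t) (θ v : E n) (hv : ‖v‖ = 1) :
    ⟪cm μ t θ v, v⟫ ≤ R ^ 2 := by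
  have := tt_prob hR ht θ
  rw [cm_inner hR ht]
  unfold cv
  have h1 : ∫ x, ⟪v, x⟫ * ⟪v, x⟫ ∂(tt μ t θ) ≤ ∫ _, R ^ 2 ∂(tt μ t θ) := by
    refine integral_mono_ae ((Ok.inner v).mul (Ok.inner v)|>.int (tt_hasExp hR ht θ))
      (integrable_const _) ?_
    filter_upwards [tt_ae hR θ] with x hx
    have h2 : |⟪v, x⟫| ≤ R := (abs_real_inner_le_norm v x).trans (by rw [hv, one_mul]; exact hx)
    rw [← sq]
    exact sq_le_sq' (by linarith [(abs_le.1 h2).1]) (abs_le.1 h2).2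
  rw [integral_const, probReal_univ, one_smul] at h1
  have := mul_self_nonneg (∫ x, ⟪v, x⟫ ∂(tt μ t θ))
  linarith

lemma cm_le_inv (hR : ∀ᵐ x ∂μ, ‖x‖ ≤ R) (hl : SLC 0 μ) (ht : 0 < t) (θ v : E n) :
    ⟪cm μ t θ v, v⟫ ≤ 1 / t * ‖v‖ ^ 2 := by
  have := tt_prob hR ht θ
  rw [cm_inner hR ht]
  exact (PI_slc (tt_hasExp hR ht θ) ht (tt_slc hR hl ht θ)).lin v

end

end PC

namespace PC
open scoped ContDiff


/-! ### Comparison of the means of a gauge -/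

section
variable {n : ℕ} {N : E n → ℝ} {L t : ℝ} {ρ : ℝ → ℝ} {μ : Measure (E n)} {R : ℝ}
  [IsProbabilityMeasure μ]

lemma Fr_le (h : Sub N L) (h0 : 0 < ρ t) (y : E n) : Fr N ρ (t, y) ≤ N y + ρ t * U N 0 := by
  unfold Fr
  have h1 := mul_le_mul_of_nonneg_left (U_le h ((ρ t)⁻¹ • y)) h0.le
  rw [h.hom _ (inv_pos.2 h0), mul_add, mul_inv_cancel_left₀ h0.ne'] at h1
  exact h1

lemma Fr_ge (h : Sub N L) (h0 : 0 < ρ t) (y : E n) : N y ≤ Fr N ρ (t, y) := by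
  unfold Fr
  have h1 := mul_le_mul_of_nonneg_left (U_ge h ((ρ t)⁻¹ • y)) h0.le
  rw [h.hom _ (inv_pos.2 h0), mul_inv_cancel_left₀ h0.ne'] at h1
  exact h1

lemma Sub.convexOn (h : Sub N L) : ConvexOn ℝ Set.univ N := by
  refine ⟨convex_univ, fun x _ y _ a b ha hb hab => ?_⟩
  rcases ha.eq_or_lt with rfl | ha
  · have : b = 1 := by linarith
    simp [this]
  rcases hb.eq_or_lt with rfl | hb
  · have : a = 1 := by linarith
    simp [this]
  refine (h.add _ _).trans ?_
  rw [h.hom _ ha, h.hom _ hb, smul_eq_mul, smul_eq_mul]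

lemma N_mn (hR : ∀ᵐ x ∂μ, ‖x‖ ≤ R) (h : Sub N L) (ht : 0 < t) (θ : E n) :
    N (mn μ (fun x => x) (t, θ)) ≤ mn μ N (t, θ) := by
  have := tt_prob hR ht θ
  have hE := tt_hasExp hR ht θ
  rw [mn_tt _ ht, mn_tt _ ht]
  exact h.convexOn.map_integral_le h.cont.continuousOn isClosed_univ (by simp)
    (expB_id.integrable hE (by fun_prop)) (h.expB.integrable hE h.cont.aestronglyMeasurable)

/-- The total variance of a tilt at time `t` is at most `n / t`. -/
lemma tt_var (hR : ∀ᵐ x ∂μ, ‖x‖ ≤ R) (hl : SLC 0 μ) (ht : 0 < t) (θ : E n) :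
    ∫ x, ‖x - mn μ (fun x => x) (t, θ)‖ ^ 2 ∂(tt μ t θ) ≤ n * (1 / t) := by
  have := tt_prob hR ht θ
  have hE := tt_hasExp hR ht θ
  have hid : Integrable (fun x : E n => x) (tt μ t θ) := expB_id.integrable hE (by fun_prop)
  rw [mn_tt _ ht]
  set a := ∫ x, x ∂(tt μ t θ) with ha
  have hk : ∀ k : Fin n, ∫ x, (x k - a k) ^ 2 ∂(tt μ t θ) ≤ 1 / t := fun k => by
    have h1 := cm_le_inv hR hl ht θ (EuclideanSpace.single k 1)
    rw [cm_inner hR ht, cv_self hE (Ok.inner _), ProbabilityTheory.variance_eq_integral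
      (by fun_prop), integral_inner hid, ← ha] at h1
    simpa [EuclideanSpace.inner_single_left] using h1
  have hi : ∀ k : Fin n, Integrable (fun x : E n => (x k - a k) ^ 2) (tt μ t θ) := fun k => by
    refine ExpB.integrable (((ExpB.of_le expB_id.norm fun x => ?_).sub
      (ExpB.const (a k))).pow 2) hE (by fun_prop)
    exact PiLp.norm_apply_le x k
  simp only [EuclideanSpace.real_norm_sq_eq, PiLp.sub_apply]
  rw [integral_finsetSum _ fun k _ => hi k]
  refine (Finset.sum_le_sum fun k _ => hk k).trans ?_
  simp

lemma mn_N_le (hR : ∀ᵐ x ∂μ, ‖x‖ ≤ R) (hl : SLC 0 μ) (h : Sub N L) (ht : 0 < t) (θ : E n) :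
    mn μ N (t, θ) ≤ N (mn μ (fun x => x) (t, θ)) + 1 / 2 * (1 + L ^ 2 * (n * (1 / t))) := by
  have := tt_prob hR ht θ
  have hE := tt_hasExp hR ht θ
  have h1 := tt_var hR hl ht θ
  set a := mn μ (fun x => x) (t, θ) with ha
  have hi : Integrable (fun x : E n => ‖x - a‖ ^ 2) (tt μ t θ) :=
    ExpB.integrable ((expB_id.sub (ExpB.const a)).norm.pow 2) hE (by fun_prop)
  have hb : ∀ x, N x ≤ N a + 1 / 2 * (1 + L ^ 2 * ‖x - a‖ ^ 2) := fun x => by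
    have h2 := h.add a (x - a)
    rw [add_sub_cancel] at h2
    have h3 := h.le (x - a)
    nlinarith [sq_nonneg (L * ‖x - a‖ - 1)]
  rw [mn_tt N ht]
  refine (integral_mono (h.expB.integrable hE h.cont.aestronglyMeasurable)
    ((integrable_const _).fun_add
      (((integrable_const _).fun_add (hi.const_mul _)).const_mul _)) hb).trans ?_
  rw [integral_add (integrable_const _) (((integrable_const _).fun_add (hi.const_mul _)).const_mul _),
    integral_const_mul, integral_add (integrable_const _) (hi.const_mul _), integral_const_mul]
  simp only [integral_const, probReal_univ, one_smul]
  gcongr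

lemma Fr_bm (hR : ∀ᵐ x ∂μ, ‖x‖ ≤ R) (h : Sub N L) (t : ℝ) :
    Bm fun θ => Fr N ρ (t, mn μ (fun x => x) (t, θ)) := by
  refine Bm.of_mn hR (Bd.of_cont hR continuous_id) (Φ := fun y => Fr N ρ (t, y)) ?_ t
  have := (U_contDiff h).continuous
  change Continuous fun y => ρ t * U N ((ρ t)⁻¹ • y)
  fun_prop

lemma Fr_start (hm : ∫ x, x ∂μ = 0) :
    EE μ 0 (fun θ => Fr N ρ (0, mn μ (fun x => x) (0, θ))) = ρ 0 * U N 0 := by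
  rw [EE_zero, mn_zero, hm]
  simp [Fr]

lemma sqrt_deriv {r : ℝ → ℝ} {r' x : ℝ} (h : HasDerivAt r r' x) (h0 : 0 < r x) :
    HasDerivAt (fun t => √(r t)) (r' / (2 * √(r x))) x := h.sqrt h0.ne'

/-- The Gaussian mean of a gauge which is at most `1` on the support of a centered measure, in
terms of a time up to which the covariance stays close to the identity. -/
lemma gauss_mean_le (hR : ∀ᵐ x ∂μ, ‖x‖ ≤ R) (hn : 0 < n) (hm : ∫ x, x ∂μ = 0) {p : ℕ}
    (hp : Even p) (h : Sub N L) (h1 : ∀ᵐ x ∂μ, N x ≤ 1) {τ : ℝ} (hτ : 0 < τ)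
    (hP : ∀ x ∈ Set.Ioo 0 (τ ^ 2), EE μ x (chi p μ x) ≤ 1 / 10) : U N 0 ≤ 4 / τ := by
  set m := U N 0 with hmd
  have hm0 : 0 ≤ m := U_nonneg h 0
  have hτ2 : 0 < τ ^ 2 := by positivity
  set r : ℝ → ℝ := fun t => 5 * τ ^ 2 / 16 - t / 4 with hr
  have hrpos : ∀ t, t ≤ τ ^ 2 → (τ / 4) ^ 2 ≤ r t := fun t ht => by simp only [hr]; linarith
  have hrp : ∀ t, t ≤ τ ^ 2 → 0 < r t := fun t ht =>
    lt_of_lt_of_le (by positivity) (hrpos t ht)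
  have hρlow : ∀ t, t ≤ τ ^ 2 → τ / 4 ≤ √(r t) := fun t ht => Real.le_sqrt_of_sq_le (hrpos t ht)
  have hrd : ∀ t, HasDerivAt r (-(1 / 4)) t := fun t => by
    refine (((hasDerivAt_id t).div_const 4).const_sub (5 * τ ^ 2 / 16)).congr_deriv (by ring)
  have hrc : Continuous r := by simp only [hr]; fun_prop
  have key := EE_growth (ρ := fun t => √(r t)) (ρ' := fun t => -(1 / 4) / (2 * √(r t)))
    (a := 0) (b := τ ^ 2) hR h le_rfl hτ2.le (fun t ht => Real.sqrt_pos.2 (hrp t ht.2))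
    (by fun_prop) (fun t ht => sqrt_deriv (hrd t) (hrp t ht.2.le))
    (ContinuousOn.div (by fun_prop) (by fun_prop) fun t ht => by
      have := Real.sqrt_pos.2 (hrp t ht.2.le); positivity)
    (-1) (m / (2 * τ) * (1 / 10)) (fun x θ => m / (2 * τ) * chi p μ x θ)
    (fun x hx => (Bm.const _).mul (chi_bm hR p))
    (fun x hx θ => mul_nonneg (by positivity) (chi_nonneg hR hx.1 hn θ p hp))
    (fun x hx => by
      rw [EE_cmul]
      exact mul_le_mul_of_nonneg_left (hP x hx) (by positivity))
    (fun x hx θ w => by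
      have hs := hρlow x hx.2.le
      have hs0 : 0 < √(r x) := lt_of_lt_of_le (by positivity) hs
      have hl0 := lpU_nonneg h w
      have hl1 : lpU N w ≤ m := lpU_le h w
      have hchi := chi_nonneg hR hx.1 hn θ p hp
      have hS0 : 0 ≤ ∑ k, fderiv ℝ (fderiv ℝ (U N)) w (cm μ x θ (EuclideanSpace.single k 1))
        (cm μ x θ (EuclideanSpace.single k 1)) := Finset.sum_nonneg fun k _ =>
          U_second_nonneg h _ _
      have e : ∀ S : ℝ, -1 * (-(1 / 4) / (2 * √(r x)) * lpU N w + 1 / 2 * ((√(r x))⁻¹ * S)) =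
          (1 / 4 * lpU N w - S) / (2 * √(r x)) := fun S => by field_simp; ring
      rw [e]
      rcases le_or_gt ‖cm μ x θ - 1‖ (1 / 2) with hg | hg
      · have hb := (bil_bound (fun v => U_second_nonneg h w v) (cm_symm hR hx.1 θ)
          fun v hv => cm_near hg hv).1
        change 1 / 4 * lpU N w ≤ _ at hb
        refine (div_nonpos_of_nonpos_of_nonneg (by linarith) (by positivity)).trans ?_
        positivity
      · have hc1 := chi_ge hR hx.1 hn θ p hp hg
        calc _ ≤ (1 / 4 * m) / (2 * (τ / 4)) := by gcongr; linarith
          _ = m / (2 * τ) * 1 := by field_simp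
          _ ≤ _ := by gcongr)
  rw [Fr_start hm] at key
  have hend : EE μ (τ ^ 2) (fun θ => Fr N (fun t => √(r t)) (τ ^ 2, mn μ (fun x => x) (τ ^ 2, θ)))
      ≤ 1 + τ / 4 * m := by
    rw [← EE_const (μ := μ) hR hτ2.le (1 + τ / 4 * m)]
    refine EE_mono hR hτ2.le (Fr_bm hR h _) (Bm.const _) fun θ => ?_
    refine (Fr_le h (Real.sqrt_pos.2 (hrp _ le_rfl)) _).trans ?_
    have e1 : √(r (τ ^ 2)) = τ / 4 := by
      rw [Real.sqrt_eq_iff_mul_self_eq (hrp _ le_rfl).le (by positivity)]; simp only [hr]; ring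
    rw [e1]
    have h2 := N_mn hR h hτ2 θ
    have h3 : ‖mn μ N (τ ^ 2, θ)‖ ≤ 1 := mn_bound hR (by
      filter_upwards [h1] with x hx
      rw [norm_of_nonneg (h.nn x)]; exact hx) _
    have h4 := (le_abs_self _).trans h3
    linarith
  have hst : 11 / 20 * τ ≤ √(r 0) := by
    refine Real.le_sqrt_of_sq_le ?_
    simp only [hr]; nlinarith
  have hst2 := mul_le_mul_of_nonneg_right hst hm0
  rw [le_div_iff₀ hτ]
  have e2 : m / (2 * τ) * (1 / 10) * (τ ^ 2 - 0) = 1 / 20 * τ * m := by field_simp; ring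
  rw [e2] at key
  nlinarith

/-- The mean of a gauge under a centered log-concave measure, in terms of its Gaussian mean and of a
time up to which the covariance stays close to the identity. -/
lemma mean_le (hR : ∀ᵐ x ∂μ, ‖x‖ ≤ R) (hl : SLC 0 μ) (hn : 0 < n) (hm : ∫ x, x ∂μ = 0) {p : ℕ}
    (hp : Even p) (h : Sub N L) {τ : ℝ} (hτ : 0 < τ) (hτ1 : τ ≤ 1)
    (hP : ∀ x ∈ Set.Ioo 0 (τ ^ 2), EE μ x (chi p μ x) * R ^ 4 ≤ 1) :
    ∫ x, N x ∂μ ≤ 3 / τ * U N 0 + 1 := by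
  set m := U N 0 with hmd
  have hm0 : 0 ≤ m := U_nonneg h 0
  have hτ2 : 0 < τ ^ 2 := by positivity
  have hτ21 : τ ^ 2 ≤ 1 := by nlinarith
  set r : ℝ → ℝ := fun t => 1 / τ ^ 2 + 9 / 4 * (τ ^ 2 - t) with hr
  have hrpos : ∀ t, t ≤ τ ^ 2 → (1 / τ) ^ 2 ≤ r t := fun t ht => by
    simp only [hr]; rw [div_pow, one_pow]; linarith
  have hrp : ∀ t, t ≤ τ ^ 2 → 0 < r t := fun t ht =>
    lt_of_lt_of_le (by positivity) (hrpos t ht)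
  have hρlow : ∀ t, t ≤ τ ^ 2 → 1 / τ ≤ √(r t) := fun t ht => Real.le_sqrt_of_sq_le (hrpos t ht)
  have hrd : ∀ t, HasDerivAt r (-(9 / 4)) t := fun t => by
    refine ((((hasDerivAt_id t).const_sub (τ ^ 2)).const_mul (9 / 4)).const_add
      (1 / τ ^ 2)).congr_deriv (by ring)
  have hrc : Continuous r := by simp only [hr]; fun_prop
  -- first phase: the covariance is at most `3 / 2`
  have key1 := EE_growth (ρ := fun t => √(r t)) (ρ' := fun t => -(9 / 4) / (2 * √(r t)))
    (a := 0) (b := τ ^ 2) hR h le_rfl hτ2.le (fun t ht => Real.sqrt_pos.2 (hrp t ht.2))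
    (by fun_prop) (fun t ht => sqrt_deriv (hrd t) (hrp t ht.2.le))
    (ContinuousOn.div (by fun_prop) (by fun_prop) fun t ht => by
      have := Real.sqrt_pos.2 (hrp t ht.2.le); positivity)
    1 (τ / 2 * m) (fun x θ => τ / 2 * m * R ^ 4 * chi p μ x θ)
    (fun x hx => (Bm.const _).mul (chi_bm hR p))
    (fun x hx θ => mul_nonneg (by positivity) (chi_nonneg hR hx.1 hn θ p hp))
    (fun x hx => by
      rw [EE_cmul]
      calc _ = τ / 2 * m * (EE μ x (chi p μ x) * R ^ 4) := by ring
        _ ≤ τ / 2 * m * 1 := by gcongr; exact hP x hx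
        _ = _ := mul_one _)
    (fun x hx θ w => by
      have hs := hρlow x hx.2.le
      have hs0 : 0 < √(r x) := lt_of_lt_of_le (by positivity) hs
      have hl0 := lpU_nonneg h w
      have hl1 : lpU N w ≤ m := lpU_le h w
      have hchi := chi_nonneg hR hx.1 hn θ p hp
      have e : ∀ S : ℝ, 1 * (-(9 / 4) / (2 * √(r x)) * lpU N w + 1 / 2 * ((√(r x))⁻¹ * S)) =
          (S - 9 / 4 * lpU N w) / (2 * √(r x)) := fun S => by field_simp; ring
      rw [e]
      rcases le_or_gt ‖cm μ x θ - 1‖ (1 / 2) with hg | hg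
      · have hb := (bil_bound (fun v => U_second_nonneg h w v) (cm_symm hR hx.1 θ)
          fun v hv => cm_near hg hv).2
        change _ ≤ 9 / 4 * lpU N w at hb
        refine (div_nonpos_of_nonpos_of_nonneg (by linarith) (by positivity)).trans ?_
        positivity
      · have hc1 := chi_ge hR hx.1 hn θ p hp hg
        have hb := (bil_bound (c := 0) (C := (R ^ 2) ^ 2) (fun v => U_second_nonneg h w v)
          (cm_symm hR hx.1 θ) fun v hv => ⟨sq_nonneg _,
            pow_le_pow_left₀ (cm_nonneg hR hx.1 θ v) (cm_le_sq hR hx.1 θ v hv) 2⟩).2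
        change _ ≤ (R ^ 2) ^ 2 * lpU N w at hb
        have hb2 := hb.trans (mul_le_mul_of_nonneg_left hl1 (by positivity))
        calc _ ≤ ((R ^ 2) ^ 2 * m) / (2 * (1 / τ)) := by gcongr; linarith
          _ = τ / 2 * m * R ^ 4 * 1 := by field_simp
          _ ≤ _ := by gcongr)
  rw [Fr_start hm] at key1
  -- second phase: the covariance is at most `1 / t`
  set T := L ^ 2 * n + 1 with hT
  have hT1 : 1 ≤ T := by rw [hT]; have : 0 ≤ L ^ 2 * n := by positivity
                         linarith
  have hT0 : 0 < T := by linarith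
  have hmx : ∀ t : ℝ, 0 < max t (τ ^ 2) := fun t => lt_max_of_lt_right hτ2
  have key2 := EE_growth (ρ := fun t => √(1 / max t (τ ^ 2)))
    (ρ' := fun t => -1 / t ^ 2 / (2 * √(1 / t)))
    (a := τ ^ 2) (b := T) hR h hτ2.le (by linarith)
    (fun t _ => Real.sqrt_pos.2 (one_div_pos.2 (hmx t)))
    (Continuous.continuousOn (Real.continuous_sqrt.comp (continuous_const.div (by fun_prop)
      fun t => (hmx t).ne')))
    (fun t ht => by
      have ht0 : 0 < t := hτ2.trans ht.1
      have hd1 : HasDerivAt (fun t : ℝ => 1 / t) (-1 / t ^ 2) t := by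
        have := hasDerivAt_inv ht0.ne'
        simp only [one_div]
        exact this.congr_deriv (by ring)
      refine (sqrt_deriv hd1 (one_div_pos.2 ht0)).congr_of_eventuallyEq ?_
      filter_upwards [lt_mem_nhds ht.1] with s hs
      rw [max_eq_left hs.le])
    (ContinuousOn.div (continuousOn_const.div (by fun_prop) fun t ht => by
        have := hτ2.trans ht.1; positivity)
      (continuousOn_const.mul (ContinuousOn.sqrt (continuousOn_const.div continuousOn_id
        fun t ht => (hτ2.trans ht.1).ne'))) fun t ht => by
        have := Real.sqrt_pos.2 (one_div_pos.2 (hτ2.trans ht.1)); positivity)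
    1 0 (fun _ _ => 0) (fun x hx => Bm.const _) (fun x hx θ => le_rfl)
    (fun x hx => by rw [EE_const hR (hτ2.trans hx.1).le])
    (fun x hx θ w => by
      have hx0 := hτ2.trans hx.1
      have hs0 : 0 < √(1 / x) := Real.sqrt_pos.2 (one_div_pos.2 hx0)
      have hb := (bil_bound (c := 0) (C := (1 / x) ^ 2) (fun v => U_second_nonneg h w v)
          (cm_symm hR hx0 θ) fun v hv => ⟨sq_nonneg _,
            pow_le_pow_left₀ (cm_nonneg hR hx0 θ v)
              ((cm_le_inv hR hl hx0 θ v).trans (by rw [hv]; simp)) 2⟩).2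
      change _ ≤ (1 / x) ^ 2 * lpU N w at hb
      rw [max_eq_left hx.1.le]
      have e : ∀ S : ℝ, 1 * (-1 / x ^ 2 / (2 * √(1 / x)) * lpU N w +
          1 / 2 * ((√(1 / x))⁻¹ * S)) = (S - (1 / x) ^ 2 * lpU N w) / (2 * √(1 / x)) :=
        fun S => by
          rw [div_pow, one_pow, sub_div]; ring
      rw [e]
      exact div_nonpos_of_nonpos_of_nonneg (by linarith) (by positivity))
  have heq : ∀ y : E n, Fr N (fun t => √(1 / max t (τ ^ 2))) (τ ^ 2, y) =
      Fr N (fun t => √(r t)) (τ ^ 2, y) := fun y => by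
    simp [Fr, hr]
  simp only [heq] at key2
  have hend : ∫ x, N x ∂μ ≤ EE μ T (fun θ => Fr N (fun t => √(1 / max t (τ ^ 2)))
      (T, mn μ (fun x => x) (T, θ))) + 1 := by
    have e1 := EE_const (μ := μ) hR hT0.le (1 : ℝ)
    have e2 := EE_add hR hT0.le (Fr_bm (ρ := fun t => √(1 / max t (τ ^ 2))) hR h T)
      (Bm.const (1 : ℝ))
    rw [e1] at e2
    rw [← e2, ← EE_mn hR hT0.le (Bd.of_cont hR h.cont)]
    refine EE_mono hR hT0.le (Bm.of_mn hR (Bd.of_cont hR h.cont) (Φ := fun y => y) continuous_id T)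
      ((Fr_bm hR h _).add (Bm.const _)) fun θ => ?_
    have h3 := Fr_ge (ρ := fun t => √(1 / max t (τ ^ 2))) (t := T) h
      (Real.sqrt_pos.2 (one_div_pos.2 (hmx T))) (mn μ (fun x => x) (T, θ))
    have h4 := mn_N_le hR hl h hT0 θ
    have h5 : L ^ 2 * (n * (1 / T)) ≤ 1 := by
      rw [← mul_assoc, mul_one_div, div_le_one hT0, hT]; linarith
    linarith
  have hst : √(r 0) ≤ 1 / τ + 3 / 2 * τ := by
    rw [Real.sqrt_le_left (by positivity)]
    simp only [hr]
    have : 1 / τ * τ = 1 := by field_simp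
    have e : (1 / τ) ^ 2 = 1 / τ ^ 2 := by rw [div_pow, one_pow]
    nlinarith
  have hst2 := mul_le_mul_of_nonneg_right hst hm0
  have h5 : 1 ≤ 1 / τ := by rw [le_div_iff₀ hτ]; linarith
  have h6 : (1 / τ + 3 / 2 * τ + τ / 2 * τ ^ 2) * m ≤ (3 / τ) * m := by
    refine mul_le_mul_of_nonneg_right ?_ hm0
    have : 3 / τ = 3 * (1 / τ) := by ring
    have : τ / 2 * τ ^ 2 ≤ 1 / 2 := by nlinarith
    linarith
  linarith

end

end PC

namespace PC
open scoped ContDiff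


/-! ### Isotropic convex bodies -/

section
variable {n : ℕ} {K : Set (E n)}

lemma body_vol (hK : IsConvexBody K) : volume K ≠ 0 ∧ volume K ≠ ⊤ :=
  ⟨(Measure.measure_pos_of_nonempty_interior _ hK.2.2).ne', hK.1.measure_lt_top.ne⟩

lemma body_prob (hK : IsConvexBody K) : IsProbabilityMeasure (unifOn K) := by
  obtain ⟨h0, h1⟩ := body_vol hK
  exact ⟨by simpa [unifOn] using ENNReal.inv_mul_cancel h0 h1⟩

lemma body_ae (hK : IsConvexBody K) : ∀ᵐ x ∂(unifOn K), x ∈ K :=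
  Measure.ae_smul_measure (ae_restrict_mem hK.1.measurableSet) _

lemma body_integral (f : E n → ℝ) :
    ∫ x, f x ∂(unifOn K) = (volume K).toReal⁻¹ * ∫ x in K, f x := by
  rw [unifOn, integral_smul_measure, ENNReal.toReal_inv, smul_eq_mul]

lemma body_intg (hK : IsConvexBody K) {F : Type*} [NormedAddCommGroup F] {f : E n → F}
    (hf : Continuous f) : Integrable f (unifOn K) := by
  have := body_prob hK
  obtain ⟨C, hC⟩ := hK.1.exists_bound_of_continuousOn hf.continuousOn
  refine Integrable.of_bound hf.aestronglyMeasurable C ?_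
  filter_upwards [body_ae hK] with x hx using hC x hx

lemma body_slc (hK : IsConvexBody K) : SLC 0 (unifOn K) := by
  obtain ⟨h0, h1⟩ := body_vol hK
  refine ⟨K.indicator fun _ => (volume K).toReal⁻¹,
    measurable_const.indicator hK.1.measurableSet,
    fun x => Set.indicator_nonneg (fun _ _ => by positivity) x, fun x y => ?_, ?_⟩
  · simp only [zero_div, neg_zero, zero_mul, exp_zero, mul_one]
    by_cases hx : x ∈ K
    · by_cases hy : y ∈ K
      · have hm : (1 / 2 : ℝ) • (x + y) ∈ K := by
          rw [smul_add]
          exact hK.2.1 hx hy (by norm_num) (by norm_num) (by norm_num)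
        simp only [Set.indicator_of_mem, hx, hy, hm, sq, le_refl]
      · rw [Set.indicator_of_notMem hy, mul_zero]; positivity
    · rw [Set.indicator_of_notMem hx, zero_mul]; positivity
  · have e : (fun x => ENNReal.ofReal (K.indicator (fun _ => (volume K).toReal⁻¹) x)) =
        K.indicator fun _ => (volume K)⁻¹ := by
      funext x
      by_cases hx : x ∈ K
      · rw [Set.indicator_of_mem hx, Set.indicator_of_mem hx, ← ENNReal.toReal_inv,
          ENNReal.ofReal_toReal (ENNReal.inv_ne_top.2 h0)]
      · rw [Set.indicator_of_notMem hx, Set.indicator_of_notMem hx, ENNReal.ofReal_zero]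
    rw [e, withDensity_indicator hK.1.measurableSet, withDensity_const, unifOn]

lemma body_mean (hK : IsConvexBody K) (hi : IsIsotropicBody K) : ∫ x, x ∂(unifOn K) = 0 := by
  ext i
  have h1 := integral_inner (𝕜 := ℝ) (body_intg hK (f := fun x : E n => x) continuous_id)
    (EuclideanSpace.single i 1)
  simp only [EuclideanSpace.inner_single_left, map_one, one_mul] at h1
  rw [← h1, hi.1 i]; rfl

lemma body_cov (hK : IsConvexBody K) (hi : IsIsotropicBody K) :
    ∫ x, (innerSL ℝ x).smulRight x ∂(unifOn K) = (1 : E n →L[ℝ] E n) := by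
  have hI : Integrable (fun x : E n => (innerSL ℝ x).smulRight x) (unifOn K) :=
    body_intg hK (by fun_prop)
  refine ContinuousLinearMap.ext fun v => ?_
  rw [ContinuousLinearMap.integral_apply hI, one_apply_eq_self]
  ext i
  have h1 := integral_inner (𝕜 := ℝ) (hI.apply_continuousLinearMap v) (EuclideanSpace.single i 1)
  simp only [EuclideanSpace.inner_single_left, map_one, one_mul,
    ContinuousLinearMap.smulRight_apply, innerSL_apply_apply, PiLp.smul_apply, smul_eq_mul] at h1 ⊢
  rw [← h1]
  have e : ∀ x : E n, ⟪x, v⟫ * x i = ∑ j, v j * (x j * x i) := fun x => by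
    rw [PiLp.inner_apply, Finset.sum_mul]
    refine Finset.sum_congr rfl fun j _ => ?_
    simp only [RCLike.inner_apply, conj_trivial]; ring
  simp only [e]
  rw [integral_finsetSum _ fun j _ => body_intg hK (by fun_prop)]
  simp [integral_const_mul, hi.2]

lemma body_second (hK : IsConvexBody K) (hi : IsIsotropicBody K) (v : E n) :
    ∫ x, ⟪v, x⟫ ^ 2 ∂(unifOn K) = ‖v‖ ^ 2 := by
  have hI : Integrable (fun x : E n => (innerSL ℝ x).smulRight x) (unifOn K) :=
    body_intg hK (by fun_prop)
  have h1 := congrArg (fun A : E n →L[ℝ] E n => ⟪v, A v⟫) (body_cov hK hi)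
  simp only [one_apply_eq_self] at h1
  rw [ContinuousLinearMap.integral_apply hI, ← integral_inner (hI.apply_continuousLinearMap v),
    real_inner_self_eq_norm_sq] at h1
  rw [← h1]
  refine integral_congr_ae (Filter.Eventually.of_forall fun x => ?_)
  simp only [ContinuousLinearMap.smulRight_apply, innerSL_apply_apply, inner_smul_right]
  rw [real_inner_comm v x, sq]

lemma body_first (hK : IsConvexBody K) (hi : IsIsotropicBody K) (v : E n) :
    ∫ x, ⟪v, x⟫ ∂(unifOn K) = 0 := by
  rw [integral_inner (body_intg hK (f := fun x : E n => x) continuous_id), body_mean hK hi,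
    inner_zero_right]

/-- Shrinking `K` towards one of its points `b` by the factor `c` costs a factor `c ^ n` in
volume. -/
lemma body_shrink (hK : IsConvexBody K) {b : E n} (hb : b ∈ K) {c : ℝ} (hc : 0 < c) (hc1 : c ≤ 1)
    {g : E n → ℝ} (hg : Continuous g) (hg0 : ∀ x, 0 ≤ g x) :
    c ^ n * ∫ x, g (c • x + (1 - c) • b) ∂(unifOn K) ≤ ∫ x, g x ∂(unifOn K) := by
  rw [body_integral, body_integral, mul_left_comm]
  refine mul_le_mul_of_nonneg_left ?_ (by positivity)
  have hF : Integrable (K.indicator g) :=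
    (hg.continuousOn.integrableOn_compact hK.1).integrable_indicator hK.1.measurableSet
  have hF2 : Integrable (fun x => K.indicator g (c • x + (1 - c) • b)) :=
    (hF.comp_add_right ((1 - c) • b)).comp_smul hc.ne'
  have e : ∫ x, K.indicator g (c • x + (1 - c) • b) = (c ^ n)⁻¹ * ∫ x in K, g x := by
    rw [Measure.integral_comp_smul volume (fun y => K.indicator g (y + (1 - c) • b)) c,
      integral_add_right_eq_self (fun y => K.indicator g y),
      integral_indicator hK.1.measurableSet, finrank_euclideanSpace_fin,
      abs_of_pos (by positivity), smul_eq_mul]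
  have h1 : ∫ x in K, g (c • x + (1 - c) • b) ≤ ∫ x, K.indicator g (c • x + (1 - c) • b) := by
    rw [← integral_indicator hK.1.measurableSet]
    refine integral_mono ?_ hF2 fun x => ?_
    · have hg2 : Continuous fun x => g (c • x + (1 - c) • b) := by fun_prop
      exact (hg2.continuousOn.integrableOn_compact hK.1).integrable_indicator hK.1.measurableSet
    · by_cases hx : x ∈ K
      · rw [Set.indicator_of_mem hx, Set.indicator_of_mem
          (hK.2.1 hx hb hc.le (by linarith) (by ring))]
      · rw [Set.indicator_of_notMem hx]
        exact Set.indicator_nonneg (fun _ _ => hg0 _) _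
  rw [e] at h1
  rwa [inv_mul_eq_div, le_div_iff₀ (by positivity), mul_comm] at h1

/-- An isotropic convex body has circumradius at most `3 n`. -/
lemma body_norm_le (hn : 0 < n) (hK : IsConvexBody K) (hi : IsIsotropicBody K) {b : E n}
    (hb : b ∈ K) : ‖b‖ ≤ 3 * n := by
  have := body_prob hK
  rcases eq_or_ne b 0 with rfl | hb0
  · simp
  have hn1 : (1 : ℝ) ≤ n := by exact_mod_cast hn
  set ε : ℝ := 1 / (2 * n) with hε
  have hε0 : 0 < ε := by positivity
  have hε1 : ε ≤ 1 / 2 := by rw [hε]; gcongr; linarith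
  have hεn : n * ε = 1 / 2 := by rw [hε]; field_simp
  set u := ‖b‖⁻¹ • b with hu
  have hu1 : ‖u‖ = 1 := norm_smul_inv_norm (𝕜 := ℝ) hb0
  have hub : ⟪u, b⟫ = ‖b‖ := by
    rw [hu, real_inner_smul_left, real_inner_self_eq_norm_sq, sq,
      inv_mul_cancel_left₀ (norm_ne_zero_iff.2 hb0)]
  have h1 := body_shrink hK hb (c := 1 - ε) (by linarith) (by linarith)
    (g := fun x => ⟪u, x⟫ ^ 2) (by fun_prop) (fun x => sq_nonneg _)
  rw [body_second hK hi, hu1] at h1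
  have hI1 := body_intg hK (f := fun x : E n => ⟪u, x⟫ ^ 2) (by fun_prop)
  have hI2 := body_intg hK (f := fun x : E n => ⟪u, x⟫) (by fun_prop)
  have h2 : ∫ x, ⟪u, (1 - ε) • x + (1 - (1 - ε)) • b⟫ ^ 2 ∂(unifOn K) =
      (1 - ε) ^ 2 + ε ^ 2 * ‖b‖ ^ 2 := by
    have e : ∀ x, ⟪u, (1 - ε) • x + (1 - (1 - ε)) • b⟫ ^ 2 =
        (1 - ε) ^ 2 * ⟪u, x⟫ ^ 2 + ((2 * (1 - ε) * ε * ‖b‖) * ⟪u, x⟫ + ε ^ 2 * ‖b‖ ^ 2) :=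
      fun x => by
        rw [inner_add_right, real_inner_smul_right, real_inner_smul_right, hub]; ring
    simp only [e]
    rw [integral_add (hI1.const_mul _) ((hI2.const_mul _).fun_add (integrable_const _)),
      integral_add (hI2.const_mul _) (integrable_const _), integral_const_mul,
      integral_const_mul, body_second hK hi, body_first hK hi, hu1]
    simp
  rw [h2] at h1
  have h3 : 1 / 2 ≤ (1 - ε) ^ n := by
    have := one_add_mul_le_pow (a := -ε) (by linarith) n
    rw [← sub_eq_add_neg] at this
    linarith
  have h4 : 1 / 2 * (ε ^ 2 * ‖b‖ ^ 2) ≤ 1 := by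
    calc _ ≤ (1 - ε) ^ n * ((1 - ε) ^ 2 + ε ^ 2 * ‖b‖ ^ 2) := by
          gcongr; nlinarith [sq_nonneg (1 - ε)]
      _ ≤ 1 := by linarith
  have h5 : ε * ‖b‖ ≤ 3 / 2 := by
    refine abs_le_of_sq_le_sq' ?_ (by norm_num) |>.2
    nlinarith
  calc ‖b‖ = 2 * n * (ε * ‖b‖) := by rw [hε]; field_simp
    _ ≤ 2 * n * (3 / 2) := by gcongr
    _ = 3 * n := by ring

/-- An isotropic convex body has inradius at least `1 / (3 n)`. -/
lemma body_ball (hn : 0 < n) (hK : IsConvexBody K) (hi : IsIsotropicBody K) :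
    Metric.ball 0 (1 / (3 * n)) ⊆ K := by
  have := body_prob hK
  have hn1 : (1 : ℝ) ≤ n := by exact_mod_cast hn
  intro x hx
  rw [mem_ball_zero_iff] at hx
  by_contra hxK
  obtain ⟨f, s, hf, hs⟩ := geometric_hahn_banach_closed_point hK.2.1 hK.1.isClosed hxK
  set v := (InnerProductSpace.toDual ℝ (E n)).symm f with hv
  have hfv : ∀ y, f y = ⟪v, y⟫ := fun y => by
    rw [hv, InnerProductSpace.toDual_symm_apply]
  simp only [hfv] at hf hs
  have hI1 := body_intg hK (f := fun x : E n => ⟪v, x⟫ ^ 2) (by fun_prop)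
  have hI2 := body_intg hK (f := fun x : E n => ⟪v, x⟫) (by fun_prop)
  -- `(⟪v, y⟫ - ⟪v, x⟫) (⟪v, y⟫ + 3 n ‖v‖) ≤ 0` on `K`, and the left side has mean
  -- `‖v‖² - 3 n ‖v‖ ⟪v, x⟫`
  have h1 : ∫ y, (⟪v, y⟫ ^ 2 + ((3 * n * ‖v‖ - ⟪v, x⟫) * ⟪v, y⟫ - 3 * n * ‖v‖ * ⟪v, x⟫))
      ∂(unifOn K) ≤ 0 := by
    refine integral_nonpos_of_ae ?_
    filter_upwards [body_ae hK] with y hy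
    have h2 := hf y hy
    have h3 := (abs_le.1 ((abs_real_inner_le_norm v y).trans (mul_le_mul_of_nonneg_left
      (body_norm_le hn hK hi hy) (norm_nonneg v)))).1
    change _ ≤ (0 : ℝ)
    nlinarith
  rw [integral_add hI1 ((hI2.const_mul _).sub' (integrable_const _)),
    integral_sub (hI2.const_mul _) (integrable_const _), integral_const_mul, body_second hK hi,
    body_first hK hi] at h1
  simp only [integral_const, probReal_univ, one_smul, mul_zero, zero_sub] at h1
  have hv0 : 0 < ‖v‖ := by
    rw [norm_pos_iff]
    rintro h0
    obtain ⟨y, hy⟩ := hK.2.2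
    have := hf y (interior_subset hy)
    rw [h0, inner_zero_left] at this hs
    linarith
  have h2 : ⟪v, x⟫ < ‖v‖ * (1 / (3 * n)) :=
    (real_inner_le_norm v x).trans_lt (by gcongr)
  have h3 : 3 * n * ‖v‖ * ⟪v, x⟫ < 3 * n * ‖v‖ * (‖v‖ * (1 / (3 * n))) := by gcongr
  have h4 : 3 * n * ‖v‖ * (‖v‖ * (1 / (3 * n))) = ‖v‖ ^ 2 := by field_simp
  linarith

lemma body_nhds (hn : 0 < n) (hK : IsConvexBody K) (hi : IsIsotropicBody K) : K ∈ nhds (0 : E n) :=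
  Filter.mem_of_superset (Metric.ball_mem_nhds 0 (by positivity)) (body_ball hn hK hi)

lemma body_sub (hn : 0 < n) (hK : IsConvexBody K) (hi : IsIsotropicBody K) :
    Sub (gauge K) (3 * n) where
  nn := gauge_nonneg
  add := gauge_add_le hK.2.1 (absorbent_nhds_zero (body_nhds hn hK hi))
  hom c hc x := by rw [gauge_smul_of_nonneg hc.le, smul_eq_mul]
  le x := by
    have h0 : (0 : ℝ) < 1 / (3 * n) := by positivity
    refine (gauge_mono (absorbent_ball_zero h0) (body_ball hn hK hi) x).trans ?_
    rw [gauge_ball h0.le, div_div_eq_mul_div, div_one, mul_comm]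

lemma body_mem (hn : 0 < n) (hK : IsConvexBody K) (hi : IsIsotropicBody K) {r : ℝ} (hr : 0 < r)
    {x : E n} (hx : gauge K x ≤ r) : x ∈ r • K := by
  rw [Set.mem_smul_set_iff_inv_smul_mem₀ hr.ne']
  have := (gauge_le_one_iff_mem_closure hK.2.1 (body_nhds hn hK hi) (x := r⁻¹ • x)).1 (by
    rw [gauge_smul_of_nonneg (by positivity), smul_eq_mul, inv_mul_le_one₀ hr]; exact hx)
  rwa [hK.1.isClosed.closure_eq] at this

end

end PC

namespace PC
open scoped ContDiff


/-! ### Choice of parameters -/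

section
variable {n : ℕ} {K T : Set (E n)}

/-- The parameter `k` of the moment `2 k + 2` used in the covariance estimate. -/
def kk (n : ℕ) : ℕ := ⌈9 * log ((n : ℝ) + 1)⌉₊

/-- The time scale `1 / (7168 (2 k + 2))`, of order `1 / log n`. -/
def τ₀ (n : ℕ) : ℝ := 1 / (7168 * (2 * (kk n : ℝ) + 2))

lemma τ₀_pos : 0 < τ₀ n := by unfold τ₀; positivity

lemma τ₀_le : τ₀ n ≤ 1 := by
  unfold τ₀
  rw [div_le_one (by positivity)]
  have : (0 : ℝ) ≤ kk n := Nat.cast_nonneg _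
  linarith

lemma log_ge_one (hn : 2 ≤ n) : 1 ≤ log ((n : ℝ) + 1) := by
  have h2 : (2 : ℝ) ≤ n := by exact_mod_cast hn
  rw [le_log_iff_exp_le (by positivity)]
  have := exp_one_lt_d9
  linarith

/-- Up to time `τ₀²`, the probability that the covariance is far from the identity is negligible
against the fourth power of the radius `3 n` of the body. -/
lemma chi_small (hn : 2 ≤ n) (hK : IsConvexBody K) (hi : IsIsotropicBody K) {x : ℝ}
    (hx : x ∈ Set.Ioo 0 (τ₀ n ^ 2)) :
    EE (unifOn K) x (chi (2 * kk n) (unifOn K) x) * (3 * n) ^ 4 ≤ 1 := by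
  have := body_prob hK
  have hn0 : 0 < n := by omega
  have h2 : (2 : ℝ) ≤ n := by exact_mod_cast hn
  have hR : ∀ᵐ x ∂(unifOn K), ‖x‖ ≤ 3 * n := by
    filter_upwards [body_ae hK] with x hx using body_norm_le hn0 hK hi hx
  have hx1 : x ≤ 1 := hx.2.le.trans (pow_le_one₀ τ₀_pos.le τ₀_le)
  have h1 := chi_EE hR (body_slc hK) hn0 (body_mean hK hi) (body_cov hK hi) (2 * kk n)
    (even_two_mul _) hx.1 hx1
  set k := kk n with hk
  have hs : √x ≤ τ₀ n := (Real.sqrt_le_left τ₀_pos.le).2 hx.2.le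
  have h3 : exp (3584 * (((2 * k : ℕ) : ℝ) + 2) ^ 2 * √x) ≤ 2 ^ (2 * k + 2) := by
    calc _ ≤ exp (3584 * (((2 * k : ℕ) : ℝ) + 2) ^ 2 * τ₀ n) := by gcongr
      _ = exp ((k + 1 : ℕ) * 1) := by
        congr 1
        unfold τ₀
        rw [← hk]
        push_cast
        field_simp
        norm_num
      _ = exp 1 ^ (k + 1) := exp_nat_mul _ _
      _ ≤ 4 ^ (k + 1) := by
        have := exp_one_lt_d9
        gcongr; linarith
      _ = _ := by rw [show 2 * k + 2 = 2 * (k + 1) by ring, pow_mul]; norm_num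
  have h4 : ((n : ℝ) + 1) ^ 9 ≤ 4 ^ k := by
    calc ((n : ℝ) + 1) ^ 9 = exp (9 * log ((n : ℝ) + 1)) := by
          rw [mul_comm, exp_mul, exp_log (by positivity)]; norm_cast
      _ ≤ exp (k * 1) := by
          rw [mul_one]; exact exp_le_exp.2 (Nat.le_ceil _)
      _ = exp 1 ^ k := exp_nat_mul _ _
      _ ≤ 4 ^ k := by
        have := exp_one_lt_d9
        gcongr; linarith
  have h5 : EE (unifOn K) x (chi (2 * k) (unifOn K) x) ≤ n / 2 * (1 / 4) ^ k := by
    calc _ ≤ _ := h1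
      _ ≤ 2 * n * (1 / 4) ^ (2 * k + 2) * 2 ^ (2 * k + 2) := by gcongr
      _ = 2 * n * (1 / 2) ^ (2 * k + 2) := by
        rw [mul_assoc, ← mul_pow]; norm_num
      _ = n / 2 * (1 / 4) ^ k := by
        rw [show 2 * k + 2 = 2 * (k + 1) by ring, pow_mul, pow_succ]; norm_num; ring
  calc _ ≤ (n / 2 * (1 / 4) ^ k * (3 * n) ^ 4 : ℝ) := by gcongr
    _ = 81 / 2 * n ^ 5 / 4 ^ k := by rw [div_pow, one_pow]; ring
    _ ≤ 1 := by
      rw [div_le_one (by positivity)]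
      refine le_trans ?_ h4
      calc (81 / 2 * n ^ 5 : ℝ) ≤ 3 ^ 4 * (n + 1) ^ 5 := by gcongr <;> norm_num
        _ ≤ (n + 1) ^ 4 * (n + 1) ^ 5 := by gcongr; linarith
        _ = _ := by ring

/-- The mean over `T` of the gauge of `K` is of order `log² n`, by comparing both bodies with the
Gaussian. -/
lemma mean_gauge_le (hn : 2 ≤ n) (hK : IsConvexBody K) (hT : IsConvexBody T)
    (hKi : IsIsotropicBody K) (hTi : IsIsotropicBody T) :
    ∫ x, gauge K x ∂(unifOn T) ≤ 12 / τ₀ n ^ 2 + 1 := by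
  have hn0 : 0 < n := by omega
  have h2 : (2 : ℝ) ≤ n := by exact_mod_cast hn
  have := body_prob hK
  have := body_prob hT
  have hRK : ∀ᵐ x ∂(unifOn K), ‖x‖ ≤ 3 * n := by
    filter_upwards [body_ae hK] with x hx using body_norm_le hn0 hK hKi hx
  have hRT : ∀ᵐ x ∂(unifOn T), ‖x‖ ≤ 3 * n := by
    filter_upwards [body_ae hT] with x hx using body_norm_le hn0 hT hTi hx
  have hS := body_sub hn0 hK hKi
  have h1 := gauss_mean_le hRK hn0 (body_mean hK hKi) (even_two_mul (kk n)) hS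
    (by filter_upwards [body_ae hK] with x hx using gauge_le_one_of_mem hx) (τ₀_pos (n := n))
    (fun x hx => by
      have h3 := chi_small hn hK hKi hx
      rw [← le_div_iff₀ (by positivity)] at h3
      refine h3.trans ?_
      gcongr
      calc (10 : ℝ) ≤ (3 * 2) ^ 4 := by norm_num
        _ ≤ _ := by gcongr)
  have h4 := mean_le hRT (body_slc hT) hn0 (body_mean hT hTi) (even_two_mul (kk n)) hS
    (τ₀_pos (n := n)) τ₀_le (fun x hx => chi_small hn hT hTi hx)
  have hτ := τ₀_pos (n := n)
  calc _ ≤ 3 / τ₀ n * U (gauge K) 0 + 1 := h4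
    _ ≤ 3 / τ₀ n * (4 / τ₀ n) + 1 := by gcongr
    _ = _ := by ring

lemma scale_le (hn : 2 ≤ n) :
    12 / τ₀ n ^ 2 + 1 ≤ (12 * (7168 * 22) ^ 2 + 1) * log ((n : ℝ) + 1) ^ 2 := by
  have h1 := log_ge_one hn
  have h2 : (kk n : ℝ) ≤ 9 * log ((n : ℝ) + 1) + 1 := (Nat.ceil_lt_add_one (by linarith)).le
  have h3 : 12 / τ₀ n ^ 2 = 12 * (7168 * (2 * (kk n : ℝ) + 2)) ^ 2 := by
    unfold τ₀; field_simp
  rw [h3, add_mul]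
  refine add_le_add ?_ (by nlinarith)
  rw [mul_assoc, ← mul_pow, mul_assoc 7168]
  gcongr
  linarith

/-- Markov's inequality for the gauge of `K` on `T`. -/
lemma markov (hn : 2 ≤ n) (hK : IsConvexBody K) (hT : IsConvexBody T)
    (hKi : IsIsotropicBody K) (hTi : IsIsotropicBody T) :
    (99 / 100 : ℝ≥0∞) * volume T ≤ volume
      ((100 * (12 * (7168 * 22) ^ 2 + 1) * Real.log (n + 1) ^ 2) • K ∩ T) := by
  have hn0 : 0 < n := by omega
  have := body_prob hT
  obtain ⟨hT0, hT1⟩ := body_vol hT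
  have hlog := log_ge_one hn
  set D : ℝ := (12 * (7168 * 22) ^ 2 + 1) * Real.log (n + 1) ^ 2 with hD
  have hD0 : 0 < D := by positivity
  have hm : ∫ x, gauge K x ∂(unifOn T) ≤ D := (mean_gauge_le hn hK hT hKi hTi).trans (scale_le hn)
  rw [mul_assoc, ← hD]
  set S : Set (E n) := {x | 100 * D ≤ gauge K x} with hS
  have hSc : IsClosed S := isClosed_le continuous_const (body_sub hn0 hK hKi).cont
  have h1 := mul_meas_ge_le_integral_of_nonneg (μ := unifOn T)
    (Filter.Eventually.of_forall (gauge_nonneg (s := K)))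
    (body_intg hT (body_sub hn0 hK hKi).cont) (100 * D)
  have h2 : (unifOn T).real S ≤ 1 / 100 := by
    rw [le_div_iff₀ (by norm_num)]
    have h3 : 100 * D * (unifOn T).real S ≤ D := h1.trans hm
    refine le_of_mul_le_mul_left (a := D) ?_ hD0
    linarith
  have h3 : (unifOn T) S ≤ 1 / 100 := by
    rw [← ENNReal.ofReal_toReal (measure_ne_top (unifOn T) S)]
    refine (ENNReal.ofReal_le_ofReal h2).trans ?_
    rw [ENNReal.ofReal_div_of_pos (by norm_num)]
    simp
  have h4 : volume (S ∩ T) ≤ 1 / 100 * volume T := by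
    rw [unifOn, Measure.smul_apply, smul_eq_mul, Measure.restrict_apply hSc.measurableSet,
      mul_comm, ← div_eq_mul_inv] at h3
    rwa [ENNReal.div_le_iff hT0 hT1] at h3
  have h5 : volume T ≤ volume ((100 * D) • K ∩ T) + 1 / 100 * volume T := by
    calc volume T ≤ volume ((100 * D) • K ∩ T ∪ S ∩ T) := by
          refine measure_mono fun x hx => ?_
          rcases le_or_gt (100 * D) (gauge K x) with h | h
          · exact Or.inr ⟨h, hx⟩
          · exact Or.inl ⟨body_mem hn0 hK hKi (by positivity) h.le, hx⟩
      _ ≤ _ := measure_union_le _ _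
      _ ≤ _ := by gcongr
  have h6 : (1 / 100 : ℝ≥0∞) * volume T ≠ ⊤ :=
    ENNReal.mul_ne_top (ENNReal.div_ne_top (by simp) (by simp)) hT1
  refine (ENNReal.add_le_add_iff_right h6).1 ?_
  refine le_trans (le_of_eq ?_) h5
  rw [← add_mul, ENNReal.div_add_div_same]
  norm_num [ENNReal.div_self]

end

end PC

/-- For convex bodies `K, T` in isotropic position, `Vol(λK ∩ T) ≥ (99/100) Vol(T)` with
`λ = C log²(n+1)`. -/
theorem partial_containment_isotropic :
    ∃ C : ℝ, 0 < C ∧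
      ∀ n : ℕ, 2 ≤ n → ∀ K T : Set (EuclideanSpace ℝ (Fin n)),
        IsConvexBody K → IsConvexBody T → IsIsotropicBody K → IsIsotropicBody T →
        (99 / 100 : ℝ≥0∞) * volume T ≤
          volume ((C * Real.log (n + 1) ^ 2) • K ∩ T) :=
  ⟨100 * (12 * (7168 * 22) ^ 2 + 1), by norm_num, fun _ hn _ _ hK hT hKi hTi =>
    PC.markov hn hK hT hKi hTi⟩

end
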